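/- Let k be even with 2 < k < 2n and k < 2(r−1)(n−1) − 1. Then π_k(X_r(U(n))^{irr}) ≅ ℤ, the infinite cyclic group. The same holds with SU(n) in place of U(n). -/

import Mathlib

/-!
Let `G` be `U(n)` or `SU(n)`, let `E` (`BP.Pt`) be the space of irreducible `r`-tuples in `G`, and let
`X` be the space of its conjugacy classes. By Schur's lemma the projective unitary group acts freely
on `E`, with local slices (`slice`), so that homotopies lift from `X` to `E` (`IsQuo.transport`,
`hlp`) and there is an exact sequence relating `X`, `E` and the orbits `PU(n)`. Scalars do not
matter in the dimensions considered, because circle-valued functions on cubes have logarithms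
(`scalar_log`). Reducible tuples have codimension `2 (r - 1) (n - 1)`, so that `E` has the homotopy of
`G ^ r` in the dimensions considered (`general_position_G`), and orbit maps are homotopically trivial
in `G ^ r` since `γ A γᴴ A⁻¹` is a commutator with a matrix connected to `1`. As `π_k(U(n)) = 0` for
`k` even, the boundary map is an isomorphism from `π_k(X)` to `π_{k-1}(U(n))` (`pi_iso`). It is handled
as a relation `Rl` between classes, shown to be the graph of an isomorphism (`rel_mulEquiv`).

In the stable range, `π_m(U(n))` is the group `SC m` of stable homotopy classes of families of
invertible matrices on the cube `I ^ m` relative to its boundary (`exists_rep`, `null_of_cl`: by general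
position one column can be moved to a basis vector when `m < 2 n`). There remains Bott
periodicity, `SC (m + 2) ≃ SC m`, giving `SC (2 j + 1) ≃ ℤ` and `SC (2 j) = 0` (`sc_odd`, `sc_even`).
It is proved for all pairs `(Y, B)`, with `Y` compact metric and `B` closed (`bott_periodicity`):
* a family of loops is approximated by Laurent polynomials (`laurent_approx`) and linearized by
  enlarging the matrices. A linear loop is deformed to a Bott loop `1 + (z - 1) P` (`cl_eq_bott`); the
  projections `P` come from Lyapunov forms (`exists_lyap_family`), which replace spectral projections
  and can be chosen continuously by convexity;
* two families of projections with homotopic Bott loops are stably homotopic (`bott_inj`), by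
  truncating block circulant matrices which discretize a homotopy of loops;
* families of projections on `Y × I`, constant over the boundary, lift to unitary families
  (`proj_lift`), which at the end of `I` commute with the constant projection and hence yield families
  of unitary matrices on `Y`.
-/

/-- The unitary group `U(n)` of `n × n` complex unitary matrices. -/
abbrev Un (n : ℕ) : Type := ↥(Matrix.unitaryGroup (Fin n) ℂ)

/-- The character variety `X_r(U(n))`: the quotient topological space of `U(n)^r`
by the diagonal conjugation action `g • (A₁, …, A_r) = (g A₁ g⁻¹, …, g A_r g⁻¹)`. -/
abbrev CharVarU (n r : ℕ) : Type :=
  Quotient (MulAction.orbitRel (ConjAct (Un n)) (Fin r → Un n))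

/-- A tuple `(A₁, …, A_r)` of `n × n` unitary matrices is irreducible if no subspace of `ℂⁿ`
other than `{0}` and `ℂⁿ` is invariant under all the `Aᵢ`. -/
def IsIrreducibleTupleU {n r : ℕ} (A : Fin r → Un n) : Prop :=
  ∀ p : Submodule ℂ (Fin n → ℂ),
    (∀ i, ∀ v ∈ p, (A i : Matrix (Fin n) (Fin n) ℂ).mulVec v ∈ p) → p = ⊥ ∨ p = ⊤

/-- The irreducible locus `X_r(U(n))^{irr}`: the subspace of classes of irreducible tuples. -/
def irrLocusU (n r : ℕ) : Set (CharVarU n r) :=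
  {x | ∃ A : Fin r → Un n, IsIrreducibleTupleU A ∧
    Quotient.mk (MulAction.orbitRel (ConjAct (Un n)) (Fin r → Un n)) A = x}

/-- The special unitary group `SU(n)`, as the subgroup of the unitary group `U(n)`
consisting of the unitary matrices of determinant `1`. -/
def SUsubgroup (n : ℕ) : Subgroup (Un n) :=
  MonoidHom.ker (Matrix.detMonoidHom.comp (Matrix.unitaryGroup (Fin n) ℂ).subtype)

/-- The special unitary group `SU(n)`. -/
abbrev SUn (n : ℕ) : Type := ↥(SUsubgroup n)

/-- The character variety `X_r(SU(n))`: the quotient topological space of `SU(n)^r`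
by the diagonal conjugation action. -/
abbrev CharVarSU (n r : ℕ) : Type :=
  Quotient (MulAction.orbitRel (ConjAct (SUn n)) (Fin r → SUn n))

/-- A tuple `(A₁, …, A_r)` of special unitary matrices is irreducible if no subspace of `ℂⁿ`
other than `{0}` and `ℂⁿ` is invariant under all the `Aᵢ`. -/
def IsIrreducibleTupleSU {n r : ℕ} (A : Fin r → SUn n) : Prop :=
  ∀ p : Submodule ℂ (Fin n → ℂ),
    (∀ i, ∀ v ∈ p, ((A i : Un n) : Matrix (Fin n) (Fin n) ℂ).mulVec v ∈ p) → p = ⊥ ∨ p = ⊤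

/-- The irreducible locus `X_r(SU(n))^{irr}`: the subspace of classes of irreducible tuples. -/
def irrLocusSU (n r : ℕ) : Set (CharVarSU n r) :=
  {x | ∃ A : Fin r → SUn n, IsIrreducibleTupleSU A ∧
    Quotient.mk (MulAction.orbitRel (ConjAct (SUn n)) (Fin r → SUn n)) A = x}

namespace BP

open scoped unitInterval Matrix MatrixOrder Matrix.Norms.L2Operator ComplexOrder Kronecker
open Matrix (fromBlocks conjTranspose_mul fromBlocks_multiply isUnit_iff_isUnit_det mulVec_mulVec
  conjTranspose_smul diagonal conjTranspose_conjTranspose conjTranspose_one fromBlocks_one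
  conjTranspose_sub submatrix_mul_equiv fromBlocks_conjTranspose conjTranspose_add
  mem_unitaryGroup_iff' mul_kronecker_mul star_eq_conjTranspose diagonal_apply
  conjTranspose_submatrix vecMulVec toBlocks_fromBlocks₁₁ IsHermitian PosDef
  conjTranspose_kronecker unitaryGroup mulVec_zero add_mulVec smul_mulVec mulVec_smul
  kronecker_apply fromBlocks_inj det_one inv_eq_left_inv submatrix_one_equiv det_conjTranspose
  one_mulVec trace_add mul_diagonal det det_fromBlocks_zero₂₁ conjTranspose_zero sub_mulVec
  of_apply trace_mul_comm fromBlocks_add diagonal_one blockDiagonal diagonal_mul_diagonal det_smul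
  fromBlocks_toBlocks trace_smul toLin' mul_nonsing_inv nonsing_inv_mul
  mulVec_injective_iff_isUnit trace_conjTranspose mulVecLin conjTranspose_apply
  diagonal_conjTranspose toBlocks₁₂ trace_one isUnit_fromBlocks_zero₁₂ fromBlocks_neg
  kronecker_mulVec_vec vec_eq_zero_iff posSemidef_conjTranspose_mul_self vec_bijective vec_smul)

set_option linter.unusedSectionVars false

/-- Square complex matrices. -/
local notation:max "Mat" n:max => Matrix n n ℂ

open Function (uncurry)

variable {ι κ : Type} [Fintype ι] [DecidableEq ι] [Fintype κ] [DecidableEq κ]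

/-! ### Homotopy lifting from continuous transport -/

/-- Every point of `X` has a neighbourhood over which points of `E` can be continuously transported:
`θ e x'` lies over `x'` and equals `e` when `x'` is the image of `e`. -/
def HasTransport {E X : Type} [TopologicalSpace E] [TopologicalSpace X] (p : E → X) : Prop :=
  ∀ x, ∃ V : Set X, IsOpen V ∧ x ∈ V ∧ ∃ θ : E → X → E,
    ContinuousOn (uncurry θ) {q | p q.1 ∈ V ∧ q.2 ∈ V} ∧
    (∀ e x', p e ∈ V → x' ∈ V → p (θ e x') = x') ∧ ∀ e, p e ∈ V → θ e (p e) = e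

section
variable {E X Y : Type} [TopologicalSpace E] [TopologicalSpace X] [MetricSpace Y]
  [CompactSpace Y]

/-- The time `t` truncated at `τ`. -/
noncomputable def clock (τ : ℝ) (t : I) : I := Set.projIcc (0:ℝ) 1 zero_le_one (min (t:ℝ) τ)

lemma continuous_clock {Z : Type} [TopologicalSpace Z] {τ : Z → ℝ} {t : Z → I}
    (hτ : Continuous τ) (ht : Continuous t) : Continuous fun z => clock (τ z) (t z) :=
  continuous_projIcc.comp ((continuous_subtype_val.comp ht).min hτ)

lemma clock_one (t : I) : clock 1 t = t := by
  unfold clock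
  rw [min_eq_left t.2.2]; exact Set.projIcc_val _ t

lemma clock_zero (t : I) : clock 0 t = 0 := by
  unfold clock
  rw [min_eq_right t.2.1]; exact Set.projIcc_left zero_le_one

lemma clock_at_zero {τ : ℝ} (h : 0 ≤ τ) : clock τ 0 = 0 := by
  unfold clock
  rw [min_eq_left (by simpa using h)]; exact Set.projIcc_left zero_le_one

/-- Lifting a homotopy along which a neighbourhood of each point of `Y` stays in one good set. -/
lemma hlp_short (p : E → X) (f : Y → I → X)
    (hf : Continuous (uncurry f))
    (hloc : ∀ y, ∃ W : Set Y, IsOpen W ∧ y ∈ W ∧ ∃ V : Set X, IsOpen V ∧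
      (∀ y' ∈ W, ∀ t, f y' t ∈ V) ∧ ∃ θ : E → X → E,
      ContinuousOn (uncurry θ) {q | p q.1 ∈ V ∧ q.2 ∈ V} ∧
      (∀ e x', p e ∈ V → x' ∈ V → p (θ e x') = x') ∧ ∀ e, p e ∈ V → θ e (p e) = e)
    (F0 : Y → E) (hF0 : Continuous F0) (h0 : ∀ y, p (F0 y) = f y 0) :
    ∃ F : Y → I → E, Continuous (uncurry F) ∧ (∀ y t, p (F y t) = f y t) ∧
      (∀ y, F y 0 = F0 y) ∧ ∀ y, (∀ t, f y t = f y 0) → ∀ t, F y t = F0 y := by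
  classical
  choose W hWo hyW V hVo hWV θ hθc hθp hθe using hloc
  obtain ⟨s, hs⟩ := isCompact_univ.elim_finite_subcover W hWo
    (fun y _ => Set.mem_iUnion.2 ⟨y, hyW y⟩)
  obtain ⟨ρ, hρ⟩ := PartitionOfUnity.exists_isSubordinate (isClosed_univ (X := Y))
    (fun i : s => W i) (fun i => hWo i) (by
      intro y hy
      have := hs hy
      simp only [Set.mem_iUnion] at this ⊢
      obtain ⟨i, hi, hy⟩ := this
      exact ⟨⟨i, hi⟩, hy⟩)
  have key : ∀ T : Finset s, ∃ F : Y → I → E, Continuous (uncurry F) ∧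
      (∀ y t, p (F y t) = f y (clock (∑ i ∈ T, ρ i y) t)) ∧
      (∀ y, F y 0 = F0 y) ∧ ∀ y, (∀ t, f y t = f y 0) → ∀ t, F y t = F0 y := by
    intro T
    induction T using Finset.induction_on with
    | empty =>
      refine ⟨fun y _ => F0 y, hF0.comp continuous_fst, ?_, fun _ => rfl, fun _ _ _ => rfl⟩
      intro y t
      simp [clock_zero, h0]
    | insert a T ha ih =>
      obtain ⟨F, hFc, hFp, hF0', hFk⟩ := ih
      set τ : Y → ℝ := fun y => ∑ i ∈ insert a T, ρ i y with hτ
      have hτc : Continuous τ := continuous_finsetSum _ fun i _ => (ρ i).continuous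
      have hτ0 : ∀ y, 0 ≤ τ y := fun y => Finset.sum_nonneg fun i _ => ρ.nonneg i y
      have hgo : ∀ y, y ∈ W a → ∀ t, f y (clock (τ y) t) ∈ V a := fun y hy t => hWV a y hy _
      have hFV : ∀ y, y ∈ W a → ∀ t, p (F y t) ∈ V a := fun y hy t => by
        rw [hFp]; exact hWV a y hy _
      have heq : ∀ y, y ∉ tsupport (ρ a) → ∀ t, p (F y t) = f y (clock (τ y) t) := by
        intro y hy t
        rw [hFp, hτ]; simp only [Finset.sum_insert ha]
        rw [image_eq_zero_of_notMem_tsupport hy, zero_add]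
      refine ⟨fun y t => if y ∈ tsupport (ρ a) then θ a (F y t) (f y (clock (τ y) t)) else F y t,
        ?_, ?_, ?_, ?_⟩
      · rw [continuous_iff_continuousAt]
        rintro ⟨y, t⟩
        by_cases hy : y ∈ tsupport (ρ a)
        · have hyW' : y ∈ W a := hρ a hy
          have hopen : (Prod.fst ⁻¹' W a : Set (Y × I)) ∈ nhds (y, t) :=
            ((hWo a).preimage continuous_fst).mem_nhds hyW'
          have h1 : ContinuousOn (fun q : Y × I => θ a (F q.1 q.2) (f q.1 (clock (τ q.1) q.2)))
              (Prod.fst ⁻¹' W a) := by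
            refine (hθc a).comp (f := fun q : Y × I => (F q.1 q.2, f q.1 (clock (τ q.1) q.2)))
              (Continuous.continuousOn ?_) ?_
            · exact hFc.prodMk (hf.comp (continuous_fst.prodMk
                (continuous_clock (hτc.comp continuous_fst) continuous_snd)))
            · intro q hq
              exact ⟨hFV _ hq _, hgo _ hq _⟩
          refine (h1.continuousAt hopen).congr ?_
          filter_upwards [hopen] with q hq
          simp only [uncurry]
          split_ifs with h
          · rfl
          · rw [← heq _ h, hθe a _ (hFV _ hq _)]
        · have hopen : (Prod.fst ⁻¹' (tsupport (ρ a))ᶜ : Set (Y × I)) ∈ nhds (y, t) :=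
            ((isClosed_tsupport _).isOpen_compl.preimage continuous_fst).mem_nhds hy
          refine hFc.continuousAt.congr ?_
          filter_upwards [hopen] with q hq
          simp only [uncurry]
          rw [if_neg hq]
      · intro y t
        beta_reduce
        split_ifs with h
        · exact hθp a _ _ (hFV _ (hρ a h) _) (hgo _ (hρ a h) _)
        · exact heq y h t
      · intro y
        beta_reduce
        split_ifs with h
        · rw [clock_at_zero (hτ0 y)]
          have : p (F y 0) = f y 0 := by rw [hF0', h0]
          rw [← this, hθe a _ (hFV _ (hρ a h) _), hF0']
        · exact hF0' y
      · intro y hy t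
        beta_reduce
        split_ifs with h
        · rw [hFk y hy, hy, ← h0, hθe a]
          rw [h0]; exact hWV a y (hρ a h) _
        · exact hFk y hy t
  obtain ⟨F, hFc, hFp, h1, h2⟩ := key Finset.univ
  refine ⟨F, hFc, fun y t => ?_, h1, h2⟩
  rw [hFp]
  have : ∑ i, ρ i y = 1 := by
    rw [← finsum_eq_sum_of_fintype]; exact ρ.sum_eq_one (Set.mem_univ y)
  rw [this, clock_one]

/-- Homotopy lifting for maps admitting local transport; the lift is constant along those `y`
for which the homotopy is constant. -/
theorem hlp (p : E → X) (hloc : HasTransport p) (f : Y → I → X)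
    (hf : Continuous (uncurry f))
    (F0 : Y → E) (hF0 : Continuous F0) (h0 : ∀ y, p (F0 y) = f y 0) :
    ∃ F : Y → I → E, Continuous (uncurry F) ∧ (∀ y t, p (F y t) = f y t) ∧
      (∀ y, F y 0 = F0 y) ∧ ∀ y, (∀ t, f y t = f y 0) → ∀ t, F y t = F0 y := by
  choose V hVo hxV θ hθc hθp hθe using hloc
  obtain ⟨δ, hδ, hball⟩ := lebesgue_number_lemma_of_metric (isCompact_univ (X := Y × I))
    (c := fun x : X => uncurry f ⁻¹' V x) (fun x => (hVo x).preimage hf)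
    (fun q _ => Set.mem_iUnion.2 ⟨uncurry f q, hxV _⟩)
  obtain ⟨N, hN⟩ := exists_nat_gt (1 / δ)
  have hNpos : (0:ℝ) < N := lt_trans (by positivity) hN
  have hNδ : 1 / (N:ℝ) < δ := by
    rw [div_lt_iff₀ hNpos]; rw [div_lt_iff₀ hδ] at hN; linarith
  have key : ∀ j : ℕ, ∃ F : Y → I → E, Continuous (uncurry F) ∧
      (∀ y t, p (F y t) = f y (clock (j / N) t)) ∧
      (∀ y, F y 0 = F0 y) ∧ ∀ y, (∀ t, f y t = f y 0) → ∀ t, F y t = F0 y := by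
    intro j
    induction j with
    | zero =>
      refine ⟨fun y _ => F0 y, hF0.comp continuous_fst, ?_, fun _ => rfl, fun _ _ _ => rfl⟩
      intro y t
      simp [clock_zero, h0]
    | succ j ih =>
      obtain ⟨F, hFc, hFp, hF0', hFk⟩ := ih
      -- reparametrise the next slab
      let c : ℝ → I := fun s => Set.projIcc (0:ℝ) 1 zero_le_one ((j + s) / N)
      have hc : Continuous c := continuous_projIcc.comp (by fun_prop)
      obtain ⟨G, hGc, hGp, hG0, hGk⟩ := hlp_short p (fun y s => f y (c s))
        (hf.comp (continuous_fst.prodMk (hc.comp (continuous_subtype_val.comp continuous_snd))))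
        (by
          intro y
          obtain ⟨x, hx⟩ := hball (y, c 0) (Set.mem_univ _)
          refine ⟨Metric.ball y δ, Metric.isOpen_ball, Metric.mem_ball_self hδ, V x, hVo x, ?_,
            θ x, hθc x, hθp x, hθe x⟩
          intro y' hy' t
          refine hx (show (y', c t) ∈ _ from ?_)
          rw [Metric.mem_ball, Prod.dist_eq, max_lt_iff]
          refine ⟨hy', ?_⟩
          calc dist (c t) (c 0) = |(c t : ℝ) - c 0| := rfl
            _ ≤ |(j + (t:ℝ)) / N - (j + 0) / N| := by
                simpa [c] using Set.abs_projIcc_sub_projIcc (zero_le_one (α := ℝ))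
                  (c := (j + (t:ℝ)) / N) (d := (j + 0) / N)
            _ = t / N := by
                rw [← sub_div]
                rw [abs_of_nonneg]
                · congr 1; ring
                · apply div_nonneg _ hNpos.le
                  have := t.2.1
                  linarith
            _ ≤ 1 / N := by gcongr; exact t.2.2
            _ < δ := hNδ)
        (fun y => F y (c 0)) (hFc.comp (continuous_id.prodMk continuous_const))
        (by
          intro y
          rw [hFp]
          congr 1
          apply Subtype.ext
          simp only [clock, c, Set.coe_projIcc, Set.Icc.coe_zero, add_zero]
          have : (0:ℝ) ≤ j / N := by positivity
          rcases le_total 1 ((j:ℝ) / N) with h | h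
          · simp [h]
          · simp [h, this])
      have hGk' : ∀ y, (∀ t, f y t = f y 0) → ∀ t, G y t = F0 y := by
        intro y hy t
        rw [hGk y (fun t => by rw [hy, hy (c _)]), hFk y hy]
      -- the part of the new lift after time `j / N`
      let g : I → I := fun t => Set.projIcc (0:ℝ) 1 zero_le_one (N * t - j)
      have hg : Continuous g := continuous_projIcc.comp (by fun_prop)
      refine ⟨fun y t => if (t:ℝ) ≤ j / N then F y t else G y (g t), ?_, ?_, ?_, ?_⟩
      · refine Continuous.if_le (f := fun q : Y × I => (q.2 : ℝ)) (g := fun _ => (j / N : ℝ))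
          (f' := fun q : Y × I => F q.1 q.2) (g' := fun q : Y × I => G q.1 (g q.2)) hFc
          (hGc.comp (continuous_fst.prodMk (hg.comp continuous_snd))) (by fun_prop)
          continuous_const ?_
        rintro ⟨y, t⟩ ht
        have ht : (t:ℝ) = j / N := ht
        have h1 : c 0 = t := by
          simp only [c, add_zero, ← ht]
          exact Set.projIcc_val _ t
        have h2 : g t = 0 := by
          simp only [g]
          rw [ht, mul_div_cancel₀ _ hNpos.ne', sub_self]
          exact Set.projIcc_left zero_le_one
        change F y t = G y (g t)
        rw [h2, hG0, h1]
      · intro y t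
        beta_reduce
        split_ifs with h
        · rw [hFp]
          congr 1
          simp only [clock]
          rw [min_eq_left h, min_eq_left]
          refine h.trans ?_
          gcongr
          simp
        · rw [hGp]
          push Not at h
          congr 1
          rw [div_lt_iff₀ hNpos] at h
          have h3 : (j + (g t : ℝ)) / N = min (t:ℝ) ((j + 1 : ℕ) / N) := by
            simp only [g, Set.coe_projIcc]
            rw [max_eq_right (le_min zero_le_one (by linarith)), div_eq_iff hNpos.ne',
              min_mul_of_nonneg _ _ hNpos.le, div_mul_cancel₀ _ hNpos.ne', add_min]
            rw [min_comm]
            push_cast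
            congr 1
            ring
          simp only [c, clock, h3]
      · intro y
        beta_reduce
        rw [if_pos (by simp only [Set.Icc.coe_zero]; positivity)]; exact hF0' y
      · intro y hy t
        beta_reduce
        split_ifs
        · exact hFk y hy t
        · exact hGk' y hy _
  obtain ⟨F, hFc, hFp, h1, h2⟩ := key N
  refine ⟨F, hFc, fun y t => ?_, h1, h2⟩
  rw [hFp, div_self hNpos.ne', clock_one]
end

/-! ### The polar decomposition -/

section polar

lemma continuous_matInv {Z : Type} [TopologicalSpace Z] {f : Z → Mat ι}
    (hf : Continuous f) (hu : ∀ z, IsUnit (f z)) : Continuous fun z => (f z)⁻¹ := by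
  rw [continuous_iff_continuousAt]
  intro z
  simp only [Matrix.nonsing_inv_eq_ringInverse]
  obtain ⟨u, hu⟩ := hu z
  have := NormedRing.inverse_continuousAt u
  rw [hu] at this
  exact ContinuousAt.comp (f := f) (g := Ring.inverse) this hf.continuousAt

/-- A square matrix is unitary. -/
def IsUni (U : Mat ι) : Prop := Uᴴ * U = 1

lemma IsUni.mul_ct {U : Mat ι} (h : IsUni U) : U * Uᴴ = 1 := mul_eq_one_comm.1 h
lemma IsUni.isUnit {U : Mat ι} (h : IsUni U) : IsUnit U :=
  ⟨⟨U, Uᴴ, h.mul_ct, h⟩, rfl⟩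
lemma IsUni.inv {U : Mat ι} (h : IsUni U) : U⁻¹ = Uᴴ := inv_eq_left_inv h
lemma IsUni.mul {U V : Mat ι} (hU : IsUni U) (hV : IsUni V) : IsUni (U * V) := by
  unfold IsUni
  rw [conjTranspose_mul, Matrix.mul_assoc, ← Matrix.mul_assoc Uᴴ, hU, Matrix.one_mul, hV]
lemma IsUni.ct {U : Mat ι} (hU : IsUni U) : IsUni Uᴴ := by
  unfold IsUni; rw [conjTranspose_conjTranspose]; exact hU.mul_ct
lemma isUni_one : IsUni (1 : Mat ι) := by simp [IsUni]
lemma IsUni.fromBlocks {U : Mat ι} {V : Mat κ} (hU : IsUni U) (hV : IsUni V) :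
    IsUni (fromBlocks U 0 0 V) := by
  unfold IsUni at *
  rw [fromBlocks_conjTranspose, fromBlocks_multiply]
  simp [hU, hV, fromBlocks_one]

/-- The unitary factor of the polar decomposition. -/
noncomputable def polar (A : Mat ι) : Mat ι := A * (CFC.abs A)⁻¹

lemma isUnit_abs {A : Mat ι} (hA : IsUnit A) : IsUnit (CFC.abs A) := by
  have h : CFC.abs A * CFC.abs A = star A * A := CFC.abs_mul_abs A
  have h2 : IsUnit (CFC.abs A * CFC.abs A) := by rw [h]; exact hA.star.mul hA
  rw [isUnit_iff_isUnit_det, Matrix.det_mul] at h2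
  rw [isUnit_iff_isUnit_det]
  exact isUnit_of_mul_isUnit_left h2

lemma abs_ct (A : Mat ι) : (CFC.abs A)ᴴ = CFC.abs A :=
  (CFC.abs_nonneg A).isSelfAdjoint

lemma polar_uni {A : Mat ι} (hA : IsUnit A) : IsUni (polar A) := by
  have h : CFC.abs A * CFC.abs A = Aᴴ * A := CFC.abs_mul_abs A
  have hu := (isUnit_iff_isUnit_det _).1 (isUnit_abs hA)
  unfold IsUni polar
  rw [conjTranspose_mul, Matrix.conjTranspose_nonsing_inv, abs_ct, Matrix.mul_assoc,
    ← Matrix.mul_assoc Aᴴ, ← h, Matrix.mul_assoc, mul_nonsing_inv _ hu, Matrix.mul_one,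
    nonsing_inv_mul _ hu]

lemma polar_mul_abs {A : Mat ι} (hA : IsUnit A) : polar A * CFC.abs A = A := by
  have hu := (isUnit_iff_isUnit_det _).1 (isUnit_abs hA)
  unfold polar
  rw [Matrix.mul_assoc, nonsing_inv_mul _ hu, Matrix.mul_one]

lemma polar_ct_mul {A : Mat ι} (hA : IsUnit A) : (polar A)ᴴ * A = CFC.abs A := by
  conv_lhs => rw [← polar_mul_abs hA]
  rw [polar_mul_abs hA]
  nth_rewrite 2 [← polar_mul_abs hA]
  rw [← Matrix.mul_assoc, polar_uni hA, Matrix.one_mul]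

lemma polar_pd {A : Mat ι} (hA : IsUnit A) : ((polar A)ᴴ * A).PosDef := by
  rw [polar_ct_mul hA]
  exact ((Matrix.nonneg_iff_posSemidef.1 (CFC.abs_nonneg A)).posDef_iff_isUnit).2 (isUnit_abs hA)

lemma polar_unique {A U : Mat ι} (hA : IsUnit A) (hU : IsUni U)
    (h : (Uᴴ * A).PosSemidef) : polar A = U := by
  have h1 : CFC.abs A = Uᴴ * A := by
    apply CFC.sqrt_unique
    · nth_rewrite 1 [← h.1]
      rw [conjTranspose_mul, conjTranspose_conjTranspose, Matrix.mul_assoc,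
        ← Matrix.mul_assoc U, hU.mul_ct, Matrix.one_mul]
      rfl
    · exact h.nonneg
  have h2 : A = U * CFC.abs A := by rw [h1, ← Matrix.mul_assoc, hU.mul_ct, Matrix.one_mul]
  have hu := (isUnit_iff_isUnit_det _).1 (isUnit_abs hA)
  unfold polar
  nth_rewrite 1 [h2]
  rw [Matrix.mul_assoc, mul_nonsing_inv _ hu, Matrix.mul_one]

lemma polar_of_uni {U : Mat ι} (hU : IsUni U) : polar U = U :=
  polar_unique hU.isUnit hU (by rw [hU]; exact Matrix.PosSemidef.one)

lemma polar_one : polar (1 : Mat ι) = 1 := polar_of_uni isUni_one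

lemma polar_mul_left {A V : Mat ι} (hA : IsUnit A) (hV : IsUni V) :
    polar (V * A) = V * polar A := by
  refine polar_unique (hV.isUnit.mul hA) (hV.mul (polar_uni hA)) ?_
  rw [conjTranspose_mul, Matrix.mul_assoc, ← Matrix.mul_assoc Vᴴ, hV, Matrix.one_mul]
  exact (polar_pd hA).posSemidef

lemma polar_mul_right {A V : Mat ι} (hA : IsUnit A) (hV : IsUni V) :
    polar (A * V) = polar A * V := by
  refine polar_unique (hA.mul hV.isUnit) ((polar_uni hA).mul hV) ?_
  have := (polar_pd hA).posSemidef.conjTranspose_mul_mul_same V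
  rw [conjTranspose_mul]
  simpa [Matrix.mul_assoc] using this

lemma polar_ct_selfAdjoint {H : Mat ι} (hu : IsUnit H) (hH : Hᴴ = H) :
    (polar H)ᴴ = polar H := by
  symm
  have h0 := polar_uni hu
  refine polar_unique hu h0.ct ?_
  rw [conjTranspose_conjTranspose]
  have h := (polar_pd hu).posSemidef
  -- `H * polar H` is the conjugate of `(polar H)ᴴ * H`
  have h1 := h.mul_mul_conjTranspose_same (polar H)
  rw [← Matrix.mul_assoc, h0.mul_ct, Matrix.one_mul] at h1
  have h2 : H * (polar H)ᴴ = polar H * H := by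
    have := h1.1
    unfold IsHermitian at this
    rw [conjTranspose_mul, conjTranspose_conjTranspose, hH] at this
    exact this.symm
  rwa [h2] at h1

lemma continuous_polar {Z : Type} [TopologicalSpace Z] {f : Z → Mat ι}
    (hf : Continuous f) (hu : ∀ z, IsUnit (f z)) : Continuous fun z => polar (f z) := by
  unfold polar
  refine hf.matrix_mul (continuous_matInv ?_ fun z => isUnit_abs (hu z))
  exact CFC.continuousOn_sqrt.comp_continuous (by fun_prop)
    (fun z => star_mul_self_nonneg (f z))

/-- The segment from an invertible matrix to its polar part consists of invertible matrices. -/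
lemma isUnit_polar_seg {A : Mat ι} (hA : IsUnit A) {s : ℝ} (h0 : 0 ≤ s) (h1 : s ≤ 1) :
    IsUnit (((1 - s : ℝ) : ℂ) • A + (s : ℂ) • polar A) := by
  have h : ((1 - s : ℝ) : ℂ) • A + (s : ℂ) • polar A =
      polar A * (((1 - s : ℝ) : ℂ) • CFC.abs A + (s : ℂ) • (1 : Mat ι)) := by
    rw [Matrix.mul_add, Matrix.mul_smul, Matrix.mul_smul, polar_mul_abs hA, Matrix.mul_one]
  rw [h]
  refine (polar_uni hA).isUnit.mul ?_
  have hpd : (CFC.abs A).PosDef :=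
    ((Matrix.nonneg_iff_posSemidef.1 (CFC.abs_nonneg A)).posDef_iff_isUnit).2 (isUnit_abs hA)
  rcases eq_or_lt_of_le h0 with rfl | hs
  · simpa using isUnit_abs hA
  · refine PosDef.isUnit ?_
    refine PosDef.posSemidef_add (hpd.posSemidef.smul ?_) (PosDef.one.smul ?_)
    · exact_mod_cast (by linarith : (0:ℝ) ≤ 1 - s)
    · exact_mod_cast hs
end polar

/-! ### Families of invertible matrices up to stable homotopy -/

section gm
variable {Y : Type} [TopologicalSpace Y] {B : Set Y}
variable {μ ν : Type} [Fintype μ] [DecidableEq μ] [Fintype ν] [DecidableEq ν]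

/-- Continuous families of invertible matrices which equal `1` on `B`. -/
structure GM (B : Set Y) (f : Y → Mat ι) : Prop where
  cont : Continuous f
  unit : ∀ y, IsUnit (f y)
  base : ∀ y ∈ B, f y = 1

/-- The family `f` is homotopic to `1` through invertible families, relative to `B`. -/
def Null (B : Set Y) (f : Y → Mat ι) : Prop :=
  ∃ H : Y → I → Mat ι, Continuous (uncurry H) ∧ (∀ y t, IsUnit (H y t)) ∧
    (∀ y, H y 0 = f y) ∧ (∀ y, H y 1 = 1) ∧ ∀ y ∈ B, ∀ t, H y t = 1

/-- Block sum of two families of matrices. -/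
def bd (f : Y → Mat ι) (g : Y → Mat κ) : Y → Mat (ι ⊕ κ) :=
  fun y => fromBlocks (f y) 0 0 (g y)

/-- Reindexing of a family of matrices. -/
def sub (e : κ ≃ ι) (f : Y → Mat ι) : Y → Mat κ := fun y => (f y).submatrix e e

/-- The family `f` becomes homotopic to `1` after adding an identity block. -/
def StNull (B : Set Y) (f : Y → Mat ι) : Prop :=
  ∃ n : ℕ, Null B (bd f (1 : Y → Mat (Fin n)))

lemma isUnit_fromBlocks {A : Mat ι} {D : Mat κ} (hA : IsUnit A) (hD : IsUnit D) :
    IsUnit (fromBlocks A 0 0 D) := by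
  rw [isUnit_iff_isUnit_det, det_fromBlocks_zero₂₁]
  exact ((isUnit_iff_isUnit_det _).1 hA).mul ((isUnit_iff_isUnit_det _).1 hD)

lemma isUnit_submatrix {A : Mat ι} (hA : IsUnit A) (e : κ ≃ ι) :
    IsUnit (A.submatrix e e) := by
  rw [isUnit_iff_isUnit_det, Matrix.det_submatrix_equiv_self]
  exact (isUnit_iff_isUnit_det _).1 hA

lemma isUnit_inv {A : Mat ι} (hA : IsUnit A) : IsUnit A⁻¹ := by
  rw [Matrix.isUnit_nonsing_inv_iff]; exact hA

lemma mul_inv_of {A : Mat ι} (hA : IsUnit A) : A * A⁻¹ = 1 :=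
  mul_nonsing_inv _ ((isUnit_iff_isUnit_det _).1 hA)
lemma inv_mul_of {A : Mat ι} (hA : IsUnit A) : A⁻¹ * A = 1 :=
  nonsing_inv_mul _ ((isUnit_iff_isUnit_det _).1 hA)

lemma GM.one : GM B (1 : Y → Mat ι) := ⟨continuous_const, fun _ => isUnit_one, fun _ _ => rfl⟩
lemma GM.mul {f g : Y → Mat ι} (hf : GM B f) (hg : GM B g) : GM B (f * g) :=
  ⟨hf.cont.matrix_mul hg.cont, fun y => (hf.unit y).mul (hg.unit y), fun y hy => by
    simp [hf.base y hy, hg.base y hy]⟩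
lemma GM.inv {f : Y → Mat ι} (hf : GM B f) : GM B f⁻¹ :=
  ⟨continuous_matInv hf.cont hf.unit, fun y => isUnit_inv (hf.unit y), fun y hy => by
    simp [hf.base y hy]⟩
lemma GM.bd {f : Y → Mat ι} {g : Y → Mat κ} (hf : GM B f) (hg : GM B g) :
    GM B (bd f g) :=
  ⟨hf.cont.matrix_fromBlocks continuous_const continuous_const hg.cont,
    fun y => isUnit_fromBlocks (hf.unit y) (hg.unit y), fun y hy => by
    simp [BP.bd, hf.base y hy, hg.base y hy]⟩
lemma GM.sub {f : Y → Mat ι} (hf : GM B f) (e : κ ≃ ι) : GM B (sub e f) :=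
  ⟨hf.cont.matrix_submatrix e e, fun y => isUnit_submatrix (hf.unit y) e, fun y hy => by
    simp [BP.sub, hf.base y hy]⟩

lemma GM.mul_inv {f : Y → Mat ι} (hf : GM B f) : f * f⁻¹ = 1 :=
  funext fun y => mul_inv_of (hf.unit y)
lemma GM.inv_inv {f : Y → Mat ι} (hf : GM B f) : f⁻¹⁻¹ = f :=
  funext fun y => Matrix.nonsing_inv_nonsing_inv _ ((isUnit_iff_isUnit_det _).1 (hf.unit y))

lemma bd_one : bd (1 : Y → Mat ι) (1 : Y → Mat κ) = 1 := by
  funext y; simp [bd]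
lemma bd_mul (f f' : Y → Mat ι) (g g' : Y → Mat κ) :
    bd (f * f') (g * g') = bd f g * bd f' g' := by
  funext y; simp [bd, fromBlocks_multiply]
lemma bd_inv {f : Y → Mat ι} {g : Y → Mat κ} (hf : GM B f) (hg : GM B g) :
    (bd f g)⁻¹ = bd f⁻¹ g⁻¹ := by
  funext y
  refine inv_eq_left_inv ?_
  simp [bd, fromBlocks_multiply, inv_mul_of (hf.unit y), inv_mul_of (hg.unit y)]
lemma sub_one (e : κ ≃ ι) : sub e (1 : Y → Mat ι) = 1 := by
  funext y; simp [sub]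
lemma sub_inv (e : κ ≃ ι) (f : Y → Mat ι) : sub e f⁻¹ = (sub e f)⁻¹ := by
  funext y; simp [sub, Matrix.inv_submatrix_equiv]

/-! ### Null families -/

lemma Null.gm {f : Y → Mat ι} (h : Null B f) : GM B f := by
  obtain ⟨H, hc, hu, h0, h1, hB⟩ := h
  refine ⟨?_, fun y => h0 y ▸ hu y 0, fun y hy => by rw [← h0, hB y hy]⟩
  have : f = fun y => H y 0 := funext fun y => (h0 y).symm
  rw [this]
  exact hc.comp (continuous_id.prodMk continuous_const)

lemma Null.one : Null B (1 : Y → Mat ι) :=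
  ⟨fun _ _ => 1, continuous_const, fun _ _ => isUnit_one, fun _ => rfl, fun _ => rfl,
    fun _ _ _ => rfl⟩

lemma Null.mul {f g : Y → Mat ι} (hf : Null B f) (hg : Null B g) : Null B (f * g) := by
  obtain ⟨H, hc, hu, h0, h1, hB⟩ := hf
  obtain ⟨H', hc', hu', h0', h1', hB'⟩ := hg
  exact ⟨fun y t => H y t * H' y t, hc.matrix_mul hc', fun y t => (hu y t).mul (hu' y t),
    fun y => by simp [h0, h0'], fun y => by simp [h1, h1'],
    fun y hy t => by simp [hB y hy, hB' y hy]⟩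

lemma Null.inv {f : Y → Mat ι} (hf : Null B f) : Null B f⁻¹ := by
  obtain ⟨H, hc, hu, h0, h1, hB⟩ := hf
  exact ⟨fun y t => (H y t)⁻¹, continuous_matInv hc (fun q => hu q.1 q.2),
    fun y t => isUnit_inv (hu y t), fun y => by simp [h0], fun y => by simp [h1],
    fun y hy t => by simp [hB y hy]⟩

lemma Null.bd {f : Y → Mat ι} {g : Y → Mat κ} (hf : Null B f) (hg : Null B g) :
    Null B (bd f g) := by
  obtain ⟨H, hc, hu, h0, h1, hB⟩ := hf
  obtain ⟨H', hc', hu', h0', h1', hB'⟩ := hg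
  exact ⟨fun y t => fromBlocks (H y t) 0 0 (H' y t),
    hc.matrix_fromBlocks continuous_const continuous_const hc',
    fun y t => isUnit_fromBlocks (hu y t) (hu' y t),
    fun y => by simp [h0, h0', BP.bd], fun y => by simp [h1, h1'],
    fun y hy t => by simp [hB y hy, hB' y hy]⟩

lemma Null.sub {f : Y → Mat ι} (hf : Null B f) (e : κ ≃ ι) : Null B (sub e f) := by
  obtain ⟨H, hc, hu, h0, h1, hB⟩ := hf
  exact ⟨fun y t => (H y t).submatrix e e, hc.matrix_submatrix e e,
    fun y t => isUnit_submatrix (hu y t) e, fun y => by simp [h0, BP.sub],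
    fun y => by simp [h1], fun y hy t => by simp [hB y hy]⟩

lemma sub_symm_sub (e : κ ≃ ι) (f : Y → Mat ι) : BP.sub e.symm (BP.sub e f) = f := by
  funext y; simp [sub]

lemma Null.of_sub {f : Y → Mat ι} {e : κ ≃ ι} (h : Null B (BP.sub e f)) : Null B f := by
  have := h.sub e.symm
  rwa [sub_symm_sub] at this

lemma isUnit_upper (X : Matrix ι κ ℂ) :
    IsUnit (fromBlocks (1 : Mat ι) X 0 (1 : Mat κ)) := by
  rw [isUnit_iff_isUnit_det, det_fromBlocks_zero₂₁]; simp

lemma isUnit_lower (X : Matrix κ ι ℂ) :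
    IsUnit (fromBlocks (1 : Mat ι) 0 X (1 : Mat κ)) := by
  rw [isUnit_iff_isUnit_det, Matrix.det_fromBlocks_zero₁₂]; simp

/-- `diag (g, g⁻¹)` is a product of elementary matrices, hence null. -/
lemma null_bd_inv {g : Y → Mat ι} (hg : GM B g) : Null B (BP.bd g g⁻¹) := by
  let W : ℂ → Mat ι → Mat (ι ⊕ ι) := fun s A =>
    fromBlocks 1 (s • A) 0 1 * fromBlocks 1 0 (-(s • A⁻¹)) 1 *
      fromBlocks 1 (s • A) 0 1
  have hWu : ∀ s A, IsUnit (W s A) := fun s A =>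
    ((isUnit_upper _).mul (isUnit_lower _)).mul (isUnit_upper _)
  have hWc : Continuous fun q : Y × I => W (1 - (q.2 : ℝ) : ℝ) (g q.1) := by
    have h1 : Continuous fun q : Y × I => (((1 - (q.2 : ℝ) : ℝ) : ℂ)) := by fun_prop
    have h2 := h1.smul (hg.cont.comp continuous_fst)
    have h3 := h1.smul ((continuous_matInv hg.cont hg.unit).comp continuous_fst)
    exact ((continuous_const.matrix_fromBlocks h2 continuous_const continuous_const).matrix_mul
      (continuous_const.matrix_fromBlocks continuous_const h3.neg continuous_const)).matrix_mul
      (continuous_const.matrix_fromBlocks h2 continuous_const continuous_const)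
  have hWc1 : Continuous fun q : Y × I => W (1 - (q.2 : ℝ) : ℝ) (1 : Mat ι) := by
    have h1 : Continuous fun q : Y × I => (((1 - (q.2 : ℝ) : ℝ) : ℂ)) := by fun_prop
    have h2 := h1.smul (continuous_const (y := (1 : Mat ι)))
    have h3 := h1.smul (continuous_const (y := (1 : Mat ι)⁻¹))
    exact ((continuous_const.matrix_fromBlocks h2 continuous_const continuous_const).matrix_mul
      (continuous_const.matrix_fromBlocks continuous_const h3.neg continuous_const)).matrix_mul
      (continuous_const.matrix_fromBlocks h2 continuous_const continuous_const)
  have hW1 : ∀ A : Mat ι, IsUnit A → W 1 A = fromBlocks 0 A (-A⁻¹) 0 := by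
    intro A hA
    simp [W, fromBlocks_multiply, mul_inv_of hA, inv_mul_of hA]
  refine ⟨fun y t => W (1 - (t : ℝ) : ℝ) (g y) * (W (1 - (t : ℝ) : ℝ) 1)⁻¹,
    hWc.matrix_mul (continuous_matInv hWc1 fun q => hWu _ _),
    fun y t => (hWu _ _).mul (isUnit_inv (hWu _ _)), ?_, ?_, ?_⟩
  · intro y
    simp only [Set.Icc.coe_zero, _root_.sub_zero, Complex.ofReal_one]
    have h1 : (W 1 (1 : Mat ι))⁻¹ = fromBlocks 0 (-1) 1 0 := by
      refine inv_eq_left_inv ?_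
      rw [hW1 _ isUnit_one]
      simp [fromBlocks_multiply, fromBlocks_one]
    rw [h1, hW1 _ (hg.unit y)]
    simp [fromBlocks_multiply, BP.bd]
  · intro y
    have : ∀ A, W 0 A = 1 := fun A => by simp [W, fromBlocks_one]
    simp [this]
  · intro y hy t
    beta_reduce
    rw [hg.base y hy]
    exact mul_inv_of (hWu _ _)

/-! ### Stably null families -/

lemma StNull.of_null {f : Y → Mat ι} (hf : Null B f) : StNull B f := ⟨0, hf.bd Null.one⟩

lemma bd_assoc (f : Y → Mat ι) (g : Y → Mat κ) (h : Y → Mat μ) :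
    bd f (bd g h) = sub (Equiv.sumAssoc ι κ μ).symm (bd (bd f g) h) := by
  funext y
  ext i j
  rcases i with i | i | i <;> rcases j with j | j | j <;> rfl

lemma bd_comm (f : Y → Mat ι) (g : Y → Mat κ) :
    bd g f = sub (Equiv.sumComm κ ι) (bd f g) := by
  funext y
  ext i j
  rcases i with i | i <;> rcases j with j | j <;> rfl

lemma bd_sub (e : κ ≃ ι) (e' : ν ≃ μ) (f : Y → Mat ι) (g : Y → Mat μ) :
    bd (sub e f) (sub e' g) = sub (Equiv.sumCongr e e') (bd f g) := by
  funext y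
  ext i j
  rcases i with i | i <;> rcases j with j | j <;> rfl

lemma null_bd_one_iff (e : ι ≃ κ) (f : Y → Mat μ) :
    Null B (bd f (1 : Y → Mat ι)) ↔ Null B (bd f (1 : Y → Mat κ)) := by
  have h : bd f (1 : Y → Mat ι) =
      sub (Equiv.sumCongr (Equiv.refl μ) e) (bd f (1 : Y → Mat κ)) := by
    rw [← bd_sub, sub_one]; rfl
  rw [h]
  exact ⟨fun h => h.of_sub, fun h => h.sub _⟩

lemma stNull_of_bd_one {f : Y → Mat ι} (h : Null B (bd f (1 : Y → Mat κ))) :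
    StNull B f := ⟨Fintype.card κ, (null_bd_one_iff (Fintype.equivFin κ) f).1 h⟩

/-- Stably null families stay null after adding larger identity blocks. -/
lemma StNull.bd_add {f : Y → Mat ι} {n : ℕ}
    (h : Null B (BP.bd f (1 : Y → Mat (Fin n)))) (m : ℕ) :
    Null B (BP.bd f (1 : Y → Mat (Fin (n + m)))) := by
  have h1 := h.bd (Null.one (ι := Fin m) (B := B))
  have h2 := h1.sub (Equiv.sumAssoc ι (Fin n) (Fin m)).symm
  rw [← bd_assoc, bd_one] at h2
  exact (null_bd_one_iff finSumFinEquiv f).1 h2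

lemma StNull.mul {f g : Y → Mat ι} (hf : StNull B f) (hg : StNull B g) :
    StNull B (f * g) := by
  obtain ⟨n, hn⟩ := hf
  obtain ⟨m, hm⟩ := hg
  refine ⟨n + m, ?_⟩
  have h1 := StNull.bd_add hn m
  have h2 := StNull.bd_add hm n
  rw [add_comm m n] at h2
  have := h1.mul h2
  rwa [← bd_mul, mul_one] at this

lemma StNull.gm {f : Y → Mat ι} (hf : StNull B f) : GM B f := by
  obtain ⟨n, hn⟩ := hf
  have h := hn.gm
  refine ⟨?_, fun y => ?_, fun y hy => ?_⟩
  · have : f = fun y => (BP.bd f (1 : Y → Mat (Fin n)) y).submatrix Sum.inl Sum.inl :=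
      rfl
    rw [this]
    exact h.cont.matrix_submatrix _ _
  · have := h.unit y
    rw [isUnit_iff_isUnit_det] at this ⊢
    simpa [BP.bd, det_fromBlocks_zero₂₁] using this
  · have := congrArg (fun M => M.submatrix Sum.inl Sum.inl) (h.base y hy)
    ext i j
    have := congrFun (congrFun this i) j
    simpa [BP.bd, Matrix.one_apply] using this

lemma StNull.inv {f : Y → Mat ι} (hf : StNull B f) : StNull B f⁻¹ := by
  have hg := hf.gm
  obtain ⟨n, hn⟩ := hf
  refine ⟨n, ?_⟩
  have := hn.inv
  rw [bd_inv hg GM.one] at this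
  simpa using this

lemma StNull.sub {f : Y → Mat ι} (hf : StNull B f) (e : κ ≃ ι) : StNull B (sub e f) := by
  obtain ⟨n, hn⟩ := hf
  refine ⟨n, ?_⟩
  have := hn.sub (Equiv.sumCongr e (Equiv.refl (Fin n)))
  rw [← bd_sub, sub_one] at this
  exact this

lemma StNull.of_sub {f : Y → Mat ι} {e : κ ≃ ι} (h : StNull B (BP.sub e f)) :
    StNull B f := by
  have := h.sub e.symm
  rwa [sub_symm_sub] at this

lemma StNull.bd_one {f : Y → Mat ι} (hf : StNull B f) :
    StNull B (BP.bd f (1 : Y → Mat κ)) := by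
  obtain ⟨n, hn⟩ := hf
  refine stNull_of_bd_one (κ := Fin n) ?_
  have h1 := (hn.bd (Null.one (ι := κ) (B := B))).sub (Equiv.sumAssoc ι (Fin n) κ).symm
  rw [← bd_assoc, BP.bd_one] at h1
  have h2 : Null B (BP.bd f (1 : Y → Mat (κ ⊕ Fin n))) :=
    (null_bd_one_iff (Equiv.sumComm (Fin n) κ) f).1 h1
  rw [← BP.bd_one, bd_assoc] at h2
  exact h2.of_sub

lemma StNull.of_bd_one {f : Y → Mat ι}
    (h : StNull B (BP.bd f (1 : Y → Mat κ))) : StNull B f := by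
  obtain ⟨n, hn⟩ := h
  have h1 := hn.sub (Equiv.sumAssoc ι κ (Fin n)).symm
  rw [← bd_assoc, BP.bd_one] at h1
  exact stNull_of_bd_one h1

lemma StNull.one_bd {f : Y → Mat ι} (hf : StNull B f) :
    StNull B (BP.bd (1 : Y → Mat κ) f) := by
  rw [bd_comm]; exact hf.bd_one.sub _

lemma StNull.bd {f : Y → Mat ι} {g : Y → Mat κ} (hf : StNull B f)
    (hg : StNull B g) : StNull B (BP.bd f g) := by
  have h := (hf.bd_one (κ := κ)).mul (hg.one_bd (κ := ι))
  rwa [← bd_mul, mul_one, one_mul] at h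

/-- A stably null summand can be dropped. -/
lemma StNull.of_bd {f : Y → Mat ι} {g : Y → Mat κ}
    (h : StNull B (BP.bd f g)) (hg : StNull B g) : StNull B f := by
  have h1 := h.mul (hg.inv.one_bd (κ := ι))
  rw [← bd_mul, mul_one, hg.gm.mul_inv] at h1
  exact h1.of_bd_one

end gm

/-! ### The group of stable classes -/

section sgroup
variable {Y : Type} [TopologicalSpace Y] {B : Set Y}
variable {μ ν : Type} [Fintype μ] [DecidableEq μ] [Fintype ν] [DecidableEq ν]

/-- Stable homotopy of invertible families, possibly of different sizes. -/
def Eqv (B : Set Y) (f : Y → Mat ι) (g : Y → Mat κ) : Prop := StNull B (bd f g⁻¹)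

lemma Eqv.refl {f : Y → Mat ι} (hf : GM B f) : Eqv B f f := StNull.of_null (null_bd_inv hf)

lemma Eqv.symm {f : Y → Mat ι} {g : Y → Mat κ} (hf : GM B f) (hg : GM B g)
    (h : Eqv B f g) : Eqv B g f := by
  have h1 := h.inv
  rw [bd_inv hf hg.inv, hg.inv_inv] at h1
  unfold Eqv
  rw [bd_comm]
  exact h1.sub _

lemma Eqv.trans {f : Y → Mat ι} {g : Y → Mat κ} {h : Y → Mat μ}
    (hg : GM B g) (h1 : Eqv B f g)
    (h2 : Eqv B g h) : Eqv B f h := by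
  -- `f ⊕ g⁻¹ ⊕ g ⊕ h⁻¹` is a reindexing of `(f ⊕ h⁻¹) ⊕ (g ⊕ g⁻¹)`
  have h3 := h1.bd h2
  have e : bd (bd f h⁻¹) (bd g g⁻¹) = sub
      (⟨fun x => match x with
        | .inl (.inl i) => .inl (.inl i) | .inl (.inr i) => .inr (.inr i)
        | .inr (.inl i) => .inr (.inl i) | .inr (.inr i) => .inl (.inr i),
        fun x => match x with
        | .inl (.inl i) => .inl (.inl i) | .inl (.inr i) => .inr (.inr i)
        | .inr (.inl i) => .inr (.inl i) | .inr (.inr i) => .inl (.inr i),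
        by rintro ((i | i) | (i | i)) <;> rfl, by rintro ((i | i) | (i | i)) <;> rfl⟩ :
        (ι ⊕ μ) ⊕ (κ ⊕ κ) ≃ (ι ⊕ κ) ⊕ (κ ⊕ μ)) (bd (bd f g⁻¹) (bd g h⁻¹)) := by
    funext y
    ext i j
    rcases i with (i | i) | (i | i) <;> rcases j with (j | j) | (j | j) <;> rfl
  have h4 : StNull B (bd (bd f h⁻¹) (bd g g⁻¹)) := by rw [e]; exact h3.sub _
  exact h4.of_bd (Eqv.refl hg)

lemma Eqv.bd {f : Y → Mat ι} {g : Y → Mat κ} {f' : Y → Mat μ}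
    {g' : Y → Mat ν} (hg : GM B g) (hg' : GM B g')
    (h : Eqv B f g) (h' : Eqv B f' g') : Eqv B (bd f f') (bd g g') := by
  have h3 := StNull.bd h h'
  unfold Eqv
  rw [bd_inv hg hg']
  have e : BP.bd (BP.bd f f') (BP.bd g⁻¹ g'⁻¹) = BP.sub
      (⟨fun x => match x with
        | .inl (.inl i) => .inl (.inl i) | .inl (.inr i) => .inr (.inl i)
        | .inr (.inl i) => .inl (.inr i) | .inr (.inr i) => .inr (.inr i),
        fun x => match x with
        | .inl (.inl i) => .inl (.inl i) | .inl (.inr i) => .inr (.inl i)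
        | .inr (.inl i) => .inl (.inr i) | .inr (.inr i) => .inr (.inr i),
        by rintro ((i | i) | (i | i)) <;> rfl, by rintro ((i | i) | (i | i)) <;> rfl⟩ :
        (ι ⊕ μ) ⊕ (κ ⊕ ν) ≃ (ι ⊕ κ) ⊕ (μ ⊕ ν)) (BP.bd (BP.bd f g⁻¹) (BP.bd f' g'⁻¹)) := by
    funext y
    ext i j
    rcases i with (i | i) | (i | i) <;> rcases j with (j | j) | (j | j) <;> rfl
  rw [e]
  exact h3.sub _

lemma eqv_sub {f : Y → Mat ι} (hf : GM B f) (e : κ ≃ ι) : Eqv B (sub e f) f := by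
  have h := (Eqv.refl hf).sub (Equiv.sumCongr e (Equiv.refl ι))
  rw [← bd_sub] at h
  exact h

variable (B) in
/-- Representatives: invertible families of some size `n`, equal to `1` on `B`. -/
structure Rep : Type where
  /-- the size -/
  n : ℕ
  /-- the family -/
  f : Y → Mat (Fin n)
  gm : GM B f

instance repSetoid : Setoid (Rep B) where
  r x y := Eqv B x.f y.f
  iseqv := ⟨fun x => Eqv.refl x.gm, fun {x y} h => Eqv.symm x.gm y.gm h,
    fun {_ y _} h h' => Eqv.trans y.gm h h'⟩

variable (B) in
/-- The group of stable homotopy classes of maps from `(Y, B)` to the invertible matrices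
(the topological `K`-group `K⁻¹(Y, B)`). -/
def SGrp : Type := Quotient (repSetoid (B := B))

lemma gm_sub_equivFin {f : Y → Mat ι} (h : GM B f) : GM B (sub (Fintype.equivFin ι).symm f) :=
  h.sub _

open Classical in
variable (B) in
/-- The class of an invertible family, indexed by an arbitrary finite type (the class of the
empty family when the argument is not an invertible family equal to `1` on `B`). -/
noncomputable def cl (f : Y → Mat ι) : SGrp B :=
  if h : GM B f then
    Quotient.mk repSetoid (⟨_, sub (Fintype.equivFin ι).symm f, gm_sub_equivFin h⟩ : Rep B)
  else Quotient.mk repSetoid (⟨0, 1, GM.one⟩ : Rep B)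

lemma cl_def {f : Y → Mat ι} (h : GM B f) : cl B f = Quotient.mk repSetoid
    (⟨_, sub (Fintype.equivFin ι).symm f, gm_sub_equivFin h⟩ : Rep B) := dif_pos h

lemma cl_eq_iff {f : Y → Mat ι} {g : Y → Mat κ} (hf : GM B f) (hg : GM B g) :
    cl B f = cl B g ↔ Eqv B f g := by
  rw [cl_def hf, cl_def hg]
  refine Iff.trans (Quotient.eq (r := repSetoid (B := B))) ?_
  change Eqv B (sub _ f) (sub _ g) ↔ _
  have h1 := eqv_sub hf (Fintype.equivFin ι).symm
  have h2 := eqv_sub hg (Fintype.equivFin κ).symm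
  constructor
  · intro h
    exact ((h1.symm (gm_sub_equivFin hf) hf).trans (gm_sub_equivFin hf) h).trans
      (gm_sub_equivFin hg) h2
  · intro h
    exact (h1.trans hf h).trans hg (h2.symm (gm_sub_equivFin hg) hg)

lemma cl_exists (x : SGrp B) : ∃ n, ∃ f : Y → Mat (Fin n), GM B f ∧ cl B f = x := by
  obtain ⟨⟨n, f, hf⟩, rfl⟩ := Quotient.exists_rep x
  refine ⟨n, f, hf, ?_⟩
  rw [cl_def hf]
  exact Quotient.sound (eqv_sub hf _)

noncomputable instance : Zero (SGrp B) := ⟨Quotient.mk repSetoid (⟨0, 1, GM.one⟩ : Rep B)⟩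
noncomputable instance : Add (SGrp B) := ⟨Quotient.map₂
  (fun x y => (⟨x.n + y.n, sub finSumFinEquiv.symm (bd x.f y.f), (x.gm.bd y.gm).sub _⟩ : Rep B))
  (by
    intro x x' hx y y' hy
    change Eqv B _ _
    have h := Eqv.bd x'.gm y'.gm hx hy
    exact ((eqv_sub (x.gm.bd y.gm) _).trans (x.gm.bd y.gm) h).trans (x'.gm.bd y'.gm)
      ((eqv_sub (x'.gm.bd y'.gm) _).symm ((x'.gm.bd y'.gm).sub _) (x'.gm.bd y'.gm)))⟩
noncomputable instance : Neg (SGrp B) := ⟨Quotient.map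
  (fun x => (⟨x.n, x.f⁻¹, x.gm.inv⟩ : Rep B))
  (by
    intro x x' hx
    change Eqv B _ _
    have hx : Eqv B _ _ := hx
    have := StNull.inv hx
    rwa [bd_inv x.gm x'.gm.inv] at this)⟩

lemma cl_bd {f : Y → Mat ι} {g : Y → Mat κ} (hf : GM B f) (hg : GM B g) :
    cl B (bd f g) = cl B f + cl B g := by
  have h1 := (eqv_sub hf (Fintype.equivFin ι).symm).bd hf hg
    (eqv_sub hg (Fintype.equivFin κ).symm)
  have hfg := (gm_sub_equivFin hf).bd (gm_sub_equivFin hg)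
  have h2 := (eqv_sub hfg finSumFinEquiv.symm).trans hfg h1
  have h3 := (cl_eq_iff (hf.bd hg) (hfg.sub finSumFinEquiv.symm)).2
    (h2.symm (hfg.sub _) (hf.bd hg))
  rw [h3]
  have h4 : ∀ (n : ℕ) (u : Y → Mat (Fin n)) (hu : GM B u),
      cl B u = Quotient.mk repSetoid (⟨n, u, hu⟩ : Rep B) := by
    intro n u hu
    rw [cl_def hu]
    exact Quotient.sound (eqv_sub hu _)
  rw [h4 _ _ (hfg.sub _)]
  rw [cl_def hf, cl_def hg]
  rfl

lemma cl_inv {f : Y → Mat ι} (hf : GM B f) : cl B f⁻¹ = -cl B f := by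
  rw [cl_def hf, cl_def hf.inv]
  refine Quotient.sound ?_
  have := Eqv.refl (gm_sub_equivFin hf).inv
  change Eqv B (sub _ f⁻¹) (sub _ f)⁻¹
  rwa [← sub_inv] at this ⊢

lemma cl_one : cl B (1 : Y → Mat ι) = 0 := by
  rw [cl_def GM.one]
  refine Quotient.sound ?_
  have h : StNull B (bd (sub (Fintype.equivFin ι).symm (1 : Y → Mat ι))
      (1 : Y → Mat (Fin 0))⁻¹) := by
    rw [sub_one, inv_one, bd_one]
    exact StNull.of_null Null.one
  exact h

lemma cl_eq_zero_iff {f : Y → Mat ι} (hf : GM B f) : cl B f = 0 ↔ StNull B f := by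
  rw [← cl_one (ι := Fin 0), cl_eq_iff hf GM.one, Eqv, inv_one]
  exact ⟨fun h => h.of_bd_one, fun h => h.bd_one⟩

lemma cl_sub {f : Y → Mat ι} (hf : GM B f) (e : κ ≃ ι) : cl B (sub e f) = cl B f :=
  (cl_eq_iff (hf.sub e) hf).2 (eqv_sub hf e)

noncomputable instance : AddCommGroup (SGrp B) where
  zsmul := zsmulRec
  nsmul := nsmulRec
  add_assoc := by
    intro x y z
    obtain ⟨_, f, hf, rfl⟩ := cl_exists x
    obtain ⟨_, g, hg, rfl⟩ := cl_exists y
    obtain ⟨_, h, hh, rfl⟩ := cl_exists z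
    rw [← cl_bd hf hg, ← cl_bd hg hh, ← cl_bd (hf.bd hg) hh, ← cl_bd hf (hg.bd hh), bd_assoc,
      cl_sub ((hf.bd hg).bd hh)]
  zero_add := by
    intro x
    obtain ⟨_, f, hf, rfl⟩ := cl_exists x
    rw [← cl_one (ι := Fin 0), ← cl_bd GM.one hf, cl_eq_iff (GM.one.bd hf) hf, Eqv]
    have h := (Eqv.refl hf).one_bd (κ := Fin 0)
    rw [bd_assoc] at h
    exact h.of_sub
  add_zero := by
    intro x
    obtain ⟨_, f, hf, rfl⟩ := cl_exists x
    rw [← cl_one (ι := Fin 0), ← cl_bd hf GM.one, bd_comm, cl_sub (GM.one.bd hf),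
      cl_eq_iff (GM.one.bd hf) hf, Eqv]
    have h := (Eqv.refl hf).one_bd (κ := Fin 0)
    rw [bd_assoc] at h
    exact h.of_sub
  neg_add_cancel := by
    intro x
    obtain ⟨_, f, hf, rfl⟩ := cl_exists x
    rw [← cl_inv hf, ← cl_bd hf.inv hf, cl_eq_zero_iff (hf.inv.bd hf), bd_comm]
    exact (Eqv.refl hf).sub _
  add_comm := by
    intro x y
    obtain ⟨_, f, hf, rfl⟩ := cl_exists x
    obtain ⟨_, g, hg, rfl⟩ := cl_exists y
    rw [← cl_bd hf hg, ← cl_bd hg hf, bd_comm, cl_sub (hg.bd hf)]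

lemma cl_mul {f g : Y → Mat ι} (hf : GM B f) (hg : GM B g) :
    cl B (f * g) = cl B f + cl B g := by
  have h1 : bd (f * g) g⁻¹ = bd f 1 * bd g g⁻¹ := by rw [← bd_mul, one_mul]
  have h2 : bd (bd (f * g) g⁻¹) f⁻¹ = bd (bd f 1) f⁻¹ * bd (bd g g⁻¹) 1 := by
    rw [h1, ← bd_mul (bd f 1) (bd g g⁻¹) f⁻¹ 1, mul_one]
  have h3 : StNull B (bd (bd f (1 : Y → Mat ι)) f⁻¹) := by
    rw [← cl_eq_zero_iff ((hf.bd GM.one).bd hf.inv), cl_bd (hf.bd GM.one) hf.inv,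
      cl_bd hf GM.one, cl_one, cl_inv hf]
    abel
  have h4 : StNull B (bd (bd g g⁻¹) (1 : Y → Mat ι)) := (Eqv.refl hg).bd_one
  have h5 : StNull B (bd (bd (f * g) g⁻¹) f⁻¹) := by
    rw [h2]; exact h3.mul h4
  rw [← cl_eq_zero_iff (((hf.mul hg).bd hg.inv).bd hf.inv), cl_bd ((hf.mul hg).bd hg.inv) hf.inv,
    cl_bd (hf.mul hg) hg.inv, cl_inv hf, cl_inv hg] at h5
  rw [← sub_eq_zero, ← h5]
  abel

/-- Homotopic families, relative to `B`, have the same class. -/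
lemma cl_homotopy (H : Y → I → Mat ι) (hc : Continuous (uncurry H))
    (hu : ∀ y t, IsUnit (H y t)) (hB : ∀ y ∈ B, ∀ t, H y t = 1) :
    cl B (fun y => H y 0) = cl B (fun y => H y 1) := by
  have g0 : GM B (fun y => H y 0) := ⟨hc.comp (continuous_id.prodMk continuous_const),
    fun y => hu y 0, fun y hy => hB y hy 0⟩
  have g1 : GM B (fun y => H y 1) := ⟨hc.comp (continuous_id.prodMk continuous_const),
    fun y => hu y 1, fun y hy => hB y hy 1⟩
  have h : Null B ((fun y => H y 0) * (fun y => H y 1)⁻¹) :=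
    ⟨fun y t => H y t * (H y 1)⁻¹, hc.matrix_mul (continuous_matInv
      (hc.comp (continuous_fst.prodMk continuous_const)) fun q => hu _ _),
      fun y t => (hu y t).mul (isUnit_inv (hu y 1)), fun y => rfl,
      fun y => mul_inv_of (hu y 1), fun y hy t => by simp [hB y hy]⟩
  have h2 := (cl_eq_zero_iff h.gm).2 (StNull.of_null h)
  rw [cl_mul g0 g1.inv, cl_inv g1] at h2
  exact add_neg_eq_zero.1 h2
end sgroup

/-! ### Laurent approximation of families of loops -/

section
/-- The standard loop `z = exp (2πit)` in the complex plane. -/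
noncomputable def zt (t : ℝ) : ℂ := Complex.exp (2 * Real.pi * Complex.I * t)

lemma continuous_zt : Continuous zt := by unfold zt; fun_prop
lemma zt_zero : zt 0 = 1 := by simp [zt]
lemma zt_one : zt 1 = 1 := by simp [zt]
lemma zt_ne (t : ℝ) : zt t ≠ 0 := Complex.exp_ne_zero _
lemma norm_zt (t : ℝ) : ‖zt t‖ = 1 := by
  have : (2 * Real.pi * Complex.I * t : ℂ) = ((2 * Real.pi * t : ℝ) : ℂ) * Complex.I := by
    push_cast; ring
  rw [zt, this, Complex.norm_exp_ofReal_mul_I]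
lemma zt_star (t : ℝ) : star (zt t) * zt t = 1 := by
  have := Complex.conj_mul' (zt t)
  rw [norm_zt] at this
  simpa using this

lemma exists_pou_approx {K E : Type} [TopologicalSpace K] [CompactSpace K] [T2Space K]
    [NormedAddCommGroup E] [NormedSpace ℝ E] (G : C(K, E)) {ε : ℝ} (hε : 0 < ε) :
    ∃ (n : ℕ) (φ : Fin n → C(K, ℝ)) (k : Fin n → K),
      ∀ x, ‖G x - ∑ i, φ i x • G (k i)‖ ≤ ε := by
  have hopen : ∀ x : K, IsOpen {x' | ‖G x' - G x‖ < ε} := fun x =>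
    isOpen_lt (by fun_prop) continuous_const
  obtain ⟨t, ht⟩ := isCompact_univ.elim_finite_subcover (fun x : K => {x' | ‖G x' - G x‖ < ε})
    hopen (fun x _ => Set.mem_iUnion.2 ⟨x, by simpa using hε⟩)
  obtain ⟨P, hP⟩ := PartitionOfUnity.exists_isSubordinate (s := (Set.univ : Set K)) isClosed_univ
    (fun i : t => {x' | ‖G x' - G i‖ < ε}) (fun i => hopen i) (by
      intro x hx
      obtain ⟨i, hi, hx⟩ := Set.mem_iUnion₂.1 (ht hx)
      exact Set.mem_iUnion.2 ⟨⟨i, hi⟩, hx⟩)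
  have hsum : ∀ x, ∑ i, P i x = 1 := fun x => by
    rw [← finsum_eq_sum_of_fintype]; exact P.sum_eq_one (Set.mem_univ x)
  have key : ∀ x, ‖G x - ∑ i, P i x • G i‖ ≤ ε := by
    intro x
    have h1 : G x - ∑ i, P i x • G i = ∑ i, P i x • (G x - G i) := by
      simp only [smul_sub, Finset.sum_sub_distrib, ← Finset.sum_smul, hsum, one_smul]
    rw [h1]
    calc _ ≤ ∑ i, ‖P i x • (G x - G i)‖ := norm_sum_le _ _
      _ ≤ ∑ i, P i x * ε := by
          refine Finset.sum_le_sum fun i _ => ?_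
          rw [norm_smul, Real.norm_of_nonneg (P.nonneg i x)]
          by_cases h : P i x = 0
          · simp [h]
          · refine mul_le_mul_of_nonneg_left (le_of_lt ?_) (P.nonneg i x)
            exact hP i (subset_tsupport _ h)
      _ = ε := by rw [← Finset.sum_mul, hsum, one_mul]
  let e := Fintype.equivFin t
  refine ⟨_, fun i => P (e.symm i), fun i => (e.symm i : K), fun x => ?_⟩
  have := key x
  rwa [← e.symm.sum_comp] at this

/-- Trigonometric polynomials are dense in the continuous functions on the circle. -/
lemma exists_trig_approx (φ : C(AddCircle (1:ℝ), ℝ)) {ε : ℝ} (hε : 0 < ε) :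
    ∃ c : ℤ →₀ ℂ, ∀ t : ℝ, ‖((φ t : ℝ) : ℂ) - c.sum fun n a => a * zt t ^ n‖ ≤ ε := by
  have : Fact (0 < (1:ℝ)) := ⟨one_pos⟩
  let ψ : C(AddCircle (1:ℝ), ℂ) := ⟨fun x => (φ x : ℂ), by fun_prop⟩
  have h1 : ψ ∈ (Submodule.span ℂ (Set.range <| @fourier 1)).topologicalClosure := by
    rw [span_fourier_closure_eq_top]; trivial
  rw [← SetLike.mem_coe, Submodule.topologicalClosure_coe, Metric.mem_closure_iff] at h1
  obtain ⟨p, hp, hd⟩ := h1 ε hε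
  obtain ⟨c, rfl⟩ := Finsupp.mem_span_range_iff_exists_finsupp.1 hp
  refine ⟨c, fun t => ?_⟩
  have h2 := (ContinuousMap.dist_apply_le_dist (f := ψ) (g := c.sum fun i a => a • fourier i)
    (t : AddCircle (1:ℝ))).trans hd.le
  rw [dist_eq_norm] at h2
  have h3 : (c.sum fun i a => a • fourier i : C(AddCircle (1:ℝ), ℂ)) (t : AddCircle (1:ℝ))
      = c.sum fun n a => a * zt t ^ n := by
    unfold Finsupp.sum
    rw [ContinuousMap.sum_apply]
    refine Finset.sum_congr rfl fun n _ => ?_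
    rw [ContinuousMap.smul_apply, fourier_coe_apply, smul_eq_mul]
    beta_reduce
    rw [zt, ← Complex.exp_int_mul]
    congr 2
    push_cast
    ring
  rwa [h3] at h2

variable {Y : Type} [TopologicalSpace Y] [CompactSpace Y]

/-- Laurent polynomial approximation of a family of matrix loops, keeping the loops over `B`
equal to zero. -/
theorem laurent_approx (B : Set Y) (D : Y → I → Mat ι)
    (hD : Continuous (uncurry D)) (h01 : ∀ y, D y 0 = D y 1)
    (hB : ∀ y ∈ B, ∀ t, D y t = 0) {ε : ℝ} (hε : 0 < ε) :
    ∃ (M d : ℕ) (a : ℕ → Y → Mat ι), (∀ j, Continuous (a j)) ∧ (∀ j, ∀ y ∈ B, a j y = 0) ∧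
      ∀ y (t : I), ‖zt t ^ M • D y t - ∑ j ∈ Finset.range d, zt t ^ j • a j y‖ ≤ ε := by
  have : Fact (0 < (1:ℝ)) := ⟨one_pos⟩
  let f : ℝ → C(Y, Mat ι) := fun t =>
    ⟨fun y => D y (Set.projIcc 0 1 zero_le_one t),
      hD.comp (continuous_id.prodMk continuous_const)⟩
  have hf : Continuous f := by
    refine ContinuousMap.continuous_of_continuous_uncurry _ ?_
    exact hD.comp ((continuous_snd).prodMk ((continuous_projIcc (h := zero_le_one (α := ℝ))).comp continuous_fst))
  let G : C(AddCircle (1:ℝ), C(Y, Mat ι)) :=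
    ⟨AddCircle.liftIco 1 0 f, AddCircle.liftIco_continuous (by
      ext1 y; simp [f, h01]) hf.continuousOn⟩
  have hG1 : ∀ t : I, ∀ y, G ((t : ℝ) : AddCircle (1:ℝ)) y = D y t := by
    intro t y
    rcases eq_or_lt_of_le t.2.2 with h | h
    · have ht : t = 1 := Subtype.ext h
      subst ht
      have h0 : (((1 : I) : ℝ) : AddCircle (1:ℝ)) = ((0:ℝ) : AddCircle (1:ℝ)) := by
        simp
      rw [h0]
      change AddCircle.liftIco 1 0 f _ y = _
      rw [AddCircle.liftIco_coe_apply (by simp)]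
      simp [f, h01]
    · change AddCircle.liftIco 1 0 f _ y = _
      rw [AddCircle.liftIco_coe_apply (by simpa using ⟨t.2.1, h⟩)]
      simp [f]
  have hG2 : ∀ x : AddCircle (1:ℝ), ∃ t : I, x = ((t:ℝ) : AddCircle (1:ℝ)) := by
    intro x
    obtain ⟨t, ht, rfl⟩ := AddCircle.eq_coe_Ico x
    exact ⟨⟨t, ht.1, ht.2.le⟩, rfl⟩
  obtain ⟨n, φ, k, hk⟩ := exists_pou_approx G (half_pos hε)
  let K : ℝ := 1 + ∑ i, ‖G (k i)‖
  have hK : 0 < K := by positivity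
  choose c hc using fun i => exists_trig_approx (φ i) (div_pos (half_pos hε) hK)
  obtain ⟨M, hM⟩ : ∃ M : ℕ, ∀ i, ∀ m ∈ (c i).support, m.natAbs ≤ M := by
    let S : Finset ℤ := Finset.univ.biUnion fun i => (c i).support
    refine ⟨S.sup Int.natAbs, fun i m hm => Finset.le_sup (f := Int.natAbs)
      (Finset.mem_biUnion.2 ⟨i, Finset.mem_univ _, hm⟩)⟩
  refine ⟨M, 2 * M + 1, fun j y => ∑ i, c i (j - M) • G (k i) y, fun j => ?_, fun j y hy => ?_,
    fun y t => ?_⟩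
  · refine continuous_finsetSum _ fun i _ => ?_
    exact (ContinuousMap.continuous (G (k i))).const_smul (c i (j - M))
  · refine Finset.sum_eq_zero fun i _ => ?_
    obtain ⟨t, ht⟩ := hG2 (k i)
    rw [ht, hG1, hB y hy, smul_zero]
  · have h1 : ∀ i, zt t ^ M * ((c i).sum fun n a => a * zt t ^ n)
        = ∑ j ∈ Finset.range (2 * M + 1), zt t ^ j * c i (j - M) := by
      intro i
      rw [Finsupp.sum_of_support_subset (c i) (s := Finset.Icc (-(M:ℤ)) M) (fun m hm => by
        have := hM i m hm
        rw [Finset.mem_Icc]; omega) _ (by simp), Finset.mul_sum]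
      refine Finset.sum_nbij' (fun m : ℤ => (m + M).toNat) (fun j : ℕ => (j : ℤ) - M) ?_ ?_ ?_ ?_ ?_
      · intro m hm
        rw [Finset.mem_Icc] at hm
        rw [Finset.mem_range]; omega
      · intro j hj
        rw [Finset.mem_range] at hj
        rw [Finset.mem_Icc]; omega
      · intro m hm
        rw [Finset.mem_Icc] at hm
        omega
      · intro j hj
        omega
      · intro m hm
        rw [Finset.mem_Icc] at hm
        have e1 : (((m + M).toNat : ℕ) : ℤ) = m + M := Int.toNat_of_nonneg (by omega)
        rw [e1, add_sub_cancel_right, ← zpow_natCast (zt t) (m + M).toNat, e1,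
          zpow_add₀ (zt_ne t), zpow_natCast]
        ring
    have h2 : ∑ j ∈ Finset.range (2 * M + 1), zt t ^ j • ∑ i, c i (j - M) • G (k i) y
        = zt t ^ M • ∑ i, ((c i).sum fun n a => a * zt t ^ n) • G (k i) y := by
      simp only [Finset.smul_sum, smul_smul, h1]
      rw [Finset.sum_comm]
      simp only [Finset.sum_smul]
    rw [h2, ← smul_sub, norm_smul, norm_pow, norm_zt, one_pow, one_mul]
    have h3 := (ContinuousMap.norm_coe_le_norm _ y).trans (hk ((t:ℝ) : AddCircle (1:ℝ)))
    have h4 : (G ((t:ℝ) : AddCircle (1:ℝ)) - ∑ i, φ i ((t:ℝ) : AddCircle (1:ℝ)) • G (k i)) y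
      = D y t - ∑ i, ((φ i ((t:ℝ) : AddCircle (1:ℝ)) : ℝ) : ℂ) • G (k i) y := by
      rw [ContinuousMap.sub_apply, hG1, ContinuousMap.sum_apply]
      simp
    rw [h4] at h3
    have h5 : ‖∑ i, ((φ i ((t:ℝ) : AddCircle (1:ℝ)) : ℝ) : ℂ) • G (k i) y
        - ∑ i, ((c i).sum fun n a => a * zt t ^ n) • G (k i) y‖ ≤ ε / 2 := by
      rw [← Finset.sum_sub_distrib]
      calc _ ≤ ∑ i, ε / 2 / K * ‖G (k i)‖ := by
            refine norm_sum_le_of_le _ fun i _ => ?_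
            rw [← sub_smul, norm_smul]
            exact mul_le_mul (hc i t) (ContinuousMap.norm_coe_le_norm _ y) (norm_nonneg _)
              (by positivity)
        _ = ε / 2 / K * ∑ i, ‖G (k i)‖ := by rw [Finset.mul_sum]
        _ ≤ ε / 2 / K * K := by
            refine mul_le_mul_of_nonneg_left ?_ (by positivity)
            simp [K]
        _ = ε / 2 := by field_simp
    calc _ ≤ _ := norm_sub_le_norm_sub_add_norm_sub _ _ _
      _ ≤ ε / 2 + ε / 2 := add_le_add h3 h5
      _ = ε := by ring
end

/-! ### Lyapunov forms -/

section

/-- The Lyapunov condition: `H` is hermitian and `c* H + H c` is positive definite. -/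
def Lyap (c H : Mat ι) : Prop := H.IsHermitian ∧ (cᴴ * H + H * c).PosDef

lemma Lyap.convex_left {c c' H : Mat ι} (h : Lyap c H) (h' : Lyap c' H) {a b : ℝ}
    (ha : 0 ≤ a) (hb : 0 ≤ b) (hab : a + b = 1) : Lyap ((a:ℂ) • c + (b:ℂ) • c') H := by
  refine ⟨h.1, ?_⟩
  have e : ((a:ℂ) • c + (b:ℂ) • c')ᴴ * H + H * ((a:ℂ) • c + (b:ℂ) • c')
      = a • (cᴴ * H + H * c) + b • (c'ᴴ * H + H * c') := by
    simp only [conjTranspose_add, conjTranspose_smul, add_mul, mul_add, smul_add,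
      Matrix.smul_mul, Matrix.mul_smul, Complex.star_def, Complex.conj_ofReal,
      Complex.coe_smul, star_trivial]
    abel
  rw [e]
  rcases ha.eq_or_lt with rfl | ha'
  · have : b = 1 := by linarith
    subst this; simpa using h'.2
  · exact (h.2.smul ha').add_posSemidef (h'.2.posSemidef.smul hb)

lemma Lyap.convex_right {c H H' : Mat ι} (h : Lyap c H) (h' : Lyap c H') {a b : ℝ}
    (ha : 0 ≤ a) (hb : 0 ≤ b) (hab : a + b = 1) : Lyap c (a • H + b • H') := by
  refine ⟨?_, ?_⟩
  · have h1 := h.1.eq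
    have h2 := h'.1.eq
    simp [IsHermitian, conjTranspose_add, conjTranspose_smul, h1, h2]
  have e : cᴴ * (a • H + b • H') + (a • H + b • H') * c
      = a • (cᴴ * H + H * c) + b • (cᴴ * H' + H' * c) := by
    simp only [add_mul, mul_add, smul_add, Matrix.smul_mul, Matrix.mul_smul]
    abel
  rw [e]
  rcases ha.eq_or_lt with rfl | ha'
  · have : b = 1 := by linarith
    subst this; simpa using h'.2
  · exact (h.2.smul ha').add_posSemidef (h'.2.posSemidef.smul hb)

lemma isUnit_of_ker {A : Mat ι} (h : ∀ v, A *ᵥ v = 0 → v = 0) : IsUnit A := by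
  rw [← mulVec_injective_iff_isUnit]
  intro v w hvw
  rw [← sub_eq_zero]
  exact h _ (by rw [Matrix.mulVec_sub, sub_eq_zero]; exact hvw)

lemma ker_of_isUnit {A : Mat ι} (h : IsUnit A) {v : ι → ℂ} (hv : A *ᵥ v = 0) : v = 0 :=
  (mulVec_injective_iff_isUnit.2 h) (by rw [hv, mulVec_zero])

lemma star_mulVec_dot (A : Mat ι) (v w : ι → ℂ) :
    star (A *ᵥ v) ⬝ᵥ w = star v ⬝ᵥ (Aᴴ *ᵥ w) := by
  rw [Matrix.star_mulVec, Matrix.dotProduct_mulVec]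

lemma posDef_ker {P : Mat ι} (hP : P.PosDef) {v : ι → ℂ} (h : star v ⬝ᵥ (P *ᵥ v) = 0) :
    v = 0 := by
  by_contra hv
  exact (hP.dotProduct_mulVec_pos hv).ne' h

lemma Lyap.isUnit_right {c H : Mat ι} (h : Lyap c H) : IsUnit H := by
  refine isUnit_of_ker fun v hv => posDef_ker h.2 ?_
  rw [add_mulVec, ← mulVec_mulVec, ← mulVec_mulVec, hv, mulVec_zero,
    zero_add]
  have := star_mulVec_dot H v (c *ᵥ v)
  rw [h.1.eq, hv] at this
  rw [← this]; simp

/-- A matrix satisfying a Lyapunov condition has no purely imaginary eigenvalue. -/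
lemma Lyap.isUnit_sub {c H : Mat ι} (h : Lyap c H) {z : ℂ} (hz : star z = -z) :
    IsUnit (c - z • (1 : Mat ι)) := by
  refine isUnit_of_ker fun v hv => posDef_ker h.2 ?_
  have hc : c *ᵥ v = z • v := by
    rwa [sub_mulVec, smul_mulVec, one_mulVec, sub_eq_zero] at hv
  rw [add_mulVec, ← mulVec_mulVec, ← mulVec_mulVec, hc, dotProduct_add,
    ← star_mulVec_dot, hc, mulVec_smul, star_smul, hz, dotProduct_smul, smul_dotProduct]
  simp

/-- An invertible hermitian matrix is a Lyapunov form of its unitary part. -/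
lemma lyap_polar {H : Mat ι} (hH : Hᴴ = H) (hu : IsUnit H) :
    Lyap (polar H) H := by
  have h1 := polar_pd hu
  have h2 := polar_ct_selfAdjoint hu hH
  refine ⟨hH, h1.add ?_⟩
  have := h1.1.eq
  rw [conjTranspose_mul, conjTranspose_conjTranspose, hH] at this
  rw [this]; exact h1

/-- Positivity of the real part of the quadratic form, an open condition. -/
def RePos (A : Mat ι) : Prop := ∀ v : ι → ℂ, v ≠ 0 → 0 < (star v ⬝ᵥ (A *ᵥ v)).re

lemma isOpen_rePos : IsOpen {A : Mat ι | RePos A} := by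
  have e : {A : Mat ι | RePos A} =
      {A | ∀ v ∈ Metric.sphere (0 : ι → ℂ) 1, 0 < (star v ⬝ᵥ (A *ᵥ v)).re} := by
    ext A
    refine ⟨fun h v hv => h v (by rintro rfl; simp at hv), fun h v hv => ?_⟩
    have hn : 0 < ‖v‖ := norm_pos_iff.2 hv
    have := h (((‖v‖⁻¹ : ℝ) : ℂ) • v) (by
      rw [mem_sphere_zero_iff_norm, norm_smul, Complex.norm_real, norm_inv, norm_norm,
        inv_mul_cancel₀ hn.ne'])
    rw [mulVec_smul, star_smul, dotProduct_smul, smul_dotProduct, Complex.star_def,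
      Complex.conj_ofReal, smul_eq_mul, smul_eq_mul, Complex.re_ofReal_mul,
      Complex.re_ofReal_mul] at this
    have hp : 0 < ‖v‖⁻¹ := by positivity
    exact (mul_pos_iff_of_pos_left hp).1 ((mul_pos_iff_of_pos_left hp).1 this)
  rw [e, isOpen_iff_mem_nhds]
  intro A hA
  refine (isCompact_sphere (0 : ι → ℂ) 1).eventually_forall_of_forall_eventually ?_
  intro v hv
  have hc : Continuous fun q : Mat ι × (ι → ℂ) => (star q.2 ⬝ᵥ (q.1 *ᵥ q.2)).re := by
    refine Complex.continuous_re.comp ?_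
    exact (continuous_snd.star).dotProduct (continuous_fst.matrix_mulVec continuous_snd)
  exact hc.continuousAt.eventually (lt_mem_nhds (hA v hv))

lemma posDef_iff_rePos {A : Mat ι} (hA : A.IsHermitian) : A.PosDef ↔ RePos A := by
  rw [Matrix.posDef_iff_dotProduct_mulVec]
  constructor
  · intro h v hv
    exact (Complex.pos_iff.1 (h.2 hv)).1
  · intro h
    refine ⟨hA, fun {v} hv => Complex.pos_iff.2 ⟨h v hv, ?_⟩⟩
    have h1 : star (star v ⬝ᵥ (A *ᵥ v)) = star v ⬝ᵥ (A *ᵥ v) := by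
      rw [← Matrix.star_dotProduct, star_mulVec_dot, hA.eq]
    have h2 := congrArg Complex.im h1
    simp only [Complex.star_def, Complex.conj_im] at h2
    linarith

lemma isOpen_posDef_of_hermitian {Z : Type} [TopologicalSpace Z] {f : Z → Mat ι}
    (hf : Continuous f) (hh : ∀ z, (f z).IsHermitian) : IsOpen {z | (f z).PosDef} := by
  have : {z | (f z).PosDef} = f ⁻¹' {A | RePos A} := by
    ext z; exact posDef_iff_rePos (hh z)
  rw [this]
  exact isOpen_rePos.preimage hf

/-- Real functionals on complex matrices are given by the trace pairing. -/
lemma exists_trace_rep (f : Mat ι →ₗ[ℝ] ℝ) :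
    ∃ Z : Mat ι, ∀ P, f P = (Z * P).trace.re := by
  refine ⟨Matrix.of fun i j => (f (Matrix.single j i 1) : ℂ) -
    Complex.I * (f (Matrix.single j i Complex.I) : ℂ), fun P => ?_⟩
  conv_lhs => rw [Matrix.matrix_eq_sum_single P]
  rw [map_sum, Matrix.trace]
  simp only [map_sum, Matrix.diag_apply, Matrix.mul_apply, of_apply, Complex.re_sum]
  rw [Finset.sum_comm]
  refine Finset.sum_congr rfl fun i _ => Finset.sum_congr rfl fun j _ => ?_
  have : Matrix.single j i (P j i) = (P j i).re • Matrix.single j i (1:ℂ)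
      + (P j i).im • Matrix.single j i Complex.I := by
    rw [Matrix.smul_single, Matrix.smul_single, ← Matrix.single_add]
    congr 1
    simp [Complex.re_add_im]
  rw [this, map_add, map_smul, map_smul]
  simp
  ring

lemma vecMulVec_quad (Z : Mat ι) (v : ι → ℂ) :
    (Z * vecMulVec v (star v)).trace = star v ⬝ᵥ (Z *ᵥ v) := by
  rw [Matrix.mul_vecMulVec, Matrix.trace_vecMulVec, dotProduct_comm]

/-- Lyapunov's theorem: a matrix without purely imaginary eigenvalues satisfies a Lyapunov
condition.  Otherwise a separating hyperplane provides a nonzero positive semidefinite `W` with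
`c W = - W c*`, whose range is invariant and carries an imaginary eigenvalue. -/
lemma exists_lyap {c : Mat ι}
    (hc : ∀ z : ℂ, star z = -z → IsUnit (c - z • (1 : Mat ι))) : ∃ H, Lyap c H := by
  by_contra hno
  push Not at hno
  -- the cone of matrices with positive real part and the image of the Lyapunov operator
  let L : Mat ι →ₗ[ℝ] Mat ι :=
    { toFun := fun H => cᴴ * H + H * c
      map_add' := fun H H' => by rw [mul_add, add_mul]; abel
      map_smul' := fun a H => by simp [smul_add] }
  let T : Submodule ℝ (Mat ι) := (selfAdjoint.submodule ℝ (Mat ι)).map L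
  have hT : ∀ P ∈ T, P.IsHermitian ∧ ¬ RePos P := by
    rintro P ⟨H, hH, rfl⟩
    have hH : Hᴴ = H := hH
    have hP : (cᴴ * H + H * c).IsHermitian := by
      simp [IsHermitian, hH, add_comm]
    exact ⟨hP, fun h => hno H ⟨hH, (posDef_iff_rePos hP).2 h⟩⟩
  have hconv : Convex ℝ {A : Mat ι | RePos A} := by
    intro A hA A' hA' a b ha hb hab v hv
    rw [add_mulVec, dotProduct_add, smul_mulVec, smul_mulVec,
      dotProduct_smul, dotProduct_smul, Complex.add_re, Complex.smul_re, Complex.smul_re,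
      smul_eq_mul, smul_eq_mul]
    have h1 := hA v hv
    have h2 := hA' v hv
    rcases ha.eq_or_lt with rfl | ha'
    · have : b = 1 := by linarith
      subst this; simpa using h2
    · have := mul_pos ha' h1
      have := mul_nonneg hb h2.le
      linarith
  obtain ⟨f, u, hfs, hft⟩ := geometric_hahn_banach_open hconv isOpen_rePos T.convex
    (Set.disjoint_left.2 fun P h1 h2 => (hT P h2).2 h1)
  have hu : u ≤ 0 := by simpa using hft 0 T.zero_mem
  have hfT : ∀ P ∈ T, f P = 0 := by
    intro P hP
    by_contra hne
    have := hft (((u - 1) / f P) • P) (T.smul_mem _ hP)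
    rw [map_smul, smul_eq_mul, div_mul_cancel₀ _ hne] at this
    linarith
  obtain ⟨Z, hZ⟩ := exists_trace_rep (f : Mat ι →ₗ[ℝ] ℝ)
  have hZ : ∀ P, f P = (Z * P).trace.re := hZ
  set W : Mat ι := -(Z + Zᴴ) with hW
  have hWh : W.IsHermitian := by simp [IsHermitian, hW, add_comm]
  -- the real part of the quadratic form of `Z` is nonpositive
  have hquad : ∀ v : ι → ℂ, (star v ⬝ᵥ (Z *ᵥ v)).re ≤ 0 := by
    intro v
    have h1 : ∀ ε : ℝ, 0 < ε → (star v ⬝ᵥ (Z *ᵥ v)).re + ε * f 1 ≤ 0 := by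
      intro ε hε
      have hpd : (vecMulVec v (star v) + ε • (1 : Mat ι)).PosDef :=
        ((PosDef.one).smul hε).posSemidef_add (Matrix.posSemidef_vecMulVec_self_star v)
      have := hfs _ ((posDef_iff_rePos hpd.1).1 hpd)
      rw [map_add, map_smul, hZ (vecMulVec v (star v)), vecMulVec_quad, smul_eq_mul] at this
      linarith
    by_contra hpos
    push Not at hpos
    set q := (star v ⬝ᵥ (Z *ᵥ v)).re
    have := h1 (q / (2 * (1 + |f 1|))) (by positivity)
    have h2 : q / (2 * (1 + |f 1|)) * f 1 ≥ - (q / 2) := by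
      have h3 : f 1 ≥ -(1 + |f 1|) := by linarith [neg_abs_le (f 1)]
      have h4 : 0 < q / (2 * (1 + |f 1|)) := by positivity
      calc q / (2 * (1 + |f 1|)) * f 1 ≥ q / (2 * (1 + |f 1|)) * (-(1 + |f 1|)) :=
            mul_le_mul_of_nonneg_left h3 h4.le
        _ = _ := by field_simp
    linarith
  have hWq : ∀ v : ι → ℂ, star v ⬝ᵥ (W *ᵥ v) = ((-2 * (star v ⬝ᵥ (Z *ᵥ v)).re : ℝ) : ℂ) := by
    intro v
    have h1 : star v ⬝ᵥ (Zᴴ *ᵥ v) = star (star v ⬝ᵥ (Z *ᵥ v)) := by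
      rw [← star_mulVec_dot, Matrix.star_dotProduct]
    rw [hW, Matrix.neg_mulVec, add_mulVec, dotProduct_neg, dotProduct_add, h1,
      Complex.star_def, Complex.add_conj]
    push_cast; ring
  have hWpsd : W.PosSemidef := Matrix.PosSemidef.of_dotProduct_mulVec_nonneg hWh fun v => by
    rw [hWq]
    have := hquad v
    exact_mod_cast (by linarith : (0:ℝ) ≤ -2 * (star v ⬝ᵥ (Z *ᵥ v)).re)
  -- `c W = - W c*`
  have htr : ∀ H : Mat ι, Hᴴ = H → ((W * cᴴ + c * W) * H).trace.re = 0 := by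
    intro H hH
    have h1 : f (cᴴ * H + H * c) = 0 := hfT _ ⟨H, hH, rfl⟩
    rw [hZ] at h1
    have h2 : (Zᴴ * (cᴴ * H + H * c)).trace = star (Z * (cᴴ * H + H * c)).trace := by
      rw [← trace_conjTranspose, conjTranspose_mul, trace_mul_comm]
      simp [hH, add_comm]
    have h3 : ((W * cᴴ + c * W) * H).trace = (W * (cᴴ * H + H * c)).trace := by
      rw [add_mul, mul_add, trace_add, trace_add, mul_assoc W, ← mul_assoc W H c,
        trace_mul_comm (W * H) c, mul_assoc]
    rw [h3, hW, neg_mul, add_mul, Matrix.trace_neg, trace_add, h2, Complex.neg_re,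
      Complex.add_re, Complex.star_def, Complex.conj_re, h1]
    simp
  have hcW : W * cᴴ + c * W = 0 := by
    have hS : (W * cᴴ + c * W)ᴴ = W * cᴴ + c * W := by
      simp [conjTranspose_mul, hWh.eq, add_comm]
    have h1 := htr _ hS
    rw [← Matrix.trace_conjTranspose_mul_self_eq_zero_iff, hS]
    have h2 : star ((W * cᴴ + c * W) * (W * cᴴ + c * W)).trace
        = ((W * cᴴ + c * W) * (W * cᴴ + c * W)).trace := by
      rw [← trace_conjTranspose, conjTranspose_mul, hS]
    refine Complex.ext h1 ?_
    have h3 := congrArg Complex.im h2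
    simp only [Complex.star_def, Complex.conj_im] at h3
    simp only [Complex.zero_im]
    linarith
  have hcWv : ∀ v, c *ᵥ (W *ᵥ v) = W *ᵥ (-(cᴴ *ᵥ v)) := by
    intro v
    rw [Matrix.mulVec_neg, mulVec_mulVec, mulVec_mulVec, ← Matrix.neg_mulVec]
    congr 1
    exact eq_neg_of_add_eq_zero_right hcW
  -- an eigenvector of `c` in the range of `W`
  let E : Submodule ℂ (ι → ℂ) := LinearMap.range (mulVecLin W)
  have hE : ∀ x ∈ E, mulVecLin c x ∈ E := by
    rintro _ ⟨v, rfl⟩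
    exact ⟨-(cᴴ *ᵥ v), (hcWv v).symm⟩
  have hEn : Nontrivial E := by
    rw [Submodule.nontrivial_iff_ne_bot]
    intro hb
    have hW0 : W = 0 := by
      have := LinearMap.range_eq_bot.1 hb
      ext i j
      have := congrArg (fun l => l (Pi.single j 1) i) this
      simpa using this
    have h1 : (0:ℝ) = f 1 := by
      have h2 : (W).trace.re = -2 * f 1 := by
        rw [hZ, hW, mul_one, Matrix.trace_neg, trace_add, trace_conjTranspose]
        simp; ring
      rw [hW0] at h2
      simp at h2
      exact h2.symm
    have := hfs 1 ((posDef_iff_rePos PosDef.one.1).1 PosDef.one)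
    linarith
  obtain ⟨l, hl⟩ := Module.End.exists_eigenvalue ((mulVecLin c).restrict hE)
  obtain ⟨⟨x, v, hx⟩, hxl⟩ := hl.exists_hasEigenvector
  have hx : W *ᵥ v = x := hx
  have hx0 : x ≠ 0 := fun h => hxl.2 (Subtype.ext h)
  have hcx : c *ᵥ x = l • x := congrArg Subtype.val hxl.apply_eq_smul
  have hne : star v ⬝ᵥ x ≠ 0 := by
    rw [← hx, Ne, hWpsd.dotProduct_mulVec_zero_iff, hx]
    exact hx0
  have hl2 : star l = -l := by
    have h1 : star v ⬝ᵥ (c *ᵥ x) = l * (star v ⬝ᵥ x) := by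
      rw [hcx, dotProduct_smul, smul_eq_mul]
    have h2 : star v ⬝ᵥ (c *ᵥ x) = - (star l * (star v ⬝ᵥ x)) := by
      conv_lhs => rw [← hx, hcWv, Matrix.mulVec_neg, dotProduct_neg]
      congr 1
      have h3 := star_mulVec_dot W v (cᴴ *ᵥ v)
      rw [hWh.eq, hx] at h3
      rw [← h3, ← star_mulVec_dot, hcx, star_smul, smul_dotProduct, smul_eq_mul]
      congr 1
      have h4 := star_mulVec_dot W v v
      rw [hWh.eq, hx] at h4
      exact h4
    rw [h1, ← neg_mul] at h2
    have := mul_right_cancel₀ hne h2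
    linear_combination this
  exact hx0 (ker_of_isUnit (hc l hl2) (by
    rw [sub_mulVec, smul_mulVec, one_mulVec, hcx, sub_self]))

/-- A continuous family of matrices without imaginary eigenvalues, constant on a closed set,
admits a continuous family of Lyapunov matrices with prescribed constant value on that set. -/
theorem exists_lyap_family {Y : Type} [TopologicalSpace Y] [CompactSpace Y] [T2Space Y]
    {B : Set Y} (hB : IsClosed B) {c : Y → Mat ι} (hcc : Continuous c)
    (hc : ∀ y, ∀ z : ℂ, star z = -z → IsUnit (c y - z • (1 : Mat ι)))
    {H0 : Mat ι} (h0 : ∀ y ∈ B, Lyap (c y) H0) :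
    ∃ H : Y → Mat ι, Continuous H ∧ (∀ y, Lyap (c y) (H y)) ∧ ∀ y ∈ B, H y = H0 := by
  have hopen : ∀ K : Mat ι, Kᴴ = K → IsOpen {y | Lyap (c y) K} := by
    intro K hK
    have : {y | Lyap (c y) K} = {y | ((c y)ᴴ * K + K * c y).PosDef} := by
      ext y; exact ⟨fun h => h.2, fun h => ⟨hK, h⟩⟩
    rw [this]
    refine isOpen_posDef_of_hermitian ?_ fun y => by simp [IsHermitian, hK, add_comm]
    exact (hcc.matrix_conjTranspose.matrix_mul continuous_const).add
      (continuous_const.matrix_mul hcc)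
  obtain ⟨H, hH⟩ := exists_continuous_forall_mem_convex_of_local_const
    (t := fun y => {K : Mat ι | Lyap (c y) K ∧ (y ∈ B → K = H0)}) (by
      rintro y K ⟨hK, hK'⟩ K2 ⟨hK2, hK2'⟩ a b ha hb hab
      refine ⟨hK.convex_right hK2 ha hb hab, fun hy => ?_⟩
      rw [hK' hy, hK2' hy, ← add_smul, hab, one_smul]) (by
      intro y
      by_cases hy : y ∈ B
      · refine ⟨H0, ?_⟩
        filter_upwards [(hopen H0 (h0 y hy).1).mem_nhds (h0 y hy)] with x hx
        exact ⟨hx, fun _ => rfl⟩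
      · obtain ⟨K, hK⟩ := exists_lyap (hc y)
        refine ⟨K, ?_⟩
        filter_upwards [(hopen K hK.1).mem_nhds hK, hB.isOpen_compl.mem_nhds hy] with x hx hx2
        exact ⟨hx, fun h => absurd h hx2⟩)
  exact ⟨H, H.continuous, fun y => (hH y).1, fun y => (hH y).2⟩
end

/-! ### Linearization of families of loops -/

section
variable {Y : Type} [TopologicalSpace Y]

/-- The part of `Y × I` lying over `B` or over the end points. -/
def Bp (B : Set Y) : Set (Y × I) := {q | q.1 ∈ B ∨ q.2 = 0 ∨ q.2 = 1}

/-- A family `f` of invertible matrix loops agreeing over `B` with the fixed loop `f0`. -/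
structure LP (B : Set Y) (f : Y → I → Mat ι) (f0 : I → Mat ι) : Prop where
  cont : Continuous (uncurry f)
  cont0 : Continuous f0
  unit : ∀ y t, IsUnit (f y t)
  unit0 : ∀ t, IsUnit (f0 t)
  per : ∀ y, f y 1 = f y 0
  per0 : f0 1 = f0 0
  base : ∀ y ∈ B, f y = f0

/-- The normalisation of a pair of loops, equal to `1` on `Bp B`. -/
noncomputable def nrm (f : Y → I → Mat ι) (f0 : I → Mat ι) : Y × I → Mat ι :=
  fun q => (f q.1 0)⁻¹ * f q.1 q.2 * (f0 q.2)⁻¹ * f0 0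

/-- The class of a pair of loops. -/
noncomputable def clp (B : Set Y) (f : Y → I → Mat ι) (f0 : I → Mat ι) :
    SGrp (Bp B) := cl (Bp B) (nrm f f0)

variable {B : Set Y}

lemma nrm_base {f : Y → I → Mat ι} {f0 : I → Mat ι} (h : LP B f f0)
    {q : Y × I} (hq : q ∈ Bp B) : nrm f f0 q = 1 := by
  obtain ⟨y, t⟩ := q
  have u0 := inv_mul_of (h.unit0 0)
  have key : f y t = f y 0 ∧ f0 t = f0 0 → nrm f f0 (y, t) = 1 := by
    rintro ⟨h1, h2⟩
    simp only [nrm]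
    rw [h1, h2, inv_mul_of (h.unit y 0), one_mul, u0]
  rcases hq with hq | hq | hq
  · simp only [nrm]
    rw [h.base y hq, mul_assoc (f0 0)⁻¹, mul_inv_of (h.unit0 t), mul_one, u0]
  · simp only at hq
    subst hq; exact key ⟨rfl, rfl⟩
  · simp only at hq
    subst hq; exact key ⟨h.per y, h.per0⟩

lemma LP.gm {f : Y → I → Mat ι} {f0 : I → Mat ι} (h : LP B f f0) :
    GM (Bp B) (nrm f f0) := by
  refine ⟨?_, fun q => ?_, fun q hq => nrm_base h hq⟩
  · have h1 : Continuous fun q : Y × I => (f q.1 0)⁻¹ := continuous_matInv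
      (h.cont.comp (continuous_fst.prodMk continuous_const)) fun q => h.unit _ _
    have h2 : Continuous fun q : Y × I => (f0 q.2)⁻¹ := continuous_matInv
      (h.cont0.comp continuous_snd) fun q => h.unit0 _
    exact ((h1.matrix_mul h.cont).matrix_mul h2).matrix_mul continuous_const
  · exact (((isUnit_inv (h.unit _ _)).mul (h.unit _ _)).mul (isUnit_inv (h.unit0 _))).mul
      (h.unit0 0)

lemma clp_homotopy (f : I → Y → I → Mat ι) (f0 : I → I → Mat ι)
    (hc : Continuous fun q : I × Y × I => f q.1 q.2.1 q.2.2) (hc0 : Continuous (uncurry f0))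
    (h : ∀ s, LP B (f s) (f0 s)) : clp B (f 0) (f0 0) = clp B (f 1) (f0 1) := by
  refine cl_homotopy (B := Bp B) (fun q s => nrm (f s) (f0 s) q) ?_ (fun q s => (h s).gm.unit q)
    (fun q hq s => nrm_base (h s) hq)
  have h1 : Continuous fun q : (Y × I) × I => (f q.2 q.1.1 0)⁻¹ := continuous_matInv
    (hc.comp (continuous_snd.prodMk ((continuous_fst.comp continuous_fst).prodMk
      continuous_const))) fun q => (h _).unit _ _
  have h2 : Continuous fun q : (Y × I) × I => (f0 q.2 q.1.2)⁻¹ := continuous_matInv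
    (hc0.comp (continuous_snd.prodMk (continuous_snd.comp continuous_fst)))
    fun q => (h _).unit0 _
  have h3 : Continuous fun q : (Y × I) × I => f q.2 q.1.1 q.1.2 :=
    hc.comp (continuous_snd.prodMk continuous_fst)
  have h4 : Continuous fun q : (Y × I) × I => f0 q.2 0 :=
    hc0.comp (continuous_snd.prodMk continuous_const)
  exact ((h1.matrix_mul h3).matrix_mul h2).matrix_mul h4

lemma LP.one : LP B (fun _ _ => (1 : Mat ι)) 1 :=
  ⟨continuous_const, continuous_const, fun _ _ => isUnit_one, fun _ => isUnit_one, fun _ => rfl,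
    rfl, fun _ _ => rfl⟩

lemma fromBlocks_inv' {A : Mat ι} {D : Mat κ} (hA : IsUnit A) (hD : IsUnit D) :
    (fromBlocks A 0 0 D)⁻¹ = fromBlocks A⁻¹ 0 0 D⁻¹ :=
  inv_eq_left_inv (by
    rw [fromBlocks_multiply]
    simp [inv_mul_of hA, inv_mul_of hD])

lemma clp_bd {f : Y → I → Mat ι} {f0 : I → Mat ι} (h : LP B f f0)
    {g : Y → I → Mat κ} {g0 : I → Mat κ} (h' : LP B g g0) :
    clp B (fun y => bd (f y) (g y)) (bd f0 g0) = clp B f f0 + clp B g g0 := by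
  unfold clp
  rw [← cl_bd h.gm h'.gm]
  congr 1
  funext q
  simp only [nrm, BP.bd]
  rw [fromBlocks_inv' (h.unit _ _) (h'.unit _ _), fromBlocks_inv' (h.unit0 _) (h'.unit0 _)]
  simp [fromBlocks_multiply]

lemma clp_one : clp B (fun _ _ => (1 : Mat ι)) 1 = 0 := by
  unfold clp
  rw [← cl_one (ι := ι)]
  congr 1
  funext q
  simp [nrm]

lemma clp_bd_one {f : Y → I → Mat ι} {f0 : I → Mat ι} (h : LP B f f0) :
    clp B (fun y => bd (f y) (1 : I → Mat κ)) (bd f0 1) = clp B f f0 := by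
  have := clp_bd h (LP.one (ι := κ) (B := B))
  rw [clp_one, add_zero] at this
  exact this

lemma clp_left {f : Y → I → Mat ι} {f0 : I → Mat ι}
    {k : Y → Mat ι} {k0 : Mat ι} (hu : ∀ y, IsUnit (k y))
    (hu0 : IsUnit k0) :
    clp B (fun y t => k y * f y t) (fun t => k0 * f0 t) = clp B f f0 := by
  unfold clp
  congr 1
  funext q
  simp only [nrm, Matrix.mul_inv_rev]
  rw [mul_assoc (f q.1 0)⁻¹, ← mul_assoc (k q.1)⁻¹, inv_mul_of (hu _), one_mul, mul_assoc, mul_assoc,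
    mul_assoc, ← mul_assoc k0⁻¹, inv_mul_of hu0, one_mul]
  simp only [mul_assoc]

/-- An orthogonal projection matrix. -/
def IsProj (P : Mat ι) : Prop := Pᴴ = P ∧ P * P = P

/-- The Bott loop `1 + (z - 1) P`. -/
noncomputable def bott (P : Mat ι) (t : I) : Mat ι := 1 + (zt t - 1) • P

lemma bott_zero (P : Mat ι) : bott P 0 = 1 := by simp [bott, zt_zero]
lemma bott_one (P : Mat ι) : bott P 1 = 1 := by simp [bott, zt_one]

lemma IsProj.bott_uni {P : Mat ι} (hP : IsProj P) (t : I) : IsUni (bott P t) := by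
  unfold IsUni bott
  have h := zt_star t
  simp only [conjTranspose_add, conjTranspose_one, conjTranspose_smul, hP.1,
    add_mul, mul_add, one_mul, mul_one, Matrix.smul_mul, Matrix.mul_smul, hP.2, smul_smul]
  rw [add_assoc, ← add_smul, ← add_smul, star_sub, star_one]
  rw [show (star (zt t) - 1 + (zt t - 1 + (zt t - 1) * (star (zt t) - 1)) : ℂ) = 0 by
    linear_combination h, zero_smul, add_zero]

lemma exists_zt {z : ℂ} (hz : ‖z‖ = 1) : ∃ t : I, zt t = z := by
  have h1 := Complex.norm_mul_exp_arg_mul_I z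
  rw [hz, Complex.ofReal_one, one_mul] at h1
  have hp := Real.pi_pos
  have hl := Complex.neg_pi_lt_arg z
  have hu := Complex.arg_le_pi z
  have h2 : ∀ m : ℤ, zt (z.arg / (2 * Real.pi) + m) = z := by
    intro m
    have e : (2 * Real.pi * Complex.I * ((z.arg / (2 * Real.pi) + m : ℝ) : ℂ))
        = z.arg * Complex.I + m * (2 * Real.pi * Complex.I) := by
      push_cast
      have : (Real.pi : ℂ) ≠ 0 := by exact_mod_cast hp.ne'
      field_simp
    rw [zt, e, Complex.exp_periodic.int_mul m, h1]
  rcases le_or_gt 0 z.arg with h0 | h0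
  · refine ⟨⟨z.arg / (2 * Real.pi), by positivity, ?_⟩, by simpa using h2 0⟩
    rw [div_le_one (by positivity)]; linarith
  · refine ⟨⟨z.arg / (2 * Real.pi) + (1:ℤ), ?_, ?_⟩, h2 1⟩
    · have : -1 ≤ z.arg / (2 * Real.pi) := by
        rw [le_div_iff₀ (by positivity)]; linarith
      push_cast; linarith
    · have : z.arg / (2 * Real.pi) ≤ 0 := div_nonpos_of_nonpos_of_nonneg h0.le (by positivity)
      push_cast; linarith

/-- Polynomial loops with coefficients `a`. -/
noncomputable def pol (d : ℕ) (a : ℕ → Mat ι) (t : I) : Mat ι :=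
  ∑ j ∈ Finset.range d, zt t ^ j • a j

lemma continuous_pol {Z : Type} [TopologicalSpace Z] (d : ℕ) {a : ℕ → Z → Mat ι}
    (ha : ∀ j, Continuous (a j)) : Continuous fun q : Z × I => pol d (fun j => a j q.1) q.2 := by
  unfold pol
  refine continuous_finsetSum _ fun j _ => ?_
  exact ((continuous_zt.comp (continuous_subtype_val.comp continuous_snd)).pow j).smul
    ((ha j).comp continuous_fst)

lemma continuous_pol0 (d : ℕ) (a : ℕ → Mat ι) : Continuous (pol d a) := by
  unfold pol
  refine continuous_finsetSum _ fun j _ => ?_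
  exact ((continuous_zt.comp continuous_subtype_val).pow j).smul continuous_const

lemma pol_per (d : ℕ) (a : ℕ → Mat ι) : pol d a 1 = pol d a 0 := by
  simp [pol, zt_zero, zt_one]

/-- A pair of polynomial loops. -/
lemma LP.of_pol (d : ℕ) {a : ℕ → Y → Mat ι} {a0 : ℕ → Mat ι}
    (ha : ∀ j, Continuous (a j)) (hb : ∀ j, ∀ y ∈ B, a j y = a0 j)
    (hu : ∀ y t, IsUnit (pol d (fun j => a j y) t)) (hu0 : ∀ t, IsUnit (pol d a0 t)) :
    LP B (fun y => pol d fun j => a j y) (pol d a0) :=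
  ⟨continuous_pol d ha, continuous_pol0 d a0, hu, hu0,
    fun y => pol_per _ _, pol_per _ _, fun y hy => by
      funext t; simp only [pol, hb _ y hy]⟩

/-- Coefficients of the Higman linearisation step. -/
def hig (a : ℕ → Mat ι) : ℕ → Mat (ι ⊕ ι)
  | 0 => fromBlocks (a 0) (a 1) 0 1
  | 1 => fromBlocks 0 (a 2) (-1) 0
  | (j + 2) => fromBlocks 0 (a (j + 3)) 0 0

/-- The homotopy from `q ⊕ 1` to its Higman linearisation. -/
noncomputable def higH (d : ℕ) (a : ℕ → Mat ι) (s t : I) : Mat (ι ⊕ ι) :=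
  fromBlocks 1 (((s:ℝ):ℂ) • pol (d + 2) (fun j => a (j + 1)) t) 0 1 *
    fromBlocks (pol (d + 3) a t) 0 0 1 *
    fromBlocks 1 0 (-(((s:ℝ):ℂ) • zt t • (1 : Mat ι))) 1

lemma pol_succ (d : ℕ) (a : ℕ → Mat ι) (t : I) :
    pol (d + 1) a t = a 0 + zt t • pol d (fun j => a (j + 1)) t := by
  unfold pol
  rw [Finset.sum_range_succ', pow_zero, one_smul, add_comm, Finset.smul_sum]
  simp only [smul_smul, pow_succ']

lemma pol_fromBlocks (d : ℕ) (a b c e : ℕ → Mat ι) (t : I) :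
    pol d (fun j => fromBlocks (a j) (b j) (c j) (e j)) t
      = fromBlocks (pol d a t) (pol d b t) (pol d c t) (pol d e t) := by
  ext (i | i) (j | j) <;> simp [pol, Matrix.sum_apply]

lemma higH_one (d : ℕ) (a : ℕ → Mat ι) (t : I) : higH d a 1 t = pol (d + 2) (hig a) t := by
  have e1 : pol (d + 2) (hig a) t
      = fromBlocks (a 0) (pol (d + 2) (fun j => a (j + 1)) t) (-(zt t • 1)) 1 := by
    rw [pol_succ, pol_succ, pol_succ (d + 1), pol_succ d]
    simp only [hig]
    rw [pol_fromBlocks]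
    simp [Matrix.fromBlocks_smul, fromBlocks_add, pol]
  rw [e1, higH, pol_succ (d + 2)]
  simp [fromBlocks_multiply]

lemma higH_zero (d : ℕ) (a : ℕ → Mat ι) (t : I) :
    higH d a 0 t = fromBlocks (pol (d + 3) a t) 0 0 1 := by
  simp [higH]

lemma isUnit_higH (d : ℕ) (a : ℕ → Mat ι) (s t : I) (h : IsUnit (pol (d + 3) a t)) :
    IsUnit (higH d a s t) :=
  ((isUnit_upper _).mul (isUnit_fromBlocks h isUnit_one)).mul (isUnit_lower _)

lemma continuous_higH {Z : Type} [TopologicalSpace Z] (d : ℕ) {a : ℕ → Z → Mat ι}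
    (ha : ∀ j, Continuous (a j)) :
    Continuous fun q : I × Z × I => higH d (fun j => a j q.2.1) q.1 q.2.2 := by
  unfold higH
  have h1 : Continuous fun q : I × Z × I => ((q.1 : ℝ) : ℂ) :=
    Complex.continuous_ofReal.comp (continuous_subtype_val.comp continuous_fst)
  have h2 : Continuous fun q : I × Z × I => zt q.2.2 :=
    continuous_zt.comp (continuous_subtype_val.comp (continuous_snd.comp continuous_snd))
  have h3 := (continuous_pol (d + 2) (a := fun j => a (j + 1)) fun j => ha (j + 1)).comp
    (continuous_snd (X := I) (Y := Z × I))
  have h4 := (continuous_pol (d + 3) ha).comp (continuous_snd (X := I) (Y := Z × I))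
  refine Continuous.matrix_mul (Continuous.matrix_mul ?_ ?_) ?_
  · exact continuous_const.matrix_fromBlocks (h1.smul h3) continuous_const continuous_const
  · exact h4.matrix_fromBlocks continuous_const continuous_const continuous_const
  · exact continuous_const.matrix_fromBlocks continuous_const
      ((h1.smul (h2.smul continuous_const)).neg) continuous_const

lemma continuous_higH0 (d : ℕ) (a : ℕ → Mat ι) :
    Continuous fun q : I × I => higH d a q.1 q.2 := by
  unfold higH
  have h1 : Continuous fun q : I × I => ((q.1 : ℝ) : ℂ) :=
    Complex.continuous_ofReal.comp (continuous_subtype_val.comp continuous_fst)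
  have h2 : Continuous fun q : I × I => zt q.2 :=
    continuous_zt.comp (continuous_subtype_val.comp continuous_snd)
  have h3 := (continuous_pol0 (d + 2) (fun j => a (j + 1))).comp (continuous_snd (X := I) (Y := I))
  have h4 := (continuous_pol0 (d + 3) a).comp (continuous_snd (X := I) (Y := I))
  refine Continuous.matrix_mul (Continuous.matrix_mul ?_ ?_) ?_
  · exact continuous_const.matrix_fromBlocks (h1.smul h3) continuous_const continuous_const
  · exact h4.matrix_fromBlocks continuous_const continuous_const continuous_const
  · exact continuous_const.matrix_fromBlocks continuous_const
      ((h1.smul (h2.smul continuous_const)).neg) continuous_const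

/-- Every pair of polynomial loops is stably homotopic to a pair of linear ones. -/
lemma clp_linear (d : ℕ) : ∀ (ι : Type) [Fintype ι] [DecidableEq ι] (a : ℕ → Y → Mat ι)
    (a0 : ℕ → Mat ι) (_ : ∀ j, Continuous (a j)) (_ : ∀ j, ∀ y ∈ B, a j y = a0 j)
    (_ : ∀ y t, IsUnit (pol (d + 2) (fun j => a j y) t)) (_ : ∀ t, IsUnit (pol (d + 2) a0 t)),
    ∃ (κ : Type) (_ : Fintype κ) (_ : DecidableEq κ) (l : ℕ → Y → Mat κ)
      (l0 : ℕ → Mat κ), (∀ j, Continuous (l j)) ∧ (∀ j, ∀ y ∈ B, l j y = l0 j) ∧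
      (∀ y t, IsUnit (pol 2 (fun j => l j y) t)) ∧ (∀ t, IsUnit (pol 2 l0 t)) ∧
      clp B (fun y => pol (d + 2) fun j => a j y) (pol (d + 2) a0)
        = clp B (fun y => pol 2 fun j => l j y) (pol 2 l0) := by
  induction d with
  | zero => intro ι _ _ a a0 ha hb hu hu0; exact ⟨ι, _, _, a, a0, ha, hb, hu, hu0, rfl⟩
  | succ d ih =>
    intro ι _ _ a a0 ha hb hu hu0
    have hu2 : ∀ s y t, IsUnit (higH d (fun j => a j y) s t) := fun s y t =>
      isUnit_higH d _ s t (hu y t)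
    have hu20 : ∀ s t, IsUnit (higH d a0 s t) := fun s t => isUnit_higH d _ s t (hu0 t)
    have hhc : ∀ j, Continuous fun y => hig (fun j => a j y) j := by
      intro j
      match j with
      | 0 => exact (ha 0).matrix_fromBlocks (ha 1) continuous_const continuous_const
      | 1 => exact continuous_const.matrix_fromBlocks (ha 2) continuous_const continuous_const
      | (j + 2) =>
        exact continuous_const.matrix_fromBlocks (ha (j + 3)) continuous_const continuous_const
    obtain ⟨κ, i1, i2, l, l0, h1, h2, h3, h4, h5⟩ := ih (ι ⊕ ι) (fun j y => hig (fun j => a j y) j)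
      (hig a0) hhc (fun j y hy => by simp only [hb _ y hy])
      (fun y t => by
        have := hu2 1 y t
        rwa [higH_one] at this)
      (fun t => by
        have := hu20 1 t
        rwa [higH_one] at this)
    refine ⟨κ, i1, i2, l, l0, h1, h2, h3, h4, ?_⟩
    rw [← h5]
    have hl := LP.of_pol (d + 3) ha hb hu hu0
    rw [← clp_bd_one (κ := ι) hl]
    have hh := clp_homotopy (B := B) (fun s y t => higH d (fun j => a j y) s t)
      (fun s t => higH d a0 s t) (continuous_higH d ha)
      (continuous_higH0 d a0) ?_
    · simp only [higH_one, higH_zero] at hh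
      exact hh
    · intro s
      have c1 : Continuous fun q : Y × I => (s, q) := continuous_const.prodMk continuous_id
      have c2 : Continuous fun q : I => (s, q) := continuous_const.prodMk continuous_id
      have c3 := (continuous_higH d ha).comp c1
      have c4 := (continuous_higH0 d a0).comp c2
      refine ⟨c3, c4, hu2 s, hu20 s, fun y => ?_, ?_, fun y hy => ?_⟩
      · simp only [higH, pol_per, Set.Icc.coe_one, Set.Icc.coe_zero, zt_zero, zt_one]
      · simp only [higH, pol_per, Set.Icc.coe_one, Set.Icc.coe_zero, zt_zero, zt_one]
      · simp only [hb _ y hy]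
end

section
variable {Y : Type} [TopologicalSpace Y] {B : Set Y}

lemma zt_inv (t : ℝ) : star (zt t) = (zt t)⁻¹ := by
  have h := zt_star t
  have h0 := zt_ne t
  field_simp; exact h

/-- If `c` has no imaginary eigenvalue, then the linear loop attached to `(1 + c) / 2` is
invertible. -/
lemma isUnit_bott_of_hyp {c : Mat ι}
    (hc : ∀ z : ℂ, star z = -z → IsUnit (c - z • (1 : Mat ι))) (t : I) :
    IsUnit (bott ((1/2:ℂ) • (1 + c)) t) := by
  by_cases h : zt t = 1
  · simp [bott, h]
  have h1 : zt t - 1 ≠ 0 := sub_ne_zero.2 h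
  have hz := zt_ne t
  have e : bott ((1/2:ℂ) • (1 + c)) t
      = ((zt t - 1) / 2) • (c - (-(zt t + 1) / (zt t - 1)) • (1 : Mat ι)) := by
    rw [smul_sub, smul_smul, bott, smul_smul, smul_add,
      show (zt t - 1) / 2 * (-(zt t + 1) / (zt t - 1)) = -(zt t + 1) / 2 by field_simp]
    module
  rw [e]
  have h2 : ((zt t - 1) / 2) ≠ 0 := div_ne_zero h1 two_ne_zero
  rw [show ((zt t - 1) / 2) • (c - (-(zt t + 1) / (zt t - 1)) • (1 : Mat ι))
    = (Units.mk0 _ h2) • (c - (-(zt t + 1) / (zt t - 1)) • (1 : Mat ι)) from rfl]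
  refine IsUnit.smul _ (hc _ ?_)
  rw [star_div₀, star_neg, star_add, star_sub, star_one, zt_inv]
  have h3 : 1 - zt t ≠ 0 := by rw [← neg_sub]; exact neg_ne_zero.2 h1
  field_simp
  ring

lemma hyp_of_isUnit_bott {b : Mat ι} (hb : ∀ t : I, IsUnit (bott b t)) (w : ℂ)
    (hw : star w = -w) : IsUnit ((2:ℂ) • b - 1 - w • (1 : Mat ι)) := by
  have h0 : w + 1 ≠ 0 := by
    intro h
    have : w = -1 := by linear_combination h
    rw [this] at hw
    norm_num at hw
  have hn : ‖(w - 1) / (w + 1)‖ = 1 := by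
    rw [norm_div, ← norm_star (w - 1), star_sub, hw, star_one, ← norm_neg,
      show -(-w - 1) = w + 1 by ring, div_self (norm_ne_zero_iff.2 h0)]
  obtain ⟨t, ht⟩ := exists_zt hn
  have e : (2:ℂ) • b - 1 - w • (1 : Mat ι) = (-(w + 1)) • bott b t := by
    rw [bott, ht, smul_add, smul_smul,
      show -(w + 1) * ((w - 1) / (w + 1) - 1) = 2 by field_simp; ring]
    module
  rw [e, show (-(w + 1)) • bott b t = (Units.mk0 _ (neg_ne_zero.2 h0)) • bott b t from rfl]
  exact IsUnit.smul _ (hb t)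

lemma continuous_bott {Z : Type} [TopologicalSpace Z] {b : Z → Mat ι} (hb : Continuous b)
    {τ : Z → I} (hτ : Continuous τ) : Continuous fun z => bott (b z) (τ z) := by
  unfold bott
  exact continuous_const.add (((continuous_zt.comp
    (continuous_subtype_val.comp hτ)).sub continuous_const).smul hb)

lemma isProj_of_sym {S : Mat ι} (h : Sᴴ = S) (h' : IsUni S) :
    IsProj ((1/2:ℂ) • (1 + S)) := by
  have h2 : S * S = 1 := by unfold IsUni at h'; rwa [h] at h'
  constructor
  · simp [conjTranspose_smul, conjTranspose_add, h]
  · simp only [Matrix.smul_mul, Matrix.mul_smul, add_mul, mul_add, one_mul, mul_one, h2]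
    module

lemma LP.of_bott {b : Y → Mat ι} {b0 : Mat ι} (hb : Continuous b)
    (h : ∀ y t, IsUnit (bott (b y) t)) (h0 : ∀ t, IsUnit (bott b0 t)) (hB : ∀ y ∈ B, b y = b0) :
    LP B (fun y => bott (b y)) (bott b0) :=
  ⟨continuous_bott (hb.comp continuous_fst) continuous_snd,
    continuous_bott continuous_const continuous_id, h, h0, fun y => by rw [bott_zero, bott_one],
    by rw [bott_zero, bott_one], fun y hy => by rw [hB y hy]⟩

/-- Pairs of linear loops are homotopic to pairs of Bott loops of projections. -/
lemma clp_linear_bott [CompactSpace Y] [T2Space Y] (hBc : IsClosed B)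
    {l : ℕ → Y → Mat ι} {l0 : ℕ → Mat ι} (hl : ∀ j, Continuous (l j))
    (hlB : ∀ j, ∀ y ∈ B, l j y = l0 j) (hu : ∀ y t, IsUnit (pol 2 (fun j => l j y) t))
    (hu0 : ∀ t, IsUnit (pol 2 l0 t)) :
    ∃ (P : Y → Mat ι) (P0 : Mat ι), Continuous P ∧ (∀ y, IsProj (P y)) ∧
      IsProj P0 ∧ (∀ y ∈ B, P y = P0) ∧
      clp B (fun y => pol 2 fun j => l j y) (pol 2 l0) = clp B (fun y => bott (P y)) (bott P0) := by
  have ep : ∀ (a : ℕ → Mat ι) (t : I), (∀ t, IsUnit (pol 2 a t)) → IsUnit (a 0 + a 1) ∧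
      pol 2 a t = (a 0 + a 1) * bott ((a 0 + a 1)⁻¹ * a 1) t := by
    intro a t h
    have h1 : IsUnit (a 0 + a 1) := by
      have := h 0
      simpa [pol, Finset.sum_range_succ, zt_zero] using this
    refine ⟨h1, ?_⟩
    rw [bott, mul_add, mul_one, Matrix.mul_smul, ← mul_assoc, mul_inv_of h1, one_mul]
    simp [pol, Finset.sum_range_succ]
    module
  obtain ⟨k, hk⟩ : ∃ k : Y → Mat ι, ∀ y, k y = l 0 y + l 1 y := ⟨_, fun _ => rfl⟩
  obtain ⟨k0, hk0⟩ : ∃ k0 : Mat ι, k0 = l0 0 + l0 1 := ⟨_, rfl⟩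
  have kc : Continuous k := by
    rw [show k = _ from funext hk]
    exact (hl 0).add (hl 1)
  have ku : ∀ y, IsUnit (k y) := fun y => by rw [hk]; exact (ep _ 0 (hu y)).1
  have ku0 : IsUnit k0 := by rw [hk0]; exact (ep _ 0 hu0).1
  obtain ⟨b, hb⟩ : ∃ b : Y → Mat ι, ∀ y, b y = (k y)⁻¹ * l 1 y := ⟨_, fun _ => rfl⟩
  obtain ⟨b0, hb0⟩ : ∃ b0 : Mat ι, b0 = k0⁻¹ * l0 1 := ⟨_, rfl⟩
  have bc : Continuous b := by
    rw [show b = _ from funext hb]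
    exact (continuous_matInv kc ku).matrix_mul (hl 1)
  have bB : ∀ y ∈ B, b y = b0 := fun y hy => by
    simp only [hb, hb0, hk, hk0, hlB _ y hy]
  have e1 : (fun y => pol 2 fun j => l j y) = fun y t => k y * bott (b y) t := by
    funext y t; rw [hb, hk]; exact (ep _ t (hu y)).2
  have e2 : pol 2 l0 = fun t => k0 * bott b0 t := by
    funext t; rw [hb0, hk0]; exact (ep _ t hu0).2
  rw [e1, e2, clp_left ku ku0]
  have bu : ∀ y t, IsUnit (bott (b y) t) := fun y t => by
    have h := hu y t
    rw [(ep _ t (hu y)).2, ← hk, ← hb] at h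
    have := (isUnit_inv (ku y)).mul h
    rwa [← mul_assoc, inv_mul_of (ku y), one_mul] at this
  have bu0 : ∀ t, IsUnit (bott b0 t) := fun t => by
    have h := hu0 t
    rw [(ep _ t hu0).2, ← hk0, ← hb0] at h
    have := (isUnit_inv ku0).mul h
    rwa [← mul_assoc, inv_mul_of ku0, one_mul] at this
  have hc := fun y => hyp_of_isUnit_bott (bu y)
  have hc0 := hyp_of_isUnit_bott bu0
  obtain ⟨H0, hH0⟩ := exists_lyap hc0
  obtain ⟨H, Hc, HL, HB⟩ := exists_lyap_family hBc
    (c := fun y => (2:ℂ) • b y - 1) ((bc.const_smul (2:ℂ)).sub continuous_const) hc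
    (H0 := H0) (fun y hy => by simpa only [bB y hy] using hH0)
  have hs : ∀ {c H : Mat ι}, Lyap c H → ∀ s t : I,
      IsUnit (bott ((1/2:ℂ) • (1 + (((1 - s : ℝ) : ℂ) • c + ((s:ℝ):ℂ) • polar H))) t) := by
    intro c H h s t
    refine isUnit_bott_of_hyp (fun z hz => ?_) t
    exact (h.convex_left (lyap_polar h.1 h.isUnit_right) (sub_nonneg.2 s.2.2) s.2.1
      (by ring)).isUnit_sub hz
  have hP : ∀ {c H : Mat ι}, Lyap c H → IsProj ((1/2:ℂ) • (1 + polar H)) := fun h =>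
    isProj_of_sym (polar_ct_selfAdjoint h.isUnit_right h.1) (polar_uni h.isUnit_right)
  have pc : Continuous fun y => polar (H y) := continuous_polar Hc fun y => (HL y).isUnit_right
  have pc' : Continuous fun y => (1/2:ℂ) • (1 + polar (H y)) :=
    (continuous_const (y := (1/2:ℂ))).smul (continuous_const.add pc)
  refine ⟨fun y => (1/2:ℂ) • (1 + polar (H y)), (1/2:ℂ) • (1 + polar H0),
    pc', fun y => hP (HL y), hP hH0, fun y hy => by
      simp only [HB y hy], ?_⟩
  have sc1 : Continuous fun s : I => ((1 - s : ℝ) : ℂ) := by fun_prop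
  have sc2 : Continuous fun s : I => ((s : ℝ) : ℂ) := by fun_prop
  obtain ⟨β, hβ⟩ : ∃ β : I → Y → Mat ι, ∀ s y, β s y =
    (1/2:ℂ) • (1 + (((1 - s : ℝ) : ℂ) • ((2:ℂ) • b y - 1) + ((s:ℝ):ℂ) • polar (H y))) :=
    ⟨_, fun _ _ => rfl⟩
  obtain ⟨β0, hβ0⟩ : ∃ β0 : I → Mat ι, ∀ s, β0 s =
    (1/2:ℂ) • (1 + (((1 - s : ℝ) : ℂ) • ((2:ℂ) • b0 - 1) + ((s:ℝ):ℂ) • polar H0)) :=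
    ⟨_, fun _ => rfl⟩
  have βc : Continuous (uncurry β) := by
    rw [show uncurry β = _ from funext fun q => hβ q.1 q.2]
    exact (continuous_const (y := (1/2:ℂ))).smul (continuous_const.add (((sc1.comp continuous_fst).smul
      (((bc.comp continuous_snd).const_smul (2:ℂ)).sub continuous_const)).add
      ((sc2.comp continuous_fst).smul (pc.comp continuous_snd))))
  have βc0 : Continuous β0 := by
    rw [show β0 = _ from funext hβ0]
    exact (continuous_const (y := (1/2:ℂ))).smul (continuous_const.add ((sc1.smul continuous_const).add
      (sc2.smul continuous_const)))
  have c1 : Continuous fun q : I × Y × I => bott (β q.1 q.2.1) q.2.2 :=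
    continuous_bott (b := fun q : I × Y × I => β q.1 q.2.1)
      (βc.comp (continuous_fst.prodMk (continuous_fst.comp continuous_snd)))
      (continuous_snd.comp continuous_snd)
  have c2 : Continuous fun q : I × I => bott (β0 q.1) q.2 :=
    continuous_bott (b := fun q : I × I => β0 q.1) (βc0.comp continuous_fst) continuous_snd
  have hh := clp_homotopy (B := B) (fun s y t => bott (β s y) t) (fun s t => bott (β0 s) t) c1 c2
    (fun s => LP.of_bott (b := β s) (b0 := β0 s) (βc.comp (continuous_const.prodMk continuous_id))
      (fun y t => by rw [hβ]; exact hs (HL y) s t) (fun t => by rw [hβ0]; exact hs hH0 s t)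
      (fun y hy => by simp only [hβ, hβ0, bB y hy, HB y hy]))
  have z1 : ∀ y, β 0 y = b y := fun y => by
    simp only [hβ, Set.Icc.coe_zero]; push_cast; module
  have z2 : β0 0 = b0 := by
    simp only [hβ0, Set.Icc.coe_zero]; push_cast; module
  have z3 : ∀ y, β 1 y = (1/2:ℂ) • (1 + polar (H y)) := fun y => by
    simp only [hβ, Set.Icc.coe_one]; push_cast; module
  have z4 : β0 1 = (1/2:ℂ) • (1 + polar H0) := by
    simp only [hβ0, Set.Icc.coe_one]; push_cast; module
  simp only [z1, z2, z3, z4] at hh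
  exact hh

lemma exists_unit_nhd {Z : Type} [TopologicalSpace Z] [CompactSpace Z] {F : Z → Mat ι}
    (hF : Continuous F) (hu : ∀ z, IsUnit (F z)) :
    ∃ ε > 0, ∀ z E, ‖E‖ ≤ ε → IsUnit (F z + E) := by
  obtain ⟨δ, hδ, h⟩ := (isCompact_range hF).exists_thickening_subset_open
    (t := {A | IsUnit A}) Units.isOpen (by rintro _ ⟨z, rfl⟩; exact hu z)
  refine ⟨δ / 2, by positivity, fun z E hE => h ?_⟩
  rw [Metric.mem_thickening_iff]
  exact ⟨F z, ⟨z, rfl⟩, by rw [dist_eq_norm, add_sub_cancel_left]; linarith⟩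

/-- Every class over `Y × I` comes from a family of projections. -/
theorem cl_eq_bott [CompactSpace Y] [T2Space Y] (hBc : IsClosed B) {F : Y × I → Mat ι}
    (hF : GM (Bp B) F) :
    ∃ (κ : Type) (_ : Fintype κ) (_ : DecidableEq κ) (P : Y → Mat κ) (P0 : Mat κ),
      Continuous P ∧ (∀ y, IsProj (P y)) ∧ IsProj P0 ∧ (∀ y ∈ B, P y = P0) ∧
      cl (Bp B) F = clp B (fun y => bott (P y)) (bott P0) := by
  obtain ⟨ε, hε, hεu⟩ := exists_unit_nhd hF.cont hF.unit
  have f0 : ∀ y, F (y, 0) = 1 := fun y => hF.base _ (Or.inr (Or.inl rfl))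
  have f1 : ∀ y, F (y, 1) = 1 := fun y => hF.base _ (Or.inr (Or.inr rfl))
  have fB : ∀ y ∈ B, ∀ t, F (y, t) = 1 := fun y hy t => hF.base _ (Or.inl hy)
  have hFc : Continuous (uncurry fun y t => F (y, t) - 1) := by
    have := hF.cont.sub (continuous_const (y := (1 : Mat ι)))
    exact this
  obtain ⟨M, d, a, ac, aB, ha⟩ := laurent_approx B (fun y t => F (y, t) - 1)
    hFc (fun y => by simp [f0, f1])
    (fun y hy t => by simp [fB y hy]) hε
  let A : ℕ → Y → Mat ι := fun j y => (if j < d then a j y else 0) + if j = M then 1 else 0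
  let A0 : ℕ → Mat ι := fun j => if j = M then 1 else 0
  have pA0 : ∀ t, pol (d + M + 2) A0 t = zt t ^ M • 1 := by
    intro t
    simp only [pol, A0, smul_ite, smul_zero]
    rw [Finset.sum_ite_eq', if_pos (Finset.mem_range.2 (by omega))]
  have pA : ∀ y t, pol (d + M + 2) (fun j => A j y) t
      = ∑ j ∈ Finset.range d, zt t ^ j • a j y + zt t ^ M • 1 := by
    intro y t
    rw [← pA0]
    simp only [pol, A, A0, smul_add, Finset.sum_add_distrib]
    congr 1
    simp only [smul_ite, smul_zero]
    rw [← Finset.sum_filter]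
    congr 1
    ext j; simp only [Finset.mem_filter, Finset.mem_range]; omega
  have zu : ∀ (t : I) {C : Mat ι}, IsUnit C → IsUnit (zt t ^ M • C) := fun t C hC => by
    rw [show zt t ^ M • C = (Units.mk0 _ (pow_ne_zero M (zt_ne t))) • C from rfl]
    exact IsUnit.smul _ hC
  have zn : ∀ (t : I), ‖(zt t ^ M)⁻¹‖ = 1 := fun t => by simp [norm_zt]
  -- the straight line from `z ^ M • F` to the approximant stays invertible
  obtain ⟨Hs, hHs⟩ : ∃ Hs : I → Y → I → Mat ι, ∀ s y t, Hs s y t = zt t ^ M • F (y, t) +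
    ((s:ℝ):ℂ) • (pol (d + M + 2) (fun j => A j y) t - zt t ^ M • F (y, t)) :=
    ⟨_, fun _ _ _ => rfl⟩
  have Hu : ∀ s y t, IsUnit (Hs s y t) := by
    intro s y t
    have e : Hs s y t = zt t ^ M • (F (y, t) + (zt t ^ M)⁻¹ • ((s:ℝ):ℂ) •
        (pol (d + M + 2) (fun j => A j y) t - zt t ^ M • F (y, t))) := by
      simp only [hHs]
      rw [smul_add, smul_smul (zt t ^ M), mul_inv_cancel₀ (pow_ne_zero M (zt_ne t)), one_smul]
    rw [e]
    refine zu t (hεu _ _ ?_)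
    rw [norm_smul, norm_smul, zn, one_mul]
    have h1 : ‖((s:ℝ):ℂ)‖ ≤ 1 := by
      rw [Complex.norm_real, Real.norm_of_nonneg s.2.1]; exact s.2.2
    have h2 := ha y t
    rw [pA, ← norm_neg (_ - _)]
    have e2 : -(∑ j ∈ Finset.range d, zt t ^ j • a j y + zt t ^ M • (1 : Mat ι)
        - zt t ^ M • F (y, t))
        = zt t ^ M • (F (y, t) - 1) - ∑ j ∈ Finset.range d, zt t ^ j • a j y := by
      rw [smul_sub]; abel
    rw [e2]
    calc _ ≤ 1 * ε := mul_le_mul h1 h2 (norm_nonneg _) zero_le_one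
      _ = ε := one_mul _
  have zc : Continuous fun t : I => zt t ^ M := (continuous_zt.comp continuous_subtype_val).pow M
  have Ac : ∀ j, Continuous (A j) := fun j => by
    refine Continuous.add ?_ continuous_const
    split_ifs
    · exact ac j
    · exact continuous_const
  have AB : ∀ j, ∀ y ∈ B, A j y = A0 j := fun j y hy => by simp [A, A0, aB j y hy]
  have pc := continuous_pol (d + M + 2) Ac
  have p1 : Continuous fun q : Y × I => zt q.2 ^ M • F q :=
    (zc.comp continuous_snd).smul hF.cont
  have p2 : Continuous fun q : I × Y × I => zt q.2.2 ^ M • F (q.2.1, q.2.2) :=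
    p1.comp continuous_snd
  have p3 : Continuous fun q : I × Y × I => pol (d + M + 2) (fun j => A j q.2.1) q.2.2 :=
    pc.comp continuous_snd
  have p4 : Continuous fun q : I × Y × I => ((q.1 : ℝ) : ℂ) :=
    Complex.continuous_ofReal.comp (continuous_subtype_val.comp continuous_fst)
  have Hc : Continuous fun q : I × Y × I => Hs q.1 q.2.1 q.2.2 :=
    by simp only [hHs]; exact p2.add (p4.smul (p3.sub p2))
  have A0u : ∀ t, IsUnit (pol (d + M + 2) A0 t) := fun t => by
    rw [pA0]; exact zu t isUnit_one
  have hLP : ∀ s, LP B (Hs s) (pol (d + M + 2) A0) := fun s => by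
    have c1 : Continuous fun q : Y × I => (s, q) := continuous_const.prodMk continuous_id
    refine ⟨Hc.comp c1, continuous_pol0 _ _, Hu s, A0u, fun y => ?_, pol_per _ _, fun y hy => ?_⟩
    · simp only [hHs, pol_per, f0, f1, Set.Icc.coe_zero, Set.Icc.coe_one, zt_zero, zt_one]
    · funext t
      simp only [hHs, AB _ y hy, fB y hy]
      rw [show (fun j => A0 j) = A0 from rfl, pA0]; simp
  have hh := clp_homotopy (B := B) Hs (fun _ => pol (d + M + 2) A0) Hc
    ((continuous_pol0 (d + M + 2) A0).comp continuous_snd) hLP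
  have hH0 : clp B (Hs 0) (pol (d + M + 2) A0) = cl (Bp B) F := by
    unfold clp
    congr 1
    funext ⟨y, t⟩
    simp only [nrm, hHs, pA0, f0, Set.Icc.coe_zero, zt_zero]
    have hz : (zt t ^ M • (1 : Mat ι))⁻¹ = (zt t ^ M)⁻¹ • 1 := by
      refine inv_eq_left_inv ?_
      rw [Matrix.smul_mul, one_mul, smul_smul, inv_mul_cancel₀ (pow_ne_zero M (zt_ne t)), one_smul]
    rw [hz]
    simp [smul_smul, inv_mul_cancel₀ (pow_ne_zero M (zt_ne t))]
  have hH1 : Hs 1 = fun y => pol (d + M + 2) fun j => A j y := by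
    funext y t
    simp [hHs]
  rw [hH0, hH1] at hh
  have Au : ∀ y t, IsUnit (pol (d + M + 2) (fun j => A j y) t) := fun y t => by
    have := Hu 1 y t
    rwa [hH1] at this
  obtain ⟨κ, i1, i2, l, l0, h1, h2, h3, h4, h5⟩ := clp_linear (d + M) ι A A0 Ac AB Au A0u
  obtain ⟨P, P0, g1, g2, g3, g4, g5⟩ := clp_linear_bott hBc h1 h2 h3 h4
  exact ⟨κ, i1, i2, P, P0, g1, g2, g3, g4, by rw [hh, h5, g5]⟩
end

/-! ### Truncating families of projections -/

section
variable {N : Type} [Fintype N] [DecidableEq N] {L : ℕ} [NeZero L]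

/-- The `k`-th of `L` equidistant sample points. -/
noncomputable def tp (L : ℕ) (k : Fin L) : I :=
  ⟨(k : ℝ) / L, by positivity, div_le_one_of_le₀ (by exact_mod_cast k.2.le) (by positivity)⟩

/-- The standard primitive `L`-th root of unity. -/
noncomputable def om (L : ℕ) : ℂ := zt (1 / L)

lemma om_prim : IsPrimitiveRoot (om L) L := by
  have := Complex.isPrimitiveRoot_exp L (NeZero.ne L)
  convert this using 1
  unfold om zt
  congr 1
  push_cast
  ring

lemma om_ne : om L ≠ 0 := zt_ne _

lemma zt_tp (k : Fin L) : zt (tp L k) = om L ^ (k : ℕ) := by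
  unfold om zt tp
  rw [← Complex.exp_nat_mul]
  congr 1
  push_cast
  ring

lemma star_om : star (om L) = (om L)⁻¹ := zt_inv _

/-- The discrete Fourier matrix. -/
noncomputable def dft (L : ℕ) : Mat (Fin L) :=
  Matrix.of fun k j => ((Real.sqrt L : ℝ) : ℂ)⁻¹ * om L ^ ((k : ℕ) * (j : ℕ))

lemma sum_om (b : ℤ) : ∑ k : Fin L, (om L ^ b) ^ (k : ℕ) = if (L : ℤ) ∣ b then (L : ℂ) else 0 := by
  rw [Fin.sum_univ_eq_sum_range (fun k => (om L ^ b) ^ k)]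
  split_ifs with h
  · rw [(om_prim.zpow_eq_one_iff_dvd b).2 h]; simp
  · have h1 : om L ^ b ≠ 1 := fun h1 => h ((om_prim.zpow_eq_one_iff_dvd b).1 h1)
    have h2 : (om L ^ b) ^ L = 1 := by
      rw [← zpow_natCast, ← zpow_mul, mul_comm, zpow_mul, zpow_natCast, om_prim.pow_eq_one, one_zpow]
    have := geom_sum_mul (om L ^ b) L
    rw [h2, sub_self] at this
    exact (mul_eq_zero.1 this).resolve_right (sub_ne_zero.2 h1)

lemma dft_diag (a : ℤ) : (dft L)ᴴ * diagonal (fun k : Fin L => (om L ^ a) ^ (k : ℕ)) * dft L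
    = Matrix.of fun i j : Fin L => if (L : ℤ) ∣ a + j - i then (1 : ℂ) else 0 := by
  ext i j
  rw [Matrix.mul_apply]
  simp only [mul_diagonal, conjTranspose_apply, dft, of_apply, star_mul',
    star_inv₀, star_pow, star_om]
  have hL : (L : ℂ) ≠ 0 := by exact_mod_cast NeZero.ne L
  have hs : star (((Real.sqrt L : ℝ) : ℂ)) = ((Real.sqrt L : ℝ) : ℂ) := by simp
  have hs2 : ((Real.sqrt L : ℝ) : ℂ) * ((Real.sqrt L : ℝ) : ℂ) = L := by
    rw [← Complex.ofReal_mul, Real.mul_self_sqrt (by positivity)]; simp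
  have e : ∀ k : Fin L, (star ((Real.sqrt L : ℝ) : ℂ))⁻¹ * (om L)⁻¹ ^ ((k : ℕ) * (i : ℕ)) *
      (om L ^ a) ^ (k : ℕ) * (((Real.sqrt L : ℝ) : ℂ)⁻¹ * om L ^ ((k : ℕ) * (j : ℕ)))
      = (L : ℂ)⁻¹ * (om L ^ (a + j - i)) ^ (k : ℕ) := by
    intro k
    rw [hs, ← hs2, mul_inv]
    have : (om L)⁻¹ ^ ((k : ℕ) * (i : ℕ)) * (om L ^ a) ^ (k : ℕ) * om L ^ ((k : ℕ) * (j : ℕ))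
        = (om L ^ (a + j - i)) ^ (k : ℕ) := by
      simp only [← zpow_natCast, ← zpow_neg_one (om L), ← zpow_mul, ← zpow_add₀ (om_ne (L := L))]
      congr 1
      push_cast; ring
    rw [← this]; ring
  rw [Finset.sum_congr rfl fun k _ => e k, ← Finset.mul_sum, sum_om]
  split_ifs <;> simp [hL]

lemma dft_uni : (dft L)ᴴ * dft L = 1 := by
  have := dft_diag (L := L) 0
  rw [zpow_zero] at this
  simp only [one_pow] at this
  rw [show (diagonal fun _ : Fin L => (1:ℂ)) = 1 from diagonal_one, mul_one] at this
  rw [this]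
  ext i j
  rw [of_apply, Matrix.one_apply]
  congr 1
  rw [zero_add, eq_iff_iff]
  constructor
  · intro h
    ext
    have h1 := i.2
    have h2 := j.2
    have h0 := Int.eq_zero_of_abs_lt_dvd h (by rw [abs_lt]; constructor <;> omega)
    omega
  · rintro rfl; simp

/-- The Fourier matrix acting on the second tensor factor. -/
noncomputable def dftN (N : Type) [DecidableEq N] (L : ℕ) :
    Mat (N × Fin L) := (1 : Mat N) ⊗ₖ dft L

lemma dftN_uni : IsUni (dftN N L) := by
  unfold IsUni dftN
  rw [conjTranspose_kronecker, ← mul_kronecker_mul, dft_uni]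
  simp

/-- The block circulant matrix with symbol given by its values at the roots of unity. -/
noncomputable def circ : (Fin L → Mat N) →⋆ₐ[ℂ] Mat (N × Fin L) where
  toFun f := (dftN N L)ᴴ * blockDiagonal f * dftN N L
  map_one' := by
    rw [Matrix.blockDiagonal_one, mul_one]; exact dftN_uni
  map_mul' f g := by
    rw [Matrix.blockDiagonal_mul f g |> fun h => (show blockDiagonal (f * g) = _ from h)]
    simp only [mul_assoc]
    rw [← mul_assoc (dftN N L) (dftN N L)ᴴ, dftN_uni.mul_ct, one_mul]
  map_zero' := by simp
  map_add' f g := by simp [mul_add, add_mul]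
  commutes' r := by
    rw [Algebra.algebraMap_eq_smul_one, Algebra.algebraMap_eq_smul_one, Matrix.blockDiagonal_smul,
      Matrix.blockDiagonal_one, Matrix.mul_smul, Matrix.smul_mul, mul_one, dftN_uni]
  map_star' f := by
    rw [star_eq_conjTranspose, conjTranspose_mul, conjTranspose_mul,
      Matrix.blockDiagonal_conjTranspose, conjTranspose_conjTranspose, mul_assoc]
    rfl

lemma circ_apply (f : Fin L → Mat N) :
    circ f = (dftN N L)ᴴ * blockDiagonal f * dftN N L := rfl

lemma circ_norm_le (f : Fin L → Mat N) {C : ℝ} (hC : 0 ≤ C) (h : ∀ k, ‖f k‖ ≤ C) :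
    ‖circ f‖ ≤ C :=
  (NonUnitalStarAlgHom.norm_apply_le (circ (N := N) (L := L)) f).trans
    ((pi_norm_le_iff_of_nonneg hC).2 h)

lemma circ_uni {f : Fin L → Mat N} (h : ∀ k, IsUni (f k)) : IsUni (circ f) := by
  unfold IsUni
  rw [← star_eq_conjTranspose, ← map_star, ← map_mul,
    show star f * f = 1 from funext fun k => h k, map_one]

/-- Cyclic shift by `a`. -/
def shf (L : ℕ) (a : ℤ) : Mat (Fin L) :=
  Matrix.of fun i j : Fin L => if (L : ℤ) ∣ a + j - i then (1 : ℂ) else 0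

lemma circ_mono (A : Mat N) (a : ℤ) :
    circ (fun k : Fin L => (om L ^ a) ^ (k : ℕ) • A) = A ⊗ₖ shf L a := by
  have e : blockDiagonal (fun k : Fin L => (om L ^ a) ^ (k : ℕ) • A)
      = A ⊗ₖ diagonal (fun k : Fin L => (om L ^ a) ^ (k : ℕ)) := by
    ext ⟨i, k⟩ ⟨j, l⟩
    rw [Matrix.blockDiagonal_apply, kronecker_apply, diagonal_apply]
    split_ifs <;> simp [mul_comm]
  rw [circ_apply, e, dftN, conjTranspose_kronecker, ← mul_kronecker_mul,
    ← mul_kronecker_mul, dft_diag]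
  simp [shf]

lemma circ_const (A : Mat N) : circ (fun _ : Fin L => A) = A ⊗ₖ 1 := by
  have := circ_mono (L := L) A 0
  simp only [zpow_zero, one_pow, one_smul] at this
  rw [this]
  have h2 := dft_diag (L := L) 0
  simp only [zpow_zero, one_pow] at h2
  rw [show (diagonal fun _ : Fin L => (1:ℂ)) = 1 from diagonal_one, mul_one,
    dft_uni] at h2
  rw [h2]; rfl

lemma continuous_circ {Z : Type} [TopologicalSpace Z] {f : Z → Fin L → Mat N}
    (hf : ∀ k, Continuous fun z => f z k) : Continuous fun z => circ (f z) := by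
  simp only [circ_apply]
  refine (continuous_const.matrix_mul ?_).matrix_mul continuous_const
  exact Continuous.matrix_blockDiagonal (continuous_pi hf)
end

section
variable {N : Type} [Fintype N] [DecidableEq N] {L : ℕ} [NeZero L]

/-- The coordinate projection onto the set `s`. -/
noncomputable def cp {Ω : Type} [DecidableEq Ω] (s : Set Ω) : Mat Ω :=
  open Classical in diagonal fun x => if x ∈ s then 1 else 0

section cp
variable {Ω : Type} [Fintype Ω] [DecidableEq Ω]

lemma cp_ct (s : Set Ω) : (cp s)ᴴ = cp s := by
  unfold cp
  rw [diagonal_conjTranspose]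
  congr 1
  funext x
  by_cases h : x ∈ s <;> simp [h]

lemma cp_mul (s t : Set Ω) : cp s * cp t = cp (s ∩ t) := by
  unfold cp
  rw [diagonal_mul_diagonal]
  congr 1
  funext x
  by_cases h : x ∈ s <;> by_cases h' : x ∈ t <;> simp [h, h']

lemma cp_compl (s : Set Ω) : 1 - cp s = cp sᶜ := by
  unfold cp
  rw [← diagonal_one, Matrix.diagonal_sub]
  congr 1
  funext x
  by_cases h : x ∈ s <;> simp [h]

lemma cp_norm (s : Set Ω) : ‖cp s‖ ≤ 1 := by
  unfold cp
  rw [Matrix.l2_opNorm_diagonal]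
  refine (pi_norm_le_iff_of_nonneg zero_le_one).2 fun x => ?_
  split_ifs <;> simp

open Classical in
lemma cp_mul_mul_apply (s t : Set Ω) (A : Mat Ω) (i j : Ω) :
    (cp s * A * cp t) i j = if i ∈ s ∧ j ∈ t then A i j else 0 := by
  unfold cp
  rw [mul_diagonal, Matrix.diagonal_mul]
  by_cases h : i ∈ s <;> by_cases h' : j ∈ t <;> simp [h, h']

lemma cp_add {s t : Set Ω} (h : Disjoint s t) : cp s + cp t = cp (s ∪ t) := by
  unfold cp
  rw [Matrix.diagonal_add]
  congr 1
  funext x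
  by_cases h1 : x ∈ s <;> by_cases h2 : x ∈ t <;> simp [h1, h2]
  exact absurd h2 (Set.disjoint_left.1 h h1)
end cp

/-- Indices whose cyclic coordinate lies in `[a, b)`. -/
def arc (N : Type) (L a b : ℕ) : Set (N × Fin L) := {x | a ≤ (x.2 : ℕ) ∧ (x.2 : ℕ) < b}

/-- Matrices of cyclic band width at most `d`. -/
def Band (d : ℕ) (V : Mat (N × Fin L)) : Prop :=
  ∀ x y, V x y ≠ 0 → ∃ e : ℤ, |e| ≤ d ∧ (L : ℤ) ∣ e + y.2 - x.2

/-- The truncation `D - D Vᴴ Q V D`. -/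
noncomputable def trc (d : ℕ) (V : Mat (N × Fin L)) :
    Mat (N × Fin L) :=
  cp (arc N L (2*d) (8*d)) - cp (arc N L (2*d) (8*d)) * (Vᴴ * cp (arc N L (5*d) L) * V) *
    cp (arc N L (2*d) (8*d))

lemma trc_ct (d : ℕ) (V : Mat (N × Fin L)) : (trc d V)ᴴ = trc d V := by
  unfold trc
  simp [conjTranspose_sub, conjTranspose_mul, cp_ct, mul_assoc]

lemma band_arc {d : ℕ} (hL : L = 10 * d) (i j : Fin L) {e : ℤ} (he : |e| ≤ d)
    (h : (L : ℤ) ∣ e + j - i) : (i : ℤ) = j + e ∨ (i : ℤ) = j + e + L ∨ (i : ℤ) = j + e - L := by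
  obtain ⟨k, hk⟩ := h
  have h1 := i.2
  have h2 := j.2
  rw [abs_le] at he
  have hLp : (0:ℤ) < L := by omega
  have k1 : k < 2 := by
    by_contra hc
    push Not at hc
    have : (L:ℤ) * 2 ≤ L * k := mul_le_mul_of_nonneg_left hc hLp.le
    omega
  have k2 : -2 < k := by
    by_contra hc
    push Not at hc
    have : (L:ℤ) * k ≤ L * (-2) := mul_le_mul_of_nonneg_left hc hLp.le
    omega
  have : k = -1 ∨ k = 0 ∨ k = 1 := by omega
  rcases this with rfl | rfl | rfl <;> omega

lemma band_one {d : ℕ} (hL : L = 10 * d) {V : Mat (N × Fin L)} (hV : Band d V) :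
    (1 - cp (arc N L (5*d) L)) * V * cp (arc N L (6*d) (8*d)) = 0 := by
  rw [cp_compl]
  ext x y
  rw [cp_mul_mul_apply, Matrix.zero_apply]
  split_ifs with h
  · by_contra hne
    obtain ⟨e, he, hd⟩ := hV x y hne
    have h3 := band_arc hL _ _ he hd
    have h1 := x.2.2
    have h2 := y.2.2
    obtain ⟨hx, hy⟩ := h
    simp only [arc, Set.mem_compl_iff, Set.mem_ofPred_eq] at hx hy
    rw [abs_le] at he
    omega
  · rfl

lemma band_two {d : ℕ} (hL : L = 10 * d) {V : Mat (N × Fin L)} (hV : Band d V) :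
    (1 - cp (arc N L (2*d) (8*d))) * (Vᴴ * cp (arc N L (5*d) L) * V) * cp (arc N L (2*d) (6*d))
      = 0 := by
  rw [cp_compl]
  ext x y
  rw [cp_mul_mul_apply, Matrix.zero_apply]
  split_ifs with h
  · rw [Matrix.mul_apply]
    refine Finset.sum_eq_zero fun z _ => ?_
    by_contra hne
    have hz1 := left_ne_zero_of_mul hne
    have hz2 := right_ne_zero_of_mul hne
    unfold cp at hz1
    rw [mul_diagonal, conjTranspose_apply] at hz1
    have hz3 : z ∈ arc N L (5*d) L := by
      by_contra hc; simp [hc] at hz1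
    have hz4 : V z x ≠ 0 := by
      intro hc; simp [hc] at hz1
    obtain ⟨e, he, hd⟩ := hV z y hz2
    obtain ⟨e', he', hd'⟩ := hV z x hz4
    have h3 := band_arc hL _ _ he hd
    have h4 := band_arc hL _ _ he' hd'
    have h1 := x.2.2
    have h2 := y.2.2
    have h5 := z.2.2
    obtain ⟨hx, hy⟩ := h
    simp only [arc, Set.mem_compl_iff, Set.mem_ofPred_eq] at hx hy hz3
    rw [abs_le] at he he'
    omega
  · rfl

lemma isUnit_trc {d : ℕ} (hL : L = 10 * d) {V W : Mat (N × Fin L)}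
    (hV : IsUni V) (hW : Band d W) (hVW : ‖V - W‖ ≤ 1 / 16) :
    IsUnit ((2:ℂ) • trc d V - 1) := by
  obtain ⟨D, hD⟩ : ∃ D, D = cp (arc N L (2*d) (8*d)) := ⟨_, rfl⟩
  obtain ⟨D1, hD1⟩ : ∃ D, D = cp (arc N L (2*d) (6*d)) := ⟨_, rfl⟩
  obtain ⟨D2, hD2⟩ : ∃ D, D = cp (arc N L (6*d) (8*d)) := ⟨_, rfl⟩
  obtain ⟨Q, hQ⟩ : ∃ D, D = cp (arc N L (5*d) L) := ⟨_, rfl⟩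
  have b1 := band_one hL hW
  have b2 := band_two hL hW
  have nD' : ‖1 - D‖ ≤ 1 := by rw [hD, cp_compl]; exact cp_norm _
  have nD1 : ‖D1‖ ≤ 1 := hD1 ▸ cp_norm _
  have nD2 : ‖D2‖ ≤ 1 := hD2 ▸ cp_norm _
  have nQ : ‖Q‖ ≤ 1 := hQ ▸ cp_norm _
  have nQ' : ‖1 - Q‖ ≤ 1 := by rw [hQ, cp_compl]; exact cp_norm _
  have hDD : D * D = D := by rw [hD, cp_mul, Set.inter_self]
  have hQQ : Q * Q = Q := by rw [hQ, cp_mul, Set.inter_self]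
  have hDc : Dᴴ = D := by rw [hD, cp_ct]
  have hQc : Qᴴ = Q := by rw [hQ, cp_ct]
  have hsum : D = D1 + D2 := by
    rw [hD, hD1, hD2, cp_add]
    · congr 1; ext x; simp only [arc, Set.mem_union, Set.mem_ofPred_eq]; omega
    · rw [Set.disjoint_left]; intro x; simp only [arc, Set.mem_ofPred_eq]; omega
  have hDD2 : (1 - D) * D2 = 0 := by
    rw [hD, hD2, cp_compl, cp_mul]
    convert Matrix.diagonal_zero using 2
    unfold cp
    congr 1
    funext x
    rw [if_neg]
    simp only [arc, Set.mem_inter_iff, Set.mem_compl_iff, Set.mem_ofPred_eq]; omega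
  rw [← hD, ← hQ, ← hD1] at b2
  rw [← hQ, ← hD2] at b1
  have nV : ‖V‖ ≤ 1 := by
    have h := CStarRing.norm_star_mul_self (x := V)
    rw [star_eq_conjTranspose, hV] at h
    have h1 : ‖(1 : Mat (N × Fin L))‖ ≤ 1 := by
      have := cp_norm (Set.univ : Set (N × Fin L))
      rwa [show cp (Set.univ : Set (N × Fin L)) = 1 by simp [cp]] at this
    nlinarith [norm_nonneg V]
  have nVc : ‖Vᴴ‖ ≤ 1 := by rw [← star_eq_conjTranspose, norm_star]; exact nV
  have nE := hVW
  have nEc : ‖(V - W)ᴴ‖ ≤ 1 / 16 := by rw [← star_eq_conjTranspose, norm_star]; exact nE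
  have nW : ‖W‖ ≤ 17 / 16 := by
    have : W = V - (V - W) := by abel
    rw [this]
    calc _ ≤ ‖V‖ + ‖V - W‖ := norm_sub_le _ _
      _ ≤ _ := by linarith
  -- the off-diagonal corner of the projection `Vᴴ Q V`
  obtain ⟨T, hT⟩ : ∃ T, T = (1 - D) * (Vᴴ * Q * V) * D := ⟨_, rfl⟩
  have e1 : (1 - D) * (Vᴴ * Q * V) * D1
      = (1 - D) * ((V - W)ᴴ * (Q * W) + Vᴴ * (Q * (V - W))) * D1 := by
    rw [← sub_eq_zero, ← b2, ← Matrix.sub_mul, ← Matrix.mul_sub]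
    congr 2
    rw [conjTranspose_sub]
    noncomm_ring
  have e2 : (1 - D) * (Vᴴ * Q * V) * D2
      = (1 - D) * (Vᴴ * (-((1 - Q) * (V - W)))) * D2 := by
    have h1 : (1 - D) * (Vᴴ * V) * D2 = 0 := by rw [hV, mul_one, hDD2]
    have h2 : (1 - D) * (Vᴴ * ((1 - Q) * W)) * D2 = 0 := by
      rw [mul_assoc, mul_assoc Vᴴ, b1, mul_zero, mul_zero]
    have e : (1 - D) * (Vᴴ * Q * V) * D2 = (1 - D) * (Vᴴ * V) * D2
        - (1 - D) * (Vᴴ * ((1 - Q) * W)) * D2 + (1 - D) * (Vᴴ * (-((1 - Q) * (V - W)))) * D2 := by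
      noncomm_ring
    rw [e, h1, h2, sub_zero, zero_add]
  have m1 : ∀ A B : Mat (N × Fin L), ∀ a b : ℝ, ‖A‖ ≤ a → ‖B‖ ≤ b →
      ‖A * B‖ ≤ a * b := fun A B a b ha hb =>
    (norm_mul_le A B).trans (mul_le_mul ha hb (norm_nonneg _) ((norm_nonneg _).trans ha))
  have nT : ‖T‖ ≤ 1 / 4 := by
    rw [hT]
    nth_rewrite 2 [hsum]
    rw [mul_add, e1, e2]
    have t1 : ‖(V - W)ᴴ * (Q * W) + Vᴴ * (Q * (V - W))‖ ≤ 1/16 * (1 * (17/16)) + 1 * (1 * (1/16)) :=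
      (norm_add_le _ _).trans (add_le_add (m1 _ _ _ _ nEc (m1 _ _ _ _ nQ nW))
        (m1 _ _ _ _ nVc (m1 _ _ _ _ nQ nE)))
    have t2 : ‖Vᴴ * (-((1 - Q) * (V - W)))‖ ≤ 1 * (1 * (1/16)) := by
      refine m1 _ _ _ _ nVc ?_
      rw [norm_neg]; exact m1 _ _ _ _ nQ' nE
    refine (norm_add_le _ _).trans ((add_le_add (m1 _ _ _ _ (m1 _ _ _ _ nD' t1) nD1)
      (m1 _ _ _ _ (m1 _ _ _ _ nD' t2) nD2)).trans ?_)
    norm_num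
  have hsq : ((2:ℂ) • trc d V - 1) * ((2:ℂ) • trc d V - 1) = 1 - (4:ℂ) • (Tᴴ * T) := by
    have hTT : Tᴴ * T = D * (Vᴴ * Q * V) * D - D * (Vᴴ * Q * V) * D * (D * (Vᴴ * Q * V) * D) := by
      have hR : (Vᴴ * Q * V) * (Vᴴ * Q * V) = Vᴴ * Q * V := by
        calc _ = Vᴴ * Q * (V * Vᴴ) * Q * V := by simp only [mul_assoc]
          _ = _ := by rw [hV.mul_ct, mul_one, mul_assoc Vᴴ, hQQ]
      have hRc : (Vᴴ * Q * V)ᴴ = Vᴴ * Q * V := by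
        simp [conjTranspose_mul, hQc, mul_assoc]
      have hD1D : (1 - D) * (1 - D) = 1 - D := by
        rw [mul_sub, mul_one, _root_.sub_mul, one_mul, hDD]; abel
      have h1 : Tᴴ = D * (Vᴴ * Q * V) * (1 - D) := by
        rw [hT, conjTranspose_mul, conjTranspose_mul, hRc, hDc,
          conjTranspose_sub, hDc, conjTranspose_one]
        simp only [mul_assoc]
      rw [h1, hT]
      generalize Vᴴ * Q * V = R at *
      calc D * R * (1 - D) * ((1 - D) * R * D) = D * R * ((1 - D) * (1 - D)) * R * D := by
            simp only [mul_assoc]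
        _ = D * (R * R) * D - D * R * D * R * D := by rw [hD1D]; noncomm_ring
        _ = _ := by
          rw [hR]
          congr 1
          calc D * R * D * R * D = D * R * (D * D) * R * D := by rw [hDD]
            _ = _ := by simp only [mul_assoc]
    rw [hTT, trc, ← hD, ← hQ]
    generalize Vᴴ * Q * V = R at *
    have h3 : D * (D * R * D) = D * R * D := by simp only [← mul_assoc, hDD]
    have h4 : D * R * D * D = D * R * D := by rw [mul_assoc, hDD]
    generalize D * R * D = X at *
    simp only [_root_.sub_mul, mul_sub, Matrix.smul_mul, Matrix.mul_smul, smul_sub, one_mul, mul_one, h3,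
      h4, hDD]
    module
  have hu : IsUnit (((2:ℂ) • trc d V - 1) * ((2:ℂ) • trc d V - 1)) := by
    rw [hsq]
    refine isUnit_one_sub_of_norm_lt_one ?_
    rw [norm_smul]
    have : ‖Tᴴ * T‖ ≤ 1/4 * (1/4) := m1 _ _ _ _
      (by rw [← star_eq_conjTranspose, norm_star]; exact nT) nT
    have h4 : ‖(4:ℂ)‖ = 4 := by norm_num
    rw [h4]
    linarith
  rw [← pow_two] at hu
  exact (isUnit_pow_iff two_ne_zero).1 hu

lemma band_kron {d : ℕ} (A : Mat N) {a : ℤ} (ha : |a| ≤ d) : Band d (A ⊗ₖ shf L a) := by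
  intro x y h
  refine ⟨a, ha, ?_⟩
  by_contra hc
  refine h ?_
  rw [show x = (x.1, x.2) from rfl, show y = (y.1, y.2) from rfl, kronecker_apply]
  simp [shf, hc]

lemma Band.sum {d : ℕ} {α : Type} (s : Finset α) (V : α → Mat (N × Fin L))
    (h : ∀ a ∈ s, Band d (V a)) : Band d (∑ a ∈ s, V a) := by
  intro x y hne
  rw [Matrix.sum_apply] at hne
  obtain ⟨a, ha, h1⟩ := Finset.exists_ne_zero_of_sum_ne_zero hne
  exact h a ha x y h1

lemma bott_circ (P : Mat N) :
    circ (fun k : Fin L => bott P (tp L k)) = (1 - P) ⊗ₖ 1 + P ⊗ₖ shf L 1 := by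
  have e : (fun k : Fin L => bott P (tp L k))
      = (fun _ => (1 - P)) + fun k : Fin L => (om L ^ (1:ℤ)) ^ (k:ℕ) • P := by
    funext k
    rw [Pi.add_apply, bott, zt_tp, zpow_one]
    module
  rw [e, map_add, circ_const, circ_mono]

/-- The truncation of the circulant of a Bott loop is explicitly known. -/
lemma trc_bott {d : ℕ} (hd : 1 ≤ d) (hL : L = 10 * d) {P : Mat N} (hP : IsProj P) :
    1 - trc d (circ fun k : Fin L => bott P (tp L k))
      = cp (arc N L (2*d) (5*d))ᶜ + P ⊗ₖ cp {j : Fin L | (j:ℕ) + 1 = 5 * d} := by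
  have hk : ∀ s : Set (Fin L), cp {x : N × Fin L | x.2 ∈ s} = (1 : Mat N) ⊗ₖ cp s := by
    intro s
    ext ⟨i, k⟩ ⟨j, l⟩
    simp only [cp, kronecker_apply, diagonal_apply, Matrix.one_apply,
      Set.mem_ofPred_eq, Prod.mk.injEq]
    by_cases h1 : i = j <;> by_cases h2 : k = l <;> simp [h1, h2]
  have hD := hk {j | 2*d ≤ (j:ℕ) ∧ (j:ℕ) < 8*d}
  have hQ := hk {j | 5*d ≤ (j:ℕ) ∧ (j:ℕ) < L}
  have hC := hk {j | 2*d ≤ (j:ℕ) ∧ (j:ℕ) < 5*d}ᶜ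
  rw [show (arc N L (2*d) (5*d))ᶜ = {x : N × Fin L | x.2 ∈
    ({j | 2*d ≤ (j:ℕ) ∧ (j:ℕ) < 5*d}ᶜ : Set (Fin L))} from rfl, hC, trc,
    show arc N L (2*d) (8*d) = {x : N × Fin L | x.2 ∈
    ({j | 2*d ≤ (j:ℕ) ∧ (j:ℕ) < 8*d} : Set (Fin L))} from rfl, hD,
    show arc N L (5*d) L = {x : N × Fin L | x.2 ∈
    ({j | 5*d ≤ (j:ℕ) ∧ (j:ℕ) < L} : Set (Fin L))} from rfl, hQ, bott_circ]
  obtain ⟨δ, hδ⟩ : ∃ A : Mat (Fin L), A = cp {j : Fin L | 2*d ≤ (j:ℕ) ∧ (j:ℕ) < 8*d} :=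
    ⟨_, rfl⟩
  obtain ⟨q, hq⟩ : ∃ A : Mat (Fin L), A = cp {j : Fin L | 5*d ≤ (j:ℕ) ∧ (j:ℕ) < L} :=
    ⟨_, rfl⟩
  rw [← hδ, ← hq]
  have p1 : (1 - P) * (1 - P) = 1 - P := by
    rw [mul_sub, mul_one, _root_.sub_mul, one_mul, hP.2]; abel
  have p2 : (1 - P) * P = 0 := by rw [_root_.sub_mul, one_mul, hP.2, sub_self]
  have p3 : P * (1 - P) = 0 := by rw [mul_sub, mul_one, hP.2, sub_self]
  have key : ((1 - P) ⊗ₖ (1 : Mat (Fin L)) + P ⊗ₖ shf L 1)ᴴ * (1 ⊗ₖ q) *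
      ((1 - P) ⊗ₖ 1 + P ⊗ₖ shf L 1) = (1 - P) ⊗ₖ q + P ⊗ₖ ((shf L 1)ᴴ * q * shf L 1) := by
    rw [conjTranspose_add, conjTranspose_kronecker, conjTranspose_kronecker,
      conjTranspose_sub, hP.1, conjTranspose_one, conjTranspose_one]
    simp only [add_mul, mul_add, ← mul_kronecker_mul, one_mul, mul_one, p1, p2, p3, hP.2,
      Matrix.zero_kronecker, add_zero, zero_add]
  have ds : δ * q * δ = cp {j : Fin L | 5*d ≤ (j:ℕ) ∧ (j:ℕ) < 8*d} := by
    rw [hδ, hq, cp_mul, cp_mul]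
    congr 1
    ext j
    have := j.2
    simp only [Set.mem_inter_iff, Set.mem_ofPred_eq]; omega
  have dS : δ * ((shf L 1)ᴴ * q * shf L 1) * δ
      = cp {j : Fin L | 5*d ≤ (j:ℕ) + 1 ∧ (j:ℕ) < 8*d} := by
    ext i j
    rw [hδ, cp_mul_mul_apply, Matrix.mul_apply]
    have hz : ∀ z : Fin L, ((shf L 1)ᴴ * q) i z * shf L 1 z j =
        if ((L:ℤ) ∣ 1 + i - z) ∧ (L:ℤ) ∣ 1 + j - z ∧ 5 * d ≤ (z:ℕ) then 1 else 0 := by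
      intro z
      rw [hq]
      unfold cp
      rw [mul_diagonal, conjTranspose_apply]
      have h5 := z.2
      simp only [shf, of_apply, Set.mem_ofPred_eq, h5, and_true]
      by_cases h1 : (L:ℤ) ∣ 1 + i - z <;> by_cases h2 : (L:ℤ) ∣ 1 + j - z <;>
        by_cases h3 : 5 * d ≤ (z:ℕ) <;> simp [h1, h2, h3]
    rw [Finset.sum_congr rfl fun z _ => hz z]
    simp only [Set.mem_ofPred_eq]
    by_cases hij : (2*d ≤ (i:ℕ) ∧ (i:ℕ) < 8*d) ∧ (2*d ≤ (j:ℕ) ∧ (j:ℕ) < 8*d)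
    · rw [if_pos hij]
      have hi1 : (i:ℕ) + 1 < L := by omega
      rw [Finset.sum_eq_single (⟨(i:ℕ) + 1, hi1⟩ : Fin L)]
      · unfold cp
        rw [diagonal_apply]
        simp only [Set.mem_ofPred_eq]
        by_cases h : i = j
        · subst h
          rw [if_pos rfl]
          have : (L:ℤ) ∣ 1 + (i:ℕ) - ((i:ℕ) + 1 : ℕ) := by push_cast; simp [add_comm]
          simp only [this, true_and]
          congr 1
          rw [eq_iff_iff]; omega
        · rw [if_neg h, if_neg]
          rintro ⟨-, h2, -⟩
          have h6 := band_arc (d := d) hL ⟨(i:ℕ) + 1, hi1⟩ j (e := 1) (by simp; omega) h2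
          have : (i:ℕ) ≠ j := fun h' => h (Fin.ext h')
          simp only at h6
          omega
      · intro z _ hz
        rw [if_neg]
        rintro ⟨h2, -, -⟩
        have h6 := band_arc (d := d) hL z i (e := 1) (by simp; omega) h2
        have : (z:ℕ) ≠ i + 1 := fun h' => hz (Fin.ext h')
        have := z.2
        omega
      · simp
    · rw [if_neg hij]
      unfold cp
      rw [diagonal_apply]
      simp only [Set.mem_ofPred_eq]
      by_cases h : i = j
      · subst h
        rw [if_pos rfl, if_neg]
        omega
      · rw [if_neg h]
  rw [key]
  simp only [mul_add, add_mul, ← mul_kronecker_mul, one_mul, mul_one, ds, dS]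
  have s1 : cp {j : Fin L | 5*d ≤ (j:ℕ) + 1 ∧ (j:ℕ) < 8*d}
      = cp {j : Fin L | (j:ℕ) + 1 = 5 * d} + cp {j : Fin L | 5*d ≤ (j:ℕ) ∧ (j:ℕ) < 8*d} := by
    rw [cp_add]
    · congr 1; ext j; simp only [Set.mem_union, Set.mem_ofPred_eq]; omega
    · rw [Set.disjoint_left]; intro x; simp only [Set.mem_ofPred_eq]; omega
  have s2 : δ = cp {j : Fin L | 2*d ≤ (j:ℕ) ∧ (j:ℕ) < 5*d}
      + cp {j : Fin L | 5*d ≤ (j:ℕ) ∧ (j:ℕ) < 8*d} := by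
    rw [hδ, cp_add]
    · congr 1; ext j; simp only [Set.mem_union, Set.mem_ofPred_eq]; omega
    · rw [Set.disjoint_left]; intro x; simp only [Set.mem_ofPred_eq]; omega
  rw [s1, s2, ← cp_compl, show (1 : Mat (N × Fin L)) = 1 ⊗ₖ 1 by simp]
  have k1 : ∀ A B : Mat N, ∀ C : Mat (Fin L),
      (A - B) ⊗ₖ C = A ⊗ₖ C - B ⊗ₖ C := fun A B C => by
    ext ⟨i, k⟩ ⟨j, l⟩; simp [_root_.sub_mul]
  have k2 : ∀ A : Mat N, ∀ B C : Mat (Fin L),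
      A ⊗ₖ (B - C) = A ⊗ₖ B - A ⊗ₖ C := fun A B C => by
    ext ⟨i, k⟩ ⟨j, l⟩; simp [mul_sub]
  simp only [Matrix.kronecker_add, k1, k2]
  abel
end

section
variable {Y : Type} [TopologicalSpace Y] {B : Set Y}
variable {N : Type} [Fintype N] [DecidableEq N] {L : ℕ} [NeZero L]

/-- The endpoint projection of the truncation construction. -/
noncomputable def endP (d L : ℕ) (P : Mat N) : Mat (N × Fin L) :=
  cp (arc N L (2*d) (5*d))ᶜ + P ⊗ₖ cp {j : Fin L | (j:ℕ) + 1 = 5 * d}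

lemma isProj_fromBlocks {P : Mat ι} {Q : Mat κ} (hP : IsProj P) (hQ : IsProj Q) :
    IsProj (fromBlocks P 0 0 Q) := by
  refine ⟨?_, ?_⟩
  · rw [fromBlocks_conjTranspose, hP.1, hQ.1]; simp
  · rw [fromBlocks_multiply, hP.2, hQ.2]; simp

lemma isProj_zero : IsProj (0 : Mat ι) := ⟨by simp, by simp⟩
lemma isProj_one : IsProj (1 : Mat ι) := ⟨by simp, by simp⟩

lemma isProj_endP {d : ℕ} (hd : 1 ≤ d) {P : Mat N} (hP : IsProj P) :
    IsProj (endP d L P) := by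
  have hk : cp (arc N L (2*d) (5*d))ᶜ = (1 : Mat N) ⊗ₖ
      cp ({j : Fin L | 2*d ≤ (j:ℕ) ∧ (j:ℕ) < 5*d}ᶜ) := by
    ext ⟨i, k⟩ ⟨j, l⟩
    simp only [cp, kronecker_apply, diagonal_apply, Matrix.one_apply, arc,
      Set.mem_compl_iff, Set.mem_ofPred_eq, Prod.mk.injEq]
    by_cases h1 : i = j <;> by_cases h2 : k = l <;> simp [h1, h2]
  have hz : cp ({j : Fin L | 2*d ≤ (j:ℕ) ∧ (j:ℕ) < 5*d}ᶜ ∩ {j : Fin L | (j:ℕ) + 1 = 5 * d}) = 0 := by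
    unfold cp
    refine Eq.trans (congrArg diagonal (a₂ := fun _ => (0:ℂ)) ?_) Matrix.diagonal_zero
    funext x
    rw [if_neg]
    simp only [Set.mem_inter_iff, Set.mem_compl_iff, Set.mem_ofPred_eq]; omega
  have hz' := hz
  rw [Set.inter_comm] at hz'
  unfold endP
  rw [hk]
  refine ⟨?_, ?_⟩
  · rw [conjTranspose_add, conjTranspose_kronecker, conjTranspose_kronecker,
      cp_ct, cp_ct, hP.1, conjTranspose_one]
  · simp only [add_mul, mul_add, ← mul_kronecker_mul, cp_mul, hz, hz', hP.2, one_mul,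
      mul_one, Set.inter_self, Matrix.kronecker_zero, add_zero, zero_add]

lemma half_polar {E : Mat ι} (hE : IsProj E) :
    ((1/2 : ℂ)) • (1 - polar ((2:ℂ) • (1 - E) - 1)) = E := by
  have hu : IsUni ((2:ℂ) • (1 - E) - 1) := by
    unfold IsUni
    rw [conjTranspose_sub, conjTranspose_smul, conjTranspose_sub, hE.1,
      conjTranspose_one]
    simp only [_root_.sub_mul, mul_sub, Matrix.smul_mul, Matrix.mul_smul, smul_sub, one_mul,
      mul_one, hE.2, star_ofNat]
    module
  rw [polar_of_uni hu]
  module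

/-- A homotopy of unitary loops between two Bott loops gives, after stabilisation, a homotopy
of projections. -/
theorem proj_homotopy [CompactSpace Y] [T2Space Y] {f : Y → I → I → Mat N}
    (hf : Continuous fun q : (Y × I) × I => f q.1.1 q.1.2 q.2) (hu : ∀ y s t, IsUni (f y s t))
    (hper : ∀ y s, f y s 0 = f y s 1) {P : Y → Mat N} {P0 : Mat N}
    (hP : ∀ y, IsProj (P y)) (hP0 : IsProj P0)
    (h0 : ∀ y t, f y 0 t = bott (P y) t) (h1 : ∀ y t, f y 1 t = bott P0 t)
    (hB : ∀ y ∈ B, ∀ s t, f y s t = bott P0 t) :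
    ∃ (d L : ℕ), 1 ≤ d ∧ L = 10 * d ∧
      ∃ G : Y → I → Mat (N × Fin L), Continuous (uncurry G) ∧
      (∀ y s, IsProj (G y s)) ∧ (∀ y, G y 0 = endP d L (P y)) ∧ (∀ y, G y 1 = endP d L P0) ∧
      ∀ y ∈ B, ∀ s, G y s = endP d L P0 := by
  obtain ⟨M, d0, a, ha, -, happ⟩ := laurent_approx (Y := Y × I) ∅
    (fun q t => f q.1 q.2 t) hf (fun q => hper _ _) (by simp) (ε := 1/16) (by norm_num)
  obtain ⟨d, hd⟩ : ∃ d, d = max M d0 + 1 := ⟨_, rfl⟩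
  obtain ⟨L, hL⟩ : ∃ L, L = 10 * d := ⟨_, rfl⟩
  have hd1 : 1 ≤ d := by omega
  have : NeZero L := ⟨by omega⟩
  refine ⟨d, L, hd1, hL, ?_⟩
  obtain ⟨V, hV⟩ : ∃ V : Y × I → Mat (N × Fin L), ∀ q, V q =
      circ (fun k : Fin L => f q.1 q.2 (tp L k)) := ⟨_, fun _ => rfl⟩
  have hVc : Continuous V := by
    rw [funext hV]
    exact continuous_circ fun k => hf.comp (continuous_id.prodMk continuous_const)
  have hVu : ∀ q, IsUni (V q) := fun q => by rw [hV]; exact circ_uni fun k => hu _ _ _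
  have hUnit : ∀ q, IsUnit ((2:ℂ) • trc d (V q) - 1) := by
    intro q
    have hW : circ (fun k : Fin L => ∑ j ∈ Finset.range d0, (om L ^ ((j:ℤ) - M)) ^ (k:ℕ) • a j q)
        = ∑ j ∈ Finset.range d0, a j q ⊗ₖ shf L ((j:ℤ) - M) := by
      rw [Finset.sum_congr rfl fun j _ => (circ_mono (L := L) (a j q) ((j:ℤ) - M)).symm, ← map_sum]
      congr 1
      funext k
      rw [Finset.sum_apply]
    refine isUnit_trc hL (hVu q) (W := ∑ j ∈ Finset.range d0, a j q ⊗ₖ shf L ((j:ℤ) - M)) ?_ ?_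
    · refine Band.sum _ _ fun j hj => band_kron _ ?_
      rw [Finset.mem_range] at hj
      rw [abs_le]
      have := le_max_left M d0
      have := le_max_right M d0
      omega
    · rw [← hW, hV, ← map_sub]
      refine circ_norm_le _ (by norm_num) fun k => ?_
      have h := happ q (tp L k)
      rw [zt_tp] at h
      have hn : ‖(om L ^ (k:ℕ)) ^ M‖ = 1 := by
        rw [norm_pow, norm_pow, om, norm_zt, one_pow, one_pow]
      have e : (om L ^ (k:ℕ)) ^ M • f q.1 q.2 (tp L k) - ∑ j ∈ Finset.range d0,
          (om L ^ (k:ℕ)) ^ j • a j q = (om L ^ (k:ℕ)) ^ M • ((fun k : Fin L => f q.1 q.2 (tp L k)) -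
          fun k : Fin L => ∑ j ∈ Finset.range d0, (om L ^ ((j:ℤ) - M)) ^ (k:ℕ) • a j q) k := by
        rw [Pi.sub_apply, smul_sub, Finset.smul_sum]
        congr 1
        refine Finset.sum_congr rfl fun j _ => ?_
        rw [smul_smul]
        congr 1
        simp only [← zpow_natCast, ← zpow_mul, ← zpow_add₀ om_ne]
        congr 1
        ring
      rwa [e, norm_smul, hn, one_mul] at h
  have htc : Continuous fun q => (2:ℂ) • trc d (V q) - 1 := by
    unfold trc
    refine Continuous.sub ((continuous_const (y := (2:ℂ))).smul (continuous_const.sub ?_))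
      continuous_const
    exact (continuous_const.matrix_mul ((hVc.matrix_conjTranspose.matrix_mul
      continuous_const).matrix_mul hVc)).matrix_mul continuous_const
  have hend : ∀ (y : Y) (s : I) (Q : Mat N), IsProj Q → (∀ t, f y s t = bott Q t) →
      (1/2:ℂ) • (1 - polar ((2:ℂ) • trc d (V (y, s)) - 1)) = endP d L Q := by
    intro y s Q hQ h
    have e := trc_bott hd1 hL hQ
    have e2 : trc d (V (y, s)) = 1 - endP d L Q := by
      unfold endP
      rw [← e, hV]
      simp only [h, sub_sub_cancel]
    rw [e2]
    exact half_polar (isProj_endP hd1 hQ)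
  refine ⟨fun y s => (1/2:ℂ) • (1 - polar ((2:ℂ) • trc d (V (y, s)) - 1)), ?_, fun y s => ?_,
    fun y => hend _ _ _ (hP y) (h0 y), fun y => hend _ _ _ hP0 (h1 y),
    fun y hy s => hend _ _ _ hP0 (hB y hy s)⟩
  · exact (continuous_const (y := (1/2:ℂ))).smul (continuous_const.sub (continuous_polar htc hUnit))
  · have hS : (-polar ((2:ℂ) • trc d (V (y, s)) - 1))ᴴ
        = -polar ((2:ℂ) • trc d (V (y, s)) - 1) := by
      rw [Matrix.conjTranspose_neg, polar_ct_selfAdjoint (hUnit _)]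
      rw [conjTranspose_sub, conjTranspose_smul, trc_ct]; simp
    have := isProj_of_sym hS (by
      have := polar_uni (hUnit (y, s))
      unfold IsUni at *
      rw [Matrix.conjTranspose_neg, neg_mul_neg, this])
    rwa [← sub_eq_add_neg] at this

/-- Reindexing of the endpoint projection. -/
lemma endP_reindex (ι : Type) [Fintype ι] [DecidableEq ι] (n d L : ℕ) (hd : 1 ≤ d)
    (hL : L = 10 * d) :
    ∃ (κ1 κ2 : Type) (_ : Fintype κ1) (_ : DecidableEq κ1) (_ : Fintype κ2) (_ : DecidableEq κ2)
      (e : ι ⊕ (κ1 ⊕ κ2) ≃ (ι ⊕ Fin n) × Fin L), ∀ P : Mat ι,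
      (endP d L (fromBlocks P 0 0 (0 : Mat (Fin n)))).submatrix e e
        = fromBlocks P 0 0 (fromBlocks 1 0 0 0) := by
  classical
  let k0 : Fin L := ⟨5 * d - 1, by omega⟩
  have hk0 : (k0 : ℕ) + 1 = 5 * d := by simp only [k0]; omega
  have hk0' : ∀ k : Fin L, (k : ℕ) + 1 = 5 * d → k = k0 := fun k h => Fin.ext (by omega)
  let κ1 := {x : (ι ⊕ Fin n) × Fin L // x ∈ (arc (ι ⊕ Fin n) L (2*d) (5*d))ᶜ}
  let κ2 := {x : (ι ⊕ Fin n) × Fin L // x ∈ arc (ι ⊕ Fin n) L (2*d) (5*d) ∧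
    ∀ i : ι, x ≠ (Sum.inl i, k0)}
  have hmem : ∀ i : ι ⊕ Fin n, (i, k0) ∈ arc (ι ⊕ Fin n) L (2*d) (5*d) := fun i => by
    simp only [arc, Set.mem_ofPred_eq]; omega
  let φ : ι ⊕ (κ1 ⊕ κ2) → (ι ⊕ Fin n) × Fin L :=
    Sum.elim (fun i => (Sum.inl i, k0)) (Sum.elim Subtype.val Subtype.val)
  have hφ : Function.Bijective φ := by
    constructor
    · rintro (i | x | x) (j | y | y) h <;> simp only [φ, Sum.elim_inl, Sum.elim_inr] at h
      · rw [Prod.mk.injEq] at h; rw [Sum.inl_injective h.1]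
      · exact absurd (hmem _) (h ▸ y.2)
      · exact absurd h.symm (y.2.2 i)
      · exact absurd (hmem (Sum.inl j)) (h ▸ x.2)
      · rw [Subtype.ext h]
      · exact absurd y.2.1 (h ▸ x.2)
      · exact absurd h (x.2.2 j)
      · exact absurd x.2.1 (h ▸ y.2)
      · rw [Subtype.ext h]
    · intro x
      by_cases h1 : x ∈ arc (ι ⊕ Fin n) L (2*d) (5*d)
      · by_cases h2 : ∃ i : ι, x = (Sum.inl i, k0)
        · obtain ⟨i, rfl⟩ := h2
          exact ⟨Sum.inl i, rfl⟩
        · push Not at h2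
          exact ⟨Sum.inr (Sum.inr ⟨x, h1, h2⟩), rfl⟩
      · exact ⟨Sum.inr (Sum.inl ⟨x, h1⟩), rfl⟩
  refine ⟨κ1, κ2, inferInstance, inferInstance, inferInstance, inferInstance,
    Equiv.ofBijective φ hφ, fun P => ?_⟩
  have hE : ∀ x y : (ι ⊕ Fin n) × Fin L,
      endP d L (fromBlocks P 0 0 (0 : Mat (Fin n))) x y =
      (if x = y ∧ x ∉ arc (ι ⊕ Fin n) L (2*d) (5*d) then 1 else 0) +
      fromBlocks P 0 0 (0 : Mat (Fin n)) x.1 y.1 *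
        (if x.2 = y.2 ∧ x.2 = k0 then 1 else 0) := by
    intro x y
    rw [endP, Matrix.add_apply, show x = (x.1, x.2) from rfl, show y = (y.1, y.2) from rfl,
      kronecker_apply]
    unfold cp
    rw [diagonal_apply, diagonal_apply]
    have hx : ((x.2 : ℕ) + 1 = 5 * d) ↔ x.2 = k0 := ⟨hk0' _, fun h => by rw [h]; exact hk0⟩
    simp only [Set.mem_compl_iff, Set.mem_ofPred_eq, hx]
    congr 1
    · split_ifs <;> first | rfl | (exfalso; tauto)
    · congr 1
      split_ifs <;> first | rfl | (exfalso; tauto)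
  ext u v
  rw [Matrix.submatrix_apply, hE]
  have a1 : ∀ x : κ1, x.1.2 ≠ k0 := fun x h => x.2 (by
    have := hmem x.1.1; rwa [← h] at this)
  have a2 : ∀ (x : κ2) (i : ι), x.1.2 = k0 → x.1.1 ≠ Sum.inl i := fun x i h h' =>
    x.2.2 i (Prod.ext h' h)
  have a3 : ∀ (x : κ2), x.1.2 = k0 → ∃ i, x.1.1 = Sum.inr i := fun x h => by
    rcases hx : x.1.1 with i | i
    · exact absurd hx (a2 x i h)
    · exact ⟨i, rfl⟩
  rcases u with i | x | x <;> rcases v with j | y | y <;>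
    simp only [Equiv.ofBijective_apply, φ, Sum.elim_inl, Sum.elim_inr, Matrix.fromBlocks_apply₁₁,
      Matrix.fromBlocks_apply₁₂, Matrix.fromBlocks_apply₂₁, Matrix.fromBlocks_apply₂₂,
      Matrix.zero_apply]
  · simp [hmem]
  · simp [hmem, (a1 y).symm]
  · by_cases h : k0 = y.1.2
    · obtain ⟨m, hm⟩ := a3 y h.symm
      simp [hmem, hm]
    · simp [hmem, h]
  · have : ¬ (x.1 = (Sum.inl j, k0) ∧ x.1 ∉ arc (ι ⊕ Fin n) L (2*d) (5*d)) := fun h =>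
      h.2 (h.1 ▸ hmem _)
    rw [if_neg this, if_neg (fun h => a1 x h.2)]; simp
  · rw [if_neg (c := _ ∧ x.1.2 = k0) (fun h => a1 x h.2), mul_zero, add_zero, Matrix.one_apply]
    have hx : x.1 ∉ arc (ι ⊕ Fin n) L (2*d) (5*d) := x.2
    by_cases h : x = y
    · rw [if_pos h, if_pos ⟨congrArg _ h, hx⟩]
    · rw [if_neg h, if_neg (fun h' => h (Subtype.ext h'.1))]
  · have : ¬ (x.1 = y.1 ∧ x.1 ∉ arc (ι ⊕ Fin n) L (2*d) (5*d)) := fun h => h.2 (h.1 ▸ y.2.1)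
    rw [if_neg this, if_neg (fun h => a1 x h.2)]; simp
  · have : ¬ (x.1 = (Sum.inl j, k0) ∧ x.1 ∉ arc (ι ⊕ Fin n) L (2*d) (5*d)) := fun h =>
      h.2 x.2.1
    rw [if_neg this]
    by_cases h : x.1.2 = k0
    · obtain ⟨m, hm⟩ := a3 x h
      simp [hm]
    · simp [h]
  · have : ¬ (x.1 = y.1 ∧ x.1 ∉ arc (ι ⊕ Fin n) L (2*d) (5*d)) := fun h => h.2 x.2.1
    rw [if_neg this]
    by_cases h : x.1.2 = k0
    · rw [if_neg (fun h' : x.1.2 = y.1.2 ∧ x.1.2 = k0 => a1 y (h'.1 ▸ h))]; simp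
    · simp [h]
  · have : ¬ (x.1 = y.1 ∧ x.1 ∉ arc (ι ⊕ Fin n) L (2*d) (5*d)) := fun h => h.2 x.2.1
    rw [if_neg this]
    by_cases h : x.1.2 = k0
    · obtain ⟨m, hm⟩ := a3 x h
      rw [hm]
      rcases y.1.1 <;> simp
    · simp [h]

/-- Injectivity of the Bott map on projections. -/
theorem bott_inj [CompactSpace Y] [T2Space Y] {P : Y → Mat ι} {P0 : Mat ι}
    (hPc : Continuous P) (hP : ∀ y, IsProj (P y)) (hP0 : IsProj P0) (hPB : ∀ y ∈ B, P y = P0)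
    (h : clp B (fun y => bott (P y)) (bott P0) = 0) :
    ∃ (κ1 κ2 : Type) (_ : Fintype κ1) (_ : DecidableEq κ1) (_ : Fintype κ2) (_ : DecidableEq κ2)
      (G : Y → I → Mat (ι ⊕ (κ1 ⊕ κ2))), Continuous (uncurry G) ∧
      (∀ y s, IsProj (G y s)) ∧
      (∀ y, G y 0 = fromBlocks (P y) 0 0 (fromBlocks 1 0 0 0)) ∧
      (∀ y, G y 1 = fromBlocks P0 0 0 (fromBlocks 1 0 0 0)) ∧
      ∀ y ∈ B, ∀ s, G y s = fromBlocks P0 0 0 (fromBlocks 1 0 0 0) := by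
  have hLP : LP B (fun y => bott (P y)) (bott P0) := LP.of_bott hPc
    (fun y t => ((hP y).bott_uni t).isUnit) (fun t => (hP0.bott_uni t).isUnit) hPB
  rw [clp, cl_eq_zero_iff hLP.gm] at h
  obtain ⟨n, H, hHc, hHu, hH0, hH1, hHB⟩ := h
  have hb0 : Continuous fun t : I => bott P0 t := hLP.cont0
  have hub : ∀ t : I, IsUni (fromBlocks (bott P0 t) 0 0 (1 : Mat (Fin n))) :=
    fun t => (hP0.bott_uni t).fromBlocks isUni_one
  have hU : ∀ y s t, IsUnit (H (y, t) s * fromBlocks (bott P0 t) 0 0 1) := fun y s t =>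
    (hHu _ _).mul (hub t).isUnit
  have hbe : ∀ (Q : Mat ι) (t : I), fromBlocks (bott Q t) 0 0
      (1 : Mat (Fin n)) = bott (fromBlocks Q 0 0 0) t := by
    intro Q t
    unfold bott
    ext i j
    rcases i with i | i <;> rcases j with j | j <;> simp [Matrix.one_apply]
  have hpz : ∀ {Q : Mat ι}, IsProj Q → IsProj (fromBlocks Q 0 0
      (0 : Mat (Fin n))) := fun hQ => isProj_fromBlocks hQ isProj_zero
  obtain ⟨d, L, hd, hL, G, hGc, hGp, hG0, hG1, hGB⟩ := proj_homotopy (B := B)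
    (f := fun y s t => polar (H (y, t) s * fromBlocks (bott P0 t) 0 0 1))
    (P := fun y => fromBlocks (P y) 0 0 0) (P0 := fromBlocks P0 0 0 0)
    (by
      refine continuous_polar (Continuous.matrix_mul ?_ ?_) fun q => hU _ _ _
      · exact hHc.comp (((continuous_fst.comp continuous_fst).prodMk continuous_snd).prodMk
          (continuous_snd.comp continuous_fst))
      · exact (hb0.comp continuous_snd).matrix_fromBlocks continuous_const continuous_const
          continuous_const)
    (fun y s t => polar_uni (hU _ _ _))
    (fun y s => by
      beta_reduce
      rw [hHB (y, 0) (Or.inr (Or.inl rfl)), hHB (y, 1) (Or.inr (Or.inr rfl)), bott_zero, bott_one])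
    (fun y => hpz (hP y)) (hpz hP0)
    (fun y t => by
      beta_reduce
      rw [hH0]
      unfold bd nrm
      simp only [bott_zero, inv_one, one_mul, mul_one, Pi.one_apply]
      rw [fromBlocks_multiply]
      simp only [mul_assoc, inv_mul_of (hLP.unit0 t), mul_one, Matrix.mul_zero, Matrix.zero_mul,
        add_zero, zero_add]
      rw [hbe]
      exact polar_of_uni ((hpz (hP y)).bott_uni t))
    (fun y t => by
      beta_reduce
      rw [hH1, one_mul, hbe]
      exact polar_of_uni ((hpz hP0).bott_uni t))
    (fun y hy s t => by
      beta_reduce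
      rw [hHB (y, t) (Or.inl hy), one_mul, hbe]
      exact polar_of_uni ((hpz hP0).bott_uni t))
  obtain ⟨κ1, κ2, i1, i2, i3, i4, e, he⟩ := endP_reindex ι n d L hd hL
  refine ⟨κ1, κ2, i1, i2, i3, i4, fun y s => (G y s).submatrix e e, hGc.matrix_submatrix e e,
    fun y s => ⟨?_, ?_⟩, fun y => ?_, fun y => ?_, fun y hy s => ?_⟩
  · rw [conjTranspose_submatrix, (hGp y s).1]
  · rw [submatrix_mul_equiv, (hGp y s).2]
  · beta_reduce; rw [hG0, he]
  · beta_reduce; rw [hG1, he]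
  · beta_reduce; rw [hGB y hy, he]
end

/-! ### Bott classes of families of projections -/

section
variable {Y : Type} [TopologicalSpace Y] {B : Set Y}

/-- The group of invertible matrices is path connected. -/
lemma gl_path {A : Mat ι} (hA : IsUnit A) : ∃ γ : I → Mat ι, Continuous γ ∧
    (∀ t, IsUnit (γ t)) ∧ γ 0 = A ∧ γ 1 = 1 := by
  obtain ⟨C, hC⟩ : ∃ C, C = A - 1 := ⟨_, rfl⟩
  have hfin : Set.Finite {z : ℂ | (1 + z • C).det = 0} := by
    have h1 : Set.Finite {w : ℂ | C.charpoly.IsRoot w} :=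
      Polynomial.finite_setOfPred_isRoot C.charpoly_monic.ne_zero
    refine (h1.image fun w => -w⁻¹).subset ?_
    intro z hz
    rw [Set.mem_ofPred_eq] at hz
    have hz0 : z ≠ 0 := by rintro rfl; simp at hz
    refine ⟨-z⁻¹, ?_, by simp⟩
    rw [Set.mem_ofPred_eq, Polynomial.IsRoot, Matrix.eval_charpoly]
    have e : Matrix.scalar ι (-z⁻¹) - C = (-z⁻¹) • (1 + z • C) := by
      rw [smul_add, smul_smul, neg_mul, inv_mul_cancel₀ hz0, Matrix.smul_one_eq_diagonal,
        neg_one_smul, ← sub_eq_add_neg]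
      rfl
    rw [e, det_smul, hz, mul_zero]
  have hpc := hfin.countable.isPathConnected_compl_of_one_lt_rank
    (by rw [Complex.rank_real_complex]; exact Cardinal.one_lt_two)
  have hu : ∀ z : ℂ, z ∈ {z : ℂ | (1 + z • C).det = 0}ᶜ → IsUnit (1 + z • C) := fun z hz => by
    rw [isUnit_iff_isUnit_det, isUnit_iff_ne_zero]; exact hz
  obtain ⟨γ, hγ⟩ := hpc.joinedIn 1 (by
    rw [Set.mem_compl_iff, Set.mem_ofPred_eq, hC]
    simpa [sub_eq_add_neg] using ((isUnit_iff_isUnit_det _).1 hA).ne_zero) 0 (by simp)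
  refine ⟨fun t => 1 + γ t • C, continuous_const.add (γ.continuous.smul continuous_const),
    fun t => hu _ (hγ t), ?_, ?_⟩
  · simp [hC]
  · simp

/-- A family of projections equal to `P0` on `B`. -/
structure PD (B : Set Y) (P : Y → Mat ι) (P0 : Mat ι) : Prop where
  cont : Continuous P
  proj : ∀ y, IsProj (P y)
  proj0 : IsProj P0
  base : ∀ y ∈ B, P y = P0

/-- The Bott class of a family of projections relative to a constant projection. -/
noncomputable def clb (B : Set Y) (P : Y → Mat ι) (P0 : Mat ι) : SGrp (Bp B) :=
  clp B (fun y => bott (P y)) (bott P0)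

lemma PD.lp {P : Y → Mat ι} {P0 : Mat ι} (h : PD B P P0) :
    LP B (fun y => bott (P y)) (bott P0) :=
  LP.of_bott h.cont (fun y t => ((h.proj y).bott_uni t).isUnit)
    (fun t => (h.proj0.bott_uni t).isUnit) h.base

lemma PD.bd {P : Y → Mat ι} {P0 : Mat ι} (h : PD B P P0)
    {Q : Y → Mat κ} {Q0 : Mat κ} (h' : PD B Q Q0) :
    PD B (fun y => fromBlocks (P y) 0 0 (Q y)) (fromBlocks P0 0 0 Q0) :=
  ⟨h.cont.matrix_fromBlocks continuous_const continuous_const h'.cont,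
    fun y => isProj_fromBlocks (h.proj y) (h'.proj y), isProj_fromBlocks h.proj0 h'.proj0,
    fun y hy => by rw [h.base y hy, h'.base y hy]⟩

lemma bott_fromBlocks (P : Mat ι) (Q : Mat κ) (t : I) :
    bott (fromBlocks P 0 0 Q) t = fromBlocks (bott P t) 0 0 (bott Q t) := by
  unfold bott
  ext i j
  rcases i with i | i <;> rcases j with j | j <;> simp [Matrix.one_apply]

lemma clb_bd {P : Y → Mat ι} {P0 : Mat ι} (h : PD B P P0)
    {Q : Y → Mat κ} {Q0 : Mat κ} (h' : PD B Q Q0) :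
    clb B (fun y => fromBlocks (P y) 0 0 (Q y)) (fromBlocks P0 0 0 Q0)
      = clb B P P0 + clb B Q Q0 := by
  unfold clb
  rw [← clp_bd h.lp h'.lp]
  congr 1
  · funext y t; exact bott_fromBlocks _ _ _
  · funext t; exact bott_fromBlocks _ _ _

lemma clb_const {P0 : Mat ι} (h : IsProj P0) : clb B (fun _ => P0) P0 = 0 := by
  unfold clb clp
  rw [← cl_one (ι := ι)]
  congr 1
  funext q
  simp [nrm, bott_zero, mul_inv_of (h.bott_uni _).isUnit]

lemma bott_submatrix (P : Mat ι) (e : κ ≃ ι) (t : I) :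
    bott (P.submatrix e e) t = (bott P t).submatrix e e := by
  unfold bott
  rw [Matrix.submatrix_add, Matrix.submatrix_smul, Pi.add_apply, Pi.add_apply, Pi.smul_apply, Pi.smul_apply,
    submatrix_one_equiv]

lemma isProj_submatrix {P : Mat ι} (h : IsProj P) (e : κ ≃ ι) :
    IsProj (P.submatrix e e) :=
  ⟨by rw [conjTranspose_submatrix, h.1], by rw [submatrix_mul_equiv, h.2]⟩

lemma PD.sub {P : Y → Mat ι} {P0 : Mat ι} (h : PD B P P0) (e : κ ≃ ι) :
    PD B (fun y => (P y).submatrix e e) (P0.submatrix e e) :=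
  ⟨h.cont.matrix_submatrix e e, fun y => isProj_submatrix (h.proj y) e,
    isProj_submatrix h.proj0 e, fun y hy => by rw [h.base y hy]⟩

lemma clb_sub {P : Y → Mat ι} {P0 : Mat ι} (h : PD B P P0) (e : κ ≃ ι) :
    clb B (fun y => (P y).submatrix e e) (P0.submatrix e e) = clb B P P0 := by
  unfold clb clp
  rw [← cl_sub h.lp.gm e]
  congr 1
  funext q
  simp only [nrm, bott_submatrix, BP.sub, Matrix.inv_submatrix_equiv, submatrix_mul_equiv]

lemma bott_conj (P : Mat ι) {W W' : Mat ι} (h : W * W' = 1) (t : I) :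
    bott (W * P * W') t = W * bott P t * W' := by
  unfold bott
  rw [mul_add, add_mul, mul_one, h, Matrix.mul_smul, Matrix.smul_mul]

lemma IsProj.conj {P W : Mat ι} (h : IsProj P) (hW : IsUni W) : IsProj (W * P * Wᴴ) := by
  refine ⟨?_, ?_⟩
  · simp only [conjTranspose_mul, conjTranspose_conjTranspose, h.1, mul_assoc]
  · calc W * P * Wᴴ * (W * P * Wᴴ) = W * P * (Wᴴ * W) * P * Wᴴ := by simp only [mul_assoc]
      _ = _ := by rw [hW, mul_one, mul_assoc W, h.2]

lemma PD.conj {P : Y → Mat ι} {P0 W : Mat ι} (h : PD B P P0) (hW : IsUni W) :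
    PD B (fun y => W * P y * Wᴴ) (W * P0 * Wᴴ) :=
  ⟨(continuous_const.matrix_mul h.cont).matrix_mul continuous_const,
    fun y => (h.proj y).conj hW, h.proj0.conj hW, fun y hy => by rw [h.base y hy]⟩

/-- Conjugation by a constant matrix does not change stable classes. -/
lemma cl_conj {f : Y → Mat ι} (hf : GM B f) {W : Mat ι} (hW : IsUnit W) :
    cl B (fun y => W * f y * W⁻¹) = cl B f := by
  obtain ⟨γ, hc, hu, h0, h1⟩ := gl_path hW
  have := cl_homotopy (B := B) (fun y s => γ s * f y * (γ s)⁻¹)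
    (((hc.comp continuous_snd).matrix_mul (hf.cont.comp continuous_fst)).matrix_mul
      (continuous_matInv (hc.comp continuous_snd) fun q => hu _))
    (fun y t => ((hu t).mul (hf.unit y)).mul (isUnit_inv (hu t)))
    (fun y hy t => by rw [hf.base y hy, mul_one, mul_inv_of (hu t)])
  simpa only [h0, h1, one_mul, inv_one, mul_one] using this

lemma clb_conj {P : Y → Mat ι} {P0 W : Mat ι} (h : PD B P P0) (hW : IsUni W) :
    clb B (fun y => W * P y * Wᴴ) (W * P0 * Wᴴ) = clb B P P0 := by
  unfold clb clp
  rw [← cl_conj h.lp.gm hW.isUnit]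
  congr 1
  funext q
  simp only [nrm]
  have e1 : ∀ Q t, bott (W * Q * Wᴴ) t = W * bott Q t * Wᴴ := fun Q t => bott_conj Q hW.mul_ct t
  have e2 : ∀ Q, (W * Q * Wᴴ)⁻¹ = W * Q⁻¹ * Wᴴ := fun Q => by
    rw [Matrix.mul_inv_rev, Matrix.mul_inv_rev, ← hW.inv,
      Matrix.nonsing_inv_nonsing_inv _ ((isUnit_iff_isUnit_det _).1 hW.isUnit), mul_assoc]
  have e3 : ∀ Q R, W * Q * Wᴴ * (W * R * Wᴴ) = W * (Q * R) * Wᴴ := fun Q R => by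
    calc W * Q * Wᴴ * (W * R * Wᴴ) = W * Q * (Wᴴ * W) * R * Wᴴ := by simp only [mul_assoc]
      _ = _ := by rw [hW, mul_one, mul_assoc W]
  simp only [e1, e2, e3, hW.inv]

/-- The Kato transporter between nearby projections. -/
noncomputable def kato (P' P : Mat ι) : Mat ι := P' * P + (1 - P') * (1 - P)

lemma isUnit_kato {P P' : Mat ι} (hP : IsProj P) (hP' : IsProj P') (h : ‖P - P'‖ < 1/2) :
    IsUnit (kato P' P) := by
  have key : ∀ {Q : Mat ι}, IsProj Q → ‖Q‖ ≤ 1 := fun {Q} hQ => by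
    have h1 := CStarRing.norm_star_mul_self (x := Q)
    rw [star_eq_conjTranspose, hQ.1, hQ.2] at h1
    nlinarith [norm_nonneg Q]
  have e : kato P' P = 1 - (P' * (P' - P) + (P - P') * P) := by
    unfold kato
    simp only [mul_sub, _root_.sub_mul, hP.2, hP'.2, one_mul, mul_one]
    abel
  rw [e]
  refine isUnit_one_sub_of_norm_lt_one ?_
  have h1 : ‖P' * (P' - P)‖ ≤ ‖P - P'‖ := by
    refine (norm_mul_le _ _).trans ?_
    rw [norm_sub_rev]
    nlinarith [key hP', norm_nonneg (P - P'), norm_nonneg P']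
  have h2 : ‖(P - P') * P‖ ≤ ‖P - P'‖ := by
    refine (norm_mul_le _ _).trans ?_
    nlinarith [key hP, norm_nonneg (P - P'), norm_nonneg P]
  linarith [norm_add_le (P' * (P' - P)) ((P - P') * P)]

lemma polar_kato {P P' : Mat ι} (hP : IsProj P) (hP' : IsProj P') (h : ‖P - P'‖ < 1/2) :
    polar (kato P' P) * P * (polar (kato P' P))ᴴ = P' := by
  have hu := isUnit_kato hP hP' h
  have hs : ∀ {Q : Mat ι}, IsProj Q → IsUni ((2:ℂ) • Q - 1) := fun {Q} hQ => by
    unfold IsUni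
    rw [conjTranspose_sub, conjTranspose_smul, hQ.1, conjTranspose_one]
    simp only [_root_.sub_mul, mul_sub, Matrix.smul_mul, Matrix.mul_smul, one_mul,
      mul_one, hQ.2, star_ofNat]
    module
  have e : ((2:ℂ) • P' - 1) * kato P' P * ((2:ℂ) • P - 1) = kato P' P := by
    have e1 : ((2:ℂ) • P' - 1) * kato P' P = P' * P - (1 - P') * (1 - P) := by
      have : P' * (P' * P) = P' * P := by rw [← mul_assoc, hP'.2]
      unfold kato
      simp only [_root_.sub_mul, mul_sub, mul_add, Matrix.smul_mul, one_mul, mul_one, this, hP'.2]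
      module
    rw [e1]
    have : P' * P * P = P' * P := by rw [mul_assoc, hP.2]
    unfold kato
    simp only [_root_.sub_mul, mul_sub, Matrix.mul_smul, one_mul, mul_one, this, hP.2]
    module
  have e2 : ((2:ℂ) • P' - 1) * polar (kato P' P) * ((2:ℂ) • P - 1) = polar (kato P' P) := by
    rw [← polar_mul_left hu (hs hP'), ← polar_mul_right ((hs hP').isUnit.mul hu) (hs hP), e]
  have hsq : ((2:ℂ) • P - 1) * ((2:ℂ) • P - 1) = 1 := by
    have := hs hP
    unfold IsUni at this
    rwa [conjTranspose_sub, conjTranspose_smul, hP.1, conjTranspose_one,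
      star_ofNat] at this
  have e3 : ((2:ℂ) • P' - 1) * polar (kato P' P) = polar (kato P' P) * ((2:ℂ) • P - 1) := by
    calc _ = ((2:ℂ) • P' - 1) * polar (kato P' P) * (((2:ℂ) • P - 1) * ((2:ℂ) • P - 1)) := by
          rw [hsq, mul_one]
      _ = _ := by rw [← mul_assoc, e2]
  have e4 : polar (kato P' P) * P = P' * polar (kato P' P) := by
    rw [_root_.sub_mul, mul_sub, one_mul, mul_one, Matrix.smul_mul, Matrix.mul_smul,
      sub_left_inj] at e3
    exact (smul_right_injective _ (two_ne_zero (α := ℂ)) e3).symm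
  rw [e4, mul_assoc, (polar_uni hu).mul_ct, mul_one]

variable (ι) in
/-- The space of unitary matrices. -/
abbrev UMat : Type := {u : Mat ι // IsUni u}
variable (ι) in
/-- The space of orthogonal projections. -/
abbrev PMat : Type := {u : Mat ι // IsProj u}

lemma proj_transport {e : Mat ι} (he : IsProj e) :
    HasTransport (fun u : UMat ι => (⟨u.1 * e * u.1ᴴ, he.conj u.2⟩ : PMat ι)) := by
  classical
  intro x
  have hcV : Continuous fun y : PMat ι => ‖y.1 - x.1‖ :=
    (continuous_subtype_val.sub continuous_const).norm
  let p := fun u : UMat ι => (⟨u.1 * e * u.1ᴴ, he.conj u.2⟩ : PMat ι)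
  let V : Set (PMat ι) := {y | ‖y.1 - x.1‖ < 1/4}
  have hV : ∀ a b : PMat ι, a ∈ V → b ∈ V → ‖a.1 - b.1‖ < 1/2 := fun a b ha hb => by
    have : a.1 - b.1 = (a.1 - x.1) - (b.1 - x.1) := by abel
    rw [this]
    refine (norm_sub_le _ _).trans_lt ?_
    have ha' : ‖a.1 - x.1‖ < 1/4 := ha
    have hb' : ‖b.1 - x.1‖ < 1/4 := hb
    linarith
  let θ : UMat ι → PMat ι → UMat ι := fun u P' =>
    if h : IsUni (polar (kato P'.1 (p u).1)) then ⟨polar (kato P'.1 (p u).1) * u.1, h.mul u.2⟩ else u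
  have hθ : ∀ u P', p u ∈ V → P' ∈ V → (θ u P').1 = polar (kato P'.1 (p u).1) * u.1 :=
    fun u P' h h' => by
      have := polar_uni (isUnit_kato (p u).2 P'.2 (hV _ _ h h'))
      exact congrArg Subtype.val (dif_pos this)
  refine ⟨V, isOpen_lt hcV continuous_const, by show ‖x.1 - x.1‖ < 1/4; simp, θ, ?_, fun u P' h h' => ?_, fun u h => ?_⟩
  · rw [continuousOn_iff_continuous_domRestrict]
    refine Continuous.subtype_mk (f := fun q : {q : UMat ι × PMat ι | p q.1 ∈ V ∧ q.2 ∈ V} =>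
      (θ q.1.1 q.1.2).1) ?_ _
    have : (fun q : {q : UMat ι × PMat ι | p q.1 ∈ V ∧ q.2 ∈ V} => (θ q.1.1 q.1.2).1) =
        fun q => polar (kato q.1.2.1 (p q.1.1).1) * q.1.1.1 :=
      funext fun q => hθ _ _ q.2.1 q.2.2
    rw [this]
    have hc1 : Continuous fun q : {q : UMat ι × PMat ι | p q.1 ∈ V ∧ q.2 ∈ V} => q.1.1.1 :=
      continuous_subtype_val.comp (continuous_fst.comp continuous_subtype_val)
    have hc2 : Continuous fun q : {q : UMat ι × PMat ι | p q.1 ∈ V ∧ q.2 ∈ V} => q.1.2.1 :=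
      continuous_subtype_val.comp (continuous_snd.comp continuous_subtype_val)
    have hc3 : Continuous fun q : {q : UMat ι × PMat ι | p q.1 ∈ V ∧ q.2 ∈ V} => (p q.1.1).1 :=
      (hc1.matrix_mul continuous_const).matrix_mul hc1.matrix_conjTranspose
    refine Continuous.matrix_mul (continuous_polar ?_ fun q =>
      isUnit_kato (p q.1.1).2 q.1.2.2 (hV _ _ q.2.1 q.2.2)) hc1
    exact (hc2.matrix_mul hc3).add ((continuous_const.sub hc2).matrix_mul (continuous_const.sub hc3))
  · refine Subtype.ext ?_
    show (θ u P').1 * e * ((θ u P').1)ᴴ = P'.1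
    rw [hθ u P' h h']
    have := polar_kato (p u).2 P'.2 (hV _ _ h h')
    conv_rhs => rw [← this]
    simp only [p, conjTranspose_mul, mul_assoc]
  · refine Subtype.ext ?_
    rw [hθ u (p u) h h]
    have : kato (p u).1 (p u).1 = 1 := by
      unfold kato
      simp only [mul_sub, _root_.sub_mul, (p u).2.2, one_mul, mul_one]; abel
    rw [this, polar_one, one_mul]

/-- Lifting of families of paths of projections starting at `e` to unitary families. -/
theorem proj_lift {Z : Type} [MetricSpace Z] [CompactSpace Z] {e : Mat ι} (he : IsProj e)
    {f : Z → I → Mat ι} (hf : Continuous (uncurry f)) (hp : ∀ z t, IsProj (f z t))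
    (h0 : ∀ z, f z 0 = e) :
    ∃ v : Z → I → Mat ι, Continuous (uncurry v) ∧ (∀ z t, IsUni (v z t)) ∧
      (∀ z t, v z t * e * (v z t)ᴴ = f z t) ∧ (∀ z, v z 0 = 1) ∧
      ∀ z, (∀ t, f z t = e) → ∀ t, v z t = 1 := by
  obtain ⟨F, hFc, hFp, hF0, hF1⟩ := hlp _ (proj_transport he)
    (fun z t => (⟨f z t, hp z t⟩ : PMat ι)) (Continuous.subtype_mk (f := fun q : Z × I => f q.1 q.2) hf _)
    (fun _ => (⟨1, isUni_one⟩ : UMat ι)) continuous_const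
    (fun z => Subtype.ext (by simp [h0]))
  refine ⟨fun z t => (F z t).1, continuous_subtype_val.comp hFc, fun z t => (F z t).2,
    fun z t => congrArg Subtype.val (hFp z t), fun z => congrArg Subtype.val (hF0 z), fun z h t => ?_⟩
  exact congrArg Subtype.val (hF1 z (fun t => Subtype.ext ((h t).trans (h0 z).symm)) t)
end

/-! ### Lifting projections to unitaries, and Bott periodicity -/

section
/-- A relation between two groups that is multiplicative, total on both sides and trivial over
the two identity elements is the graph of an isomorphism. -/
@[to_additive]
lemma rel_mulEquiv {G H : Type*} [Group G] [Group H] (R : G → H → Prop)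
    (hmul : ∀ a b a' b', R a b → R a' b' → R (a * a') (b * b')) (hl : ∀ a, ∃ b, R a b)
    (hr : ∀ b, ∃ a, R a b) (h1 : ∀ b, R 1 b → b = 1) (h2 : ∀ a, R a 1 → a = 1) :
    Nonempty (G ≃* H) := by
  have hinv : ∀ a b, R a b → R a⁻¹ b⁻¹ := fun a b h => by
    obtain ⟨c, hc⟩ := hl a⁻¹
    have := hmul _ _ _ _ h hc
    rw [mul_inv_cancel] at this
    rwa [← eq_inv_of_mul_eq_one_right (h1 _ this)]
  have hu : ∀ a b b', R a b → R a b' → b = b' := fun a b b' h h' => by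
    have := hmul _ _ _ _ (hinv _ _ h) h'
    rw [inv_mul_cancel] at this
    exact (inv_mul_eq_one.1 (h1 _ this))
  have hu' : ∀ a a' b, R a b → R a' b → a = a' := fun a a' b h h' => by
    have := hmul _ _ _ _ (hinv _ _ h) h'
    rw [inv_mul_cancel] at this
    exact (inv_mul_eq_one.1 (h2 _ this))
  choose f hf using hl
  choose g hg using hr
  exact ⟨{ toFun := f, invFun := g, left_inv := fun a => hu' _ _ _ (hg _) (hf _)
           right_inv := fun b => hu _ _ _ (hf _) (hg _)
           map_mul' := fun a b => hu _ _ _ (hf _) (hmul _ _ _ _ (hf a) (hf b)) }⟩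

variable {Y : Type} [TopologicalSpace Y] {B : Set Y}
variable {ι' κ' : Type} [Fintype ι'] [DecidableEq ι'] [Fintype κ'] [DecidableEq κ']

lemma uni_path {W : Mat ι} (hW : IsUni W) : ∃ γ : I → Mat ι, Continuous γ ∧
    (∀ t, IsUni (γ t)) ∧ γ 0 = W ∧ γ 1 = 1 := by
  obtain ⟨γ, hc, hu, h0, h1⟩ := gl_path hW.isUnit
  exact ⟨fun t => polar (γ t), continuous_polar hc hu, fun t => polar_uni (hu t),
    by simp only [h0, polar_of_uni hW], by simp only [h1, polar_one]⟩

/-- Every class is represented by a unitary family. -/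
lemma cl_exists_uni (x : SGrp B) : ∃ n, ∃ f : Y → Mat (Fin n), GM B f ∧
    (∀ y, IsUni (f y)) ∧ cl B f = x := by
  obtain ⟨n, f, hf, rfl⟩ := cl_exists x
  refine ⟨n, fun y => polar (f y), ⟨continuous_polar hf.cont hf.unit,
    fun y => (polar_uni (hf.unit y)).isUnit, fun y hy => by rw [hf.base y hy, polar_one]⟩,
    fun y => polar_uni (hf.unit y), ?_⟩
  have hc1 : Continuous fun q : Y × I => ((1 - (q.2 : ℝ) : ℝ) : ℂ) :=
    Complex.continuous_ofReal.comp (continuous_const.sub (continuous_subtype_val.comp continuous_snd))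
  have hc2 : Continuous fun q : Y × I => ((q.2 : ℝ) : ℂ) :=
    Complex.continuous_ofReal.comp (continuous_subtype_val.comp continuous_snd)
  have := cl_homotopy (B := B)
    (fun y (s : I) => ((1 - (s : ℝ) : ℝ) : ℂ) • f y + ((s : ℝ) : ℂ) • polar (f y))
    ((hc1.smul (hf.cont.comp continuous_fst)).add
      (hc2.smul ((continuous_polar hf.cont hf.unit).comp continuous_fst)))
    (fun y s => isUnit_polar_seg (hf.unit y) s.2.1 s.2.2)
    (fun y hy s => by
      rw [hf.base y hy, polar_one, ← add_smul, ← Complex.ofReal_add, sub_add_cancel,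
        Complex.ofReal_one, one_smul])
  simpa using this.symm

/-- The standard projection onto the first summand. -/
def eP (ι κ : Type) [DecidableEq ι] : Mat (ι ⊕ κ) := fromBlocks 1 0 0 0

lemma isProj_eP : IsProj (eP ι κ) := isProj_fromBlocks isProj_one isProj_zero

lemma comm_eP {M : Mat (ι ⊕ κ)} (h : M * eP ι κ = eP ι κ * M) :
    M = fromBlocks M.toBlocks₁₁ 0 0 M.toBlocks₂₂ := by
  have e := fromBlocks_toBlocks M
  rw [← e, eP, fromBlocks_multiply, fromBlocks_multiply] at h
  have h1 := congrArg toBlocks₁₂ h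
  have h2 := congrArg Matrix.toBlocks₂₁ h
  simp only [Matrix.toBlocks_fromBlocks₁₂, Matrix.toBlocks_fromBlocks₂₁, Matrix.mul_zero,
    Matrix.one_mul, Matrix.zero_mul, Matrix.mul_one, add_zero] at h1 h2
  conv_lhs => rw [← e]
  rw [← h1, h2]

lemma uni_blocks {A : Mat ι} {D : Mat κ}
    (h : IsUni (fromBlocks A 0 0 D)) : IsUni A ∧ IsUni D := by
  unfold IsUni at *
  rw [fromBlocks_conjTranspose, fromBlocks_multiply, ← fromBlocks_one,
    fromBlocks_inj] at h
  simpa using And.intro h.1 h.2.2.2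

lemma comm_of_conj_eq {e u v : Mat ι} (hu : IsUni u) (hv : IsUni v)
    (h : u * e * uᴴ = v * e * vᴴ) : uᴴ * v * e = e * (uᴴ * v) := by
  calc uᴴ * v * e = uᴴ * (v * e * vᴴ) * v := by
        simp only [mul_assoc]; rw [hv, mul_one]
    _ = _ := by rw [← h]; simp only [← mul_assoc]; rw [hu, one_mul]

lemma exists_diag {P : Mat ι} (hP : IsProj P) : ∃ (α β : Type) (_ : Fintype α)
    (_ : DecidableEq α) (_ : Fintype β) (_ : DecidableEq β) (e : α ⊕ β ≃ ι) (W : Mat ι),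
    IsUni W ∧ (W * P * Wᴴ).submatrix e e = eP α β := by
  classical
  have hH : P.IsHermitian := hP.1
  have hU : IsUni (hH.eigenvectorUnitary : Mat ι) :=
    (mem_unitaryGroup_iff'.1 hH.eigenvectorUnitary.2)
  have hd := IsHermitian.conjStarAlgAut_star_eigenvectorUnitary hH
  rw [Unitary.conjStarAlgAut_star_apply, star_eq_conjTranspose] at hd
  have hev : ∀ i, hH.eigenvalues i = 1 ∨ hH.eigenvalues i = 0 := fun i => by
    have h1 := IsProj.conj hP hU.ct
    rw [conjTranspose_conjTranspose, hd] at h1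
    have h2 := congrFun (congrFun h1.2 i) i
    rw [diagonal_mul_diagonal, Matrix.diagonal_apply_eq, Matrix.diagonal_apply_eq] at h2
    simp only [Function.comp] at h2
    have h3 : hH.eigenvalues i * hH.eigenvalues i = hH.eigenvalues i := by exact_mod_cast h2
    rcases eq_or_ne (hH.eigenvalues i) 0 with h | h
    · exact Or.inr h
    · exact Or.inl (mul_right_cancel₀ h (by rw [h3, one_mul]))
  refine ⟨{i // hH.eigenvalues i = 1}, {i // ¬ hH.eigenvalues i = 1}, inferInstance, inferInstance,
    inferInstance, inferInstance, Equiv.sumCompl _, _, hU.ct, ?_⟩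
  rw [conjTranspose_conjTranspose, hd]
  ext i j
  rcases i with i | i <;> rcases j with j | j
  · simp [eP, diagonal_apply, Matrix.one_apply, Subtype.ext_iff, i.2]
  · have : i.1 ≠ j.1 := fun h => j.2 (h ▸ i.2)
    simp [eP, this]
  · have : i.1 ≠ j.1 := fun h => i.2 (h ▸ j.2)
    simp [eP, this]
  · have : hH.eigenvalues i.1 = 0 := (hev i.1).resolve_left i.2
    simp [eP, diagonal_apply, this]

/-- A unitary family on `Y × I`, trivial for `t = 0` and over `B`, which is block diagonal with
blocks `a`, `b` for `t = 1`: this is the data relating the clutching family `a` on `Y` to the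
family of projections `u e uᴴ` on `Y × I`. -/
structure Rd (B : Set Y) (u : Y → I → Mat (ι ⊕ κ)) (a : Y → Mat ι)
    (b : Y → Mat κ) : Prop where
  cont : Continuous (uncurry u)
  uni : ∀ y t, IsUni (u y t)
  zero : ∀ y, u y 0 = 1
  one : ∀ y, u y 1 = fromBlocks (a y) 0 0 (b y)
  base : ∀ y ∈ B, ∀ t, u y t = 1

variable {u : Y → I → Mat (ι ⊕ κ)} {a : Y → Mat ι} {b : Y → Mat κ}

lemma Rd.uni_ab (h : Rd B u a b) (y : Y) : IsUni (a y) ∧ IsUni (b y) :=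
  uni_blocks (h.one y ▸ h.uni y 1)

lemma Rd.gm (h : Rd B u a b) : GM B a ∧ GM B b := by
  have hc : Continuous fun y => u y 1 :=
    h.cont.comp (continuous_id.prodMk continuous_const)
  have h1 : ∀ y ∈ B, a y = 1 ∧ b y = 1 := fun y hy => by
    have := (h.one y).symm.trans (h.base y hy 1)
    rw [← fromBlocks_one, fromBlocks_inj] at this
    exact ⟨this.1, this.2.2.2⟩
  refine ⟨⟨?_, fun y => (h.uni_ab y).1.isUnit, fun y hy => (h1 y hy).1⟩,
    ⟨?_, fun y => (h.uni_ab y).2.isUnit, fun y hy => (h1 y hy).2⟩⟩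
  · have : a = fun y => (u y 1).submatrix Sum.inl Sum.inl := by
      funext y; rw [h.one]; ext i j; simp
    rw [this]; exact hc.matrix_submatrix _ _
  · have : b = fun y => (u y 1).submatrix Sum.inr Sum.inr := by
      funext y; rw [h.one]; ext i j; simp
    rw [this]; exact hc.matrix_submatrix _ _

/-- The family of projections attached to `u`. -/
def pj (u : Y → I → Mat (ι ⊕ κ)) : Y × I → Mat (ι ⊕ κ) :=
  fun q => u q.1 q.2 * eP ι κ * (u q.1 q.2)ᴴ

lemma Rd.pj_eq (h : Rd B u a b) {q : Y × I} (hq : q ∈ Bp B) : pj u q = eP ι κ := by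
  obtain ⟨y, t⟩ := q
  rcases hq with hq | hq | hq
  · simp [pj, h.base y hq]
  · replace hq : t = 0 := hq
    subst hq
    simp [pj, h.zero y]
  · replace hq : t = 1 := hq
    subst hq
    simp [pj, h.one y, eP, fromBlocks_multiply, fromBlocks_conjTranspose,
      (h.uni_ab y).1.mul_ct]

lemma Rd.pd (h : Rd B u a b) : PD (Bp B) (pj u) (eP ι κ) :=
  ⟨(h.cont.matrix_mul continuous_const).matrix_mul h.cont.matrix_conjTranspose,
    fun _ => isProj_eP.conj (h.uni _ _), isProj_eP, fun _ hq => h.pj_eq hq⟩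

variable {u' : Y → I → Mat (ι' ⊕ κ')} {a' : Y → Mat ι'}
  {b' : Y → Mat κ'}

/-- Direct sum of two families `u`, with the summands regrouped. -/
def uS (u : Y → I → Mat (ι ⊕ κ)) (u' : Y → I → Mat (ι' ⊕ κ')) :
    Y → I → Mat ((ι ⊕ ι') ⊕ (κ ⊕ κ')) := fun y t =>
  (fromBlocks (u y t) 0 0 (u' y t)).submatrix (Equiv.sumSumSumComm ι ι' κ κ')
    (Equiv.sumSumSumComm ι ι' κ κ')

lemma eP_sum : eP (ι ⊕ ι') (κ ⊕ κ') = (fromBlocks (eP ι κ) 0 0 (eP ι' κ')).submatrix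
    (Equiv.sumSumSumComm ι ι' κ κ') (Equiv.sumSumSumComm ι ι' κ κ') := by
  unfold eP
  ext i j
  rcases i with (i | i) | (i | i) <;> rcases j with (j | j) | (j | j) <;> simp [Matrix.one_apply]

lemma pj_uS : pj (uS u u') = fun q => (fromBlocks (pj u q) 0 0 (pj u' q)).submatrix
    (Equiv.sumSumSumComm ι ι' κ κ') (Equiv.sumSumSumComm ι ι' κ κ') := by
  funext q
  simp [pj, uS, eP_sum, conjTranspose_submatrix, submatrix_mul_equiv,
    fromBlocks_conjTranspose, fromBlocks_multiply]

lemma Rd.bd (h : Rd B u a b) (h' : Rd B u' a' b') : Rd B (uS u u') (BP.bd a a') (BP.bd b b') := by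
  refine ⟨(h.cont.matrix_fromBlocks continuous_const continuous_const h'.cont).matrix_submatrix _ _,
    fun y t => ?_, fun y => ?_, fun y => ?_, fun y hy t => ?_⟩
  · have := (h.uni y t).fromBlocks (h'.uni y t)
    unfold IsUni at *
    rw [uS, conjTranspose_submatrix, submatrix_mul_equiv, this,
      submatrix_one_equiv]
  · rw [uS, h.zero, h'.zero, fromBlocks_one, submatrix_one_equiv]
  · rw [uS, h.one, h'.one, BP.bd, BP.bd]
    ext i j
    rcases i with (i | i) | (i | i) <;> rcases j with (j | j) | (j | j) <;> simp
  · rw [uS, h.base y hy, h'.base y hy, fromBlocks_one, submatrix_one_equiv]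

lemma Rd.clb_bd (h : Rd B u a b) (h' : Rd B u' a' b') :
    clb (Bp B) (pj (uS u u')) (eP (ι ⊕ ι') (κ ⊕ κ')) =
      clb (Bp B) (pj u) (eP ι κ) + clb (Bp B) (pj u') (eP ι' κ') := by
  rw [pj_uS, eP_sum, clb_sub (h.pd.bd h'.pd), BP.clb_bd h.pd h'.pd]

lemma Rd.triv : Rd B (fun _ _ => (1 : Mat (ι ⊕ κ))) 1 1 :=
  ⟨continuous_const, fun _ _ => isUni_one, fun _ => rfl, fun _ => fromBlocks_one.symm,
    fun _ _ _ => rfl⟩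

lemma clb_triv : clb (Bp B) (pj fun _ _ => (1 : Mat (ι ⊕ κ))) (eP ι κ) = 0 := by
  rw [← clb_const (B := Bp B) (isProj_eP (ι := ι) (κ := κ))]
  congr 1
  funext q; simp [pj]

/-- The relation inducing Bott periodicity. -/
def RB (x : SGrp (Bp (Bp B))) (y : SGrp B) : Prop :=
  ∃ (ι κ : Type) (_ : Fintype ι) (_ : DecidableEq ι) (_ : Fintype κ) (_ : DecidableEq κ)
    (u : Y → I → Mat (ι ⊕ κ)) (a : Y → Mat ι) (b : Y → Mat κ),
    Rd B u a b ∧ clb (Bp B) (pj u) (eP ι κ) = x ∧ cl B a = y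

lemma RB_add {x x' : SGrp (Bp (Bp B))} {y y' : SGrp B} (h : RB x y) (h' : RB x' y') :
    RB (x + x') (y + y') := by
  obtain ⟨ι, κ, _, _, _, _, u, a, b, h, rfl, rfl⟩ := h
  obtain ⟨ι', κ', _, _, _, _, u', a', b', h', rfl, rfl⟩ := h'
  exact ⟨_, _, _, _, _, _, _, _, _, h.bd h', h.clb_bd h', cl_bd h.gm.1 h'.gm.1⟩

/-- The unitary matrix `diag (a, aᴴ)` is connected to `1`. -/
lemma RB_right (y : SGrp B) : ∃ x, RB x y := by
  obtain ⟨n, a, ha, hau, rfl⟩ := cl_exists_uni y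
  obtain ⟨γ, hc, hu, h0, h1⟩ := uni_path (W := (fromBlocks 0 1 1 0 : Mat (Fin n ⊕ Fin n)))
    (by unfold IsUni
        rw [fromBlocks_conjTranspose, conjTranspose_one, conjTranspose_zero,
          fromBlocks_multiply]
        simp)
  have hA : ∀ y, IsUni (fromBlocks (a y) 0 0 (1 : Mat (Fin n))) :=
    fun y => (hau y).fromBlocks isUni_one
  have hAc : Continuous fun q : Y × I =>
      fromBlocks (a q.1) 0 0 (1 : Mat (Fin n)) :=
    (ha.cont.comp continuous_fst).matrix_fromBlocks continuous_const continuous_const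
      continuous_const
  have hγ : Continuous fun q : Y × I => γ (unitInterval.symm q.2) :=
    hc.comp (unitInterval.continuous_symm.comp continuous_snd)
  refine ⟨_, Fin n, Fin n, inferInstance, inferInstance, inferInstance, inferInstance,
    fun y t => fromBlocks (a y) 0 0 1 * γ (unitInterval.symm t) *
      (fromBlocks (a y) 0 0 1)ᴴ * (γ (unitInterval.symm t))ᴴ, a, fun y => (a y)ᴴ,
    ⟨((hAc.matrix_mul hγ).matrix_mul hAc.matrix_conjTranspose).matrix_mul
      hγ.matrix_conjTranspose, fun y t => (((hA y).mul (hu _)).mul (hA y).ct).mul (hu _).ct,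
      fun y => ?_, fun y => ?_, fun y hy t => ?_⟩, rfl, rfl⟩
  · simp only [unitInterval.symm_zero, h1, mul_one, conjTranspose_one, (hA y).mul_ct]
  · simp [unitInterval.symm_one, h0, fromBlocks_conjTranspose, fromBlocks_multiply]
  · simp [ha.base y hy, (hu _).mul_ct]
end

section
section
variable {Y : Type} [TopologicalSpace Y] {B : Set Y}
variable {ι' κ' : Type} [Fintype ι'] [DecidableEq ι'] [Fintype κ'] [DecidableEq κ']

/-- Families of projections conjugate to a constant one by a family of unitaries which is trivial
on the subspace have trivial Bott class. -/
lemma clb_conj_eq_zero {u : Y → Mat ι} {e : Mat ι} (he : IsProj e)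
    (hu : GM B u) (huu : ∀ y, IsUni (u y)) : clb B (fun y => u y * e * (u y)ᴴ) e = 0 := by
  obtain ⟨H, hc, hHu, h0, h1, hB⟩ := null_bd_inv hu
  have hb : ∀ t, IsUnit (bott e t) := fun t => (he.bott_uni t).isUnit
  have hbc : Continuous fun t => bott e t := continuous_bott continuous_const continuous_id
  let b' : I → Mat (ι ⊕ ι) := fun t => fromBlocks (bott e t) 0 0 1
  have hb' : ∀ t, IsUnit (b' t) := fun t => isUnit_fromBlocks (hb t) isUnit_one
  have hbc' : Continuous b' :=
    hbc.matrix_fromBlocks continuous_const continuous_const continuous_const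
  have hpd : PD B (fun y => u y * e * (u y)ᴴ) e :=
    ⟨(hu.cont.matrix_mul continuous_const).matrix_mul hu.cont.matrix_conjTranspose,
      fun y => he.conj (huu y), he, fun y hy => by simp [hu.base y hy]⟩
  obtain ⟨K, hK⟩ : ∃ K : Y × I → I → Mat (ι ⊕ ι), ∀ q s, K q s =
    H q.1 s * b' q.2 * (H q.1 s)⁻¹ * (b' q.2)⁻¹ := ⟨_, fun _ _ => rfl⟩
  have hHc : Continuous fun p : (Y × I) × I => H p.1.1 p.2 :=
    hc.comp ((continuous_fst.comp continuous_fst).prodMk continuous_snd)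
  have hbcc : Continuous fun p : (Y × I) × I => b' p.1.2 :=
    hbc'.comp (continuous_snd.comp continuous_fst)
  have key := cl_homotopy (B := Bp B) K
    (by
      have : uncurry K = fun p : (Y × I) × I => H p.1.1 p.2 * b' p.1.2 *
        (H p.1.1 p.2)⁻¹ * (b' p.1.2)⁻¹ := funext fun p => hK _ _
      rw [this]
      exact ((hHc.matrix_mul hbcc).matrix_mul (continuous_matInv hHc fun p => hHu _ _)).matrix_mul
        (continuous_matInv hbcc fun p => hb' _))
    (fun q s => by
      rw [hK]
      exact (((hHu _ _).mul (hb' _)).mul (isUnit_inv (hHu _ _))).mul (isUnit_inv (hb' _)))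
    (fun q hq s => by
      rw [hK]
      have hbb : b' 0 = 1 ∧ b' 1 = 1 := by simp [b', bott_zero, bott_one]
      rcases hq with hq | hq | hq
      · rw [hB _ hq, one_mul, inv_one, mul_one, mul_inv_of (hb' _)]
      · rw [hq, hbb.1, mul_one, mul_inv_of (hHu _ _), one_mul, inv_one]
      · rw [hq, hbb.2, mul_one, mul_inv_of (hHu _ _), one_mul, inv_one])
  have e1 : (fun q => K q 1) = 1 := by
    funext q
    rw [hK, h1, one_mul, inv_one, mul_one, mul_inv_of (hb' _)]; rfl
  have e0 : (fun q => K q 0) =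
      bd (nrm (fun y => bott (u y * e * (u y)ᴴ)) (bott e)) (1 : Y × I → Mat ι) := by
    funext q
    have hi : ∀ {A D : Mat ι}, IsUnit A → IsUnit D → (fromBlocks A 0 0 D)⁻¹ =
      fromBlocks A⁻¹ 0 0 D⁻¹ := fun hA hD => inv_eq_left_inv (by
        simp [fromBlocks_multiply, inv_mul_of hA, inv_mul_of hD])
    have hui := isUnit_inv (hu.unit q.1)
    have e2 : (u q.1 : Mat ι)⁻¹ = (u q.1)ᴴ := (huu _).inv
    rw [hK, h0, show bd u u⁻¹ q.1 = fromBlocks (u q.1) 0 0 (u q.1)⁻¹ from rfl,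
      show b' q.2 = fromBlocks (bott e q.2) 0 0 1 from rfl, hi (hu.unit _) hui, hi (hb _) isUnit_one, bd, fromBlocks_multiply,
      fromBlocks_multiply, fromBlocks_multiply]
    simp only [Matrix.mul_zero, Matrix.zero_mul, add_zero, zero_add, inv_one,
      Matrix.mul_one, mul_inv_of hui, Pi.one_apply, nrm, bott_zero,
      bott_conj e (huu q.1).mul_ct, Matrix.one_mul, e2, (huu q.1).mul_ct,
      mul_inv_of (huu q.1).ct.isUnit]
  rw [e1, cl_one, e0, cl_bd hpd.lp.gm GM.one, cl_one, add_zero] at key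
  exact key

lemma null_of_cl_zero {f : Y → Mat ι} (hf : GM B f) (h : cl B f = 0) :
    ∃ n, Null B (bd f (1 : Y → Mat (Fin n))) := (cl_eq_zero_iff hf).1 h

/-- If `a` is stably trivial then so is `b`, and null homotopies of both deform `u` to a unitary family
that is trivial for `t = 1` too. -/
lemma RB_zero_right {x : SGrp (Bp (Bp B))} (h : RB x (0 : SGrp B)) : x = 0 := by
  obtain ⟨ι, κ, _, _, _, _, u, a, b, h, rfl, ha⟩ := h
  have hgu : Null B (bd a b) := by
    refine ⟨fun y t => u y (unitInterval.symm t), ?_, fun y t => (h.uni _ _).isUnit, fun y => ?_,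
      fun y => ?_, fun y hy t => h.base y hy _⟩
    · exact h.cont.comp (continuous_fst.prodMk (unitInterval.continuous_symm.comp continuous_snd))
    · beta_reduce; rw [unitInterval.symm_zero, h.one]; rfl
    · beta_reduce; rw [unitInterval.symm_one, h.zero]
  have hb : cl B b = 0 := by
    have := (cl_eq_zero_iff hgu.gm).2 (StNull.of_null hgu)
    rwa [cl_bd h.gm.1 h.gm.2, ha, zero_add] at this
  obtain ⟨n, A, hAc, hAu, hA0, hA1, hAB⟩ := null_of_cl_zero h.gm.1 ha
  obtain ⟨m, D, hDc, hDu, hD0, hD1, hDB⟩ := null_of_cl_zero h.gm.2 hb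
  have H := h.bd (Rd.triv (B := B) (ι := Fin n) (κ := Fin m))
  have e := h.clb_bd (Rd.triv (B := B) (ι := Fin n) (κ := Fin m))
  rw [clb_triv, add_zero] at e
  rw [← e]
  obtain ⟨k, hk⟩ : ∃ k : Y × I → Mat ((ι ⊕ Fin n) ⊕ (κ ⊕ Fin m)),
    ∀ q, k q = fromBlocks (polar (A q.1 (unitInterval.symm q.2)))ᴴ 0 0
      (polar (D q.1 (unitInterval.symm q.2)))ᴴ := ⟨_, fun _ => rfl⟩
  have hs : Continuous fun q : Y × I => (q.1, unitInterval.symm q.2) :=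
    continuous_fst.prodMk (unitInterval.continuous_symm.comp continuous_snd)
  have hkc : Continuous k := by
    rw [funext hk]
    exact (continuous_polar (hAc.comp hs) fun q => hAu _ _).matrix_conjTranspose.matrix_fromBlocks
      continuous_const continuous_const
      (continuous_polar (hDc.comp hs) fun q => hDu _ _).matrix_conjTranspose
  have hku : ∀ q, IsUni (k q) := fun q => by
    rw [hk]; exact (polar_uni (hAu _ _)).ct.fromBlocks (polar_uni (hDu _ _)).ct
  have hke : ∀ q, k q * eP (ι ⊕ Fin n) (κ ⊕ Fin m) * (k q)ᴴ = eP _ _ := fun q => by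
    rw [hk, fromBlocks_conjTranspose, eP, fromBlocks_multiply,
      fromBlocks_multiply]
    have : (polar (A q.1 (unitInterval.symm q.2)))ᴴ * polar (A q.1 (unitInterval.symm q.2)) = 1 :=
      polar_uni (hAu _ _)
    simp [this]
  have key := clb_conj_eq_zero (B := Bp B)
    (u := fun q => uS u (fun _ _ => (1 : Mat (Fin n ⊕ Fin m))) q.1 q.2 * k q)
    (isProj_eP (ι := ι ⊕ Fin n) (κ := κ ⊕ Fin m))
    ⟨H.cont.matrix_mul hkc, fun q => ((H.uni _ _).mul (hku q)).isUnit, ?_⟩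
    (fun q => (H.uni _ _).mul (hku q))
  · rw [← key]
    congr 1
    funext q
    rw [conjTranspose_mul, mul_assoc _ (k q), mul_assoc, mul_assoc, ← mul_assoc (k q),
      ← mul_assoc (k q * _), hke, pj, mul_assoc]
  · rintro ⟨y, t⟩ hq
    beta_reduce
    rw [hk]
    rcases hq with hq | hq | hq
    · rw [H.base y hq, hAB y hq, hDB y hq]
      simp [polar_one]
    · replace hq : t = 0 := hq
      subst hq
      rw [H.zero]
      simp [hA1, hD1, polar_one]
    · replace hq : t = 1 := hq
      subst hq
      have h1 := H.uni_ab y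
      rw [H.one]
      simp only [unitInterval.symm_one, hA0, hD0]
      rw [polar_of_uni h1.1, polar_of_uni h1.2, fromBlocks_multiply]
      simp [h1.1.mul_ct, h1.2.mul_ct]

end

variable {Y : Type} [MetricSpace Y] [CompactSpace Y] {B : Set Y}

lemma isClosed_Bp (hB : IsClosed B) : IsClosed (Bp B) :=
  (hB.preimage continuous_fst).union ((isClosed_singleton.preimage continuous_snd).union
    (isClosed_singleton.preimage continuous_snd))

/-- Every class of loops is that of a Bott loop of projections, and projections over `Y × I` lift to
unitary matrices. -/
lemma RB_left (hB : IsClosed B) (x : SGrp (Bp (Bp B))) : ∃ y : SGrp B, RB x y := by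
  obtain ⟨n, F, hF, rfl⟩ := cl_exists x
  obtain ⟨κ, _, _, P, P0, hPc, hP, hP0, hPB, hcl⟩ := cl_eq_bott (isClosed_Bp hB) hF
  have hPD : PD (Bp B) P P0 := ⟨hPc, hP, hP0, hPB⟩
  obtain ⟨α, β, _, _, _, _, e, W, hW, hWP⟩ := exists_diag hP0
  have hQ := (hPD.conj hW).sub e
  have hQcl : clb (Bp B) (fun y => (W * P y * Wᴴ).submatrix e e) (eP α β) = cl (Bp (Bp B)) F := by
    rw [← hWP, clb_sub (hPD.conj hW), clb_conj hPD hW, hcl]; rfl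
  rw [hWP] at hQ
  obtain ⟨v, hvc, hvu, hve, hv0, hvB⟩ := proj_lift isProj_eP
    (f := fun y t => (W * P (y, t) * Wᴴ).submatrix e e) hQ.cont (fun y t => hQ.proj _)
    (fun y => hQ.base _ (Or.inr (Or.inl rfl)))
  have hv1 : ∀ y, v y 1 = fromBlocks (v y 1).toBlocks₁₁ 0 0 (v y 1).toBlocks₂₂ := fun y => by
    refine comm_eP ?_
    have h1 := (hve y 1).trans (hQ.base (y, 1) (Or.inr (Or.inr rfl)))
    calc v y 1 * eP α β = v y 1 * eP α β * (v y 1)ᴴ * v y 1 := by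
          rw [mul_assoc _ (v y 1)ᴴ, hvu y 1, mul_one]
      _ = _ := by rw [h1]
  refine ⟨_, α, β, inferInstance, inferInstance, inferInstance, inferInstance, v, _, _,
    ⟨hvc, hvu, hv0, hv1, fun y hy => hvB y fun t => hQ.base _ (Or.inl hy)⟩, ?_, rfl⟩
  rw [← hQcl]
  congr 1
  funext q
  exact hve q.1 q.2

/-- A homotopy of projections given by `bott_inj` lifts to unitary matrices, whose ends provide a null
homotopy of `a`. -/
lemma RB_zero_left {y : SGrp B} (h : RB 0 y) : y = 0 := by
  obtain ⟨ι, κ, _, _, _, _, u, a, b, h, hx, rfl⟩ := h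
  obtain ⟨κ1, κ2, _, _, _, _, G, hGc, hGp, hG0, hG1, hGB⟩ :=
    bott_inj h.pd.cont h.pd.proj h.pd.proj0 h.pd.base hx
  have H := h.bd (Rd.triv (B := B) (ι := κ1) (κ := κ2))
  obtain ⟨U, hU⟩ : ∃ U, U = uS u fun _ _ => (1 : Mat (κ1 ⊕ κ2)) := ⟨_, rfl⟩
  rw [← hU] at H
  obtain ⟨E, hE⟩ : ∃ E, E = eP (ι ⊕ κ1) (κ ⊕ κ2) := ⟨_, rfl⟩
  obtain ⟨s, hs⟩ : ∃ s, s = Equiv.sumSumSumComm ι κ1 κ κ2 := ⟨_, rfl⟩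
  have hEs : (fromBlocks (eP ι κ) 0 0 (fromBlocks 1 0 0 0)).submatrix s s = E := by
    rw [hE, eP_sum, hs]; rfl
  have hf0 : ∀ y t, (G (y, t) 0).submatrix s s = U y t * E * (U y t)ᴴ := fun y t => by
    have := congrFun (pj_uS (u := u) (u' := fun _ _ => (1 : Mat (κ1 ⊕ κ2)))) (y, t)
    rw [hG0, hE, hU, hs]
    refine Eq.trans ?_ this.symm
    simp [pj, eP]
  have hf1 : ∀ y t, (G (y, t) 1).submatrix s s = E := fun y t => by rw [hG1, hEs]
  have hfB : ∀ y t c, (y, t) ∈ Bp B → (G (y, t) c).submatrix s s = E := fun y t c hy => by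
    rw [hGB _ hy, hEs]
  have hcc : Continuous (uncurry fun (z : Y × I) (t : I) =>
      (G (z.1, t) z.2).submatrix s s) := by
    refine Continuous.matrix_submatrix ?_ _ _
    exact hGc.comp (f := fun p : (Y × I) × I => ((p.1.1, p.2), p.1.2)) (by fun_prop)
  obtain ⟨v, hvc, hvu, hve, hv0, hvB⟩ := proj_lift (Z := Y × I) (e := E) (hE ▸ isProj_eP) hcc
    (fun z t => isProj_submatrix (hGp _ _) s) (fun z => hfB _ _ _ (Or.inr (Or.inl rfl)))
  have hv1 : ∀ z, v z 1 * E = E * v z 1 := fun z => by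
    have h1 := (hve z 1).trans (hfB _ _ _ (Or.inr (Or.inr rfl)))
    calc v z 1 * E = v z 1 * E * (v z 1)ᴴ * v z 1 := by
          rw [mul_assoc _ (v z 1)ᴴ, hvu z 1, mul_one]
      _ = _ := by rw [h1]
  have hk : ∀ y t, (U y t)ᴴ * v (y, 0) t * E = E * ((U y t)ᴴ * v (y, 0) t) := fun y t =>
    comm_of_conj_eq (H.uni y t) (hvu _ _) ((hf0 y t).symm.trans (hve (y, 0) t).symm)
  subst hE
  have hcu : ∀ z, IsUni (v z 1).toBlocks₁₁ := fun z => (uni_blocks (comm_eP (hv1 z) ▸ hvu z 1)).1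
  have hcn : Null B fun y => (v (y, 0) 1).toBlocks₁₁ := by
    refine ⟨fun y c => (v (y, c) 1).toBlocks₁₁, ?_, fun y c => (hcu _).isUnit, fun y => rfl,
      fun y => ?_, fun y hy c => ?_⟩
    · exact (hvc.comp (continuous_id.prodMk continuous_const)).matrix_submatrix Sum.inl Sum.inl
    · beta_reduce
      rw [hvB (y, 1) (fun t => hf1 y t), ← fromBlocks_one, toBlocks_fromBlocks₁₁]
    · beta_reduce
      rw [hvB (y, c) (fun t => hfB _ _ _ (Or.inl hy)), ← fromBlocks_one,
        toBlocks_fromBlocks₁₁]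
  have hkn : Null B ((bd a (1 : Y → Matrix κ1 κ1 ℂ))⁻¹ * fun y => (v (y, 0) 1).toBlocks₁₁) := by
    have hku : ∀ y t, IsUni ((U y t)ᴴ * v (y, 0) t).toBlocks₁₁ := fun y t =>
      (uni_blocks (comm_eP (hk y t) ▸ (H.uni y t).ct.mul (hvu _ _))).1
    refine ⟨fun y t => ((U y (unitInterval.symm t))ᴴ * v (y, 0) (unitInterval.symm t)).toBlocks₁₁,
      ?_, fun y t => (hku _ _).isUnit, fun y => ?_, fun y => ?_, fun y hy t => ?_⟩
    · have c1 : Continuous fun q : Y × I => (q.1, unitInterval.symm q.2) :=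
        continuous_fst.prodMk (unitInterval.continuous_symm.comp continuous_snd)
      have c2 : Continuous fun q : Y × I => ((q.1, (0 : I)), unitInterval.symm q.2) := by fun_prop
      exact ((H.cont.comp c1).matrix_conjTranspose.matrix_mul (hvc.comp c2)).matrix_submatrix
        Sum.inl Sum.inl
    · beta_reduce
      rw [unitInterval.symm_zero, H.one, comm_eP (hv1 (y, 0)), fromBlocks_conjTranspose,
        fromBlocks_multiply, toBlocks_fromBlocks₁₁]
      simp only [Pi.mul_apply, Pi.inv_apply, (H.uni_ab y).1.inv, conjTranspose_zero,
        Matrix.mul_zero, add_zero, toBlocks_fromBlocks₁₁]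
    · beta_reduce
      rw [unitInterval.symm_one, H.zero, hv0, conjTranspose_one, mul_one,
        ← fromBlocks_one, toBlocks_fromBlocks₁₁]
    · beta_reduce
      rw [H.base y hy, hvB (y, 0) (fun t => hfB _ _ _ (Or.inl hy)), conjTranspose_one,
        mul_one, ← fromBlocks_one, toBlocks_fromBlocks₁₁]
  have h1 := (cl_eq_zero_iff hkn.gm).2 (StNull.of_null hkn)
  have h2 := (cl_eq_zero_iff hcn.gm).2 (StNull.of_null hcn)
  rw [cl_mul H.gm.1.inv hcn.gm, h2, add_zero, cl_inv H.gm.1, neg_eq_zero, cl_bd h.gm.1 GM.one,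
    cl_one, add_zero] at h1
  exact h1

/-- **Bott periodicity** for relative groups of stable homotopy classes. -/
theorem bott_periodicity (hB : IsClosed B) : Nonempty (SGrp (Bp (Bp B)) ≃+ SGrp B) :=
  rel_addEquiv RB (fun _ _ _ _ => RB_add) (RB_left hB) RB_right (fun _ => RB_zero_left)
    fun _ => RB_zero_right
end

/-! ### The stable groups of cubes -/

section
variable {Y Y' : Type} [TopologicalSpace Y] [TopologicalSpace Y'] {B : Set Y} {B' : Set Y'}

lemma GM.comp {f : Y' → Mat ι} (hf : GM B' f) {φ : Y → Y'} (hφ : Continuous φ)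
    (hB : ∀ y ∈ B, φ y ∈ B') : GM B (f ∘ φ) :=
  ⟨hf.cont.comp hφ, fun y => hf.unit _, fun y hy => hf.base _ (hB y hy)⟩

lemma cl_comp_zero {f : Y' → Mat ι} (hf : GM B' f) {φ : Y → Y'} (hφ : Continuous φ)
    (hB : ∀ y ∈ B, φ y ∈ B') (h : cl B' f = 0) : cl B (f ∘ φ) = 0 := by
  obtain ⟨n, H, hc, hu, h0, h1, hb⟩ := null_of_cl_zero hf h
  exact (cl_eq_zero_iff (hf.comp hφ hB)).2 ⟨n, fun y t => H (φ y) t,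
    hc.comp ((hφ.comp continuous_fst).prodMk continuous_snd), fun y t => hu _ t,
    fun y => h0 (φ y), fun y => h1 _, fun y hy t => hb _ (hB y hy) t⟩

/-- Homeomorphic pairs have isomorphic groups. -/
lemma sgrp_congr (φ : Y ≃ₜ Y') (hB : ∀ y, y ∈ B ↔ φ y ∈ B') :
    Nonempty (SGrp B ≃+ SGrp B') := by
  have hB1 : ∀ y ∈ B, φ y ∈ B' := fun y => (hB y).1
  have hB2 : ∀ y ∈ B', φ.symm y ∈ B := fun y hy => by rw [hB]; simpa using hy
  refine rel_addEquiv (fun x x' => ∃ (n : ℕ) (f : Y' → Mat (Fin n)), GM B' f ∧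
    cl B (f ∘ φ) = x ∧ cl B' f = x') ?_ ?_ ?_ ?_ ?_
  · rintro _ _ _ _ ⟨n, f, hf, rfl, rfl⟩ ⟨m, g, hg, rfl, rfl⟩
    refine ⟨n + m, sub finSumFinEquiv.symm (bd f g), (hf.bd hg).sub _, ?_, ?_⟩
    · rw [← cl_bd (hf.comp φ.continuous hB1) (hg.comp φ.continuous hB1)]
      exact cl_sub ((hf.bd hg).comp φ.continuous hB1) finSumFinEquiv.symm
    · rw [cl_sub (hf.bd hg), cl_bd hf hg]
  · intro x
    obtain ⟨n, f, hf, rfl⟩ := cl_exists x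
    refine ⟨_, n, f ∘ φ.symm, hf.comp φ.symm.continuous hB2, ?_, rfl⟩
    congr 1
    funext y; simp
  · intro x
    obtain ⟨n, f, hf, rfl⟩ := cl_exists x
    exact ⟨_, n, f, hf, rfl, rfl⟩
  · rintro _ ⟨n, f, hf, h, rfl⟩
    have := cl_comp_zero (hf.comp φ.continuous hB1) φ.symm.continuous hB2 h
    rw [← this]
    congr 1
    funext y; simp
  · rintro _ ⟨n, f, hf, rfl, h⟩
    exact cl_comp_zero hf φ.continuous hB1 h

lemma submatrix_eq_conj (M : Mat ι) (s : ι ≃ ι) : ∃ W : Mat ι, IsUni W ∧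
    M.submatrix s s = W * M * Wᴴ := by
  refine ⟨(1 : Mat ι).submatrix s id, ?_, ?_⟩
  · unfold IsUni
    rw [conjTranspose_submatrix, conjTranspose_one]
    have := submatrix_mul_equiv (1 : Mat ι) (1 : Mat ι) id s id
    rw [this, mul_one, Matrix.submatrix_id_id]
  · rw [conjTranspose_submatrix, conjTranspose_one]
    ext i j
    simp [Matrix.mul_apply, Matrix.one_apply]

lemma trace_blocks (A : Mat ι) (D : Mat κ) :
    (fromBlocks A 0 0 D).trace = A.trace + D.trace := by
  simp [Matrix.trace, Matrix.diag, Fintype.sum_sum_type]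

lemma trace_eP : (eP ι κ).trace = Fintype.card ι := by
  simp [eP, trace_blocks]

lemma trace_conj (P : Mat ι) {W : Mat ι} (hW : IsUni W) :
    (W * P * Wᴴ).trace = P.trace := by
  rw [mul_assoc, trace_mul_comm, mul_assoc, hW, mul_one]

lemma trace_submatrix' (P : Mat ι) (e : κ ≃ ι) : (P.submatrix e e).trace = P.trace := by
  simp only [Matrix.trace, Matrix.diag, Matrix.submatrix_apply]
  exact Equiv.sum_comp e fun i => P i i

lemma IsProj.trace_int {P : Mat ι} (hP : IsProj P) : ∃ m : ℤ, P.trace = m := by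
  obtain ⟨α, β, _, _, _, _, e, W, hW, h⟩ := exists_diag hP
  refine ⟨Fintype.card α, ?_⟩
  rw [← trace_conj P hW, ← trace_submatrix' _ e, h, trace_eP, Int.cast_natCast]

/-- Projections of equal trace are unitarily conjugate. -/
lemma conj_of_trace {P Q : Mat ι} (hP : IsProj P) (hQ : IsProj Q)
    (h : P.trace = Q.trace) : ∃ u, IsUni u ∧ P = u * Q * uᴴ := by
  obtain ⟨α, β, _, _, _, _, e, W, hW, h1⟩ := exists_diag hP
  obtain ⟨α', β', _, _, _, _, e', W', hW', h2⟩ := exists_diag hQ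
  have t1 : P.trace = Fintype.card α := by rw [← trace_conj P hW, ← trace_submatrix' _ e, h1, trace_eP]
  have t2 : Q.trace = Fintype.card α' := by
    rw [← trace_conj Q hW', ← trace_submatrix' _ e', h2, trace_eP]
  have c1 : Fintype.card α = Fintype.card α' := by
    rw [t1, t2] at h; exact_mod_cast h
  have c2 : Fintype.card β = Fintype.card β' := by
    have a1 := Fintype.card_congr e
    have a2 := Fintype.card_congr e'
    rw [Fintype.card_sum] at a1 a2
    omega
  obtain ⟨a⟩ := Fintype.card_eq.1 c1
  obtain ⟨b⟩ := Fintype.card_eq.1 c2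
  have e3 : eP α β = (eP α' β').submatrix (Equiv.sumCongr a b) (Equiv.sumCongr a b) := by
    unfold eP
    ext i j
    rcases i with i | i <;> rcases j with j | j <;> simp [Matrix.one_apply]
  have e4 : W * P * Wᴴ = (W' * Q * W'ᴴ).submatrix (e.symm.trans ((Equiv.sumCongr a b).trans e'))
      (e.symm.trans ((Equiv.sumCongr a b).trans e')) := by
    have : W * P * Wᴴ = (eP α β).submatrix e.symm e.symm := by rw [← h1]; simp
    rw [this, e3, ← h2]; rfl
  obtain ⟨V, hV, e5⟩ := submatrix_eq_conj (W' * Q * W'ᴴ)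
    (e.symm.trans ((Equiv.sumCongr a b).trans e'))
  refine ⟨Wᴴ * V * W', (hW.ct.mul hV).mul hW', ?_⟩
  calc P = (Wᴴ * W) * P * (Wᴴ * W) := by rw [hW, one_mul, mul_one]
    _ = Wᴴ * (W * P * Wᴴ) * W := by simp only [mul_assoc]
    _ = _ := by
      rw [e4, e5]
      simp only [conjTranspose_mul, conjTranspose_conjTranspose, mul_assoc]

end

/-- The group of the pair `(I, ∂I)` is infinite cyclic, through the rank of projections. -/
lemma sgrp_one : Nonempty (SGrp (Bp (∅ : Set Unit)) ≃+ ℤ) := by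
  refine rel_addEquiv (fun x m => ∃ (ι : Type) (_ : Fintype ι) (_ : DecidableEq ι)
    (P : Unit → Mat ι) (P0 : Mat ι), PD ∅ P P0 ∧ clb ∅ P P0 = x ∧
      (P ()).trace - P0.trace = m) ?_ ?_ ?_ ?_ ?_
  · rintro _ m _ m' ⟨ι, _, _, P, P0, h, rfl, hm⟩ ⟨κ, _, _, Q, Q0, h', rfl, hm'⟩
    refine ⟨_, _, _, _, _, h.bd h', clb_bd h h', ?_⟩
    rw [trace_blocks, trace_blocks, Int.cast_add, ← hm, ← hm']
    ring
  · intro x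
    obtain ⟨n, F, hF, rfl⟩ := cl_exists x
    obtain ⟨κ, _, _, P, P0, hPc, hP, hP0, hPB, hcl⟩ := cl_eq_bott isClosed_empty hF
    obtain ⟨m, hm⟩ := (hP ()).trace_int
    obtain ⟨m', hm'⟩ := hP0.trace_int
    exact ⟨m - m', κ, _, _, P, P0, ⟨hPc, hP, hP0, hPB⟩, hcl.symm, by rw [hm, hm', Int.cast_sub]⟩
  · intro m
    refine ⟨clb ∅ (fun _ => fromBlocks (1 : Mat (Fin m.toNat)) 0 0
        (0 : Mat (Fin (-m).toNat))) (fromBlocks 0 0 0 1),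
      Fin m.toNat ⊕ Fin (-m).toNat, inferInstance, inferInstance, fun _ => fromBlocks 1 0 0 0,
      fromBlocks 0 0 0 1, ⟨continuous_const, fun _ => isProj_fromBlocks isProj_one isProj_zero,
      isProj_fromBlocks isProj_zero isProj_one, fun _ h => h.elim⟩, rfl, ?_⟩
    simp only [trace_blocks, trace_one, Matrix.trace_zero, Fintype.card_fin]
    have : ((m.toNat : ℤ) - ((-m).toNat : ℤ)) = m := by omega
    rw [add_zero, zero_add]
    exact_mod_cast this
  · rintro m ⟨ι, _, _, P, P0, h, hx, hm⟩
    obtain ⟨κ1, κ2, _, _, _, _, G, hGc, hGp, hG0, hG1, -⟩ :=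
      bott_inj h.cont h.proj h.proj0 h.base hx
    obtain ⟨v, -, hvu, hve, -⟩ := proj_lift (Z := Unit) (hGp () 0) hGc hGp (fun _ => rfl)
    have := congrArg Matrix.trace (hve () 1)
    rw [trace_conj _ (hvu _ _), hG0, hG1, trace_blocks, trace_blocks P0,
      add_left_inj] at this
    rw [this, sub_self] at hm
    exact_mod_cast hm.symm
  · rintro x ⟨ι, _, _, P, P0, h, rfl, hm⟩
    obtain ⟨u, hu, e⟩ := conj_of_trace (h.proj ()) h.proj0 (by
      rw [Int.cast_zero] at hm; exact sub_eq_zero.1 hm)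
    rw [← clb_conj_eq_zero (B := (∅ : Set Unit)) (u := fun _ => u) h.proj0
      ⟨continuous_const, fun _ => hu.isUnit, fun _ h => h.elim⟩ fun _ => hu]
    congr 1
    funext y
    exact e

/-- The cube `I ^ (k + 1)` as a product. -/
def cubeSucc (k : ℕ) : (Fin k → I) × I ≃ₜ (Fin (k + 1) → I) where
  toFun p := Fin.cons p.2 p.1
  invFun y := (fun i => y i.succ, y 0)
  left_inv p := by simp
  right_inv y := by
    funext i
    refine Fin.cases ?_ (fun i => ?_) i <;> simp
  continuous_toFun := by
    exact Continuous.finCons continuous_snd continuous_fst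
  continuous_invFun := by fun_prop

lemma cubeSucc_boundary (k : ℕ) (p : (Fin k → I) × I) :
    p ∈ Bp (Cube.boundary (Fin k)) ↔ cubeSucc k p ∈ Cube.boundary (Fin (k + 1)) := by
  simp [Bp, Cube.boundary, cubeSucc, Fin.exists_fin_succ, or_comm]

/-- The groups of cubes modulo their boundary. -/
abbrev SC (k : ℕ) : Type := SGrp (Cube.boundary (Fin k))

lemma isClosed_boundary (k : ℕ) : IsClosed (Cube.boundary (Fin k)) := by
  have : Cube.boundary (Fin k) = ⋃ i, {y : Fin k → I | y i = 0 ∨ y i = 1} := by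
    ext y; simp [Cube.boundary]
  rw [this]
  exact isClosed_iUnion_of_finite fun i =>
    (isClosed_singleton.preimage (continuous_apply i)).union
      (isClosed_singleton.preimage (continuous_apply i))

lemma sc_add_two (k : ℕ) : Nonempty (SC (k + 2) ≃+ SC k) := by
  obtain ⟨a⟩ := sgrp_congr ((cubeSucc k).prodCongr (Homeomorph.refl I))
    (B := Bp (Bp (Cube.boundary (Fin k)))) (B' := Bp (Cube.boundary (Fin (k + 1)))) (fun p => by
      have := cubeSucc_boundary k p.1
      exact or_congr this Iff.rfl)
  obtain ⟨b⟩ := sgrp_congr (cubeSucc (k + 1)) (cubeSucc_boundary (k + 1))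
  obtain ⟨c⟩ := bott_periodicity (isClosed_boundary k)
  exact ⟨b.symm.trans (a.symm.trans c)⟩

/-- Bott periodicity reduces to dimension one, where classes are counted by ranks of projections. -/
lemma sc_odd (j : ℕ) : Nonempty (SC (2 * j + 1) ≃+ ℤ) := by
  induction j with
  | zero =>
    obtain ⟨a⟩ := sgrp_one
    have φ : (Fin 0 → I) ≃ₜ Unit := Homeomorph.homeomorphOfUnique _ _
    obtain ⟨b⟩ := sgrp_congr (φ.prodCongr (Homeomorph.refl I))
      (B := Bp (Cube.boundary (Fin 0))) (B' := Bp (∅ : Set Unit)) (fun p => by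
        refine or_congr ?_ Iff.rfl
        simp [Cube.boundary])
    obtain ⟨c⟩ := sgrp_congr (cubeSucc 0) (cubeSucc_boundary 0)
    exact ⟨c.symm.trans (b.trans a)⟩
  | succ j ih =>
    obtain ⟨a⟩ := ih
    obtain ⟨b⟩ := sc_add_two (2 * j + 1)
    exact ⟨b.trans a⟩

/-- Bott periodicity reduces to dimension zero, where invertible matrices are connected to `1`. -/
lemma sc_even (j : ℕ) : ∀ x : SC (2 * j), x = 0 := by
  induction j with
  | zero =>
    intro x
    obtain ⟨n, f, hf, rfl⟩ := cl_exists x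
    have hY : ∀ y : Fin (2 * 0) → I, y = fun _ => 0 := fun y => funext fun i => i.elim0
    obtain ⟨γ, hc, hu, h0, h1⟩ := gl_path (hf.unit fun _ => 0)
    refine (cl_eq_zero_iff hf).2 (StNull.of_null ⟨fun _ => γ, hc.comp continuous_snd,
      fun _ => hu, fun y => by rw [hY y]; exact h0, fun _ => h1, ?_⟩)
    rintro y ⟨i, -⟩
    exact i.elim0
  | succ j ih =>
    obtain ⟨b⟩ := sc_add_two (2 * j)
    intro x
    exact b.map_eq_zero_iff.1 (ih _)

/-! ### The stable range -/

section
section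
variable {Y : Type} [TopologicalSpace Y] {B : Set Y}

/-- A rank one perturbation of the identity that carries the vector field `v` to `w`; the linear
forms `l` make it invertible along a linear homotopy. -/
lemma rank_one_null {v w l : Y → κ → ℂ} (hv : Continuous v) (hw : Continuous w)
    (hl : Continuous l) (h1 : ∀ y, 0 < (l y ⬝ᵥ v y).re) (h2 : ∀ y, 0 < (l y ⬝ᵥ w y).re)
    (hB : ∀ y ∈ B, v y = w y) : ∃ L : Y → Mat κ, Null B L ∧ ∀ y, L y *ᵥ v y = w y := by
  have hne : ∀ y, l y ⬝ᵥ v y ≠ 0 := fun y h => by have := h1 y; simp [h] at this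
  have hc : Continuous fun y => l y ⬝ᵥ v y := hl.dotProduct hv
  refine ⟨fun y => 1 + (l y ⬝ᵥ v y)⁻¹ • vecMulVec (w y - v y) (l y),
    ⟨fun y t => 1 + (((1 - t : ℝ) : ℂ) * (l y ⬝ᵥ v y)⁻¹) • vecMulVec (w y - v y) (l y),
    ?_, ?_, ?_, ?_, ?_⟩, ?_⟩
  · have c1 : Continuous fun q : Y × I => ((1 - q.2 : ℝ) : ℂ) * (l q.1 ⬝ᵥ v q.1)⁻¹ := by
      refine Continuous.mul (by fun_prop) ?_
      exact (hc.inv₀ hne).comp continuous_fst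
    have c2 : Continuous fun q : Y × I => vecMulVec (w q.1 - v q.1) (l q.1) :=
      ((hw.sub hv).matrix_vecMulVec hl).comp continuous_fst
    exact continuous_const.add (c1.smul c2)
  · intro y t
    beta_reduce
    rw [isUnit_iff_isUnit_det, ← Matrix.smul_vecMulVec, Matrix.vecMulVec_eq Unit,
      Matrix.det_one_add_replicateCol_mul_replicateRow, isUnit_iff_ne_zero, dotProduct_smul, dotProduct_sub,
      smul_eq_mul]
    have e : 1 + ((1 - t : ℝ) : ℂ) * (l y ⬝ᵥ v y)⁻¹ * (l y ⬝ᵥ w y - l y ⬝ᵥ v y) =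
      (l y ⬝ᵥ v y)⁻¹ * ((t : ℝ) * (l y ⬝ᵥ v y) + ((1 - t : ℝ) : ℂ) * (l y ⬝ᵥ w y)) := by
      have := hne y
      field_simp
      push_cast
      ring
    rw [e]
    refine mul_ne_zero (inv_ne_zero (hne y)) fun h => ?_
    have := congrArg Complex.re h
    rw [Complex.add_re, Complex.re_ofReal_mul, Complex.re_ofReal_mul, Complex.zero_re] at this
    have a1 := t.2.1
    have a2 := t.2.2
    rcases eq_or_lt_of_le a1 with h0 | h0
    · rw [← h0] at this
      have := h2 y
      linarith
    · have b1 := mul_pos h0 (h1 y)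
      have b2 := mul_nonneg (sub_nonneg.2 a2) (h2 y).le
      linarith
  · intro y; simp
  · intro y; simp
  · intro y hy t; simp [hB y hy]
  · intro y
    rw [add_mulVec, one_mulVec, smul_mulVec, Matrix.vecMulVec_mulVec]
    rw [op_smul_eq_smul, smul_smul, inv_mul_cancel₀ (hne y), one_smul]
    simp

end

/-- The inclusion of the cube in Euclidean space. -/
def incl {m : ℕ} (y : Fin m → I) : Fin m → ℝ := fun i => (y i : ℝ)

lemma smooth_approx {m : ℕ} {F : Type} [NormedAddCommGroup F] [NormedSpace ℝ F]
    {f : (Fin m → I) → F} (hf : Continuous f) {ε : ℝ} (hε : 0 < ε) :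
    ∃ g : (Fin m → ℝ) → F, ContDiff ℝ 1 g ∧ ∀ y, ‖g (incl y) - f y‖ < ε := by
  have c : Continuous fun x : Fin m → ℝ => f fun i => Set.projIcc 0 1 zero_le_one (x i) :=
    hf.comp (continuous_pi fun i => continuous_projIcc.comp (continuous_apply i))
  obtain ⟨g, hg, h, -⟩ := c.exists_contDiff_approx 1 (ε := fun _ => ε) continuous_const fun _ => hε
  refine ⟨g, hg, fun y => ?_⟩
  have := h (incl y)
  rw [dist_eq_norm] at this
  simpa [incl, Set.projIcc_val] using this

variable {m : ℕ} {B : Set (Fin m → I)}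

/-- General position: a field of nonzero vectors may be perturbed to avoid a ray. -/
lemma avoid_ray (i0 : κ) (hm : m + 1 < 2 * Fintype.card κ) {v : (Fin m → I) → κ → ℂ}
    (hv : Continuous v) (hne : ∀ y, v y ≠ 0) (hB : ∀ y ∈ B, v y = Pi.single i0 1) :
    ∃ w : (Fin m → I) → κ → ℂ, Continuous w ∧ (∀ y ∈ B, w y = Pi.single i0 1) ∧
      (∀ y, 0 < (star (v y) ⬝ᵥ w y).re) ∧
      ∀ y, ∀ t : ℝ, 0 ≤ t → w y ≠ -((t : ℂ) • Pi.single i0 (1 : ℂ)) := by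
  have hpos : ∀ y, 0 < (star (v y) ⬝ᵥ v y).re := fun y => by
    exact (Complex.pos_iff.1 (Matrix.dotProduct_star_self_pos_iff.2 (hne y))).1
  obtain ⟨y1, -, hy1⟩ := isCompact_univ.exists_isMinOn (Set.univ_nonempty)
    (Complex.continuous_re.comp (hv.star.dotProduct hv)).continuousOn
  set c0 := (star (v y1) ⬝ᵥ v y1).re with hc0
  have hc0p : 0 < c0 := hpos y1
  have hmin : ∀ y, c0 ≤ (star (v y) ⬝ᵥ v y).re := fun y => hy1 (Set.mem_univ y)
  have hcs : Continuous fun y => ∑ i, ‖v y i‖ :=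
    continuous_finsetSum _ fun i _ => ((continuous_apply i).comp hv).norm
  obtain ⟨y2, -, hy2⟩ := isCompact_univ.exists_isMaxOn (Set.univ_nonempty) hcs.continuousOn
  set M := ∑ i, ‖v y2 i‖ with hM
  have hmax : ∀ y, ∑ i, ‖v y i‖ ≤ M := fun y => hy2 (Set.mem_univ y)
  have hM0 : 0 ≤ M := Finset.sum_nonneg fun i _ => norm_nonneg _
  obtain ⟨ε, hε, hε1, hε2⟩ : ∃ ε : ℝ, 0 < ε ∧ M * ε < c0 ∧ ε ≤ 1 / 4 := by
    refine ⟨min (c0 / (M + 1)) (1 / 4), lt_min (by positivity) (by norm_num), ?_, min_le_right _ _⟩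
    calc M * min (c0 / (M + 1)) (1 / 4) ≤ M * (c0 / (M + 1)) :=
          mul_le_mul_of_nonneg_left (min_le_left _ _) hM0
      _ < c0 := by rw [mul_div_assoc', div_lt_iff₀ (by positivity)]; nlinarith
  obtain ⟨p, hp, hpv⟩ := smooth_approx hv (half_pos hε)
  have hd : Dense (Set.range fun q : (Fin m → ℝ) × ℝ =>
      -(q.2 • (Pi.single i0 1 : κ → ℂ)) - p q.1)ᶜ := by
    refine ContDiff.dense_compl_range_of_finrank_lt_finrank ?_ ?_
    · exact ((contDiff_snd.smul contDiff_const).neg).sub (hp.comp contDiff_fst)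
    · simp [Module.finrank_pi_fintype, Complex.finrank_real_complex]
      omega
  obtain ⟨ξ, hξ, hξn⟩ := hd.exists_mem_open (Metric.isOpen_ball (x := (0 : κ → ℂ)) (ε := ε / 2))
    ⟨0, Metric.mem_ball_self (half_pos hε)⟩
  rw [mem_ball_zero_iff] at hξn
  have hdiff : ∀ y, ‖p (incl y) + ξ - v y‖ ≤ ε := fun y => by
    rw [add_sub_right_comm]
    exact (norm_add_le _ _).trans (by linarith [hpv y])
  set φ : (Fin m → I) → ℝ := fun y => min 1 (2 * ‖v y - Pi.single i0 1‖) with hφ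
  have hφ0 : ∀ y, 0 ≤ φ y := fun y => le_min zero_le_one (by positivity)
  have hφ1 : ∀ y, φ y ≤ 1 := fun y => min_le_left _ _
  have hφc : Continuous φ := continuous_const.min (continuous_const.mul (hv.sub continuous_const).norm)
  have hic : Continuous (incl : (Fin m → I) → _) := by unfold incl; fun_prop
  refine ⟨fun y => v y + φ y • (p (incl y) + ξ - v y), ?_, ?_, ?_, ?_⟩
  · exact hv.add (hφc.smul (((hp.continuous.comp hic).add continuous_const).sub hv))
  · intro y hy
    have : φ y = 0 := by simp [hφ, hB y hy]
    simp [this, hB y hy]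
  · intro y
    beta_reduce
    have hn : ‖φ y • (p (incl y) + ξ - v y)‖ ≤ ε := by
      rw [norm_smul, Real.norm_of_nonneg (hφ0 y)]
      calc φ y * _ ≤ 1 * ε := mul_le_mul (hφ1 y) (hdiff y) (norm_nonneg _) zero_le_one
        _ = ε := one_mul _
    generalize φ y • (p (incl y) + ξ - v y) = z at hn ⊢
    have h1 : ‖star (v y) ⬝ᵥ z‖ ≤ M * ε := by
      calc ‖star (v y) ⬝ᵥ z‖ ≤ ∑ i, ‖star (v y) i * z i‖ := norm_sum_le _ _
        _ ≤ ∑ i, ‖v y i‖ * ε := Finset.sum_le_sum fun i _ => by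
            rw [norm_mul, Pi.star_apply, norm_star]
            exact mul_le_mul_of_nonneg_left ((norm_le_pi_norm z i).trans hn) (norm_nonneg _)
        _ = (∑ i, ‖v y i‖) * ε := by rw [Finset.sum_mul]
        _ ≤ M * ε := mul_le_mul_of_nonneg_right (hmax y) hε.le
    rw [dotProduct_add, Complex.add_re]
    have h2 := (abs_le.1 (Complex.abs_re_le_norm (star (v y) ⬝ᵥ z))).1
    linarith [hmin y]
  · intro y t ht h
    beta_reduce at h
    rcases le_or_gt 1 (2 * ‖v y - Pi.single i0 1‖) with h1 | h1
    · have : φ y = 1 := min_eq_left h1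
      rw [this, one_smul] at h
      refine hξ ⟨(incl y, t), ?_⟩
      change -(t • (Pi.single i0 1 : κ → ℂ)) - p (incl y) = ξ
      have h' : p (incl y) + ξ = -((t : ℂ) • Pi.single i0 (1 : ℂ)) := by rw [← h]; abel
      rw [sub_eq_iff_eq_add, add_comm, h']
      ext i
      simp
    · have h2 : ‖(v y + φ y • (p (incl y) + ξ - v y) - Pi.single i0 1 : κ → ℂ) i0‖ ≤ 3 / 4 := by
        refine (norm_le_pi_norm _ i0).trans ?_
        rw [add_sub_right_comm]
        refine (norm_add_le _ _).trans ?_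
        rw [norm_smul, Real.norm_of_nonneg (hφ0 y)]
        have := mul_le_mul (hφ1 y) (hdiff y) (norm_nonneg _) zero_le_one
        linarith
      rw [h] at h2
      have h3 := (Complex.abs_re_le_norm _).trans h2
      simp at h3
      rw [abs_le] at h3
      linarith [h3.1]
end

section
variable {m : ℕ} {B : Set (Fin m → I)}

/-- A nowhere vanishing vector field on a cube of small dimension can be made constant. -/
lemma straighten (i0 : κ) (hm : m + 1 < 2 * Fintype.card κ) {v : (Fin m → I) → κ → ℂ}
    (hv : Continuous v) (hne : ∀ y, v y ≠ 0) (hB : ∀ y ∈ B, v y = Pi.single i0 1) :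
    ∃ L : (Fin m → I) → Mat κ, Null B L ∧ ∀ y, L y *ᵥ v y = Pi.single i0 1 := by
  obtain ⟨w, hw, hwB, hp, hray⟩ := avoid_ray i0 hm hv hne hB
  obtain ⟨L, hL, hLv⟩ := rank_one_null hv hw hv.star (fun y =>
    (Complex.pos_iff.1 (Matrix.dotProduct_star_self_pos_iff.2 (hne y))).1) hp
    fun y hy => by rw [hB y hy, hwB y hy]
  set N : (Fin m → I) → ℝ := fun y => Real.sqrt (∑ i, ‖w y i‖ ^ 2) with hN
  have hNc : Continuous N := Real.continuous_sqrt.comp (continuous_finsetSum _ fun i _ =>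
    (((continuous_apply i).comp hw).norm).pow 2)
  have hN2 : ∀ y, N y ^ 2 = ∑ i, ‖w y i‖ ^ 2 := fun y =>
    Real.sq_sqrt (Finset.sum_nonneg fun i _ => sq_nonneg _)
  have hN0 : ∀ y, 0 ≤ N y := fun y => Real.sqrt_nonneg _
  have hsum : ∀ y, N y ^ 2 = ‖w y i0‖ ^ 2 + ∑ i ∈ Finset.univ.erase i0, ‖w y i‖ ^ 2 := fun y => by
    rw [hN2, Finset.add_sum_erase _ (fun i => ‖w y i‖ ^ 2) (Finset.mem_univ i0)]
  have hre : ∀ y, ‖w y i0‖ ^ 2 = (w y i0).re ^ 2 + (w y i0).im ^ 2 := fun y => by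
    rw [← Complex.normSq_eq_norm_sq, Complex.normSq_apply]; ring
  have hNe : ∀ y, 0 < N y + (w y i0).re := by
    intro y
    by_contra h
    have h := not_lt.1 h
    have hs0 : 0 ≤ ∑ i ∈ Finset.univ.erase i0, ‖w y i‖ ^ 2 := Finset.sum_nonneg fun i _ => sq_nonneg _
    have h1 := hsum y
    rw [hre] at h1
    have h2 : N y ^ 2 ≤ (w y i0).re ^ 2 := by nlinarith [hN0 y]
    have h3 : (w y i0).im = 0 := by
      have : (w y i0).im ^ 2 = 0 := le_antisymm (by linarith) (sq_nonneg _)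
      exact pow_eq_zero_iff two_ne_zero |>.1 this
    have h4 : ∑ i ∈ Finset.univ.erase i0, ‖w y i‖ ^ 2 = 0 := le_antisymm (by nlinarith) hs0
    rw [Finset.sum_eq_zero_iff_of_nonneg fun i _ => sq_nonneg _] at h4
    refine hray y (-(w y i0).re) (by linarith [hN0 y]) (funext fun i => ?_)
    by_cases hi : i = i0
    · subst hi
      simp [Complex.ext_iff, h3]
    · have := h4 i (by simp [hi])
      have : w y i = 0 := by simpa using this
      simp [hi, this]
  have hNp : ∀ y, 0 < N y := fun y => by
    refine lt_of_le_of_ne (hN0 y) fun h => ?_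
    have h1 := hNe y
    rw [← h] at h1
    have h2 := hsum y
    rw [← h, hre] at h2
    have hs0 : 0 ≤ ∑ i ∈ Finset.univ.erase i0, ‖w y i‖ ^ 2 := Finset.sum_nonneg fun i _ => sq_nonneg _
    nlinarith [sq_nonneg (w y i0).im]
  obtain ⟨L', hL', hLv'⟩ := rank_one_null (B := B) (v := w) (w := fun _ => Pi.single i0 1)
    (l := fun y => (N y : ℂ) • Pi.single i0 1 + star (w y)) hw continuous_const
    (((Complex.continuous_ofReal.comp hNc).smul continuous_const).add hw.star) (fun y => by
      have e : (star (w y) ⬝ᵥ w y).re = N y ^ 2 := by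
        rw [hN2, dotProduct, Complex.re_sum]
        refine Finset.sum_congr rfl fun i _ => ?_
        rw [← Complex.normSq_eq_norm_sq, Complex.normSq_apply]
        simp
      rw [add_dotProduct, smul_dotProduct, Complex.add_re, e, single_dotProduct, one_mul,
        smul_eq_mul, Complex.re_ofReal_mul]
      have := mul_pos (hNp y) (hNe y)
      linarith) (fun y => by
      rw [dotProduct_single, mul_one]
      simpa using hNe y) hwB
  refine ⟨L' * L, hL'.mul hL, fun y => ?_⟩
  rw [Pi.mul_apply, ← mulVec_mulVec, hLv, hLv']

/-- Families of invertible matrices on a cube of small dimension split off an identity block. -/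
lemma descend (hm : m ≤ 2 * Fintype.card ι) {F : (Fin m → I) → Mat (ι ⊕ Unit)}
    (hF : Continuous F) (hu : ∀ y, IsUnit (F y))
    (hB : ∀ y ∈ B, ∃ A, F y = fromBlocks A 0 0 1) :
    ∃ (L K : (Fin m → I) → Mat (ι ⊕ Unit)) (A : (Fin m → I) → Mat ι),
      Null B L ∧ Null B K ∧ Continuous A ∧ (∀ y, IsUnit (A y)) ∧
      L * F * K = bd A (1 : (Fin m → I) → Matrix Unit Unit ℂ) ∧
      ∀ y ∈ B, F y = fromBlocks (A y) 0 0 1 := by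
  set e : ι ⊕ Unit → ℂ := Pi.single (Sum.inr ()) 1 with he
  obtain ⟨L, hL, hLv⟩ := straighten (B := B) (κ := ι ⊕ Unit) (Sum.inr ())
    (by rw [Fintype.card_sum, Fintype.card_unit]; omega) (v := fun y => F y *ᵥ e)
    (hF.matrix_mulVec continuous_const) (fun y h => by
      have h1 : IsUnit (F y) := hu y
      have := mulVec_injective_iff_isUnit.2 h1 (h.trans (mulVec_zero _).symm)
      have := congrFun this (Sum.inr ())
      simp [he] at this) (fun y hy => by
      obtain ⟨A, hA⟩ := hB y hy
      rw [hA]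
      ext i
      rcases i with i | i <;> simp [he])
  have hLc := hL.gm.cont
  have hG : Continuous fun y => L y * F y := hLc.matrix_mul hF
  have hcol : ∀ y i, (L y * F y) i (Sum.inr ()) = e i := fun y i => by
    have := congrFun (hLv y) i
    rw [mulVec_mulVec, he, Matrix.mulVec_single_one] at this
    exact this
  obtain ⟨A, hA⟩ : ∃ A : (Fin m → I) → Mat ι, ∀ y, A y = (L y * F y).toBlocks₁₁ :=
    ⟨_, fun _ => rfl⟩
  obtain ⟨X, hX⟩ : ∃ X : (Fin m → I) → Matrix Unit ι ℂ, ∀ y, X y = (L y * F y).toBlocks₂₁ :=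
    ⟨_, fun _ => rfl⟩
  have hG' : ∀ y, L y * F y = fromBlocks (A y) 0 (X y) 1 := fun y => by
    rw [hA, hX, ← fromBlocks_toBlocks (L y * F y)]
    simp only [toBlocks_fromBlocks₁₁, Matrix.toBlocks_fromBlocks₂₁]
    congr 1
    · ext i j
      simpa [he, toBlocks₁₂] using hcol y (Sum.inl i)
    · ext i j
      simpa [he, Matrix.toBlocks₂₂] using hcol y (Sum.inr ())
  have hAc : Continuous A := by
    rw [funext hA]
    exact hG.matrix_submatrix Sum.inl Sum.inl
  have hXc : Continuous X := by
    rw [funext hX]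
    exact hG.matrix_submatrix Sum.inr Sum.inl
  have hGB : ∀ y ∈ B, F y = fromBlocks (A y) 0 (X y) 1 := fun y hy => by
    rw [← hG', hL.gm.base y hy, one_mul]
  have hXB : ∀ y ∈ B, X y = 0 := fun y hy => by
    obtain ⟨A', hA'⟩ := hB y hy
    rw [hGB y hy, fromBlocks_inj] at hA'
    exact hA'.2.2.1
  refine ⟨L, fun y => fromBlocks 1 0 (-X y) 1, A, hL,
    ⟨fun y t => fromBlocks 1 0 (-(((1 - t : ℝ) : ℂ) • X y)) 1, ?_, fun y t => isUnit_lower _,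
      ?_, ?_, ?_⟩, hAc, ?_, ?_, ?_⟩
  · have c1 : Continuous fun q : (Fin m → I) × I => ((1 - q.2 : ℝ) : ℂ) := by fun_prop
    exact Continuous.matrix_fromBlocks continuous_const continuous_const
      (c1.smul (hXc.comp continuous_fst)).neg continuous_const
  · intro y; simp
  · intro y; simp
  · intro y hy t; simp [hXB y hy]
  · intro y
    have h1 : IsUnit (L y * F y) := (hL.gm.unit y).mul (hu y)
    rw [hG', isUnit_fromBlocks_zero₁₂] at h1
    exact h1.1
  · funext y
    change L y * F y * _ = _
    rw [hG', fromBlocks_multiply]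
    simp [bd]
  · intro y hy
    rw [hGB y hy, hXB y hy]

lemma descend_cl (hm : m ≤ 2 * Fintype.card ι)
    {F : (Fin m → I) → Mat (ι ⊕ Unit)} (hF : GM B F) :
    ∃ A : (Fin m → I) → Mat ι, GM B A ∧ cl B A = cl B F := by
  obtain ⟨L, K, A, hL, hK, hA, hu, h, hB⟩ := descend hm hF.cont hF.unit
    (fun y hy => ⟨1, by rw [hF.base y hy, fromBlocks_one]⟩)
  have gA : GM B A := ⟨hA, hu, fun y hy => by
    have := hB y hy
    rw [hF.base y hy, ← fromBlocks_one, fromBlocks_inj] at this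
    exact this.1.symm⟩
  refine ⟨A, gA, ?_⟩
  have h1 := congrArg (cl B) h
  rw [cl_mul (hL.gm.mul hF) hK.gm, cl_mul hL.gm hF, cl_bd gA GM.one, cl_one,
    (cl_eq_zero_iff hL.gm).2 (StNull.of_null hL), (cl_eq_zero_iff hK.gm).2 (StNull.of_null hK)] at h1
  simpa using h1.symm

/-- Every class on an `m`-cube is represented by unitary matrices of size `n ≥ m / 2`. -/
lemma exists_rep {n : ℕ} (hm : m ≤ 2 * n) (x : SGrp B) :
    ∃ f : (Fin m → I) → Mat (Fin n), GM B f ∧ (∀ y, IsUni (f y)) ∧ cl B f = x := by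
  have key : ∀ d, ∀ f : (Fin m → I) → Mat (Fin (n + d)), GM B f →
      ∃ g : (Fin m → I) → Mat (Fin n), GM B g ∧ cl B g = cl B f := by
    intro d
    induction d with
    | zero => exact fun f hf => ⟨f, hf, rfl⟩
    | succ d ih =>
      intro f hf
      have e : Fin (n + d) ⊕ Unit ≃ Fin (n + (d + 1)) :=
        Fintype.equivOfCardEq (by simp; omega)
      obtain ⟨A, hA, h⟩ := descend_cl (B := B) (ι := Fin (n + d)) (by simp; omega) (hf.sub e)
      obtain ⟨g, hg, h'⟩ := ih A hA
      exact ⟨g, hg, by rw [h', h, cl_sub hf]⟩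
  obtain ⟨N, f, hf, rfl⟩ := cl_exists x
  have e : Fin (n + N) ≃ Fin N ⊕ Fin n := Fintype.equivOfCardEq (by simp; omega)
  have g1 := hf.bd (GM.one (B := B) (ι := Fin n))
  obtain ⟨g, hg, h⟩ := key N _ (g1.sub e)
  refine ⟨fun y => polar (g y), ⟨continuous_polar hg.cont hg.unit,
    fun y => (polar_uni (hg.unit y)).isUnit, fun y hy => by rw [hg.base y hy, polar_one]⟩,
    fun y => polar_uni (hg.unit y), ?_⟩
  rw [cl_sub g1, cl_bd hf GM.one, cl_one, add_zero] at h
  rw [← h]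
  have := cl_homotopy (B := B) (fun y (t : I) => ((1 - (t : ℝ) : ℝ) : ℂ) • g y + ((t : ℝ) : ℂ) • polar (g y))
    (by
      have c1 : Continuous fun q : (Fin m → I) × I => ((1 - q.2 : ℝ) : ℂ) := by fun_prop
      have c2 : Continuous fun q : (Fin m → I) × I => ((q.2 : ℝ) : ℂ) := by fun_prop
      exact (c1.smul (hg.cont.comp continuous_fst)).add
        (c2.smul ((continuous_polar hg.cont hg.unit).comp continuous_fst)))
    (fun y t => isUnit_polar_seg (hg.unit y) t.2.1 t.2.2)
    (fun y hy t => by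
      rw [hg.base y hy, polar_one, ← add_smul, ← Complex.ofReal_add]
      simp)
  simpa using this.symm

lemma null_descend (hm : m + 1 ≤ 2 * Fintype.card ι) {f : (Fin m → I) → Mat ι}
    (h : Null B (bd f (1 : (Fin m → I) → Matrix Unit Unit ℂ))) : Null B f := by
  obtain ⟨H, hc, hu, h0, h1, hB⟩ := h
  obtain ⟨L, K, A, -, -, hA, hAu, -, h⟩ := descend (m := m + 1)
    (B := {z | (cubeSucc m).symm z ∈ Bp B}) hm
    (F := fun z => H ((cubeSucc m).symm z).1 ((cubeSucc m).symm z).2)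
    (hc.comp (cubeSucc m).symm.continuous) (fun z => hu _ _) (fun z hz => by
      rcases hz with hz | hz | hz
      · exact ⟨1, by rw [hB _ hz, fromBlocks_one]⟩
      · exact ⟨_, by rw [hz, h0]; rfl⟩
      · exact ⟨1, by rw [hz, h1, fromBlocks_one]⟩)
  have key : ∀ y t, (y, t) ∈ Bp B → H y t = fromBlocks (A (cubeSucc m (y, t))) 0 0 1 := by
    intro y t hyt
    have := h (cubeSucc m (y, t)) (by simpa using hyt)
    simpa using this
  refine ⟨fun y t => A (cubeSucc m (y, t)), hA.comp (cubeSucc m).continuous, fun y t => hAu _,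
    fun y => ?_, fun y => ?_, fun y hy t => ?_⟩
  · have := key y 0 (Or.inr (Or.inl rfl))
    rw [h0] at this
    exact (fromBlocks_inj.1 this).1.symm
  · have := key y 1 (Or.inr (Or.inr rfl))
    rw [h1, ← fromBlocks_one, fromBlocks_inj] at this
    exact this.1.symm
  · have := key y t (Or.inl hy)
    rw [hB y hy, ← fromBlocks_one, fromBlocks_inj] at this
    exact this.1.symm

/-- Stably trivial unitary families of size `n ≥ (m + 1) / 2` on an `m`-cube are null-homotopic. -/
lemma null_of_cl {n : ℕ} (hm : m + 1 ≤ 2 * n) {f : (Fin m → I) → Mat (Fin n)}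
    (hf : GM B f) (hfu : ∀ y, IsUni (f y)) (h : cl B f = 0) :
    ∃ H : (Fin m → I) → I → Mat (Fin n), Continuous (uncurry H) ∧
      (∀ y t, IsUni (H y t)) ∧ (∀ y, H y 0 = f y) ∧ (∀ y, H y 1 = 1) ∧
      ∀ y ∈ B, ∀ t, H y t = 1 := by
  have key : ∀ d, Null B (bd f (1 : (Fin m → I) → Mat (Fin d))) → Null B f := by
    intro d
    induction d with
    | zero =>
      intro h
      have : bd f (1 : (Fin m → I) → Mat (Fin 0)) =
          sub (Equiv.sumEmpty (Fin n) (Fin 0)) f := by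
        funext y
        ext i j
        rcases i with i | i
        · rcases j with j | j
          · rfl
          · exact j.elim0
        · exact i.elim0
      rw [this] at h
      exact h.of_sub
    | succ d ih =>
      intro h
      refine ih (null_descend (by simp; omega) ?_)
      have e : Fin (d + 1) ≃ Fin d ⊕ Unit := Fintype.equivOfCardEq (by simp)
      have h2 := (null_bd_one_iff e f).1 h
      rw [← bd_one, bd_assoc] at h2
      exact h2.of_sub
  obtain ⟨N, hN⟩ := null_of_cl_zero hf h
  obtain ⟨H, hc, hu, h0, h1, hB⟩ := key N hN
  exact ⟨fun y t => polar (H y t), continuous_polar hc (fun q => hu q.1 q.2),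
    fun y t => polar_uni (hu y t), fun y => by beta_reduce; rw [h0, polar_of_uni (hfu y)],
    fun y => by beta_reduce; rw [h1, polar_one], fun y hy t => by beta_reduce; rw [hB y hy t, polar_one]⟩

end

/-! ### Reducible tuples -/

section

/-- A linear parametrization of Hermitian matrices by real matrices. -/
def herm (R : ι → ι → ℝ) : Mat ι :=
  Matrix.of fun i j => ((R i j + R j i : ℝ) : ℂ) + Complex.I * ((R i j - R j i : ℝ) : ℂ)

lemma herm_surj {H : Mat ι} (hH : Hᴴ = H) : ∃ R, herm R = H := by
  have h : ∀ i j, (starRingEnd ℂ) (H j i) = H i j := fun i j => by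
    have := congrFun (congrFun hH i) j
    simpa using this
  refine ⟨fun i j => ((H i j).re + (H i j).im) / 2, ?_⟩
  ext i j
  have h1 := congrArg Complex.re (h i j)
  have h2 := congrArg Complex.im (h i j)
  simp only [Complex.conj_re, Complex.conj_im] at h1 h2
  refine Complex.ext ?_ ?_
  · simp [herm]; rw [h1, ← h2]; ring
  · simp [herm]; rw [h1, ← h2]; ring

/-- The commutant of the tuple `A` consists of the scalars. -/
def Irr {r : ℕ} (A : Fin r → Mat ι) : Prop :=
  ∀ X : Mat ι, (∀ i, A i * X = X * A i) → ∃ c : ℂ, X = c • (1 : Mat ι)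

lemma exists_proj_of_herm {r : ℕ} {A : Fin r → Mat ι} {H : Mat ι} (hH : Hᴴ = H)
    (hc : ∀ i, A i * H = H * A i) (hn : ¬∃ c : ℂ, H = c • (1 : Mat ι)) :
    ∃ E : Mat ι, IsProj E ∧ (∀ i, A i * E = E * A i) ∧ E ≠ 0 ∧ E ≠ 1 := by
  classical
  have hH : H.IsHermitian := hH
  obtain ⟨U, hU, hUe⟩ : ∃ U : Mat ι, U = (hH.eigenvectorUnitary : Mat ι) ∧ IsUni U :=
    ⟨_, rfl, mem_unitaryGroup_iff'.1 hH.eigenvectorUnitary.2⟩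
  obtain ⟨d, hd⟩ : ∃ d : ι → ℂ, Uᴴ * H * U = diagonal d := by
    refine ⟨_, Eq.trans ?_ hH.conjStarAlgAut_star_eigenvectorUnitary⟩
    rw [Unitary.conjStarAlgAut_star_apply, hU]
    rfl
  have hHd : H = U * diagonal d * Uᴴ := by
    rw [← hd]
    calc H = (U * Uᴴ) * H * (U * Uᴴ) := by rw [hUe.mul_ct, one_mul, mul_one]
      _ = _ := by simp only [mul_assoc]
  have hne : ∃ i j, d i ≠ d j := by
    by_contra h
    push Not at h
    apply hn
    rcases isEmpty_or_nonempty ι with h0 | ⟨⟨i0⟩⟩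
    · exact ⟨0, Subsingleton.elim _ _⟩
    · refine ⟨d i0, ?_⟩
      have : diagonal d = d i0 • (1 : Mat ι) := by
        rw [Matrix.smul_one_eq_diagonal]
        congr 1
        funext i
        exact h i i0
      rw [hHd, this]
      simp [hUe.mul_ct]
  obtain ⟨i0, j0, hij⟩ := hne
  obtain ⟨p, hp⟩ : ∃ p : ι → ℂ, ∀ i, p i = if d i = d i0 then 1 else 0 := ⟨_, fun _ => rfl⟩
  refine ⟨U * diagonal p * Uᴴ, IsProj.conj ⟨?_, ?_⟩ hUe, fun i => ?_, fun h => ?_, fun h => ?_⟩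
  · rw [diagonal_conjTranspose]
    congr 1
    funext i
    rw [Pi.star_apply, hp]; split_ifs <;> simp
  · rw [diagonal_mul_diagonal]
    congr 1
    funext i
    rw [hp]; split_ifs <;> simp
  · have h1 : (Uᴴ * A i * U) * diagonal d = diagonal d * (Uᴴ * A i * U) := by
      rw [← hd]
      calc Uᴴ * A i * U * (Uᴴ * H * U) = Uᴴ * (A i * ((U * Uᴴ) * H)) * U := by
            simp only [mul_assoc]
        _ = Uᴴ * (H * ((U * Uᴴ) * A i)) * U := by
            rw [hUe.mul_ct, one_mul, one_mul, hc]
        _ = _ := by simp only [mul_assoc]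
    have h2 : (Uᴴ * A i * U) * diagonal p = diagonal p * (Uᴴ * A i * U) := by
      ext k l
      have h3 := congrFun (congrFun h1 k) l
      rw [mul_diagonal, Matrix.diagonal_mul] at h3 ⊢
      by_cases h4 : d k = d l
      · rw [hp, hp, h4, mul_comm]
      · have : (Uᴴ * A i * U) k l = 0 := by
          have : (d l - d k) * (Uᴴ * A i * U) k l = 0 := by
            rw [_root_.sub_mul, ← h3]; ring
          exact (mul_eq_zero.1 this).resolve_left (sub_ne_zero.2 (Ne.symm h4))
        rw [this]; simp
    calc A i * (U * diagonal p * Uᴴ)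
        = (U * Uᴴ) * A i * (U * diagonal p * Uᴴ) := by rw [hUe.mul_ct, one_mul]
      _ = U * (Uᴴ * A i * U * diagonal p) * Uᴴ := by simp only [mul_assoc]
      _ = U * diagonal p * Uᴴ * A i * (U * Uᴴ) := by rw [h2]; simp only [mul_assoc]
      _ = _ := by rw [hUe.mul_ct, mul_one]
  all_goals
    have h5 : diagonal p = Uᴴ * (U * diagonal p * Uᴴ) * U := by
      calc diagonal p = (Uᴴ * U) * diagonal p * (Uᴴ * U) := by
            rw [hUe, one_mul, mul_one]
        _ = _ := by simp only [mul_assoc]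
    rw [h] at h5
  · have := congrFun (congrFun h5 i0) i0
    simp [hp] at this
  · have := congrFun (congrFun h5 j0) j0
    rw [mul_one, hUe] at this
    simp [hp, Ne.symm hij] at this

lemma exists_proj {r : ℕ} {A : Fin r → Mat ι} (hA : ∀ i, IsUni (A i)) (h : ¬Irr A) :
    ∃ E : Mat ι, IsProj E ∧ (∀ i, A i * E = E * A i) ∧ E ≠ 0 ∧ E ≠ 1 := by
  unfold Irr at h
  push Not at h
  obtain ⟨X, hX, hXn⟩ := h
  have hX' : ∀ i, A i * Xᴴ = Xᴴ * A i := fun i => by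
    have h1 : Xᴴ * (A i)ᴴ = (A i)ᴴ * Xᴴ := by
      rw [← conjTranspose_mul, ← conjTranspose_mul, hX]
    calc A i * Xᴴ = A i * (Xᴴ * (A i)ᴴ) * A i := by rw [mul_assoc, mul_assoc, hA i, mul_one]
      _ = (A i * (A i)ᴴ) * Xᴴ * A i := by rw [h1]; simp only [mul_assoc]
      _ = _ := by rw [(hA i).mul_ct, one_mul]
  by_cases h1 : ∃ c : ℂ, X + Xᴴ = c • (1 : Mat ι)
  · by_cases h2 : ∃ c : ℂ, Complex.I • (X - Xᴴ) = c • (1 : Mat ι)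
    · exfalso
      obtain ⟨c, hc⟩ := h1
      obtain ⟨c', hc'⟩ := h2
      apply hXn ((c - Complex.I * c') / 2)
      have h3 : X - Xᴴ = (-(Complex.I * c')) • (1 : Mat ι) := by
        rw [← neg_mul, mul_smul, ← hc', smul_smul]
        simp
      have h4 : (2 : ℂ) • X = (c - Complex.I * c') • (1 : Mat ι) := by
        rw [sub_eq_add_neg, add_smul, ← hc, ← h3, two_smul]; abel
      rw [div_eq_inv_mul, mul_smul, ← h4, smul_smul]
      simp
    · refine exists_proj_of_herm (H := Complex.I • (X - Xᴴ)) ?_ (fun i => ?_) h2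
      · rw [conjTranspose_smul, conjTranspose_sub, conjTranspose_conjTranspose,
          Complex.star_def, Complex.conj_I, neg_smul, ← smul_neg, neg_sub]
      · rw [mul_smul_comm, smul_mul_assoc, _root_.mul_sub, _root_.sub_mul, hX, hX']
  · refine exists_proj_of_herm (H := X + Xᴴ) ?_ (fun i => ?_) h1
    · rw [conjTranspose_add, conjTranspose_conjTranspose, add_comm]
    · rw [mul_add, add_mul, hX, hX']

/-- Projections near the standard one are carried to it by a matrix with identity diagonal
blocks. -/
lemma graph_of_near {E : Mat (ι ⊕ κ)} (hE : IsProj E) (h : ‖eP ι κ - E‖ < 1 / 2) :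
    ∃ T : Matrix κ ι ℂ, IsUnit (fromBlocks 1 (-Tᴴ) T 1) ∧
      E * fromBlocks 1 (-Tᴴ) T 1 = fromBlocks 1 (-Tᴴ) T 1 * eP ι κ := by
  have hu := isUnit_kato (isProj_eP) hE h
  have hk : E * kato E (eP ι κ) = kato E (eP ι κ) * eP ι κ := by
    have h1 : E * (1 - E) = 0 := by rw [_root_.mul_sub, mul_one, hE.2, sub_self]
    have h2 : (1 - eP ι κ) * eP ι κ = 0 := by
      rw [_root_.sub_mul, one_mul, isProj_eP.2, sub_self]
    unfold kato
    rw [mul_add, add_mul, ← mul_assoc, ← mul_assoc, h1, hE.2, mul_assoc, mul_assoc, h2,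
      isProj_eP.2]
    simp
  set Z := kato E (eP ι κ) with hZ
  obtain ⟨P, hP⟩ : ∃ P : Mat (ι ⊕ κ), P = eP ι κ := ⟨_, rfl⟩
  have hPP : IsProj P := hP ▸ isProj_eP
  have key : ∀ {Q : Mat (ι ⊕ κ)}, IsProj Q → ‖Q‖ ≤ 1 := fun {Q} hQ => by
    have h1 := CStarRing.norm_star_mul_self (x := Q)
    rw [star_eq_conjTranspose, hQ.1, hQ.2] at h1
    nlinarith [norm_nonneg Q]
  have key2 : ∀ {Q : Mat (ι ⊕ κ)}, IsProj Q →
      ‖Q * (P - E) * Q‖ ≤ ‖P - E‖ := fun {Q} hQ => by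
    refine (norm_mul_le _ _).trans ?_
    have h1 := norm_mul_le Q (P - E)
    have h2 := mul_le_mul_of_nonneg_right (key hQ) (norm_nonneg (P - E))
    have h3 := mul_le_mul_of_nonneg_left (key hQ) (norm_nonneg (Q * (P - E)))
    linarith
  have hQP : IsProj (1 - P) := ⟨by rw [conjTranspose_sub, hPP.1, conjTranspose_one], by
    rw [_root_.sub_mul, one_mul, _root_.mul_sub, mul_one, hPP.2]; simp⟩
  obtain ⟨D, hD⟩ : ∃ D, D = P * E * P + (1 - P) * (1 - E) * (1 - P) := ⟨_, rfl⟩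
  have hDu : IsUnit D := by
    have e : D = 1 - (P * (P - E) * P - (1 - P) * (P - E) * (1 - P)) := by
      have hq : (1 - P) * P = 0 := by rw [_root_.sub_mul, one_mul, hPP.2, sub_self]
      have e1 : P * (P - E) * P = P - P * E * P := by
        rw [_root_.mul_sub, _root_.sub_mul, hPP.2, hPP.2]
      have e2 : (1 - P) * (P - E) * (1 - P) = -((1 - P) * E * (1 - P)) := by
        rw [_root_.mul_sub (1 - P) P E, hq, _root_.zero_sub, neg_mul]
      have e3 : (1 - P) * (1 - E) * (1 - P) = 1 - P - (1 - P) * E * (1 - P) := by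
        rw [_root_.mul_sub (1 - P) 1 E, mul_one, _root_.sub_mul _ _ (1 - P), hQP.2]
      rw [hD, e1, e2, e3]; abel
    rw [e]
    refine isUnit_one_sub_of_norm_lt_one ?_
    rw [← hP] at h
    have h1 := key2 hPP
    have h2 := key2 hQP
    have h3 := norm_sub_le (P * (P - E) * P) ((1 - P) * (P - E) * (1 - P))
    linarith
  have hZD : D = fromBlocks Z.toBlocks₁₁ 0 0 Z.toBlocks₂₂ := by
    have e1 : (1 : Mat (ι ⊕ κ)) - P = fromBlocks 0 0 0 1 := by
      rw [hP, eP, ← fromBlocks_one, sub_eq_add_neg, fromBlocks_neg,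
        fromBlocks_add]; simp
    have e2 : D = P * Z * P + (1 - P) * Z * (1 - P) := by
      have hq : (1 - P) * P = 0 := by rw [_root_.sub_mul, one_mul, hPP.2, sub_self]
      have hq' : P * (1 - P) = 0 := by rw [_root_.mul_sub, mul_one, hPP.2, sub_self]
      rw [hD, hZ, kato, ← hP]
      have f1 : P * (E * P + (1 - E) * (1 - P)) * P = P * E * P := by
        calc _ = P * E * (P * P) + P * (1 - E) * ((1 - P) * P) := by noncomm_ring
          _ = _ := by rw [hq, hPP.2]; simp
      have f2 : (1 - P) * (E * P + (1 - E) * (1 - P)) * (1 - P) = (1 - P) * (1 - E) * (1 - P) := by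
        calc _ = (1 - P) * E * (P * (1 - P)) + (1 - P) * (1 - E) * ((1 - P) * (1 - P)) := by
              generalize 1 - P = P'
              noncomm_ring
          _ = _ := by rw [hq', hQP.2]; simp
      rw [f1, f2]
    have e3 : Z = fromBlocks Z.toBlocks₁₁ Z.toBlocks₁₂ Z.toBlocks₂₁ Z.toBlocks₂₂ :=
      (fromBlocks_toBlocks Z).symm
    rw [e2, e1, hP, eP]
    generalize Z.toBlocks₁₁ = z1 at e3 ⊢
    generalize Z.toBlocks₁₂ = z2 at e3
    generalize Z.toBlocks₂₁ = z3 at e3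
    generalize Z.toBlocks₂₂ = z4 at e3 ⊢
    rw [e3]
    simp [fromBlocks_multiply, fromBlocks_add]
  have hDP : D * P = P * D := by
    rw [hZD, hP, eP]; simp [fromBlocks_multiply]
  obtain ⟨W, hW⟩ : ∃ W, W = Z * D⁻¹ := ⟨_, rfl⟩
  have hWu : IsUnit W := hW ▸ hu.mul (isUnit_inv hDu)
  have hDi : D⁻¹ * P = P * D⁻¹ := by
    calc D⁻¹ * P = D⁻¹ * (P * D) * D⁻¹ := by
          rw [mul_assoc, mul_assoc, mul_inv_of hDu, mul_one]
      _ = P * D⁻¹ := by rw [← hDP, ← mul_assoc, inv_mul_of hDu, one_mul]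
  have hWE : E * W = W * P := by
    rw [hW, ← mul_assoc, hk, ← hP, mul_assoc, mul_assoc, hDi]
  have hWD : W * D = Z := by rw [hW, mul_assoc, inv_mul_of hDu, mul_one]
  have hcomm : (Wᴴ * W) * eP ι κ = eP ι κ * (Wᴴ * W) := by
    have h1 : Wᴴ * E = P * Wᴴ := by
      have := congrArg Matrix.conjTranspose hWE
      rwa [conjTranspose_mul, conjTranspose_mul, hE.1, hPP.1] at this
    rw [← hP, mul_assoc, ← hWE, ← mul_assoc, h1, mul_assoc]
  have h0 := comm_eP hcomm
  have e3 : W = fromBlocks W.toBlocks₁₁ W.toBlocks₁₂ W.toBlocks₂₁ W.toBlocks₂₂ :=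
      (fromBlocks_toBlocks W).symm
  rw [hZD] at hDu hWD
  have hd1 := (isUnit_fromBlocks_zero₁₂.1 hDu).1
  have hd2 := (isUnit_fromBlocks_zero₁₂.1 hDu).2
  have g1 : W.toBlocks₁₁ * Z.toBlocks₁₁ = Z.toBlocks₁₁ := by
    conv_rhs => rw [← hWD, e3, fromBlocks_multiply]
    simp
  have g2 : W.toBlocks₂₂ * Z.toBlocks₂₂ = Z.toBlocks₂₂ := by
    conv_rhs => rw [← hWD, e3, fromBlocks_multiply]
    simp
  have g1' : W.toBlocks₁₁ = 1 := by
    have := congrArg (· * (Z.toBlocks₁₁)⁻¹) g1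
    simpa only [mul_assoc, mul_inv_of hd1, mul_one] using this
  have g2' : W.toBlocks₂₂ = 1 := by
    have := congrArg (· * (Z.toBlocks₂₂)⁻¹) g2
    simpa only [mul_assoc, mul_inv_of hd2, mul_one] using this
  rw [g1', g2'] at e3
  have g3 : W.toBlocks₁₂ = -(W.toBlocks₂₁)ᴴ := by
    generalize W.toBlocks₁₂ = z2 at e3 ⊢
    generalize W.toBlocks₂₁ = z3 at e3 ⊢
    rw [e3, fromBlocks_conjTranspose, fromBlocks_multiply] at h0
    have := congrArg toBlocks₁₂ h0
    simp only [Matrix.toBlocks_fromBlocks₁₂] at this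
    simp at this
    exact eq_neg_of_add_eq_zero_left this
  rw [g3] at e3
  refine ⟨W.toBlocks₂₁, ?_, ?_⟩
  · rw [← e3]; exact hWu
  · rw [← e3, ← hP]; exact hWE

end

section

/-- A Cayley transform turning the product of a unitary and a Hermitian matrix into a polynomial
expression in a skew-Hermitian and a Hermitian matrix. -/
lemma cayley {A Q : Mat ι} (hA : IsUni A) (hQ : Qᴴ = Q) (hu : IsUnit (1 + A)) :
    ∃ H Q' : Mat ι, Hᴴ = -H ∧ Q'ᴴ = Q' ∧ (∀ E, A * E = E * A → H * E = E * H) ∧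
      A * Q = (1 - H) * Q' * (1 - H) := by
  obtain ⟨J, hJ⟩ : ∃ J, J = (1 + A)⁻¹ := ⟨_, rfl⟩
  have j1 : (1 + A) * J = 1 := hJ ▸ mul_inv_of hu
  have j2 : J * (1 + A) = 1 := hJ ▸ inv_mul_of hu
  have jc : ∀ E, A * E = E * A → J * E = E * J := fun E hE => by
    have h : (1 + A) * E = E * (1 + A) := by rw [add_mul, mul_add, hE]; simp
    calc J * E = J * (E * (1 + A)) * J := by rw [mul_assoc, mul_assoc, j1, mul_one]
      _ = E * J := by rw [← h, ← mul_assoc, j2, one_mul]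
  have jA := jc A rfl
  have a1 : Aᴴ * A = 1 := hA
  have a2 := hA.mul_ct
  have jh : Jᴴ = A * J := by
    have h1 : Jᴴ * (1 + Aᴴ) = 1 := by
      have := congrArg Matrix.conjTranspose j1
      simpa [conjTranspose_mul] using this
    have h2 : (1 + Aᴴ) * (A * J) = 1 := by
      rw [← mul_assoc, add_mul, one_mul, a1, add_comm, j1]
    calc Jᴴ = Jᴴ * ((1 + Aᴴ) * (A * J)) := by rw [h2, mul_one]
      _ = A * J := by rw [← mul_assoc, h1, one_mul]
  have hK : 1 - (1 - A) * J = (2 : ℂ) • (A * J) := by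
    have : (1 : Mat ι) = (1 + A) * J := j1.symm
    nth_rewrite 1 [this]
    rw [← _root_.sub_mul, ← smul_mul_assoc]
    congr 1
    rw [two_smul]; abel
  have k1 : A * J * (1 + A) = A := by rw [mul_assoc, j2, mul_one]
  have k2 : (1 + Aᴴ) * (A * J) = 1 := by
    rw [← mul_assoc, add_mul, one_mul, a1, add_comm, j1]
  refine ⟨(1 - A) * J, (1 / 4 : ℂ) • ((1 + A) * Q * (1 + Aᴴ)), ?_, ?_, fun E hE => ?_, ?_⟩
  · rw [conjTranspose_mul, jh, conjTranspose_sub, conjTranspose_one, ← jA,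
      mul_assoc, _root_.mul_sub, a2, mul_one]
    rw [_root_.sub_mul, ← jA, _root_.mul_sub]
    simp
  · rw [conjTranspose_smul, conjTranspose_mul, conjTranspose_mul, hQ,
      conjTranspose_add, conjTranspose_add, conjTranspose_conjTranspose,
      conjTranspose_one, ← mul_assoc]
    congr 1
    simp
  · rw [mul_assoc, jc E hE, ← mul_assoc, ← mul_assoc, _root_.sub_mul, _root_.mul_sub, hE]
    simp
  · rw [hK]
    simp only [smul_mul_assoc, mul_smul_comm, smul_smul]
    rw [show (2 : ℂ) * (1 / 4 * 2) = 1 by norm_num, one_smul]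
    calc A * Q = (A * J * (1 + A)) * Q * ((1 + Aᴴ) * (A * J)) := by rw [k1, k2, mul_one]
      _ = _ := by simp only [mul_assoc]

/-- A polynomial parametrization of the products of a unitary matrix, block diagonal for a
splitting close to a reference splitting given by `w`, and a Hermitian matrix. -/
def Mp (l : ℂ) (w : Mat (ι ⊕ κ)) (T : Matrix κ ι ℂ) (S : ι → ι → ℝ) (S' : κ → κ → ℝ)
    (R : (ι ⊕ κ) → (ι ⊕ κ) → ℝ) : Mat (ι ⊕ κ) :=
  l • ((1 - w * fromBlocks 1 (-Tᴴ) T 1 *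
      fromBlocks (Complex.I • herm S) 0 0 (Complex.I • herm S') *
      (w * fromBlocks 1 (-Tᴴ) T 1)ᴴ) * herm R *
    (1 - w * fromBlocks 1 (-Tᴴ) T 1 *
      fromBlocks (Complex.I • herm S) 0 0 (Complex.I • herm S') *
      (w * fromBlocks 1 (-Tᴴ) T 1)ᴴ))

lemma herm_surj_skew {H : Mat ι} (hH : Hᴴ = -H) : ∃ R, Complex.I • herm R = H := by
  obtain ⟨R, hR⟩ := herm_surj (H := -Complex.I • H) (by
    rw [conjTranspose_smul, hH]; simp)
  refine ⟨R, ?_⟩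
  rw [hR, smul_smul]
  simp

lemma red_param {r : ℕ} {A Q : Fin r → Mat (ι ⊕ κ)} (hA : ∀ i, IsUni (A i))
    (hQ : ∀ i, (Q i)ᴴ = Q i) {E : Mat (ι ⊕ κ)} (hE : IsProj E)
    (hc : ∀ i, A i * E = E * A i) {l : Fin r → ℂ} (hl : ∀ i, star (l i) * l i = 1)
    (hl' : ∀ i, IsUnit (1 + star (l i) • A i)) {w : Mat (ι ⊕ κ)} (hw : IsUni w)
    (h : ‖w * eP ι κ * wᴴ - E‖ < 1 / 2) :
    ∃ (T : Matrix κ ι ℂ) (S : Fin r → ι → ι → ℝ) (S' : Fin r → κ → κ → ℝ)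
      (R : Fin r → (ι ⊕ κ) → (ι ⊕ κ) → ℝ), ∀ i, A i * Q i = Mp (l i) w T (S i) (S' i) (R i) := by
  have hn : ∀ {u : Mat (ι ⊕ κ)}, IsUni u → ‖u‖ ≤ 1 := fun {u} hu => by
    have h1 := CStarRing.norm_star_mul_self (x := u)
    have h2 : ‖(1 : Mat (ι ⊕ κ))‖ ≤ 1 := by
      have h1 := CStarRing.norm_star_mul_self (x := (1 : Mat (ι ⊕ κ)))
      rw [star_one, one_mul] at h1
      nlinarith [norm_nonneg (1 : Mat (ι ⊕ κ))]
    rw [star_eq_conjTranspose, hu] at h1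
    nlinarith [norm_nonneg u]
  have hw2 : w * wᴴ = 1 := hw.mul_ct
  have hw1 : wᴴ * w = 1 := hw
  have hE' : IsProj (wᴴ * E * w) := by
    have := hE.conj hw.ct
    rwa [conjTranspose_conjTranspose] at this
  obtain ⟨T, hTu, hT⟩ := graph_of_near hE' (by
    have : eP ι κ - wᴴ * E * w = wᴴ * (w * eP ι κ * wᴴ - E) * w := by
      rw [_root_.mul_sub, _root_.sub_mul]
      congr 1
      calc eP ι κ = (wᴴ * w) * eP ι κ * (wᴴ * w) := by rw [hw1, one_mul, mul_one]
        _ = _ := by simp only [mul_assoc]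
    rw [this]
    have h1 := norm_mul_le (wᴴ * (w * eP ι κ * wᴴ - E)) w
    have h2 := norm_mul_le wᴴ (w * eP ι κ * wᴴ - E)
    have h3 := mul_le_mul_of_nonneg_left (hn hw) (norm_nonneg (wᴴ * (w * eP ι κ * wᴴ - E)))
    have h4 := mul_le_mul_of_nonneg_right (hn hw.ct) (norm_nonneg (w * eP ι κ * wᴴ - E))
    linarith)
  obtain ⟨Z, hZ⟩ : ∃ Z, Z = w * fromBlocks 1 (-Tᴴ) T 1 := ⟨_, rfl⟩
  have hZu : IsUnit Z := hZ ▸ hw.isUnit.mul hTu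
  have hEZ : E * Z = Z * eP ι κ := by
    rw [hZ, mul_assoc, ← hT]
    calc E * (w * fromBlocks 1 (-Tᴴ) T 1)
        = (w * wᴴ) * E * (w * fromBlocks 1 (-Tᴴ) T 1) := by rw [hw2, one_mul]
      _ = _ := by simp only [mul_assoc]
  obtain ⟨Y, hY⟩ : ∃ Y, Y = Z⁻¹ := ⟨_, rfl⟩
  have y1 : Z * Y = 1 := hY ▸ mul_inv_of hZu
  have y2 : Y * Z = 1 := hY ▸ inv_mul_of hZu
  have y1' : Yᴴ * Zᴴ = 1 := by rw [← conjTranspose_mul, y1, conjTranspose_one]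
  have hYE : Y * E = eP ι κ * Y := by
    calc Y * E = Y * (E * Z) * Y := by rw [mul_assoc, mul_assoc, y1, mul_one]
      _ = _ := by rw [hEZ, ← mul_assoc, y2, one_mul]
  have hYE' : E * Yᴴ = Yᴴ * eP ι κ := by
    have := congrArg Matrix.conjTranspose hYE
    rwa [conjTranspose_mul, conjTranspose_mul, hE.1, isProj_eP.1] at this
  have key : ∀ i, ∃ S S' R, A i * Q i = Mp (l i) w T S S' R := fun i => by
    have hA' : IsUni (star (l i) • A i) := by
      unfold IsUni
      rw [conjTranspose_smul, star_star, smul_mul_assoc, mul_smul_comm, smul_smul, hA i,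
        mul_comm, hl i, one_smul]
    obtain ⟨H, Q', h1, h2, h3, h4⟩ := cayley hA' (hQ i) (hl' i)
    have h3' := h3 E (by rw [smul_mul_assoc, mul_smul_comm, hc i])
    obtain ⟨U, hU⟩ : ∃ U, U = Y * H * Yᴴ := ⟨_, rfl⟩
    have hUs : Uᴴ = -U := by
      rw [hU, conjTranspose_mul, conjTranspose_mul, h1,
        conjTranspose_conjTranspose]
      simp [mul_assoc]
    have hUc : U * eP ι κ = eP ι κ * U := by
      rw [hU, mul_assoc, ← hYE', ← mul_assoc, mul_assoc Y, h3', ← mul_assoc Y, hYE]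
      simp only [mul_assoc]
    have hUb := comm_eP hUc
    have hHU : Z * U * Zᴴ = H := by
      rw [hU]
      calc Z * (Y * H * Yᴴ) * Zᴴ = (Z * Y) * H * (Yᴴ * Zᴴ) := by simp only [mul_assoc]
        _ = H := by rw [y1, y1', one_mul, mul_one]
    generalize U.toBlocks₁₁ = u1 at hUb
    generalize U.toBlocks₂₂ = u2 at hUb
    have g1 : u1ᴴ = -u1 := by
      have := congrArg Matrix.toBlocks₁₁ (hUb ▸ hUs)
      rwa [fromBlocks_conjTranspose, fromBlocks_neg, toBlocks_fromBlocks₁₁,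
        toBlocks_fromBlocks₁₁] at this
    have g2 : u2ᴴ = -u2 := by
      have := congrArg Matrix.toBlocks₂₂ (hUb ▸ hUs)
      rwa [fromBlocks_conjTranspose, fromBlocks_neg, Matrix.toBlocks_fromBlocks₂₂,
        Matrix.toBlocks_fromBlocks₂₂] at this
    obtain ⟨S, hS⟩ := herm_surj_skew g1
    obtain ⟨S', hS'⟩ := herm_surj_skew g2
    obtain ⟨R, hR⟩ := herm_surj h2
    refine ⟨S, S', R, ?_⟩
    unfold Mp
    rw [← hZ, hS, hS', ← hUb, hHU, hR, ← h4, smul_mul_assoc, smul_smul, mul_comm, hl i, one_smul]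
  choose S S' R hR using key
  exact ⟨T, S, S', R, hR⟩

end

/-! ### General position -/

lemma contDiff_of_linear {E F : Type} [NormedAddCommGroup E] [NormedSpace ℝ E]
    [FiniteDimensional ℝ E] [NormedAddCommGroup F] [NormedSpace ℝ F] {f : E → F}
    (h : IsLinearMap ℝ f) : ContDiff ℝ 1 f :=
  (LinearMap.toContinuousLinearMap (IsLinearMap.mk' f h)).contDiff

/-- An injective sequence of complex numbers of modulus one. -/
noncomputable def lam (k : ℕ) : ℂ := (1 + Complex.I * k) / (1 - Complex.I * k)

lemma lam_ne (k : ℕ) : (1 - Complex.I * k : ℂ) ≠ 0 := fun h => by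
  have := congrArg Complex.re h
  simp at this

lemma lam_ne' (k : ℕ) : (1 + Complex.I * k : ℂ) ≠ 0 := fun h => by
  have := congrArg Complex.re h
  simp at this

lemma lam_unit (k : ℕ) : star (lam k) * lam k = 1 := by
  have h1 := lam_ne k
  have h2 := lam_ne' k
  have : star (lam k) = (1 - Complex.I * k) / (1 + Complex.I * k) := by
    simp [lam, sub_eq_add_neg]
  rw [this, lam]
  field_simp

lemma lam_inj : Function.Injective lam := fun k j h => by
  unfold lam at h
  rw [div_eq_div_iff (lam_ne k) (lam_ne j)] at h
  have h2 : (2 * Complex.I) * ((k : ℂ) - j) = 0 := by linear_combination h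
  have h3 := (mul_eq_zero.1 h2).resolve_left (by simp)
  exact_mod_cast sub_eq_zero.1 h3

section

lemma exists_lam (A : Mat ι) : ∃ k, IsUnit (1 + star (lam k) • A) := by
  have hf := Matrix.finite_spectrum (R := ℂ) A
  have hinf : (Set.range fun k => -lam k).Infinite :=
    Set.infinite_range_of_injective (neg_injective.comp lam_inj)
  obtain ⟨_, ⟨k, rfl⟩, hk⟩ := hinf.exists_notMem_finite hf
  refine ⟨k, ?_⟩
  have h1 := spectrum.notMem_iff.1 hk
  have h2 : (1 + star (lam k) • A) = -(star (lam k)) • (algebraMap ℂ (Mat ι) (-lam k) - A) := by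
    rw [smul_sub, Algebra.algebraMap_eq_smul_one, smul_smul, neg_mul_neg, lam_unit, one_smul,
      neg_smul, sub_neg_eq_add]
  have h3 : star (lam k) ≠ 0 := fun h0 => by
    have := lam_unit k
    rw [h0, zero_mul] at this
    exact zero_ne_one this
  rw [h2]
  have := h1.smul (Units.mk0 _ (neg_ne_zero.2 h3))
  simpa [Units.smul_def] using this

lemma isLinear_herm : IsLinearMap ℝ (herm : (ι → ι → ℝ) → Mat ι) where
  map_add R R' := by ext i j; simp [herm]; ring
  map_smul c R := by ext i j; simp [herm]; ring

/-- Block diagonal skew-Hermitian matrices, parametrized by pairs of real matrices. -/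
def skewBlocks (q : (ι → ι → ℝ) × (κ → κ → ℝ)) : Mat (ι ⊕ κ) :=
  fromBlocks (Complex.I • herm q.1) 0 0 (Complex.I • herm q.2)

lemma isLinear_skewBlocks :
    IsLinearMap ℝ (skewBlocks : (ι → ι → ℝ) × (κ → κ → ℝ) → Mat (ι ⊕ κ)) where
  map_add := fun a b => by
    ext (i | i) (j | j) <;> simp [herm, skewBlocks] <;> ring
  map_smul := fun a b => by
    ext (i | i) (j | j) <;> simp [herm, skewBlocks] <;> ring

lemma contDiff_Mp {E : Type} [NormedAddCommGroup E] [NormedSpace ℝ E] {l : ℂ}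
    {w : Mat (ι ⊕ κ)} {T : E → κ → ι → ℂ} {S : E → ι → ι → ℝ} {S' : E → κ → κ → ℝ}
    {R : E → (ι ⊕ κ) → (ι ⊕ κ) → ℝ} (hT : ContDiff ℝ 1 T) (hS : ContDiff ℝ 1 S)
    (hS' : ContDiff ℝ 1 S') (hR : ContDiff ℝ 1 R) :
    ContDiff ℝ 1 fun x => Mp l w (Matrix.of (T x)) (S x) (S' x) (R x) := by
  have c1 : ContDiff ℝ 1 fun x => fromBlocks (1 : Mat ι) (-(Matrix.of (T x))ᴴ)
      (Matrix.of (T x)) (1 : Mat κ) := by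
    have h : IsLinearMap ℝ fun T : κ → ι → ℂ => fromBlocks (0 : Mat ι)
        (-(Matrix.of T)ᴴ) (Matrix.of T) (0 : Mat κ) :=
      { map_add := fun a b => by
          ext (i | i) (j | j) <;> simp
          ring
        map_smul := fun a b => by
          ext (i | i) (j | j) <;> simp }
    have h2 := ((contDiff_of_linear h).comp hT).add
      (contDiff_const (c := (1 : Mat (ι ⊕ κ))))
    convert h2 using 2 with x
    simp only [Function.comp]
    rw [← fromBlocks_one, fromBlocks_add]
    simp
  have c2 : ContDiff ℝ 1 fun x => skewBlocks (S x, S' x) :=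
    ContDiff.comp (g := skewBlocks) (contDiff_of_linear isLinear_skewBlocks) (hS.prodMk hS')
  have c3 : ContDiff ℝ 1 fun x => herm (R x) := ContDiff.comp (g := herm) (contDiff_of_linear isLinear_herm) hR
  have hct : IsLinearMap ℝ fun M : Mat (ι ⊕ κ) => Mᴴ :=
    { map_add := fun a b => conjTranspose_add a b
      map_smul := fun a b => by simp }
  have c4 := (contDiff_const (c := w)).mul c1
  have c5 := (contDiff_of_linear hct).comp c4
  have c6 := (contDiff_const (c := (1 : Mat (ι ⊕ κ)))).sub ((c4.mul c2).mul c5)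
  exact (contDiff_const (c := l)).smul ((c6.mul c3).mul c6)

lemma isUni_submatrix {A : Mat ι} (hA : IsUni A) (e : κ ≃ ι) :
    IsUni (A.submatrix e e) := by
  unfold IsUni at *
  rw [conjTranspose_submatrix, submatrix_mul_equiv, hA, submatrix_one_equiv]

end

lemma red_param' {n r : ℕ} {A Q : Fin r → Mat (Fin n)} (hA : ∀ i, IsUni (A i))
    (hQ : ∀ i, (Q i)ᴴ = Q i) (h : ¬Irr A) :
    ∃ (a b : ℕ) (_ : 1 ≤ a) (_ : 1 ≤ b) (e : Fin a ⊕ Fin b ≃ Fin n),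
      ∃ (w : Mat (Fin a ⊕ Fin b)), IsUni w ∧
      ∃ N ∈ nhds w, ∀ w', IsUni w' → w' ∈ N → ∃ k : Fin r → ℕ,
      ∃ (T : Matrix (Fin b) (Fin a) ℂ) (S : Fin r → Fin a → Fin a → ℝ)
        (S' : Fin r → Fin b → Fin b → ℝ)
        (R : Fin r → (Fin a ⊕ Fin b) → (Fin a ⊕ Fin b) → ℝ), ∀ i,
        A i * Q i = (Mp (lam (k i)) w' T (S i) (S' i) (R i)).submatrix e.symm e.symm := by
  obtain ⟨E, hE, hc, h0, h1⟩ := exists_proj hA h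
  obtain ⟨α, β, _, _, _, _, e0, W, hW, hd⟩ := exists_diag hE
  obtain ⟨e, he⟩ : ∃ e : Fin (Fintype.card α) ⊕ Fin (Fintype.card β) ≃ Fin n,
    e = ((Fintype.equivFin α).symm.sumCongr (Fintype.equivFin β).symm).trans e0 := ⟨_, rfl⟩
  have hWd : ∀ D, W * E * Wᴴ = D → E = Wᴴ * D * W := fun D hD => by
    rw [← hD]
    calc E = (Wᴴ * W) * E * (Wᴴ * W) := by rw [hW, one_mul, mul_one]
      _ = _ := by simp only [mul_assoc]
  have hd' : (W * E * Wᴴ).submatrix e e = eP _ _ := by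
    have : (W * E * Wᴴ).submatrix e e = ((W * E * Wᴴ).submatrix e0 e0).submatrix
      ((Fintype.equivFin α).symm.sumCongr (Fintype.equivFin β).symm)
      ((Fintype.equivFin α).symm.sumCongr (Fintype.equivFin β).symm) := by
      rw [he]; rfl
    rw [this, hd]
    ext (x | x) (y | y) <;> simp [eP, Matrix.one_apply]
  have hdd : W * E * Wᴴ = (eP α β).submatrix e0.symm e0.symm := by
    rw [← hd]; simp
  have ha : 1 ≤ Fintype.card α := by
    by_contra hcon
    have : IsEmpty α := Fintype.card_eq_zero_iff.1 (by omega)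
    apply h0
    have h2 : eP α β = 0 := by ext (x | x) (y | y) <;> first | exact isEmptyElim x | exact isEmptyElim y | simp [eP]
    rw [hWd _ hdd, h2]
    simp
  have hb : 1 ≤ Fintype.card β := by
    by_contra hcon
    have : IsEmpty β := Fintype.card_eq_zero_iff.1 (by omega)
    apply h1
    have h2 : eP α β = 1 := by
      ext (x | x) (y | y) <;> first | exact isEmptyElim x | exact isEmptyElim y | simp [eP, Matrix.one_apply]
    rw [hWd _ hdd, h2]
    rw [submatrix_one_equiv, mul_one, hW]
  refine ⟨_, _, ha, hb, e, (Wᴴ).submatrix e e, isUni_submatrix hW.ct e, ?_⟩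
  have hcont : Continuous fun w : Matrix (Fin (Fintype.card α) ⊕ Fin (Fintype.card β)) _ ℂ =>
      ‖w * eP _ _ * wᴴ - E.submatrix e e‖ :=
    (((continuous_id.matrix_mul continuous_const).matrix_mul
      continuous_id.matrix_conjTranspose).sub continuous_const).norm
  refine ⟨{w | ‖w * eP _ _ * wᴴ - E.submatrix e e‖ < 1 / 2},
    (isOpen_lt hcont continuous_const).mem_nhds ?_, fun w' hw' hN => ?_⟩
  · show ‖_‖ < _
    rw [← hd', conjTranspose_submatrix, conjTranspose_conjTranspose,
      submatrix_mul_equiv, submatrix_mul_equiv, ← hWd _ rfl]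
    simp
  · choose k hk using fun i => exists_lam ((A i).submatrix e e)
    obtain ⟨T, S, S', R, hR⟩ := red_param (A := fun i => (A i).submatrix e e)
      (Q := fun i => (Q i).submatrix e e) (fun i => isUni_submatrix (hA i) e)
      (fun i => by rw [conjTranspose_submatrix, hQ])
      (E := E.submatrix e e) ⟨by rw [conjTranspose_submatrix, hE.1], by
        rw [submatrix_mul_equiv, hE.2]⟩
      (fun i => by rw [submatrix_mul_equiv, submatrix_mul_equiv, hc])
      (l := fun i => lam (k i)) (fun i => lam_unit _) hk hw' hN
    refine ⟨k, T, S, S', R, fun i => ?_⟩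
    rw [← hR, submatrix_mul_equiv]
    simp

/-- Matrix tuples with reducible unitary parts are parametrized by countably many smooth maps from
spaces of smaller dimension, so that a generic translation of the family `G` avoids them. -/
lemma dense_good {m n r : ℕ} (hm : m + 1 ≤ 2 * (r - 1) * (n - 1))
    {G : (Fin m → ℝ) → Fin r → Mat (Fin n)} (hG : ContDiff ℝ 1 G) :
    Dense {ξ : Fin r → Mat (Fin n) | ∀ t (A Q : Fin r → Mat (Fin n)),
      (∀ i, IsUni (A i)) → (∀ i, (Q i)ᴴ = Q i) → (∀ i, G t i + ξ i = A i * Q i) → Irr A} := by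
  classical
  let U (ab : ℕ × ℕ) : Type := {w : Mat (Fin ab.1 ⊕ Fin ab.2) // IsUni w}
  have : ∀ ab, Nonempty (U ab) := fun ab => ⟨⟨1, isUni_one⟩⟩
  let J : Type := Σ ab : {ab : ℕ × ℕ // 1 ≤ ab.1 ∧ 1 ≤ ab.2},
    (Fin ab.1.1 ⊕ Fin ab.1.2 ≃ Fin n) × ℕ × (Fin r → ℕ)
  let W (a b : ℕ) : Type := (Fin m → ℝ) × (Fin b → Fin a → ℂ) ×
    (Fin r → (Fin a → Fin a → ℝ) × (Fin b → Fin b → ℝ) × (Fin a ⊕ Fin b → Fin a ⊕ Fin b → ℝ))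
  let Φ (j : J) : ((Fin m → ℝ) × (Fin j.1.1.2 → Fin j.1.1.1 → ℂ) ×
      (Fin r → (Fin j.1.1.1 → Fin j.1.1.1 → ℝ) × (Fin j.1.1.2 → Fin j.1.1.2 → ℝ) ×
        (Fin j.1.1.1 ⊕ Fin j.1.1.2 → Fin j.1.1.1 ⊕ Fin j.1.1.2 → ℝ))) →
      Fin r → Mat (Fin n) := fun p i =>
    (Mp (lam (j.2.2.2 i)) (TopologicalSpace.denseSeq (U j.1.1) j.2.2.1).1 (Matrix.of p.2.1)
      (p.2.2 i).1 (p.2.2 i).2.1 (p.2.2 i).2.2).submatrix j.2.1.symm j.2.1.symm - G p.1 i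
  have hdim : dimH (⋃ j, Set.range (Φ j)) <
      Module.finrank ℝ (Fin r → Mat (Fin n)) := by
    have hV : Module.finrank ℝ (Fin r → Mat (Fin n)) = r * (n * n * 2) := by
      rw [Module.finrank_pi_fintype]
      simp [Module.finrank_matrix]
    have hle : ∀ j, dimH (Set.range (Φ j)) ≤ ((r * (n * n * 2) - 1 : ℕ) : ENNReal) := fun j => by
      have hc : ContDiff ℝ 1 (Φ j) := by
        refine contDiff_pi.2 fun i => ?_
        have hsub : IsLinearMap ℝ fun M : Mat (Fin j.1.1.1 ⊕ Fin j.1.1.2) =>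
            M.submatrix j.2.1.symm j.2.1.symm := ⟨fun _ _ => rfl, fun _ _ => rfl⟩
        refine ContDiff.sub ((contDiff_of_linear hsub).comp (contDiff_Mp ?_ ?_ ?_ ?_)) ?_
        · exact contDiff_fst.comp contDiff_snd
        · exact contDiff_fst.comp ((contDiff_apply ℝ _ i).comp (contDiff_snd.comp contDiff_snd))
        · exact contDiff_fst.comp (contDiff_snd.comp ((contDiff_apply ℝ _ i).comp
            (contDiff_snd.comp contDiff_snd)))
        · exact contDiff_snd.comp (contDiff_snd.comp ((contDiff_apply ℝ _ i).comp
            (contDiff_snd.comp contDiff_snd)))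
        · exact (contDiff_apply ℝ _ i).comp (hG.comp contDiff_fst)
      refine hc.dimH_range_le.trans ?_
      obtain ⟨⟨⟨a, b⟩, ha, hb⟩, e, -⟩ := j
      simp only at ha hb e ⊢
      have hab : n = a + b := by
        have := Fintype.card_congr e
        simpa using this.symm
      have hW : Module.finrank ℝ ((Fin m → ℝ) × (Fin b → Fin a → ℂ) ×
        (Fin r → (Fin a → Fin a → ℝ) × (Fin b → Fin b → ℝ) × (Fin a ⊕ Fin b → Fin a ⊕ Fin b → ℝ)))
          = m + (b * (a * 2) + r * (a * a + (b * b + (a + b) * (a + b)))) := by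
        simp [Module.finrank_pi_fintype, Module.finrank_prod]
      rw [hW]
      norm_cast
      subst hab
      obtain ⟨a, rfl⟩ := Nat.exists_eq_add_of_le ha
      obtain ⟨b, rfl⟩ := Nat.exists_eq_add_of_le hb
      rcases r with _ | s
      · simp at hm
      · apply Nat.le_sub_of_add_le
        have : 1 + a + (1 + b) - 1 = 1 + a + b := by omega
        rw [this] at hm
        simp only [Nat.add_sub_cancel] at hm
        have h1 : 0 ≤ 2 * s * (a * b) := Nat.zero_le _
        nlinarith
    rw [dimH_iUnion, hV]
    refine lt_of_le_of_lt (iSup_le hle) ?_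
    have hpos : 0 < r * (n * n * 2) := by
      rcases r with _ | s
      · simp at hm
      rcases n with _ | n
      · simp at hm
      positivity
    norm_cast
    omega
  refine (dense_compl_of_dimH_lt_finrank hdim).mono fun ξ hξ t A Q hA hQ hGA => ?_
  by_contra hirr
  apply hξ
  obtain ⟨a, b, ha, hb, e, w, hw, N, hN, h⟩ := red_param' hA hQ hirr
  obtain ⟨N', hN', hN'o, hwN⟩ := mem_nhds_iff.1 hN
  obtain ⟨s, hs⟩ := (TopologicalSpace.denseRange_denseSeq (U (a, b))).exists_mem_open
    (hN'o.preimage continuous_subtype_val) ⟨⟨w, hw⟩, hwN⟩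
  obtain ⟨k, T, S, S', R, hR⟩ := h _ (TopologicalSpace.denseSeq (U (a, b)) s).2 (hN' hs)
  refine Set.mem_iUnion.2 ⟨⟨⟨(a, b), ha, hb⟩, e, s, k⟩, (t, T, fun i => (S i, S' i, R i)), ?_⟩
  funext i
  have := hR i
  rw [← hGA] at this
  exact sub_eq_iff_eq_add'.2 this.symm

section

lemma IsUni.norm_le {u : Mat ι} (hu : IsUni u) : ‖u‖ ≤ 1 := by
  have h1 := CStarRing.norm_star_mul_self (x := u)
  have h2 : ‖(1 : Mat ι)‖ ≤ 1 := by
    have h1 := CStarRing.norm_star_mul_self (x := (1 : Mat ι))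
    rw [star_one, one_mul] at h1
    nlinarith [norm_nonneg (1 : Mat ι)]
  rw [star_eq_conjTranspose, hu] at h1
  nlinarith [norm_nonneg u]

lemma IsUni.norm_mul_le {u : Mat ι} (hu : IsUni u) (X : Mat ι) : ‖u * X‖ ≤ ‖X‖ :=
  (_root_.norm_mul_le u X).trans (by nlinarith [hu.norm_le, norm_nonneg X])

lemma polar_near (ε : ℝ) (hε : 0 < ε) : ∃ δ > 0, ∀ U X : Mat ι, IsUni U → ‖X - U‖ < δ →
    IsUnit X ∧ ‖polar X - U‖ < ε := by
  have ho : IsOpen {X : Mat ι | IsUnit X} := Units.isOpen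
  have hc : ContinuousOn (fun X : Mat ι => polar X) {X | IsUnit X} :=
    continuousOn_iff_continuous_domRestrict.2 (continuous_polar continuous_subtype_val fun X => X.2)
  have h1 : ContinuousAt (fun X : Mat ι => polar X) 1 :=
    hc.continuousAt (ho.mem_nhds isUnit_one)
  obtain ⟨δ, hδ, h⟩ := Metric.eventually_nhds_iff.1
    (Filter.Eventually.and (p := fun X : Mat ι => IsUnit X) (ho.mem_nhds isUnit_one)
      (Metric.continuousAt_iff'.1 h1 ε hε))
  refine ⟨δ, hδ, fun U X hU hX => ?_⟩
  have h2 := h (y := Uᴴ * X) (by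
    rw [dist_eq_norm]
    refine lt_of_le_of_lt ?_ hX
    have : Uᴴ * X - 1 = Uᴴ * (X - U) := by rw [_root_.mul_sub, hU]
    rw [this]
    exact hU.ct.norm_mul_le _)
  rw [polar_one, dist_eq_norm] at h2
  have e : U * (Uᴴ * X) = X := by rw [← mul_assoc, hU.mul_ct, one_mul]
  have h3 : IsUnit (Uᴴ * X) := h2.1
  refine ⟨e ▸ hU.isUnit.mul h3, ?_⟩
  rw [← e, polar_mul_left h3 hU]
  have : U * polar (Uᴴ * X) - U = U * (polar (Uᴴ * X) - 1) := by rw [_root_.mul_sub, mul_one]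
  rw [this]
  exact lt_of_le_of_lt (hU.norm_mul_le _) h2.2

lemma isOpen_irr [Nonempty ι] {r : ℕ} : IsOpen {A : Fin r → Mat ι | Irr A} := by
  have hn : (Fintype.card ι : ℂ) ≠ 0 := by exact_mod_cast Fintype.card_ne_zero
  have hK : IsCompact {X : Mat ι | X.trace = 0 ∧ ‖X‖ = 1} := by
    have : {X : Mat ι | X.trace = 0 ∧ ‖X‖ = 1} =
        Metric.sphere 0 1 ∩ {X | X.trace = 0} := by
      ext X; simp [and_comm]
    rw [this]
    exact (isCompact_sphere _ _).inter_right
      (isClosed_eq continuous_id.matrix_trace continuous_const)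
  have key : ∀ A : Fin r → Mat ι, Irr A ↔
      ∀ X ∈ {X : Mat ι | X.trace = 0 ∧ ‖X‖ = 1}, ∃ i, A i * X ≠ X * A i := fun A => by
    constructor
    · rintro h X ⟨h0, h1⟩
      by_contra hcon
      push Not at hcon
      obtain ⟨c, rfl⟩ := h X hcon
      rw [trace_smul, trace_one, smul_eq_mul] at h0
      rw [(mul_eq_zero.1 h0).resolve_right hn] at h1
      simp at h1
    · intro h X hX
      refine ⟨X.trace / Fintype.card ι, ?_⟩
      by_contra hcon
      have hne := norm_ne_zero_iff.2 (sub_ne_zero.2 hcon)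
      obtain ⟨Y, hY⟩ : ∃ Y, Y = X - (X.trace / Fintype.card ι) • (1 : Mat ι) := ⟨_, rfl⟩
      rw [← hY] at hne
      obtain ⟨i, hi⟩ := h (((‖Y‖⁻¹ : ℝ) : ℂ) • Y) ⟨by
        rw [trace_smul, hY, Matrix.trace_sub, trace_smul, trace_one]
        simp [hn], by rw [norm_smul]; simp [hne]⟩
      apply hi
      rw [mul_smul_comm, smul_mul_assoc, hY, _root_.mul_sub, _root_.sub_mul, hX]
      simp
  rw [isOpen_iff_mem_nhds]
  intro A hA
  have := hK.eventually_forall_of_forall_eventually (x₀ := A)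
    (P := fun A X => ∃ i, A i * X ≠ X * A i) (fun X hX => by
      obtain ⟨i, hi⟩ := (key A).1 hA X hX
      have c1 : Continuous fun z : (Fin r → Mat ι) × Mat ι => z.1 i * z.2 :=
        ((continuous_apply i).comp continuous_fst).matrix_mul continuous_snd
      have c2 : Continuous fun z : (Fin r → Mat ι) × Mat ι => z.2 * z.1 i :=
        continuous_snd.matrix_mul ((continuous_apply i).comp continuous_fst)
      filter_upwards [(isOpen_ne_fun c1 c2).mem_nhds hi] with z hz using ⟨i, hz⟩)
  filter_upwards [this] with A' hA' using (key A').2 hA'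

end

/-- Families of unitary tuples of small dimension can be perturbed to irreducible ones, relatively to a
closed set over which they are irreducible already. -/
lemma general_position {m n r : ℕ} (hm : m + 1 ≤ 2 * (r - 1) * (n - 1)) {B : Set (Fin m → I)}
    (hB : IsClosed B) {F : (Fin m → I) → Fin r → Mat (Fin n)} (hF : Continuous F)
    (hFu : ∀ y i, IsUni (F y i)) (hFi : ∀ y ∈ B, Irr (F y)) {ε : ℝ} (hε : 0 < ε) :
    ∃ F' : (Fin m → I) → Fin r → Mat (Fin n), Continuous F' ∧
      (∀ y i, IsUni (F' y i)) ∧ (∀ y, Irr (F' y)) ∧ (∀ y ∈ B, F' y = F y) ∧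
      ∀ y i, ‖F' y i - F y i‖ < ε := by
  have hn : n ≠ 0 := by rintro rfl; simp at hm
  have : Nonempty (Fin n) := ⟨⟨0, Nat.pos_of_ne_zero hn⟩⟩
  have hS : IsOpen {y | Irr (F y)} := isOpen_irr.preimage hF
  obtain ⟨ψ, h0, h1, h01⟩ := exists_continuous_zero_one_of_isClosed hB hS.isClosed_compl
    (Set.disjoint_left.2 fun y hy hy' => hy' (hFi y hy))
  have hK : IsCompact (F '' {y | ψ y ≤ 1 / 2}) :=
    ((isClosed_le ψ.continuous continuous_const).isCompact).image hF
  obtain ⟨δ, hδ, hδS⟩ := hK.exists_thickening_subset_open (isOpen_irr (ι := Fin n) (r := r)) (by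
    rintro _ ⟨y, hy, rfl⟩
    by_contra hcon
    have := h1 (x := y) hcon
    simp only [Set.mem_ofPred_eq, this, Pi.one_apply] at hy
    norm_num at hy)
  obtain ⟨η, hη, hp⟩ := polar_near (ι := Fin n) (min ε δ) (lt_min hε hδ)
  obtain ⟨G, hG, hGF⟩ := smooth_approx hF (half_pos hη)
  obtain ⟨ξ, hξ, hξη⟩ := (dense_good hm hG).exists_dist_lt 0 (half_pos hη)
  rw [dist_zero_left] at hξη
  obtain ⟨φ, hφ⟩ : ∃ φ : (Fin m → I) → ℝ, ∀ y, φ y = min 1 (2 * ψ y) := ⟨_, fun _ => rfl⟩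
  have hφc : Continuous φ := by
    rw [show φ = _ from funext hφ]
    exact continuous_const.min (continuous_const.mul ψ.continuous)
  have hφ0 : ∀ y, 0 ≤ φ y := fun y => by
    rw [hφ]; exact le_min zero_le_one (by linarith [(h01 y).1])
  have hφ1 : ∀ y, φ y ≤ 1 := fun y => by rw [hφ]; exact min_le_left _ _
  obtain ⟨X, hX⟩ : ∃ X : (Fin m → I) → Fin r → Mat (Fin n), ∀ y i, X y i =
      F y i + φ y • (G (incl y) i + ξ i - F y i) := ⟨_, fun _ _ => rfl⟩
  have hincl : Continuous (incl : (Fin m → I) → Fin m → ℝ) :=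
    continuous_pi fun i => continuous_subtype_val.comp (continuous_apply i)
  have hXc : ∀ i, Continuous fun y => X y i := fun i => by
    simp only [hX]
    have c1 : Continuous fun y => F y i := (continuous_apply i).comp hF
    have c2 : Continuous fun y => G (incl y) i :=
      (continuous_apply i).comp (hG.continuous.comp hincl)
    exact c1.add (hφc.smul ((c2.add continuous_const).sub c1))
  have hXF : ∀ y i, ‖X y i - F y i‖ < η := fun y i => by
    rw [hX, add_sub_cancel_left, norm_smul, Real.norm_eq_abs, abs_of_nonneg (hφ0 y)]
    have e1 : ‖G (incl y) i - F y i‖ ≤ ‖G (incl y) - F y‖ := norm_le_pi_norm (G (incl y) - F y) i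
    have e2 : ‖ξ i‖ ≤ ‖ξ‖ := norm_le_pi_norm ξ i
    have e3 : ‖G (incl y) i + ξ i - F y i‖ ≤ ‖G (incl y) i - F y i‖ + ‖ξ i‖ := by
      rw [show G (incl y) i + ξ i - F y i = G (incl y) i - F y i + ξ i by abel]
      exact norm_add_le _ _
    have e4 := hGF y
    have e5 := mul_le_mul_of_nonneg_right (hφ1 y) (norm_nonneg (G (incl y) i + ξ i - F y i))
    linarith
  have hXp := fun y i => hp (F y i) (X y i) (hFu y i) (hXF y i)
  refine ⟨fun y i => polar (X y i), continuous_pi fun i => continuous_polar (hXc i)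
    fun y => (hXp y i).1, fun y i => polar_uni (hXp y i).1, fun y => ?_, fun y hy => ?_,
    fun y i => (hXp y i).2.trans_le (min_le_left _ _)⟩
  · rcases le_total (ψ y) (1 / 2) with h | h
    · apply hδS
      rw [Metric.mem_thickening_iff]
      refine ⟨F y, ⟨y, h, rfl⟩, ?_⟩
      rw [dist_pi_lt_iff hδ]
      intro i
      rw [dist_eq_norm]
      exact (hXp y i).2.trans_le (min_le_right _ _)
    · have hφy : φ y = 1 := by rw [hφ]; exact min_eq_left (by linarith)
      refine hξ (incl y) _ (fun i => CFC.abs (X y i)) (fun i => polar_uni (hXp y i).1)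
        (fun i => abs_ct _) fun i => ?_
      rw [polar_mul_abs (hXp y i).1, hX, hφy, one_smul, add_sub_cancel]
  · have hφy : φ y = 0 := by
      rw [hφ, h0 hy]; simp
    funext i
    show polar (X y i) = F y i
    rw [hX, hφy, zero_smul, add_zero, polar_of_uni (hFu y i)]

/-- Membership in `U(n)`, or in `SU(n)` when `b` holds. -/
def IsG {ι : Type} [Fintype ι] [DecidableEq ι] (b : Prop) (U : Mat ι) : Prop :=
  IsUni U ∧ (b → U.det = 1)

lemma Irr.smul {ι : Type} [Fintype ι] [DecidableEq ι] {r : ℕ} {A : Fin r → Mat ι}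
    (h : Irr A) {c : Fin r → ℂ} (hc : ∀ i, c i ≠ 0) : Irr fun i => c i • A i := fun X hX =>
  h X fun i => by
    have := hX i
    rw [smul_mul_assoc, mul_smul_comm] at this
    exact smul_right_injective _ (hc i) this

lemma general_position_G (b : Prop) {m n r : ℕ} (hm : m + 1 ≤ 2 * (r - 1) * (n - 1))
    {B : Set (Fin m → I)} (hB : IsClosed B) {F : (Fin m → I) → Fin r → Mat (Fin n)}
    (hF : Continuous F) (hFu : ∀ y i, IsG b (F y i)) (hFi : ∀ y ∈ B, Irr (F y)) :
    ∃ F' : (Fin m → I) → Fin r → Mat (Fin n), Continuous F' ∧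
      (∀ y i, IsG b (F' y i)) ∧ (∀ y, Irr (F' y)) ∧ (∀ y ∈ B, F' y = F y) := by
  by_cases hb : b
  swap
  · obtain ⟨F', h1, h2, h3, h4, -⟩ := general_position hm hB hF (fun y i => (hFu y i).1) hFi one_pos
    exact ⟨F', h1, fun y i => ⟨h2 y i, fun h => absurd h hb⟩, h3, h4⟩
  have hn : n ≠ 0 := by rintro rfl; simp at hm
  have hd : ContinuousAt (fun X : Mat (Fin n) => X.det) 1 :=
    continuous_id.matrix_det.continuousAt
  have hs : {X : Mat (Fin n) | X.det ∈ Complex.slitPlane} ∈ nhds 1 :=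
    hd (Complex.isOpen_slitPlane.mem_nhds (by
      show det 1 ∈ _
      rw [det_one]; simp))
  obtain ⟨ε, hε, hεs⟩ := Metric.mem_nhds_iff.1 hs
  obtain ⟨F', h1, h2, h3, h4, h5⟩ := general_position hm hB hF (fun y i => (hFu y i).1) hFi hε
  have hdet : ∀ y i, (F' y i).det ∈ Complex.slitPlane := fun y i => by
    have := hεs (a := (F y i)ᴴ * F' y i) (by
      rw [Metric.mem_ball, dist_eq_norm]
      have e : (F y i)ᴴ * F' y i - 1 = (F y i)ᴴ * (F' y i - F y i) := by
        rw [_root_.mul_sub, (hFu y i).1]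
      rw [e]
      exact ((hFu y i).1.ct.norm_mul_le _).trans_lt (h5 y i))
    rwa [Set.mem_ofPred_eq, Matrix.det_mul, det_conjTranspose, (hFu y i).2 hb, star_one,
      one_mul] at this
  obtain ⟨c, hc⟩ : ∃ c : (Fin m → I) → Fin r → ℂ, ∀ y i, c y i =
      Complex.exp (-(Complex.arg (F' y i).det / n * Complex.I)) := ⟨_, fun _ _ => rfl⟩
  have hcs : ∀ y i, star (c y i) * c y i = 1 := fun y i => by
    rw [hc, Complex.star_def, ← Complex.exp_conj, ← Complex.exp_add]
    simp
  refine ⟨fun y i => c y i • F' y i, continuous_pi fun i => ?_, fun y i => ⟨?_, fun _ => ?_⟩,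
    fun y => (h3 y).smul fun i => by rw [hc]; exact Complex.exp_ne_zero _, fun y hy => ?_⟩
  · have c1 : Continuous fun y => F' y i := (continuous_apply i).comp h1
    have c2 : Continuous fun y => Complex.arg (F' y i).det :=
      continuous_iff_continuousAt.2 fun y =>
        ContinuousAt.comp (f := fun y => (F' y i).det) (Complex.continuousAt_arg (hdet y i))
          c1.matrix_det.continuousAt
    have c3 : Continuous fun y => c y i := by
      simp only [hc]
      exact Complex.continuous_exp.comp
        ((((Complex.continuous_ofReal.comp c2).div_const _).mul continuous_const).neg)
    exact c3.smul c1
  · unfold IsUni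
    rw [conjTranspose_smul, smul_mul_assoc, mul_smul_comm, smul_smul, h2 y i, hcs, one_smul]
  · have e1 : ‖(F' y i).det‖ = 1 := by
      have := congrArg det (h2 y i)
      rw [Matrix.det_mul, det_conjTranspose, det_one, Complex.star_def,
        ← Complex.normSq_eq_conj_mul_self, Complex.normSq_eq_norm_sq] at this
      have h : ‖(F' y i).det‖ ^ 2 = 1 := by exact_mod_cast this
      nlinarith [norm_nonneg (F' y i).det]
    have e2 := Complex.norm_mul_exp_arg_mul_I (F' y i).det
    rw [e1, Complex.ofReal_one, one_mul] at e2
    rw [det_smul, Fintype.card_fin, hc, ← Complex.exp_nat_mul]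
    nth_rewrite 2 [← e2]
    rw [← Complex.exp_add]
    have hn' : (n : ℂ) ≠ 0 := by exact_mod_cast hn
    convert Complex.exp_zero using 2
    field_simp
    ring
  · funext i
    have : c y i = 1 := by
      rw [hc, h4 y hy, (hFu y i).2 hb]; simp
    beta_reduce
    rw [this, one_smul, h4 y hy]

/-! ### Local slices for the conjugation action -/

section

/-- Orthogonal projection onto the range of an idempotent. -/
lemma exists_orth {M : Mat ι} (hM : M * M = M) :
    ∃ E : Mat ι, IsProj E ∧ M * E = E ∧ E * M = M := by
  have hM' : Mᴴ * Mᴴ = Mᴴ := by rw [← conjTranspose_mul, hM]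
  obtain ⟨N, hN⟩ : ∃ N : Mat ι, N = M + Mᴴ - 1 := ⟨_, rfl⟩
  have h1 : M * N = M * Mᴴ := by rw [hN, _root_.mul_sub, mul_add, hM, mul_one]; abel
  have h2 : N * Mᴴ = M * Mᴴ := by rw [hN, _root_.sub_mul, add_mul, hM', one_mul]; abel
  have h3 : N * M = Mᴴ * M := by rw [hN, _root_.sub_mul, add_mul, hM, one_mul]; abel
  have h4 : Mᴴ * N = Mᴴ * M := by rw [hN, _root_.mul_sub, mul_add, hM', mul_one]; abel
  have hu : IsUnit N := isUnit_of_ker fun v hv => by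
    have a1 : Mᴴ *ᵥ v = 0 := by
      have : (M * Mᴴ) *ᵥ v = 0 := by rw [← h1, ← mulVec_mulVec, hv, mulVec_zero]
      rwa [Matrix.self_mul_conjTranspose_mulVec_eq_zero] at this
    have a2 : M *ᵥ v = 0 := by
      have : (Mᴴ * M) *ᵥ v = 0 := by rw [← h4, ← mulVec_mulVec, hv, mulVec_zero]
      rwa [Matrix.conjTranspose_mul_self_mulVec_eq_zero] at this
    rw [hN, sub_mulVec, add_mulVec, a1, a2, one_mulVec] at hv
    simpa using hv
  have hi := mul_inv_of hu
  have hi' := inv_mul_of hu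
  have hNh : Nᴴ = N := by simp [hN, add_comm]
  have hE : M * N⁻¹ = N⁻¹ * Mᴴ := by
    calc M * N⁻¹ = N⁻¹ * (N * M) * N⁻¹ := by rw [← mul_assoc N⁻¹, hi', one_mul]
      _ = N⁻¹ * Mᴴ := by rw [h3, ← h4, ← mul_assoc, mul_assoc _ N, hi, mul_one]
  have hEM : M * N⁻¹ * M = M := by rw [hE, mul_assoc, ← h3, ← mul_assoc, hi', one_mul]
  refine ⟨M * N⁻¹, ⟨?_, ?_⟩, by rw [← mul_assoc, hM], hEM⟩
  · rw [conjTranspose_mul, Matrix.conjTranspose_nonsing_inv, hNh, hE]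
  · rw [← mul_assoc, hEM]

/-- A unitary tuple without proper invariant subspaces has only scalar commutant, and
conversely. -/
lemma irr_iff {r : ℕ} {A : Fin r → Mat ι} (hA : ∀ i, IsUni (A i)) :
    Irr A ↔ ∀ p : Submodule ℂ (ι → ℂ), (∀ i, ∀ v ∈ p, A i *ᵥ v ∈ p) → p = ⊥ ∨ p = ⊤ := by
  constructor
  · intro h p hp
    obtain ⟨g, hg⟩ := LinearMap.exists_leftInverse_of_injective p.subtype p.ker_subtype
    obtain ⟨M, hM⟩ : ∃ M : Mat ι, ∀ v, M *ᵥ v = g v :=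
      ⟨LinearMap.toMatrix' (p.subtype ∘ₗ g), fun v => by
        rw [← Matrix.toLin'_apply, Matrix.toLin'_toMatrix']; rfl⟩
    have hMp : ∀ v ∈ p, M *ᵥ v = v := fun v hv => by
      rw [hM]
      exact congrArg Subtype.val (LinearMap.congr_fun hg ⟨v, hv⟩)
    have hext : ∀ {X Y : Mat ι}, (∀ v, X *ᵥ v = Y *ᵥ v) → X = Y := fun h =>
      toLin'.injective (LinearMap.ext h)
    obtain ⟨E, hE, hME, hEM⟩ := exists_orth (M := M) (hext fun v => by
      rw [← mulVec_mulVec]; exact hMp _ (by rw [hM]; exact (g v).2))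
    have hEr : ∀ v, E *ᵥ v ∈ p := fun v => by
      rw [← hME, ← mulVec_mulVec, hM]; exact (g _).2
    have hEp : ∀ v ∈ p, E *ᵥ v = v := fun v hv => by
      rw [← hMp v hv, mulVec_mulVec, hEM]
    obtain ⟨c, hc⟩ := h E fun i => by
      have e1 : E * (A i * E) = A i * E := hext fun v => by
        rw [← mulVec_mulVec, ← mulVec_mulVec]
        exact hEp _ (hp i _ (hEr v))
      have e2 : E * A i * E * (E * A i * E)ᴴ + (E * A i - E * A i * E) * (E * A i - E * A i * E)ᴴ
          = E := by
        simp only [conjTranspose_mul, conjTranspose_sub, hE.1]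
        have e3 : E * A i * E * (E * ((A i)ᴴ * E)) = E * A i * E * ((A i)ᴴ * E) := by
          rw [← mul_assoc, mul_assoc _ E E, hE.2]
        have e4 : E * A i * ((A i)ᴴ * E) = E := by
          rw [mul_assoc, ← mul_assoc (A i), (hA i).mul_ct, one_mul, hE.2]
        rw [_root_.sub_mul, _root_.mul_sub, _root_.mul_sub, e3, e4]
        have e5 : E * A i * (E * ((A i)ᴴ * E)) = E * A i * E * ((A i)ᴴ * E) := by
          simp only [mul_assoc]
        rw [e5]; abel
      have e6 : (E * A i * E * (E * A i * E)ᴴ).trace = E.trace := by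
        rw [trace_mul_comm, mul_assoc, e1, conjTranspose_mul, hE.1, mul_assoc,
          ← mul_assoc (A i)ᴴ, hA i, one_mul, hE.2]
      have e7 := congrArg Matrix.trace e2
      rw [trace_add, e6, add_eq_left, Matrix.trace_mul_conjTranspose_self_eq_zero_iff,
        sub_eq_zero] at e7
      rw [e7, mul_assoc, e1]
    by_cases hc0 : c = 0
    · left
      rw [Submodule.eq_bot_iff]
      intro v hv
      rw [← hEp v hv, hc, hc0, zero_smul, Matrix.zero_mulVec]
    · right
      rw [Submodule.eq_top_iff']
      intro v
      have := p.smul_mem c⁻¹ (hEr v)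
      rwa [hc, smul_mulVec, one_mulVec, smul_smul, inv_mul_cancel₀ hc0,
        one_smul] at this
  · intro h
    by_contra hn
    obtain ⟨E, hE, hc, h0, h1⟩ := exists_proj hA hn
    rcases h (LinearMap.ker E.mulVecLin) (fun i v hv => by
      rw [LinearMap.mem_ker, Matrix.mulVecLin_apply] at hv ⊢
      rw [mulVec_mulVec, ← hc, ← mulVec_mulVec, hv, mulVec_zero]) with hp | hp
    · have hu : IsUnit E := isUnit_of_ker fun v hv => by
        have : v ∈ LinearMap.ker E.mulVecLin := hv
        rwa [hp, Submodule.mem_bot] at this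
      exact h1 (hu.mul_left_cancel (by rw [hE.2, mul_one]))
    · rw [LinearMap.ker_eq_top] at hp
      exact h0 (toLin'.injective (by rw [map_zero]; exact hp))
end

section

/-- The orthogonal projection onto a line. -/
lemma exists_line {u : κ → ℂ} (hu : u ≠ 0) : ∃ P : Mat κ, IsProj P ∧ P *ᵥ u = u ∧
    P.trace = 1 ∧ ∀ v, ∃ c : ℂ, P *ᵥ v = c • u := by
  obtain ⟨a, ha⟩ : ∃ a : ℂ, a = star u ⬝ᵥ u := ⟨_, rfl⟩
  have ha0 : a ≠ 0 := by rw [ha, Ne, dotProduct_star_self_eq_zero]; exact hu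
  have has : star a = a := by
    rw [ha]; exact (dotProduct_star_self_nonneg u).isSelfAdjoint
  have hv : ∀ v, (a⁻¹ • vecMulVec u (star u)) *ᵥ v = (a⁻¹ * (star u ⬝ᵥ v)) • u := fun v => by
    ext i
    simp only [smul_mulVec, Matrix.vecMulVec_mulVec, Pi.smul_apply, smul_eq_mul,
      MulOpposite.smul_eq_mul_unop, MulOpposite.unop_op]
    ring
  have hu1 : (a⁻¹ • vecMulVec u (star u)) *ᵥ u = u := by
    rw [hv, ← ha, inv_mul_cancel₀ ha0, one_smul]
  refine ⟨a⁻¹ • vecMulVec u (star u), ⟨?_, ?_⟩, hu1, ?_, fun v => ⟨_, hv v⟩⟩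
  · rw [conjTranspose_smul, Matrix.conjTranspose_vecMulVec, star_star, star_inv₀, has]
  · rw [mul_smul_comm, Matrix.mul_vecMulVec, hu1]
  · rw [trace_smul, Matrix.trace_vecMulVec, dotProduct_comm, ← ha, smul_eq_mul,
      inv_mul_cancel₀ ha0]

/-- A projection of trace one has one-dimensional range. -/
lemma IsProj.rank_one {P : Mat κ} (hP : IsProj P) (ht : P.trace = 1) :
    ∃ u : κ → ℂ, ∀ v, ∃ c : ℂ, P *ᵥ v = c • u := by
  have hext : ∀ {X Y : Mat κ}, (∀ v, X *ᵥ v = Y *ᵥ v) → X = Y := fun h =>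
    toLin'.injective (LinearMap.ext h)
  obtain ⟨v, hv⟩ : ∃ v, P *ᵥ v ≠ 0 := by
    by_contra! h
    have : P = 0 := hext fun v => by rw [h, Matrix.zero_mulVec]
    simp [this] at ht
  obtain ⟨Q, hQ, -, hQt, hQl⟩ := exists_line hv
  have h1 : P * Q = Q := hext fun w => by
    obtain ⟨c, hc⟩ := hQl w
    rw [← mulVec_mulVec, hc, mulVec_smul, mulVec_mulVec, hP.2]
  have h2 : Q * P = Q := by
    have := congrArg Matrix.conjTranspose h1
    rwa [conjTranspose_mul, hP.1, hQ.1] at this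
  have h3 : ((P - Q)ᴴ * (P - Q)).trace = 0 := by
    rw [conjTranspose_sub, hP.1, hQ.1, _root_.sub_mul, _root_.mul_sub, _root_.mul_sub, hP.2,
      h1, h2, hQ.2, sub_self, sub_zero, Matrix.trace_sub, ht, hQt, sub_self]
  rw [Matrix.trace_conjTranspose_mul_self_eq_zero_iff, sub_eq_zero] at h3
  rw [h3]
  exact ⟨_, hQl⟩

lemma continuousOn_polar {Z : Type} [TopologicalSpace Z] {s : Set Z} {f : Z → Mat κ}
    (hf : ContinuousOn f s) (hu : ∀ z ∈ s, IsUnit (f z)) :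
    ContinuousOn (fun z => polar (f z)) s := by
  rw [continuousOn_iff_continuous_domRestrict] at hf ⊢
  exact continuous_polar hf fun z => hu z z.2

lemma polar_smul {X : Mat κ} (hX : IsUnit X) {c : ℂ} (hc : c ≠ 0) :
    ∃ d : ℂ, polar (c • X) = d • polar X := by
  have hn : (0 : ℝ) < ‖c‖ := norm_pos_iff.2 hc
  have hd : star (c / ‖c‖) * c = (‖c‖ : ℂ) := by
    have : (‖c‖ : ℂ) ≠ 0 := by exact_mod_cast hn.ne'
    rw [Complex.star_def, map_div₀, Complex.conj_ofReal, div_mul_eq_mul_div, mul_comm,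
      Complex.mul_conj, Complex.normSq_eq_norm_sq]
    push_cast
    field_simp
  have hd1 : star (c / ‖c‖) * (c / ‖c‖) = 1 := by
    rw [← mul_div_assoc, hd, div_self]; exact_mod_cast hn.ne'
  refine ⟨c / ‖c‖, polar_unique (hX.smul (Units.mk0 c hc)) ?_ ?_⟩
  · rw [IsUni, conjTranspose_smul, smul_mul_smul_comm, hd1, polar_uni hX, one_smul]
  · rw [conjTranspose_smul, smul_mul_smul_comm, hd]
    exact (polar_pd hX).posSemidef.smul (by exact_mod_cast hn.le)

/-- The intertwining operator `X ↦ B X - X A` on vectorized matrices. -/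
def slL (A B : Mat ι) : Mat (ι × ι) := 1 ⊗ₖ B - Aᵀ ⊗ₖ 1

lemma slL_vec (A B X : Mat ι) : slL A B *ᵥ X.vec = (B * X - X * A).vec := by
  rw [slL, sub_mulVec, kronecker_mulVec_vec, kronecker_mulVec_vec]
  ext; simp [Matrix.vec]

lemma isUni_kron {g : Mat ι} (hg : IsUni g) : IsUni ((1 : Mat ι) ⊗ₖ g) := by
  rw [IsUni, conjTranspose_kronecker, ← mul_kronecker_mul, hg]
  simp

lemma slL_conj (A B : Mat ι) {g : Mat ι} (hg : IsUni g) :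
    slL A (g * B * gᴴ) = (1 ⊗ₖ g) * slL A B * (1 ⊗ₖ g)ᴴ := by
  rw [slL, slL, _root_.mul_sub, _root_.sub_mul, conjTranspose_kronecker,
    ← mul_kronecker_mul, ← mul_kronecker_mul, ← mul_kronecker_mul,
    ← mul_kronecker_mul, mul_one g, hg.mul_ct]
  simp

/-- The positive operator whose kernel is the space of intertwiners from `A` to `B`. -/
def slK {r : ℕ} (A B : Fin r → Mat ι) : Mat (ι × ι) :=
  ∑ i, (slL (A i) (B i))ᴴ * slL (A i) (B i)

/-- The spectral projection of `slK A B` below the value `c`. -/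
noncomputable def slP {r : ℕ} (A : Fin r → Mat ι) (c : ℂ) (B : Fin r → Mat ι) :
    Mat (ι × ι) :=
  (1 / 2 : ℂ) • (1 + polar (c • (1 : Mat (ι × ι)) - slK A B))

/-- The approximate intertwiner from `A` to `B` closest to the identity. -/
noncomputable def slX {r : ℕ} (A : Fin r → Mat ι) (c : ℂ) (B : Fin r → Mat ι) :
    Mat ι :=
  Matrix.of fun i j => (slP A c B *ᵥ (1 : Mat ι).vec) (j, i)

variable {r : ℕ}

lemma vec_slX (A B : Fin r → Mat ι) (c : ℂ) :
    (slX A c B).vec = slP A c B *ᵥ (1 : Mat ι).vec := rfl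

lemma slK_ct (A B : Fin r → Mat ι) : (slK A B)ᴴ = slK A B := by
  simp [slK, Matrix.conjTranspose_sum]

lemma slK_conj (A B : Fin r → Mat ι) {g : Mat ι} (hg : IsUni g) :
    slK A (fun i => g * B i * gᴴ) = (1 ⊗ₖ g) * slK A B * (1 ⊗ₖ g)ᴴ := by
  simp only [slK, slL_conj _ _ hg, Finset.mul_sum, Finset.sum_mul]
  refine Finset.sum_congr rfl fun i _ => ?_
  have := isUni_kron hg
  generalize (1 : Mat ι) ⊗ₖ g = G at this ⊢
  rw [conjTranspose_mul, conjTranspose_mul, conjTranspose_conjTranspose]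
  calc _ = G * (slL (A i) (B i))ᴴ * (Gᴴ * G) * slL (A i) (B i) * Gᴴ := by simp only [mul_assoc]
    _ = _ := by rw [this]; simp only [mul_assoc, one_mul]

lemma slP_conj (A B : Fin r → Mat ι) {c : ℂ} {g : Mat ι} (hg : IsUni g)
    (hu : IsUnit (c • (1 : Mat (ι × ι)) - slK A B)) :
    slP A c (fun i => g * B i * gᴴ) = (1 ⊗ₖ g) * slP A c B * (1 ⊗ₖ g)ᴴ := by
  have hG := isUni_kron hg
  rw [slP, slP, slK_conj A B hg]
  generalize (1 : Mat ι) ⊗ₖ g = G at hG ⊢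
  have h1 : c • (1 : Mat (ι × ι)) - G * slK A B * Gᴴ =
      G * (c • 1 - slK A B) * Gᴴ := by
    rw [_root_.mul_sub, _root_.sub_mul, mul_smul_comm, mul_one, smul_mul_assoc, hG.mul_ct]
  rw [h1, polar_mul_right (hG.isUnit.mul hu) hG.ct, polar_mul_left hu hG, mul_smul_comm,
    smul_mul_assoc, mul_add, mul_one, add_mul, hG.mul_ct]

lemma slP_proj (A B : Fin r → Mat ι) {c : ℝ}
    (hu : IsUnit ((c : ℂ) • (1 : Mat (ι × ι)) - slK A B)) : IsProj (slP A c B) := by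
  have h1 := polar_ct_selfAdjoint hu (by simp [slK_ct])
  have h2 := polar_uni hu
  rw [IsUni, h1] at h2
  refine ⟨?_, ?_⟩
  · rw [slP, conjTranspose_smul, conjTranspose_add, h1]; simp
  · rw [slP, smul_mul_smul_comm, mul_add, add_mul, add_mul, h2, mul_one, mul_one, one_mul,
      add_comm (polar _) 1, ← two_smul ℂ, smul_smul]
    norm_num

/-- For an irreducible tuple the kernel of `slK A A` is spanned by the identity and is isolated
in the spectrum. -/
lemma slP_self [Nonempty ι] {A : Fin r → Mat ι} (hA : Irr A) :
    ∃ c : ℝ, IsUnit ((c : ℂ) • (1 : Mat (ι × ι)) - slK A A) ∧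
      (slP A c A).trace = 1 ∧ slX A c A = 1 := by
  have h10 : (1 : Mat ι).vec ≠ 0 := by
    rw [Ne, vec_eq_zero_iff]; exact one_ne_zero
  obtain ⟨P, hP, hP1, hPt, hPl⟩ := exists_line h10
  have hext : ∀ {X Y : Mat (ι × ι)}, (∀ v, X *ᵥ v = Y *ᵥ v) → X = Y := fun h =>
    toLin'.injective (LinearMap.ext h)
  have hKP : slK A A * P = 0 := hext fun v => by
    obtain ⟨c, hc⟩ := hPl v
    rw [← mulVec_mulVec, hc, mulVec_smul, slK, Matrix.sum_mulVec]
    simp [← mulVec_mulVec, slL_vec, Matrix.vec_zero]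
  have hPK : P * slK A A = 0 := by
    have := congrArg Matrix.conjTranspose hKP
    rwa [conjTranspose_mul, hP.1, slK_ct, conjTranspose_zero] at this
  have hKs : (slK A A).PosSemidef :=
    Matrix.posSemidef_sum _ fun i _ => posSemidef_conjTranspose_mul_self _
  have hPs : P.PosSemidef := by
    have := posSemidef_conjTranspose_mul_self P
    rwa [hP.1, hP.2] at this
  have hpd : (slK A A + P).PosDef := by
    rw [(hKs.add hPs).posDef_iff_isUnit]
    refine isUnit_of_ker fun v hv => ?_
    have hPv : P *ᵥ v = 0 := by
      have := congrArg (fun w => P *ᵥ w) hv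
      simpa [mulVec_mulVec, mul_add, hPK, hP.2] using this
    have hKv : star v ⬝ᵥ (slK A A *ᵥ v) = 0 := by
      rw [add_mulVec, hPv, add_zero] at hv
      rw [hv, dotProduct_zero]
    rw [slK, Matrix.sum_mulVec, dotProduct_sum, Finset.sum_eq_zero_iff_of_nonneg fun i _ =>
      (posSemidef_conjTranspose_mul_self _).dotProduct_mulVec_nonneg v] at hKv
    obtain ⟨X, rfl⟩ := vec_bijective.2 v
    obtain ⟨c, hc⟩ := hA X fun i => by
      have := hKv i (Finset.mem_univ _)
      rw [← mulVec_mulVec, ← star_mulVec_dot, dotProduct_star_self_eq_zero, slL_vec,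
        vec_eq_zero_iff, sub_eq_zero] at this
      exact this
    rw [hc, vec_smul, mulVec_smul, hP1] at hPv
    rw [hc, vec_smul, hPv]
  obtain ⟨c, hc0, hc⟩ : ∃ c : ℝ, 0 < c ∧
      (slK A A + P - ((2 * c : ℝ) : ℂ) • (1 : Mat (ι × ι))).PosDef := by
    have ho := isOpen_posDef_of_hermitian
      (f := fun c : ℝ => slK A A + P - ((2 * c : ℝ) : ℂ) • (1 : Mat (ι × ι)))
      (by fun_prop) (fun c => by
        rw [IsHermitian, conjTranspose_sub, conjTranspose_add, slK_ct, hP.1,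
          conjTranspose_smul, conjTranspose_one, Complex.star_def,
          Complex.conj_ofReal])
    have h0 := ho.mem_nhds (x := (0 : ℝ)) (by simpa [Set.mem_ofPred_eq] using hpd)
    obtain ⟨ε, hε, hb⟩ := Metric.mem_nhds_iff.1 h0
    refine ⟨ε / 2, by linarith, hb ?_⟩
    rw [Metric.mem_ball, dist_zero_right, Real.norm_eq_abs, abs_of_pos] <;> linarith
  have hS : (slK A A + (2 * c : ℂ) • P - (c : ℂ) • 1).PosDef := by
    have h1 := hc.posSemidef.conjTranspose_mul_mul_same (1 - P)
    have h2 := PosDef.posSemidef_add h1 (PosDef.one.smul (a := (c : ℂ)) (by exact_mod_cast hc0))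
    convert h2 using 1
    rw [conjTranspose_sub, conjTranspose_one, hP.1]
    simp only [_root_.mul_sub, _root_.sub_mul, mul_add, add_mul, mul_one, one_mul, hPK, hKP, hP.2,
      mul_smul_comm, smul_mul_assoc, zero_mul]
    push_cast
    module
  have hU : IsUni ((2 : ℂ) • P - 1) := by
    rw [IsUni, conjTranspose_sub, conjTranspose_smul, hP.1]
    simp only [_root_.mul_sub, _root_.sub_mul, mul_one, one_mul, hP.2,
      mul_smul_comm, smul_mul_assoc, conjTranspose_one, Complex.star_def, Complex.conj_ofNat]
    module
  have hUct : ((2 : ℂ) • P - 1)ᴴ = (2 : ℂ) • P - 1 := by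
    rw [conjTranspose_sub, conjTranspose_smul, hP.1]; simp
  have hUS : ((2 : ℂ) • P - 1) * ((c : ℂ) • 1 - slK A A) =
      slK A A + (2 * c : ℂ) • P - (c : ℂ) • 1 := by
    simp only [_root_.mul_sub, _root_.sub_mul, mul_one, one_mul, hPK,
      mul_smul_comm, smul_mul_assoc]
    module
  have hu : IsUnit ((c : ℂ) • (1 : Mat (ι × ι)) - slK A A) := by
    have : (c : ℂ) • (1 : Mat (ι × ι)) - slK A A =
        ((2 : ℂ) • P - 1)ᴴ * (slK A A + (2 * c : ℂ) • P - (c : ℂ) • 1) := by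
      rw [← hUS, ← mul_assoc, hU, one_mul]
    rw [this]
    exact hU.ct.isUnit.mul hS.isUnit
  have hSP : slP A c A = P := by
    rw [slP, polar_unique hu hU (by rw [hUct, hUS]; exact hS.posSemidef)]
    module
  refine ⟨c, hu, by rw [hSP, hPt], ?_⟩
  apply vec_bijective.1
  rw [vec_slX, hSP, hP1]

/-- Near an irreducible tuple there is a continuous unitary frame, equivariant up to scalars. -/
lemma slice [Nonempty ι] {A : Fin r → Mat ι} (hA : Irr A) :
    ∃ (N : Set (Fin r → Mat ι)) (v : (Fin r → Mat ι) → Mat ι),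
      IsOpen N ∧ A ∈ N ∧ ContinuousOn v N ∧ (∀ B ∈ N, IsUni (v B)) ∧
      ∀ B ∈ N, ∀ g, IsUni g → (fun i => g * B i * gᴴ) ∈ N →
        ∃ c : ℂ, v (fun i => g * B i * gᴴ) = c • (g * v B) := by
  obtain ⟨c, hu, ht, hX⟩ := slP_self hA
  have hKc : Continuous fun B : Fin r → Mat ι =>
      (c : ℂ) • (1 : Mat (ι × ι)) - slK A B := by
    have hL : ∀ i, Continuous fun B : Fin r → Mat ι => slL (A i) (B i) := fun i => by
      refine Continuous.sub (continuous_matrix fun a b => ?_) continuous_const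
      simp only [Matrix.kroneckerMap_apply]
      fun_prop
    refine continuous_const.sub (continuous_finsetSum _ fun i _ => ?_)
    exact (hL i).matrix_conjTranspose.matrix_mul (hL i)
  obtain ⟨Z, hZ⟩ : ∃ Z : Set (Fin r → Mat ι), Z = {B |
      IsUnit ((c : ℂ) • (1 : Mat (ι × ι)) - slK A B)} := ⟨_, rfl⟩
  have hZu : ∀ B ∈ Z, IsUnit ((c : ℂ) • (1 : Mat (ι × ι)) - slK A B) := fun B hB => by
    rwa [hZ] at hB
  have hZo : IsOpen Z := by
    rw [hZ]
    simp only [isUnit_iff_isUnit_det, isUnit_iff_ne_zero]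
    exact isOpen_ne.preimage hKc.matrix_det
  have hPc : ContinuousOn (slP A c) Z :=
    ((continuousOn_polar hKc.continuousOn hZu).const_add 1).const_smul (1 / 2 : ℂ)
  have hXc : ContinuousOn (slX A c) Z := by
    rw [continuousOn_iff_continuous_domRestrict] at hPc ⊢
    refine continuous_matrix fun i j => ?_
    exact (continuous_apply (j, i)).comp (hPc.matrix_mulVec continuous_const)
  have h1 : ContinuousOn (fun B => ((slP A c B).trace, (slX A c B).det)) Z := by
    rw [continuousOn_iff_continuous_domRestrict] at hPc hXc ⊢
    exact hPc.matrix_trace.prodMk hXc.matrix_det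
  obtain ⟨N, hN⟩ : ∃ N, N = Z ∩ (fun B => ((slP A c B).trace, (slX A c B).det)) ⁻¹'
    (Metric.ball 1 1 ×ˢ {0}ᶜ) := ⟨_, rfl⟩
  have hNo : IsOpen N := by
    rw [hN]
    exact h1.isOpen_inter_preimage hZo (Metric.isOpen_ball.prod isOpen_compl_singleton)
  have hNZ : N ⊆ Z := hN ▸ Set.inter_subset_left
  have hNu : ∀ B ∈ N, IsUnit (slX A c B) := fun B hB => by
    rw [hN] at hB
    rw [isUnit_iff_isUnit_det, isUnit_iff_ne_zero]
    exact hB.2.2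
  have hNt : ∀ B ∈ N, (slP A c B).trace = 1 := fun B hB => by
    obtain ⟨m, hm⟩ := (slP_proj A B (hZu B (hNZ hB))).trace_int
    rw [hN] at hB
    have h2 : dist (slP A c B).trace 1 < 1 := hB.2.1
    rw [hm, dist_eq_norm] at h2
    have h3 : |m - 1| < 1 := by
      have h4 : ((m : ℂ) - 1) = ((m - 1 : ℤ) : ℂ) := by push_cast; ring
      rw [h4, Complex.norm_intCast] at h2
      exact_mod_cast h2
    rw [hm, show m = 1 by rw [Int.abs_lt_one_iff] at h3; omega, Int.cast_one]
  refine ⟨N, fun B => polar (slX A c B), hNo, ?_, continuousOn_polar (hXc.mono hNZ) hNu,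
    fun B hB => polar_uni (hNu B hB), ?_⟩
  · rw [hN]
    refine ⟨by rw [hZ]; exact hu, ?_⟩
    simp [ht, hX]
  · intro B hB g hg hgB
    obtain ⟨u, hul⟩ := (slP_proj A B (hZu B (hNZ hB))).rank_one (hNt B hB)
    have hGX : ((1 : Mat ι) ⊗ₖ g) *ᵥ (slX A c B).vec = (g * slX A c B).vec := by
      rw [kronecker_mulVec_vec]; simp
    have e1 : (slX A c fun i => g * B i * gᴴ).vec =
        (1 ⊗ₖ g) *ᵥ (slP A c B *ᵥ ((1 ⊗ₖ g)ᴴ *ᵥ (1 : Mat ι).vec)) := by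
      rw [vec_slX, slP_conj A B hg (hZu B (hNZ hB)), mulVec_mulVec, mulVec_mulVec,
        mul_assoc]
    obtain ⟨a, ha⟩ := hul (1 : Mat ι).vec
    obtain ⟨b, hb⟩ := hul ((1 ⊗ₖ g)ᴴ *ᵥ (1 : Mat ι).vec)
    have hX0 : ∀ C ∈ N, (slX A c C).vec ≠ 0 := fun C hC h => by
      rw [vec_eq_zero_iff] at h
      have := hNu C hC
      rw [h] at this
      exact not_isUnit_zero this
    have ha0 : a ≠ 0 := fun h => hX0 B hB (by rw [vec_slX, ha, h, zero_smul])
    have hb0 : b ≠ 0 := fun h => hX0 _ hgB (by rw [e1, hb, h, zero_smul, mulVec_zero])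
    have e2 : (slX A c fun i => g * B i * gᴴ) = (b / a) • (g * slX A c B) := by
      apply vec_bijective.1
      rw [e1, hb, vec_smul, ← hGX, vec_slX, ha, mulVec_smul, mulVec_smul,
        smul_smul, div_mul_cancel₀ _ ha0]
    obtain ⟨d, hd⟩ := polar_smul (hg.isUnit.mul (hNu B hB)) (div_ne_zero hb0 ha0)
    exact ⟨d, by beta_reduce; rw [e2, hd, polar_mul_left (hNu B hB) hg]⟩
end

/-! ### Transport for irreducible tuples -/

section
variable {r : ℕ}

/-- Simultaneous conjugation of a tuple. -/
def cj (u : Mat ι) (A : Fin r → Mat ι) : Fin r → Mat ι := fun i => u * A i * uᴴ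

lemma cj_one (A : Fin r → Mat ι) : cj 1 A = A := by funext i; simp [cj]
lemma cj_mul (u w : Mat ι) (A : Fin r → Mat ι) : cj (u * w) A = cj u (cj w A) := by
  funext i; simp [cj, mul_assoc]
lemma cj_smul {c : ℂ} (hc : star c * c = 1) (u : Mat ι) (A : Fin r → Mat ι) :
    cj (c • u) A = cj u A := by
  funext i
  simp only [cj, conjTranspose_smul, smul_mul_assoc, mul_smul_comm, smul_smul]
  rw [hc, one_smul]

lemma IsUni.smul {u : Mat ι} (hu : IsUni u) {c : ℂ} (hc : star c * c = 1) :
    IsUni (c • u) := by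
  rw [IsUni, conjTranspose_smul, smul_mul_smul_comm, hu, hc, one_smul]

lemma unit_of_smul [Nonempty ι] {u w : Mat ι} (hu : IsUni u) (hw : IsUni w) {c : ℂ}
    (h : u = c • w) : star c * c = 1 := by
  have h1 : (star c * c) • (1 : Mat ι) = 1 := by
    rw [← hw, ← smul_mul_smul_comm, ← conjTranspose_smul, ← h, hu]
    exact hw.symm
  have := congrFun (congrFun h1 (Classical.arbitrary ι)) (Classical.arbitrary ι)
  simpa using this

/-- Unitaries conjugating an irreducible tuple in the same way differ by a scalar. -/
lemma smul_of_cj [Nonempty ι] {u w : Mat ι} (hu : IsUni u) (hw : IsUni w)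
    {A : Fin r → Mat ι} (hA : Irr A) (h : cj u A = cj w A) :
    ∃ c : ℂ, u = c • w ∧ star c * c = 1 := by
  obtain ⟨c, hc⟩ := hA (wᴴ * u) fun i => by
    have h1 := congrFun h i
    simp only [cj] at h1
    calc A i * (wᴴ * u) = wᴴ * (w * A i * wᴴ) * u := by
          rw [mul_assoc w, ← mul_assoc wᴴ w, hw, one_mul, mul_assoc]
      _ = wᴴ * u * A i := by
          rw [← h1, mul_assoc wᴴ, mul_assoc (u * A i), hu, mul_one, mul_assoc]
  have h2 : u = c • w := by
    rw [← one_mul u, ← hw.mul_ct, mul_assoc, hc, mul_smul_comm, mul_one]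
  exact ⟨c, h2, unit_of_smul hu hw h2⟩

lemma Irr.cj {A : Fin r → Mat ι} (hA : Irr A) {u : Mat ι} (hu : IsUni u) :
    Irr (cj u A) := fun X hX => by
  obtain ⟨c, hc⟩ := hA (uᴴ * X * u) fun i => by
    have h1 := congrArg (fun Y => uᴴ * Y * u) (hX i)
    simp only [BP.cj] at h1
    calc _ = uᴴ * (u * A i * uᴴ * X) * u := by
          simp only [← mul_assoc]; rw [hu, one_mul]
      _ = _ := by
          rw [h1]; simp only [mul_assoc]; rw [hu, mul_one]
  refine ⟨c, ?_⟩
  calc X = u * (uᴴ * X * u) * uᴴ := by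
        simp only [← mul_assoc]; rw [hu.mul_ct, one_mul, mul_assoc, hu.mul_ct, mul_one]
    _ = _ := by rw [hc, mul_smul_comm, mul_one, smul_mul_assoc, hu.mul_ct]

lemma IsG.cj {b : Prop} {a u : Mat ι} (ha : IsG b a) (hu : IsUni u) :
    IsG b (u * a * uᴴ) := by
  refine ⟨(hu.mul ha.1).mul hu.ct, fun hb => ?_⟩
  have h1 := congrArg det hu
  rw [Matrix.det_mul, det_one] at h1
  rw [Matrix.det_mul, Matrix.det_mul, ha.2 hb, mul_one, mul_comm, h1]

lemma continuous_cj {Z : Type} [TopologicalSpace Z] {u : Z → Mat ι}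
    {A : Z → Fin r → Mat ι} (hu : Continuous u) (hA : Continuous A) :
    Continuous fun z => cj (u z) (A z) :=
  continuous_pi fun i => (hu.matrix_mul ((continuous_apply i).comp hA)).matrix_mul
    hu.matrix_conjTranspose

end

section
variable {b : Prop} {n r : ℕ}

/-- Irreducible `r`-tuples in `U(n)`, or in `SU(n)` if `b` holds. -/
abbrev Pt (b : Prop) (n r : ℕ) : Type :=
  {A : Fin r → Mat (Fin n) // (∀ i, IsG b (A i)) ∧ Irr A}

/-- The compact space of unitary matrices. -/
abbrev Ug (n : ℕ) : Type := {u : Mat (Fin n) // IsUni u}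

instance : CompactSpace (Ug n) := by
  have : ProperSpace (Mat (Fin n)) := FiniteDimensional.proper ℂ _
  have h : IsCompact {u : Mat (Fin n) | IsUni u} := by
    refine Metric.isCompact_of_isClosed_isBounded ?_ ?_
    · exact isClosed_eq (continuous_id.matrix_conjTranspose.matrix_mul continuous_id) continuous_const
    · refine (Metric.isBounded_closedBall (x := (0 : Mat (Fin n))) (r := 1)).subset ?_
      intro u hu
      rw [Metric.mem_closedBall, dist_zero_right]
      exact IsUni.norm_le hu
  exact isCompact_iff_compactSpace.1 h

/-- `p` exhibits `X` as the quotient of the irreducible tuples by conjugation. -/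
structure IsQuo {X : Type} [TopologicalSpace X] (p : Pt b n r → X) : Prop where
  cont : Continuous p
  surj : Function.Surjective p
  isOpen : IsOpenMap p
  fib : ∀ A B, p A = p B ↔ ∃ u, IsUni u ∧ B.1 = cj u A.1

/-- A function which can be computed by a continuous formula from a closed choice in a compact
space is continuous, however the choices are made. -/
lemma cont_of_choice {K Z W : Type} [TopologicalSpace K] [CompactSpace K] [TopologicalSpace Z]
    [TopologicalSpace W] {S : Set (K × Z)} (hS : IsClosed S) {f : K × Z → W} (hf : Continuous f)
    {h : Z → W} (h1 : ∀ z, ∃ k, (k, z) ∈ S) (h2 : ∀ q ∈ S, h q.2 = f q) : Continuous h := by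
  rw [continuous_iff_isClosed]
  intro C hC
  have : h ⁻¹' C = Prod.snd '' (S ∩ f ⁻¹' C) := by
    ext z
    constructor
    · intro hz
      obtain ⟨k, hk⟩ := h1 z
      exact ⟨(k, z), ⟨hk, by rw [Set.mem_preimage, ← h2 _ hk]; exact hz⟩, rfl⟩
    · rintro ⟨q, ⟨hq, hqC⟩, rfl⟩
      rw [Set.mem_preimage, h2 _ hq]; exact hqC
  rw [this]
  exact isClosedMap_snd_of_compactSpace _ (hS.inter (hC.preimage hf))

variable {X : Type} [TopologicalSpace X] {p : Pt b n r → X}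

/-- The quotient map from irreducible tuples is locally trivial enough to transport points. -/
lemma IsQuo.transport [NeZero n] (hp : IsQuo p) : HasTransport p := by
  intro x
  obtain ⟨A, rfl⟩ := hp.surj x
  obtain ⟨N, v, hNo, hAN, hvc, hvu, hve⟩ := slice A.2.2
  obtain ⟨N', hN'⟩ : ∃ N' : Set (Pt b n r), N' = Subtype.val ⁻¹' N := ⟨_, rfl⟩
  have hN'o : IsOpen N' := hN' ▸ hNo.preimage continuous_subtype_val
  have hmem : ∀ B ∈ N', B.1 ∈ N := fun B hB => by rwa [hN'] at hB
  obtain ⟨s0, hs0⟩ : ∃ s0 : Pt b n r → Fin r → Mat (Fin n),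
    ∀ B, s0 B = cj (v B.1)ᴴ B.1 := ⟨_, fun _ => rfl⟩
  -- The normal form `s0` is constant on orbits inside the slice neighbourhood.
  have hinv : ∀ B ∈ N', ∀ B' ∈ N', p B = p B' → s0 B = s0 B' := fun B hB B' hB' h => by
    obtain ⟨u, hu, hB'u⟩ := (hp.fib B B').1 h
    obtain ⟨c, hc⟩ := hve B.1 (hmem B hB) u hu (by
      have := hmem B' hB'; rw [hB'u] at this; exact this)
    have h1 : v B'.1 = c • (u * v B.1) := by rw [hB'u]; exact hc
    have hcc := unit_of_smul (hvu _ (hmem B' hB')) (hu.mul (hvu _ (hmem B hB))) h1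
    have hcc' : star (star c) * star c = 1 := by rw [star_star, mul_comm, hcc]
    rw [hs0, hs0, h1, conjTranspose_smul, cj_smul hcc', hB'u, conjTranspose_mul,
      ← cj_mul, mul_assoc, hu, mul_one]
  obtain ⟨V, hV⟩ : ∃ V, V = p '' N' := ⟨_, rfl⟩
  have hVo : IsOpen V := hV ▸ hp.isOpen _ hN'o
  have hVN : ∀ x ∈ V, ∃ B ∈ N', p B = x := fun x hx => by rw [hV] at hx; exact hx
  have hs : ∀ x, ∃ B, x ∈ V → B ∈ N' ∧ p B = x := fun x => by
    by_cases hx : x ∈ V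
    · obtain ⟨B, hB⟩ := hVN x hx
      exact ⟨B, fun _ => hB⟩
    · exact ⟨A, fun h => (hx h).elim⟩
  choose B hB using hs
  have hsp : ∀ C ∈ N', s0 (B (p C)) = s0 C := fun C hC => by
    have hx : p C ∈ V := hV ▸ Set.mem_image_of_mem _ hC
    exact hinv _ (hB _ hx).1 _ hC (hB _ hx).2
  have hs0c : ContinuousOn s0 N' := by
    have h1 : ContinuousOn (fun C : Pt b n r => v C.1) N' :=
      hvc.comp continuous_subtype_val.continuousOn hmem
    rw [continuousOn_iff_continuous_domRestrict] at h1 ⊢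
    have h2 : N'.domRestrict s0 = fun C : N' => cj (v C.1.1)ᴴ C.1.1 := by
      funext C; exact hs0 C
    rw [h2]
    exact continuous_cj h1.matrix_conjTranspose (by fun_prop)
  have hsc : ContinuousOn (fun x => s0 (B x)) V := by
    rw [continuousOn_open_iff hVo]
    intro O hO
    have : V ∩ (fun x => s0 (B x)) ⁻¹' O = p '' (N' ∩ s0 ⁻¹' O) := by
      ext x
      constructor
      · rintro ⟨hx, hxO⟩
        obtain ⟨C, hC, rfl⟩ := hVN x hx
        exact ⟨C, ⟨hC, by rw [Set.mem_preimage, ← hsp C hC]; exact hxO⟩, rfl⟩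
      · rintro ⟨C, ⟨hC, hCO⟩, rfl⟩
        exact ⟨hV ▸ Set.mem_image_of_mem _ hC, by rw [Set.mem_preimage, hsp C hC]; exact hCO⟩
    rw [this]
    exact hp.isOpen _ (hs0c.isOpen_inter_preimage hN'o hO)
  have hg : ∀ e, ∃ g, p e ∈ V → IsUni g ∧ e.1 = cj g (s0 (B (p e))) := fun e => by
    by_cases he : p e ∈ V
    · obtain ⟨u, hu, h⟩ := (hp.fib _ _).1 (hB _ he).2
      have hvB := hvu _ (hmem _ (hB _ he).1)
      refine ⟨u * v (B (p e)).1, fun _ => ⟨hu.mul hvB, ?_⟩⟩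
      rw [h, cj_mul, hs0, ← cj_mul (v _), hvB.mul_ct, cj_one]
    · exact ⟨0, fun h => (he h).elim⟩
  choose g hg using hg
  have hsP : ∀ x ∈ V, ∀ u, IsUni u → (∀ i, IsG b (cj u (s0 (B x)) i)) ∧ Irr (cj u (s0 (B x))) ∧
      ∃ w, IsUni w ∧ cj u (s0 (B x)) = cj w (B x).1 := fun x hx u hu => by
    have hvB := hvu _ (hmem _ (hB _ hx).1)
    rw [hs0, ← cj_mul]
    have hw := hu.mul hvB.ct
    exact ⟨fun i => ((B x).2.1 i).cj hw, (B x).2.2.cj hw, _, hw, rfl⟩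
  have hθ : ∀ e x', ∃ w : Pt b n r, p e ∈ V → x' ∈ V → w.1 = cj (g e) (s0 (B x')) := fun e x' => by
    by_cases h : p e ∈ V ∧ x' ∈ V
    · obtain ⟨h1, h2, -⟩ := hsP x' h.2 _ (hg e h.1).1
      exact ⟨⟨_, h1, h2⟩, fun _ _ => rfl⟩
    · exact ⟨A, fun h1 h2 => (h ⟨h1, h2⟩).elim⟩
  choose θ hθ using hθ
  refine ⟨V, hVo, hV ▸ Set.mem_image_of_mem _ (by rw [hN']; exact hAN), θ, ?_, ?_, ?_⟩
  · rw [continuousOn_iff_continuous_domRestrict]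
    refine Continuous.subtype_mk (f := fun q : {q : Pt b n r × X | p q.1 ∈ V ∧ q.2 ∈ V} =>
      (θ q.1.1 q.1.2).1) ?_ _
    have c1 : Continuous fun q : {q : Pt b n r × X | p q.1 ∈ V ∧ q.2 ∈ V} => s0 (B q.1.2) :=
      hsc.comp_continuous (by fun_prop) fun q => q.2.2
    have c2 : Continuous fun q : {q : Pt b n r × X | p q.1 ∈ V ∧ q.2 ∈ V} => s0 (B (p q.1.1)) :=
      hsc.comp_continuous (hp.cont.comp (by fun_prop)) fun q => q.2.1
    refine cont_of_choice (K := Ug n) (S := {q | q.2.1.1.1 = cj q.1.1 (s0 (B (p q.2.1.1)))})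
      (f := fun q => cj q.1.1 (s0 (B q.2.1.2))) ?_ ?_ ?_ ?_
    · exact isClosed_eq (by fun_prop) (continuous_cj (by fun_prop) (c2.comp continuous_snd))
    · exact continuous_cj (by fun_prop) (c1.comp continuous_snd)
    · exact fun q => ⟨⟨_, (hg _ q.2.1).1⟩, (hg _ q.2.1).2⟩
    · rintro ⟨u, q⟩ hq
      change q.1.1.1 = cj u.1 (s0 (B (p q.1.1))) at hq
      have hgq := hg _ q.2.1
      obtain ⟨w, hw, hwB⟩ := hsP _ q.2.1 1 isUni_one
      rw [hθ _ _ q.2.1 q.2.2]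
      have hI : Irr (s0 (B (p q.1.1))) := by
        have := (hsP _ q.2.1 1 isUni_one).2.1
        rwa [cj_one] at this
      obtain ⟨c, hc, hcc⟩ := smul_of_cj hgq.1 u.2 hI (hgq.2.symm.trans hq)
      rw [hc, cj_smul hcc]
  · intro e x' he hx'
    obtain ⟨-, -, w, hw, h⟩ := hsP x' hx' _ (hg e he).1
    rw [← (hB x' hx').2, eq_comm, hp.fib]
    rw [(hB x' hx').2]
    exact ⟨w, hw, by rw [hθ e x' he hx', h]⟩
  · intro e he
    apply Subtype.ext
    rw [hθ e _ he he, ← (hg e he).2]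

/-- The orbit of a tuple under conjugation. -/
abbrev Orb (A : Fin r → Mat (Fin n)) : Type := {B // ∃ u, IsUni u ∧ B = cj u A}

/-- The orbit map of an irreducible tuple. -/
def orb (A : Fin r → Mat (Fin n)) (u : Ug n) : Orb A := ⟨cj u.1 A, u.1, u.2, rfl⟩

lemma orb_transport [NeZero n] {A : Fin r → Mat (Fin n)} (hA : Irr A) :
    HasTransport (orb A) := by
  rintro ⟨B, w, hw, rfl⟩
  obtain ⟨N, v, hNo, hAN, hvc, hvu, hve⟩ := slice (hA.cj hw)
  -- Along the orbit the frame recovers the conjugating unitary up to a scalar.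
  have hv : ∀ B ∈ N, (∃ u, IsUni u ∧ B = cj u A) →
      ∃ h, IsUni h ∧ v B = h * (wᴴ * v (cj w A)) ∧ B = cj h A := fun B hB hBo => by
    obtain ⟨u, hu, rfl⟩ := hBo
    have h0 : cj u A = cj (u * wᴴ) (cj w A) := by
      rw [← cj_mul, mul_assoc, hw, mul_one]
    obtain ⟨c, hc⟩ := hve (cj w A) hAN (u * wᴴ) (hu.mul hw.ct) (by
      rw [h0] at hB; exact hB)
    have h1 : v (cj u A) = c • (u * wᴴ * v (cj w A)) := by
      rw [h0]; exact hc
    have hcc := unit_of_smul (hvu _ hB) ((hu.mul hw.ct).mul (hvu _ hAN)) h1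
    exact ⟨c • u, hu.smul hcc, by rw [h1, smul_mul_assoc, mul_assoc], (cj_smul hcc _ _).symm⟩
  have hv0 := hw.ct.mul (hvu _ hAN)
  obtain ⟨V, hV⟩ : ∃ V : Set (Orb A), V = Subtype.val ⁻¹' N := ⟨_, rfl⟩
  have hVN : ∀ B ∈ V, B.1 ∈ N := fun B hB => by rwa [hV] at hB
  classical
  obtain ⟨θ, hθ⟩ : ∃ θ : Ug n → Orb A → Ug n, ∀ u B, orb A u ∈ V → B ∈ V →
      (θ u B).1 = v B.1 * (v (orb A u).1)ᴴ * u.1 := by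
    refine ⟨fun u B => if h : orb A u ∈ V ∧ B ∈ V then ⟨v B.1 * (v (orb A u).1)ᴴ * u.1,
      ((hvu _ (hVN _ h.2)).mul (hvu _ (hVN _ h.1)).ct).mul u.2⟩ else u, fun u B h1 h2 => ?_⟩
    beta_reduce; rw [dif_pos ⟨h1, h2⟩]
  refine ⟨V, hV ▸ hNo.preimage continuous_subtype_val, by rw [hV]; exact hAN, θ, ?_, ?_, ?_⟩
  · have co : Continuous (orb A) :=
      Continuous.subtype_mk (continuous_cj continuous_subtype_val continuous_const) _
    rw [continuousOn_iff_continuous_domRestrict]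
    refine Continuous.subtype_mk (f := fun q : {q : Ug n × Orb A | orb A q.1 ∈ V ∧ q.2 ∈ V} =>
      (θ q.1.1 q.1.2).1) ?_ _
    have c1 : Continuous fun q : {q : Ug n × Orb A | orb A q.1 ∈ V ∧ q.2 ∈ V} => v q.1.2.1 :=
      hvc.comp_continuous (by fun_prop) fun q => hVN _ q.2.2
    have c2 : Continuous fun q : {q : Ug n × Orb A | orb A q.1 ∈ V ∧ q.2 ∈ V} =>
        v (orb A q.1.1).1 :=
      hvc.comp_continuous (continuous_subtype_val.comp (co.comp (by fun_prop)))
        fun q => hVN _ q.2.1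
    have : (fun q : {q : Ug n × Orb A | orb A q.1 ∈ V ∧ q.2 ∈ V} => (θ q.1.1 q.1.2).1) =
        fun q => v q.1.2.1 * (v (orb A q.1.1).1)ᴴ * q.1.1.1 := by
      funext q; exact hθ _ _ q.2.1 q.2.2
    rw [this]
    exact (c1.matrix_mul c2.matrix_conjTranspose).matrix_mul (by fun_prop)
  · intro u B hu hB
    apply Subtype.ext
    change cj (θ u B).1 A = B.1
    obtain ⟨h, hh, h1, h2⟩ := hv _ (hVN _ hB) B.2
    obtain ⟨k, hk, h3, h4⟩ := hv _ (hVN _ hu) (orb A u).2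
    rw [hθ u B hu hB, h1, h3, conjTranspose_mul]
    have h5 : h * (wᴴ * v (cj w A)) * ((wᴴ * v (cj w A))ᴴ * kᴴ) = h * kᴴ := by
      rw [mul_assoc, ← mul_assoc _ _ kᴴ, hv0.mul_ct, one_mul]
    rw [h5, cj_mul, show cj u.1 A = cj k A from h4, ← cj_mul, mul_assoc, hk, mul_one, ← h2]
  · intro u hu
    apply Subtype.ext
    rw [hθ u _ hu hu, (hvu _ (hVN _ hu)).mul_ct, one_mul]
end

/-! ### The homotopy of the orbit space -/

/-- The exponential map of the circle is transported by the principal value of the argument. -/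
lemma circle_transport : HasTransport (Circle.exp : ℝ → Circle) := by
  intro x
  refine ⟨{z | 0 < ((z / x : Circle) : ℂ).re}, ?_, by simp, fun e x' =>
    e + Complex.arg ((x' / Circle.exp e : Circle) : ℂ), ?_, ?_, ?_⟩
  · exact isOpen_lt continuous_const
      (Complex.continuous_re.comp (continuous_subtype_val.comp (continuous_id.div_const x)))
  · intro q hq
    have hs : ((q.2 / Circle.exp q.1 : Circle) : ℂ) ∈ Complex.slitPlane := by
      rw [Complex.mem_slitPlane_iff_arg]
      refine ⟨fun h => ?_, Circle.coe_ne_zero _⟩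
      -- Otherwise `q.2 = -exp q.1`, but both lie in the open half circle around `x`.
      have h1 : ((q.2 / Circle.exp q.1 : Circle) : ℂ) = -1 := by
        have := congrArg (Subtype.val) (Circle.exp_arg (q.2 / Circle.exp q.1))
        rw [h] at this
        rw [← this]; simp
      have h2 : ((q.2 / x : Circle) : ℂ) = -((Circle.exp q.1 / x : Circle) : ℂ) := by
        have : q.2 / x = (q.2 / Circle.exp q.1) * (Circle.exp q.1 / x) := by
          rw [div_mul_div_cancel]
        rw [this, Circle.coe_mul, h1]; ring
      have ha : 0 < ((Circle.exp q.1 / x : Circle) : ℂ).re := hq.1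
      have hb : 0 < ((q.2 / x : Circle) : ℂ).re := hq.2
      rw [h2, Complex.neg_re] at hb
      linarith
    have c1 : Continuous fun q : ℝ × Circle => ((q.2 / Circle.exp q.1 : Circle) : ℂ) :=
      continuous_subtype_val.comp (continuous_snd.div' (Circle.exp.continuous.comp continuous_fst))
    exact (continuous_fst.continuousAt.add (ContinuousAt.comp (f := fun q : ℝ × Circle =>
      ((q.2 / Circle.exp q.1 : Circle) : ℂ)) (Complex.continuousAt_arg hs)
      c1.continuousAt)).continuousWithinAt
  · intro e x' _ _
    rw [Circle.exp_add, Circle.exp_arg, mul_div_cancel]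
  · intro e _
    simp

/-- A circle-valued function on a cube of dimension at least two, equal to `1` on the boundary, has
a continuous logarithm vanishing on the boundary. -/
lemma scalar_log {k : ℕ} (hk : 1 ≤ k) {c : (Fin (k + 1) → I) → ℂ} (hc : Continuous c)
    (hu : ∀ y, star (c y) * c y = 1) (hb : ∀ y ∈ Cube.boundary (Fin (k + 1)), c y = 1) :
    ∃ φ : (Fin (k + 1) → I) → ℝ, Continuous φ ∧ (∀ y, c y = Complex.exp (φ y * Complex.I)) ∧
      ∀ y ∈ Cube.boundary (Fin (k + 1)), φ y = 0 := by
  have hm : ∀ y, c y ∈ Submonoid.unitSphere ℂ := fun y => by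
    refine mem_sphere_zero_iff_norm.2 ?_
    have h := hu y
    rw [← starRingEnd_apply, Complex.conj_mul', ← Complex.ofReal_pow, Complex.ofReal_eq_one] at h
    exact (pow_eq_one_iff_of_nonneg (norm_nonneg _) two_ne_zero).1 h
  obtain ⟨f, hf⟩ : ∃ f : (Fin k → I) → I → Circle, ∀ y t, f y t = ⟨c (cubeSucc k (y, t)), hm _⟩ :=
    ⟨_, fun _ _ => rfl⟩
  have f1 : ∀ y t, (y, t) ∈ Bp (Cube.boundary (Fin k)) → f y t = 1 := fun y t h => by
    rw [hf]; exact Subtype.ext (hb _ ((cubeSucc_boundary k _).1 h))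
  have hfc : Continuous (uncurry f) := by
    have : uncurry f = fun q => (⟨c (cubeSucc k q), hm _⟩ : Circle) := by
      funext q; exact hf q.1 q.2
    rw [this]
    exact (hc.comp (cubeSucc k).continuous).subtype_mk _
  obtain ⟨F, hFc, hFp, hF0, hFb⟩ := hlp (Circle.exp : ℝ → Circle) circle_transport f hfc
    (fun _ => 0) continuous_const fun y => by
      rw [f1 y 0 (Or.inr (Or.inl rfl)), Circle.exp_zero]
  have hFB : ∀ y ∈ Cube.boundary (Fin k), ∀ t, F y t = 0 := fun y hy t =>
    hFb y (fun t => by rw [f1 y t (Or.inl hy), f1 y 0 (Or.inl hy)]) t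
  have hF1 : ∀ y, F y 1 = 0 := fun y => by
    have h2 : ∀ y, F y 1 ∈ AddSubgroup.zmultiples (2 * Real.pi) := fun y => by
      have h := hFp y 1
      rw [f1 y 1 (Or.inr (Or.inr rfl)), ← Circle.exp_zero, Circle.exp_eq_exp] at h
      obtain ⟨m, hm⟩ := h
      exact ⟨m, by simp [hm]⟩
    have h0 : (fun _ => 0 : Fin k → I) ∈ Cube.boundary (Fin k) := ⟨⟨0, hk⟩, Or.inl rfl⟩
    rw [← hFB _ h0 1]
    have hd : IsDiscrete ((AddSubgroup.zmultiples (2 * Real.pi) : AddSubgroup ℝ) : Set ℝ) :=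
      ⟨inferInstanceAs (DiscreteTopology (AddSubgroup.zmultiples (2 * Real.pi)))⟩
    exact isPreconnected_univ.constant_of_mapsTo hd (f := fun y => F y 1)
      (hFc.comp (continuous_id.prodMk continuous_const)).continuousOn (fun y _ => h2 y)
      (Set.mem_univ y) (Set.mem_univ _)
  refine ⟨fun y => F ((cubeSucc k).symm y).1 ((cubeSucc k).symm y).2,
    hFc.comp (cubeSucc k).symm.continuous, fun y => ?_, fun y hy => ?_⟩
  · have h := congrArg Subtype.val (hFp ((cubeSucc k).symm y).1 ((cubeSucc k).symm y).2)
    rw [hf, Circle.coe_exp] at h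
    rw [h]
    simp
  · rw [← (cubeSucc k).apply_symm_apply y, ← cubeSucc_boundary] at hy
    beta_reduce
    rcases hy with h | h | h
    · exact hFB _ h _
    · rw [h, hF0]
    · rw [h, hF1]

section
variable {X : Type} [TopologicalSpace X] {x : X} {k : ℕ}

/-- The homotopy class of a cubical loop. -/
abbrev pc (f : GenLoop (Fin k) X x) : HomotopyGroup (Fin k) X x := Quotient.mk _ f

lemma exists_loop {G : (Fin k → I) × I → X} (hG : Continuous G)
    (hb : ∀ q ∈ Bp (Cube.boundary (Fin k)), G q = x) :
    ∃ f : GenLoop (Fin (k + 1)) X x, ∀ y t, f (cubeSucc k (y, t)) = G (y, t) := by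
  refine ⟨⟨⟨fun y => G ((cubeSucc k).symm y), hG.comp (cubeSucc k).symm.continuous⟩,
    fun y hy => hb _ ?_⟩, fun y t => ?_⟩
  · rwa [cubeSucc_boundary, Homeomorph.apply_symm_apply]
  · change G ((cubeSucc k).symm (cubeSucc k (y, t))) = _
    rw [Homeomorph.symm_apply_apply]

lemma pc_eq {f g : GenLoop (Fin k) X x} {H : (Fin k → I) → I → X}
    (hc : Continuous (uncurry H)) (h0 : ∀ y, H y 0 = f y) (h1 : ∀ y, H y 1 = g y)
    (hb : ∀ y ∈ Cube.boundary (Fin k), ∀ t, H y t = x) : pc f = pc g :=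
  Quotient.sound ⟨⟨⟨⟨fun q => H q.2 q.1, hc.comp (continuous_snd.prodMk continuous_fst)⟩, h0, h1⟩,
    fun t y hy => (hb y hy t).trans (f.2 y hy).symm⟩⟩

lemma homotopy_of_pc {f g : GenLoop (Fin k) X x} (h : pc f = pc g) :
    ∃ H : (Fin k → I) → I → X, Continuous (uncurry H) ∧ (∀ y, H y 0 = f y) ∧
      (∀ y, H y 1 = g y) ∧ ∀ y ∈ Cube.boundary (Fin k), ∀ t, H y t = x := by
  obtain ⟨K⟩ := (Quotient.exact h : GenLoop.Homotopic f g)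
  exact ⟨fun y t => K (t, y), K.continuous.comp (by fun_prop : Continuous
    fun q : (Fin k → I) × I => (q.2, q.1)), fun y => K.apply_zero y,
    fun y => K.apply_one y, fun y hy t => (K.eq_fst t hy).trans (f.2 y hy)⟩

end

lemma star_exp (x : ℝ) : star (Complex.exp (x * Complex.I)) * Complex.exp (x * Complex.I) = 1 := by
  rw [← starRingEnd_apply, Complex.conj_mul', Complex.norm_exp_ofReal_mul_I]; simp

section
variable {n r m k : ℕ} {b : Prop} {X : Type} [TopologicalSpace X]

/-- The graph of the boundary map: `F` is a homotopy of tuples starting at `A` which lifts a loop of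
class `a`, and `γ`, of class `z`, conjugates `A` to the end of `F`. -/
def Rl (p : Pt b n r → X) (A : Pt b n r) (a : HomotopyGroup (Fin (m + 1)) X (p A)) (z : SC m) :
    Prop :=
  ∃ (F : (Fin m → I) → I → Pt b n r) (γ : (Fin m → I) → Mat (Fin n))
    (f : GenLoop (Fin (m + 1)) X (p A)), Continuous (uncurry F) ∧ (∀ y, F y 0 = A) ∧
    (∀ y ∈ Cube.boundary (Fin m), ∀ t, F y t = A) ∧ GM (Cube.boundary (Fin m)) γ ∧
    (∀ y, IsUni (γ y)) ∧ (∀ y, (F y 1).1 = cj (γ y) A.1) ∧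
    (∀ y t, f (cubeSucc m (y, t)) = p (F y t)) ∧ pc f = a ∧ cl (Cube.boundary (Fin m)) γ = z

variable {p : Pt b n r → X} {A : Pt b n r}

lemma unitScalar {Y : Type} [TopologicalSpace Y] [NeZero n] {H : Y → Mat (Fin n)}
    {γ : Y → Mat (Fin n)} (hA : Irr A.1)
    (hc : Continuous H) (hγ : Continuous γ) (hu : ∀ y, IsUni (H y)) (hγu : ∀ y, IsUni (γ y))
    (h : ∀ y, cj (H y) A.1 = cj (γ y) A.1) :
    ∃ c : Y → ℂ, Continuous c ∧ (∀ y, star (c y) * c y = 1) ∧ ∀ y, H y = c y • γ y := by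
  choose c hcγ hcu using fun y => smul_of_cj (hu y) (hγu y) hA (h y)
  refine ⟨c, ?_, hcu, hcγ⟩
  have h1 : c = fun y => (H y * (γ y)ᴴ) 0 0 := by
    funext y
    rw [hcγ y, Matrix.smul_mul, (hγu y).mul_ct]
    simp
  rw [h1]
  exact (hc.matrix_mul hγ.matrix_conjTranspose).matrix_elem 0 0

/-- Every class is in the domain: lift a loop to a homotopy of tuples. Its end lies in the conjugation
orbit of `A`, and lifts to unitary matrices up to scalars, which `scalar_log` corrects. -/
lemma Rl.left [NeZero n] (hp : IsQuo p) (hk : 1 ≤ k) (a : HomotopyGroup (Fin (k + 2 + 1)) X (p A)) :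
    ∃ z, Rl p A a z := by
  induction a using Quotient.inductionOn with | _ f
  have fb : ∀ q ∈ Bp (Cube.boundary (Fin (k + 2))), f (cubeSucc (k + 2) q) = p A := fun q hq =>
    f.2 _ ((cubeSucc_boundary _ _).1 hq)
  obtain ⟨F, hFc, hFp, hF0, hFb⟩ := hlp p hp.transport (fun y t => f (cubeSucc (k + 2) (y, t)))
    (f.1.continuous.comp (cubeSucc (k + 2)).continuous) (fun _ => A) continuous_const
    fun y => (fb (y, 0) (Or.inr (Or.inl rfl))).symm
  have hFB : ∀ y ∈ Cube.boundary (Fin (k + 2)), ∀ t, F y t = A := fun y hy t =>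
    hFb y (fun t => (fb (y, t) (Or.inl hy)).trans (fb (y, 0) (Or.inl hy)).symm) t
  have hF1 : ∀ y, ∃ u, IsUni u ∧ (F y 1).1 = cj u A.1 := fun y =>
    (hp.fib A (F y 1)).1 (by rw [hFp, fb (y, 1) (Or.inr (Or.inr rfl))])
  obtain ⟨G, hG⟩ : ∃ G : (Fin (k + 1) → I) × I → Orb A.1,
    ∀ q, (G q).1 = (F (cubeSucc (k + 1) q) 1).1 := ⟨fun q => ⟨_, hF1 _⟩, fun _ => rfl⟩
  have hGc : Continuous G := by
    rw [continuous_induced_rng]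
    have : Subtype.val ∘ G = fun q => (F (cubeSucc (k + 1) q) 1).1 := funext hG
    rw [this]
    exact continuous_subtype_val.comp (hFc.comp
      ((cubeSucc (k + 1)).continuous.prodMk continuous_const))
  have hGb : ∀ q ∈ Bp (Cube.boundary (Fin (k + 1))), G q = orb A.1 ⟨1, isUni_one⟩ := fun q hq =>
    Subtype.ext (by rw [hG, hFB _ ((cubeSucc_boundary _ _).1 hq)]; exact (cj_one _).symm)
  obtain ⟨H, hHc, hHp, hH0, hHb⟩ := hlp (orb A.1) (orb_transport A.2.2) (fun w s => G (w, s)) hGc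
    (fun _ => ⟨1, isUni_one⟩) continuous_const
    fun w => (hGb (w, 0) (Or.inr (Or.inl rfl))).symm
  have hHB : ∀ w ∈ Cube.boundary (Fin (k + 1)), ∀ t, (H w t).1 = 1 := fun w hw t =>
    congrArg Subtype.val (hHb w (fun t =>
      (hGb (w, t) (Or.inl hw)).trans (hGb (w, 0) (Or.inl hw)).symm) t)
  have hHA : ∀ w s, cj (H w s).1 A.1 = (F (cubeSucc (k + 1) (w, s)) 1).1 := fun w s => by
    rw [← hG]; exact congrArg Subtype.val (hHp w s)
  obtain ⟨c, hcc, hcu, hc⟩ := unitScalar (A := A) (H := fun w => (H w 1).1) (γ := fun _ => 1) A.2.2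
    (continuous_subtype_val.comp (hHc.comp (continuous_id.prodMk continuous_const)))
    continuous_const (fun w => (H w 1).2) (fun _ => isUni_one) fun w => by
      rw [cj_one, hHA, hFB _ ((cubeSucc_boundary _ _).1 (Or.inr (Or.inr rfl)))]
  obtain ⟨φ, hφc, hφ, hφb⟩ := scalar_log hk hcc hcu fun w hw => by
    have := congrFun (congrFun (hc w) 0) 0
    rw [hHB w hw] at this
    simpa using this.symm
  obtain ⟨γ, hγ⟩ : ∃ γ : (Fin (k + 2) → I) → Mat (Fin n), ∀ q,
      γ (cubeSucc (k + 1) q) =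
        Complex.exp ((-(q.2 * φ q.1) : ℝ) * Complex.I) • (H q.1 q.2).1 := by
    refine ⟨fun y => Complex.exp ((-(((cubeSucc (k + 1)).symm y).2 *
      φ ((cubeSucc (k + 1)).symm y).1) : ℝ) * Complex.I) •
      (H ((cubeSucc (k + 1)).symm y).1 ((cubeSucc (k + 1)).symm y).2).1, fun q => ?_⟩
    beta_reduce; rw [Homeomorph.symm_apply_apply]
  have hsur : ∀ y, ∃ q, y = cubeSucc (k + 1) q := fun y =>
    ⟨_, ((cubeSucc (k + 1)).apply_symm_apply y).symm⟩
  have hγu : ∀ y, IsUni (γ y) := fun y => by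
    obtain ⟨q, rfl⟩ := hsur y
    rw [hγ]
    exact (H q.1 q.2).2.smul (star_exp _)
  refine ⟨_, F, γ, f, hFc, hF0, hFB, ⟨?_, fun y => (hγu y).isUnit, fun y hy => ?_⟩, hγu,
    fun y => ?_, fun y t => (hFp y t).symm, rfl, rfl⟩
  · have h1 : Continuous (γ ∘ cubeSucc (k + 1)) := by
      have : γ ∘ cubeSucc (k + 1) = _ := funext hγ
      rw [this]
      exact (Complex.continuous_exp.comp ((Complex.continuous_ofReal.comp
        ((continuous_subtype_val.comp continuous_snd).mul (hφc.comp continuous_fst)).neg).mul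
        continuous_const)).smul (continuous_subtype_val.comp hHc)
    exact (cubeSucc (k + 1)).comp_continuous_iff'.1 h1
  · obtain ⟨q, rfl⟩ := hsur y
    rw [← cubeSucc_boundary] at hy
    rw [hγ]
    obtain ⟨w, s⟩ := q
    rcases hy with h | h | h
    · rw [hφb w h, hHB w h]; simp
    · have h' : s = 0 := h
      subst h'
      rw [hH0]; simp
    · have h' : s = 1 := h
      subst h'
      have h2 : (H w 1).1 = c w • 1 := hc w
      rw [h2, hφ w, smul_smul, ← Complex.exp_add]
      simp
  · obtain ⟨q, rfl⟩ := hsur y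
    rw [hγ, cj_smul (star_exp _), hHA]

end

section
variable {n r m k : ℕ} {b : Prop} {X : Type} [TopologicalSpace X] {p : Pt b n r → X} {A : Pt b n r}

lemma IsUni.det_mul {u : Mat (Fin n)} (hu : IsUni u) : u.det * (uᴴ).det = 1 := by
  rw [← Matrix.det_mul, hu.mul_ct, det_one]

/-- Tuples on `I ^ m × I` which are irreducible over the boundary can be made irreducible everywhere,
keeping them over the boundary. -/
lemma gp_prod (hm : m + 2 ≤ 2 * (r - 1) * (n - 1))
    {E : (Fin m → I) × I → Fin r → Mat (Fin n)} (hEc : Continuous E)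
    (hEu : ∀ q i, IsG b (E q i)) (hE : ∀ q ∈ Bp (Cube.boundary (Fin m)), Irr (E q)) :
    ∃ L : (Fin m → I) × I → Pt b n r, Continuous L ∧
      ∀ q ∈ Bp (Cube.boundary (Fin m)), (L q).1 = E q := by
  obtain ⟨F, hFc, hFu, hFi, hFE⟩ := general_position_G b (m := m + 1) (by omega)
    (isClosed_boundary (m + 1)) (F := fun y => E ((cubeSucc m).symm y))
    (hEc.comp (cubeSucc m).symm.continuous) (fun y i => hEu _ i) (fun y hy => hE _ (by
      rwa [cubeSucc_boundary, Homeomorph.apply_symm_apply]))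
  refine ⟨fun q => ⟨F (cubeSucc m q), hFu _, hFi _⟩,
    (hFc.comp (cubeSucc m).continuous).subtype_mk _, fun q hq => ?_⟩
  change F (cubeSucc m q) = _
  rw [hFE _ ((cubeSucc_boundary m q).1 hq), Homeomorph.symm_apply_apply]

/-- Every class is in the range: a homotopy of tuples in `G` from `A` to `γ A γᴴ` is made of
commutators, then moved into the irreducible tuples. -/
lemma Rl.right (hp : IsQuo p) (hm1 : m ≤ 2 * n) (hm2 : m + 2 ≤ 2 * (r - 1) * (n - 1)) (z : SC m) :
    ∃ a, Rl p A a z := by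
  obtain ⟨γ, hγ, hγu, rfl⟩ := exists_rep hm1 z
  choose α hαc hαu hα0 hα1 using fun i => uni_path (A.2.1 i).1
  obtain ⟨E, hE⟩ : ∃ E : (Fin m → I) × I → Fin r → Mat (Fin n), ∀ q i, E q i =
    γ q.1 * α i (σ q.2) * (γ q.1)ᴴ * (α i (σ q.2))ᴴ * A.1 i := ⟨_, fun _ _ => rfl⟩
  have hEc : Continuous E := by
    refine continuous_pi fun i => ?_
    have : (fun q => E q i) = _ := funext fun q => hE q i
    rw [this]
    have h1 : Continuous fun q : (Fin m → I) × I => γ q.1 := hγ.cont.comp continuous_fst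
    have h2 : Continuous fun q : (Fin m → I) × I => α i (σ q.2) :=
      (hαc i).comp (unitInterval.continuous_symm.comp continuous_snd)
    exact (((h1.matrix_mul h2).matrix_mul h1.matrix_conjTranspose).matrix_mul
      h2.matrix_conjTranspose).matrix_mul continuous_const
  have hEu : ∀ q i, IsG b (E q i) := fun q i => by
    rw [hE]
    refine ⟨((((hγu _).mul (hαu i _)).mul (hγu _).ct).mul (hαu i _).ct).mul (A.2.1 i).1,
      fun hb => ?_⟩
    have h1 := (hγu q.1).det_mul
    have h2 := (hαu i (σ q.2)).det_mul
    simp only [Matrix.det_mul, (A.2.1 i).2 hb]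
    linear_combination (α i (σ q.2)).det * ((α i (σ q.2))ᴴ).det * h1 + h2
  have hE1 : ∀ y, E (y, 1) = cj (γ y) A.1 := fun y => by
    funext i
    rw [hE, unitInterval.symm_one, hα0, mul_assoc _ (A.1 i)ᴴ, (A.2.1 i).1, mul_one]; rfl
  have hE0 : ∀ q : (Fin m → I) × I, q.1 ∈ Cube.boundary (Fin m) ∨ q.2 = 0 → E q = A.1 := by
    rintro ⟨y, t⟩ (h | h)
    · funext i
      rw [hE, hγ.base y h]
      simp [(hαu i _).mul_ct]
    · have h' : t = 0 := h
      subst h'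
      funext i
      rw [hE]
      simp [hα1, (hγu _).mul_ct]
  obtain ⟨L, hLc, hLE⟩ := gp_prod hm2 hEc hEu (by
    rintro ⟨y, t⟩ (h | h | h)
    · rw [hE0 _ (Or.inl h)]; exact A.2.2
    · rw [hE0 _ (Or.inr h)]; exact A.2.2
    · have h' : t = 1 := h
      rw [h', hE1]; exact A.2.2.cj (hγu _))
  have hL0 : ∀ q : (Fin m → I) × I, q.1 ∈ Cube.boundary (Fin m) ∨ q.2 = 0 → L q = A := fun q hq =>
    Subtype.ext (by rw [hLE q (hq.imp id Or.inl), hE0 q hq])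
  have hL1 : ∀ y, (L (y, 1)).1 = cj (γ y) A.1 := fun y => by
    rw [hLE (y, 1) (Or.inr (Or.inr rfl)), hE1]
  obtain ⟨f, hf⟩ := exists_loop (G := fun q => p (L q)) (x := p A) (hp.cont.comp hLc) (by
    rintro ⟨y, t⟩ (h | h | h)
    · rw [hL0 _ (Or.inl h)]
    · rw [hL0 _ (Or.inr h)]
    · have h' : t = 1 := h
      subst h'
      exact ((hp.fib A _).2 ⟨γ y, hγu y, hL1 y⟩).symm)
  exact ⟨pc f, fun y t => L (y, t), γ, f, hLc, fun y => hL0 _ (Or.inr rfl),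
    fun y hy t => hL0 _ (Or.inl hy), hγ, hγu, hL1, hf, rfl, rfl⟩

/-- If the loop is trivial, so is `γ`: a null homotopy of the loop lifts to tuples, and ends inside the
orbit of `A`, where it gives a null homotopy of `γ` up to scalars. -/
lemma Rl.of_one [NeZero n] (hp : IsQuo p) {z : SC (k + 2)} (h : Rl p A 1 z) : z = 0 := by
  obtain ⟨F, γ, f, hFc, hF0, hFB, hγ, hγu, hF1, hf, hf1, rfl⟩ := h
  obtain ⟨K, hKc, hK0, hK1, hKB⟩ := homotopy_of_pc (g := GenLoop.const) hf1
  obtain ⟨L, hLc, hLp, hL0, hLB⟩ := hlp p hp.transport K hKc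
    (fun y => uncurry F ((cubeSucc (k + 2)).symm y))
    (hFc.comp (cubeSucc (k + 2)).symm.continuous) fun y => by
      rw [hK0]
      conv_rhs => rw [← (cubeSucc (k + 2)).apply_symm_apply y]
      exact (hf _ _).symm
  -- At the end of the lifted homotopy all tuples are conjugate to `A`.
  have hL1 : ∀ y, ∃ u, IsUni u ∧ (L y 1).1 = cj u A.1 := fun y =>
    (hp.fib A _).1 (by rw [hLp, hK1]; rfl)
  have hLb : ∀ q ∈ Bp (Cube.boundary (Fin (k + 2))), L (cubeSucc (k + 2) q) 1 = F q.1 q.2 :=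
    fun q hq => by
      have h := (cubeSucc_boundary _ q).1 hq
      rw [hLB _ (fun t => by rw [hKB _ h, hKB _ h]), Homeomorph.symm_apply_apply]; rfl
  obtain ⟨G, hG⟩ : ∃ G : (Fin (k + 2) → I) × I → Orb A.1,
    ∀ q, (G q).1 = (L (cubeSucc (k + 2) q) 1).1 := ⟨fun q => ⟨_, hL1 _⟩, fun _ => rfl⟩
  have hGc : Continuous G := by
    rw [continuous_induced_rng]
    have : Subtype.val ∘ G = fun q => (L (cubeSucc (k + 2) q) 1).1 := funext hG
    rw [this]
    exact continuous_subtype_val.comp (hLc.comp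
      ((cubeSucc (k + 2)).continuous.prodMk continuous_const))
  have hGb : ∀ q : (Fin (k + 2) → I) × I, q.1 ∈ Cube.boundary (Fin (k + 2)) ∨ q.2 = 0 →
      G q = orb A.1 ⟨1, isUni_one⟩ := fun q hq => Subtype.ext (by
    have : F q.1 q.2 = A := hq.elim (fun h => hFB _ h _) (fun h => by rw [h, hF0])
    rw [hG, hLb _ (hq.imp id Or.inl), this]; exact (cj_one _).symm)
  obtain ⟨H, hHc, hHp, hH0, hHb⟩ := hlp (orb A.1) (orb_transport A.2.2) (fun w s => G (w, s)) hGc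
    (fun _ => ⟨1, isUni_one⟩) continuous_const fun w => (hGb (w, 0) (Or.inr rfl)).symm
  have hHB : ∀ w ∈ Cube.boundary (Fin (k + 2)), ∀ t, (H w t).1 = 1 := fun w hw t =>
    congrArg Subtype.val (hHb w (fun t =>
      (hGb (w, t) (Or.inl hw)).trans (hGb (w, 0) (Or.inl hw)).symm) t)
  obtain ⟨c, hcc, hcu, hc⟩ := unitScalar (A := A) (H := fun w => (H w 1).1) (γ := γ) A.2.2
    (continuous_subtype_val.comp (hHc.comp (continuous_id.prodMk continuous_const)))
    hγ.cont (fun w => (H w 1).2) hγu fun w => by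
      rw [← hF1, ← hLb (w, 1) (Or.inr (Or.inr rfl)), ← hG]
      exact congrArg Subtype.val (hHp w 1)
  obtain ⟨φ, hφc, hφ, hφb⟩ := scalar_log (by omega) hcc hcu fun w hw => by
    have := congrFun (congrFun (hc w) 0) 0
    rw [hHB w hw, hγ.base w hw] at this
    simpa using this.symm
  refine (cl_eq_zero_iff hγ).2 (StNull.of_null ⟨fun y s =>
    Complex.exp ((-((σ s : I) * φ y) : ℝ) * Complex.I) • (H y (σ s)).1, ?_, fun y s =>
    ((H y _).2.smul (star_exp _)).isUnit, fun y => ?_, fun y => ?_, fun y hy t => ?_⟩)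
  · have c1 : Continuous fun q : (Fin (k + 2) → I) × I => σ q.2 :=
      unitInterval.continuous_symm.comp continuous_snd
    exact (Complex.continuous_exp.comp ((Complex.continuous_ofReal.comp
        ((continuous_subtype_val.comp c1).mul (hφc.comp continuous_fst)).neg).mul
        continuous_const)).smul
        (continuous_subtype_val.comp (hHc.comp (continuous_fst.prodMk c1)))
  · have h2 : (H y 1).1 = c y • γ y := hc y
    beta_reduce
    rw [unitInterval.symm_zero, h2, hφ y, smul_smul, ← Complex.exp_add]
    simp
  · beta_reduce; rw [unitInterval.symm_one, hH0]; simp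
  · beta_reduce; rw [hφb y hy, hHB y hy]; simp

end

section
variable {n r m k : ℕ} {b : Prop} {X : Type} [TopologicalSpace X] {p : Pt b n r → X} {A : Pt b n r}

/-- A unitary family can be corrected to have determinant one, keeping those matrices which have
determinant one already. -/
lemma det_fix [NeZero n] (b : Prop) {Y : Type} [TopologicalSpace Y]
    {H : Y → Mat (Fin n)} (hc : Continuous H) (hu : ∀ y, IsUni (H y)) :
    ∃ H' : Y → Mat (Fin n), Continuous H' ∧ (∀ y, IsG b (H' y)) ∧
      ∀ y, IsG b (H y) → H' y = H y := by
  by_cases hb : b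
  swap
  · exact ⟨H, hc, fun y => ⟨hu y, fun h => absurd h hb⟩, fun _ _ => rfl⟩
  have h1 : ∀ y, (H y).det * star (H y).det = 1 := fun y => by
    rw [← det_conjTranspose]; exact (hu y).det_mul
  refine ⟨fun y => H y * diagonal (Function.update 1 0 (star (H y).det)),
    hc.matrix_mul ((continuous_const.update 0 hc.matrix_det.star).matrix_diagonal),
    fun y => ⟨(hu y).mul ?_, fun _ => ?_⟩, fun y hy => ?_⟩
  · rw [IsUni, diagonal_conjTranspose, diagonal_mul_diagonal, Matrix.diagonal_eq_one]
    funext i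
    rcases eq_or_ne i 0 with rfl | hi
    · simpa using h1 y
    · simp [hi]
  · rw [Matrix.det_mul, Matrix.det_diagonal, Finset.prod_update_of_mem (Finset.mem_univ _)]
    simp only [Pi.one_apply, Finset.prod_const_one, mul_one]
    exact h1 y
  · beta_reduce; rw [hy.2 hb, star_one]
    have : Function.update (1 : Fin n → ℂ) 0 1 = 1 := Function.update_eq_self 0 _
    rw [this]
    exact (congrArg _ diagonal_one).trans (mul_one _)

lemma isG_mul {u w : Mat (Fin n)} (hu : IsG b u) (hw : IsG b w) : IsG b (u * w) :=
  ⟨hu.1.mul hw.1, fun h => by rw [Matrix.det_mul, hu.2 h, hw.2 h, one_mul]⟩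

lemma isG_ct {u : Mat (Fin n)} (hu : IsG b u) : IsG b uᴴ :=
  ⟨hu.1.ct, fun h => by rw [det_conjTranspose, hu.2 h, star_one]⟩

/-- The space of irreducible tuples has trivial homotopy in the dimensions where the unitary group
has, below the codimension of the reducible tuples. -/
lemma pt_null [NeZero n] (hm1 : m + 1 ≤ 2 * n) (hm2 : m + 2 ≤ 2 * (r - 1) * (n - 1))
    (hS : ∀ x : SC m, x = 0) {P : (Fin m → I) → Pt b n r} (hP : Continuous P)
    (hPA : ∀ y ∈ Cube.boundary (Fin m), P y = A) :
    ∃ Q : (Fin m → I) × I → Pt b n r, Continuous Q ∧ (∀ y, Q (y, 0) = P y) ∧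
      (∀ y, Q (y, 1) = A) ∧ ∀ y ∈ Cube.boundary (Fin m), ∀ t, Q (y, t) = A := by
  have hPi : ∀ i, Continuous fun y => (P y).1 i := fun i =>
    (continuous_apply i).comp (continuous_subtype_val.comp hP)
  have hu : ∀ i y, IsG b ((P y).1 i * (A.1 i)ᴴ) := fun i y => isG_mul ((P y).2.1 i) (isG_ct (A.2.1 i))
  have hG : ∀ i, GM (Cube.boundary (Fin m)) fun y => (P y).1 i * (A.1 i)ᴴ := fun i =>
    ⟨(hPi i).matrix_mul continuous_const, fun y => (hu i y).1.isUnit, fun y hy => by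
      rw [hPA y hy, (A.2.1 i).1.mul_ct]⟩
  choose H hHc hHu hH0 hH1 hHB using fun i => null_of_cl hm1 (hG i) (fun y => (hu i y).1) (hS _)
  choose D hDc hDu hDH using fun i => det_fix b (hHc i) fun q => hHu i q.1 q.2
  have g1 : IsG b (1 : Mat (Fin n)) := ⟨isUni_one, fun _ => det_one⟩
  have hD1 : ∀ i y, D i (y, 1) = 1 := fun i y => by
    have h : uncurry (H i) (y, 1) = 1 := hH1 i y
    rw [hDH i _ (h ▸ g1), h]
  have hDB : ∀ i, ∀ y ∈ Cube.boundary (Fin m), ∀ t, D i (y, t) = 1 := fun i y hy t => by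
    have h : uncurry (H i) (y, t) = 1 := hHB i y hy t
    rw [hDH i _ (h ▸ g1), h]
  obtain ⟨E, hE⟩ : ∃ E : (Fin m → I) × I → Fin r → Mat (Fin n),
    ∀ q, E q = fun i => D i q * A.1 i := ⟨_, fun _ => rfl⟩
  have hE0 : ∀ y, E (y, 0) = (P y).1 := fun y => by
    rw [hE]
    funext i
    have h : uncurry (H i) (y, 0) = (P y).1 i * (A.1 i)ᴴ := hH0 i y
    rw [hDH i _ (h ▸ hu i y), h, mul_assoc, (A.2.1 i).1, mul_one]
  have hE1 : ∀ y, E (y, 1) = A.1 := fun y => by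
    rw [hE]; funext i; rw [hD1, one_mul]
  have hEB : ∀ y ∈ Cube.boundary (Fin m), ∀ t, E (y, t) = A.1 := fun y hy t => by
    rw [hE]; funext i; rw [hDB i y hy, one_mul]
  obtain ⟨Q, hQc, hQ⟩ := gp_prod hm2 (b := b) (E := E)
    (by
      have : E = _ := funext hE
      rw [this]
      exact continuous_pi fun i => (hDc i).matrix_mul continuous_const)
    (fun q i => by rw [hE]; exact isG_mul (hDu i q) (A.2.1 i)) (by
      rintro ⟨y, t⟩ (h | h | h)
      · rw [hEB y h]; exact A.2.2
      · have h' : t = 0 := h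
        rw [h', hE0]; exact (P y).2.2
      · have h' : t = 1 := h
        rw [h', hE1]; exact A.2.2)
  exact ⟨Q, hQc, fun y => Subtype.ext (by rw [hQ _ (Or.inr (Or.inl rfl)), hE0]),
    fun y => Subtype.ext (by rw [hQ _ (Or.inr (Or.inr rfl)), hE1]),
    fun y hy t => Subtype.ext (by rw [hQ _ (Or.inl hy), hEB y hy])⟩

/-- If `γ` is trivial, so is the loop: `F`, continued along a null homotopy of `γ`, is a sphere of
tuples of dimension `m + 1`. It contracts among all tuples since the stable group in dimension
`m + 1` vanishes, hence also among the irreducible ones by general position. -/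
lemma Rl.of_zero [NeZero n] (hp : IsQuo p) (hm1 : m + 2 ≤ 2 * n)
    (hm2 : m + 3 ≤ 2 * (r - 1) * (n - 1)) (hS : ∀ x : SC (m + 1), x = 0)
    {a : HomotopyGroup (Fin (m + 1)) X (p A)} (h : Rl p A a 0) : a = 1 := by
  obtain ⟨F, γ, f, hFc, hF0, hFB, hγ, hγu, hF1, hf, rfl, hcl⟩ := h
  obtain ⟨Γ, hΓc, hΓu, hΓ0, hΓ1, hΓB⟩ := null_of_cl (by omega) hγ hγu hcl
  -- `W` continues `F` by conjugating with the null homotopy of `γ`.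
  obtain ⟨C, hC⟩ : ∃ C : (Fin m → I) → I → Pt b n r, ∀ y t, (C y t).1 = cj (Γ y t) A.1 :=
    ⟨fun y t => ⟨cj (Γ y t) A.1, fun i => (A.2.1 i).cj (hΓu y t), A.2.2.cj (hΓu y t)⟩,
      fun _ _ => rfl⟩
  have hCc : Continuous (uncurry C) := by
    rw [continuous_induced_rng]
    have : Subtype.val ∘ uncurry C = fun q => cj (uncurry Γ q) A.1 :=
      funext fun q => hC q.1 q.2
    rw [this]
    exact continuous_cj hΓc continuous_const
  have hpC : ∀ y t, p (C y t) = p A := fun y t => ((hp.fib _ _).2 ⟨_, hΓu y t, hC y t⟩).symm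
  have hFC : ∀ y, F y 1 = C y 0 := fun y => Subtype.ext (by rw [hF1, hC, hΓ0])
  obtain ⟨W, hW⟩ : ∃ W : (Fin m → I) × ℝ → Pt b n r, ∀ q, W q = if q.2 ≤ 1 then
    F q.1 (Set.projIcc 0 1 zero_le_one q.2) else C q.1 (Set.projIcc 0 1 zero_le_one (q.2 - 1)) :=
      ⟨_, fun _ => rfl⟩
  have hWc : Continuous W := by
    have : W = _ := funext hW
    rw [this]
    refine Continuous.if_le ?_ ?_ continuous_snd continuous_const fun q hq => ?_
    · exact hFc.comp (continuous_fst.prodMk ((continuous_projIcc (h := zero_le_one)).comp continuous_snd))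
    · exact hCc.comp (continuous_fst.prodMk ((continuous_projIcc (h := zero_le_one)).comp
        (continuous_snd.sub continuous_const)))
    · rw [hq, sub_self, Set.projIcc_right, Set.projIcc_left]; exact hFC q.1
  have hWI : ∀ y (t : I), W (y, t) = F y t := fun y t => by
    rw [hW, if_pos t.2.2, Set.projIcc_val]
  have hW0 : ∀ y, W (y, 0) = A := fun y => by
    have := hWI y 0
    rwa [hF0] at this
  have hWB : ∀ y ∈ Cube.boundary (Fin m), ∀ s, W (y, s) = A := fun y hy s => by
    rw [hW]
    split_ifs
    · exact hFB y hy _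
    · exact Subtype.ext (by rw [hC, hΓB y hy, cj_one])
  have hWp : ∀ y (s : I), p (W (y, 1 + s)) = p A := fun y s => by
    rw [hW]
    split_ifs with h
    · have hs : (s : ℝ) = 0 := le_antisymm (by simpa using h) s.2.1
      rw [hs, add_zero, Set.projIcc_right]
      exact (congrArg p (hFC y)).trans (hpC y 0)
    · exact hpC _ _
  have hW2 : ∀ y, W (y, 2) = A := fun y => by
    rw [hW, if_neg (by norm_num)]
    norm_num
    exact Subtype.ext (by rw [hC, hΓ1, cj_one])
  obtain ⟨c, hc⟩ : ∃ c : (Fin (m + 1) → I) → (Fin m → I) × I, c = (cubeSucc m).symm := ⟨_, rfl⟩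
  have hcc : Continuous c := hc ▸ (cubeSucc m).symm.continuous
  have hcb : ∀ y ∈ Cube.boundary (Fin (m + 1)), c y ∈ Bp (Cube.boundary (Fin m)) := fun y hy => by
    rw [hc]; rwa [cubeSucc_boundary, Homeomorph.apply_symm_apply]
  have c2 : Continuous fun y => ((c y).2 : ℝ) :=
    continuous_subtype_val.comp (continuous_snd.comp hcc)
  have hend : ∀ y ∈ Cube.boundary (Fin (m + 1)), ∀ s : I,
      p (W ((c y).1, (1 + s) * (c y).2)) = p A := fun y hy s => by
    rcases hcb y hy with h | h | h
    · rw [hWB _ h]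
    · rw [h, Set.Icc.coe_zero, mul_zero, hW0]
    · rw [h, Set.Icc.coe_one, mul_one, hWp]
  obtain ⟨P, hP⟩ : ∃ P : (Fin (m + 1) → I) → Pt b n r, ∀ y, P y = W ((c y).1, 2 * (c y).2) :=
    ⟨_, fun _ => rfl⟩
  have hPc : Continuous P := by
    have : P = _ := funext hP
    rw [this]
    exact hWc.comp ((continuous_fst.comp hcc).prodMk (continuous_const.mul c2))
  obtain ⟨Q, hQc, hQ0, hQ1, hQB⟩ := pt_null (A := A) hm1 hm2 hS hPc fun y hy => by
    rw [hP]
    rcases hcb y hy with h | h | h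
    · rw [hWB _ h]
    · rw [h, Set.Icc.coe_zero, mul_zero, hW0]
    · rw [h, Set.Icc.coe_one, mul_one, hW2]
  have h12 : (1 : ℝ) + ((1 : I) : ℝ) = 2 := by norm_num
  obtain ⟨g, hg⟩ : ∃ g : GenLoop (Fin (m + 1)) X (p A), ∀ y, g y = p (P y) :=
    ⟨⟨⟨fun y => p (P y), hp.cont.comp hPc⟩, fun y hy => by
      have := hend y hy 1
      rw [h12, ← hP] at this
      exact this⟩, fun _ => rfl⟩
  have e1 : pc f = pc g := by
    refine pc_eq (H := fun y s => p (W ((c y).1, (1 + s) * (c y).2))) ?_ (fun y => ?_)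
      (fun y => ?_) hend
    · exact hp.cont.comp (hWc.comp ((continuous_fst.comp (hcc.comp continuous_fst)).prodMk
        ((continuous_const.add (continuous_subtype_val.comp continuous_snd)).mul
          (c2.comp continuous_fst))))
    · rw [Set.Icc.coe_zero, add_zero, one_mul, hWI, ← hf, hc]
      exact congrArg f ((cubeSucc m).apply_symm_apply y)
    · rw [hg, hP, h12]
  have e2 : pc g = pc (GenLoop.const (x := p A)) :=
    pc_eq (H := fun y t => p (Q (y, t))) (hp.cont.comp hQc) (fun y => by rw [hQ0, hg])
      (fun y => by rw [hQ1]; rfl) fun y hy t => by rw [hQB y hy]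
  exact e1.trans e2

end

section
variable {n r m k : ℕ} {b : Prop} {X : Type} [TopologicalSpace X] {p : Pt b n r → X} {A : Pt b n r}

/-- Speeding up the first coordinate of a cube, towards its first or second half. -/
noncomputable def up (β s : ℝ) (y : Fin (k + 1) → I) : Fin (k + 1) → I :=
  Function.update y 0 (Set.projIcc 0 1 zero_le_one ((1 + s) * y 0 - β * s))

lemma continuous_up (β : ℝ) : Continuous fun q : (Fin (k + 1) → I) × I => up β q.2 q.1 := by
  unfold up
  refine continuous_fst.update 0 ((continuous_projIcc (h := zero_le_one)).comp ?_)
  fun_prop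

lemma up_zero (β : ℝ) (y : Fin (k + 1) → I) : up β (0 : I) y = y := by
  unfold up
  have : (1 + ((0 : I) : ℝ)) * y 0 - β * ((0 : I) : ℝ) = y 0 := by norm_num
  rw [this, Set.projIcc_val, Function.update_eq_self]

lemma up_boundary {β : ℝ} (h0 : 0 ≤ β) (h1 : β ≤ 1) {y : Fin (k + 1) → I}
    (hy : y ∈ Cube.boundary (Fin (k + 1))) (s : I) : up β s y ∈ Cube.boundary (Fin (k + 1)) := by
  obtain ⟨i, hi⟩ := hy
  refine ⟨i, ?_⟩
  rcases eq_or_ne i 0 with rfl | hne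
  · simp only [up, Function.update_self]
    have hs := s.2.1
    rcases hi with h | h
    · left
      refine Set.projIcc_of_le_left _ ?_
      rw [h]
      simpa using mul_nonneg h0 hs
    · right
      refine Set.projIcc_of_right_le _ ?_
      rw [h, Set.Icc.coe_one]
      nlinarith
  · simpa only [up, Function.update_of_ne hne] using hi

lemma cl_up {β : ℝ} (h0 : 0 ≤ β) (h1 : β ≤ 1) {γ : (Fin (k + 1) → I) → Mat (Fin n)}
    (hγ : GM (Cube.boundary (Fin (k + 1))) γ) :
    GM (Cube.boundary (Fin (k + 1))) (fun y => γ (up β (1 : I) y)) ∧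
      cl (Cube.boundary (Fin (k + 1))) (fun y => γ (up β (1 : I) y)) =
        cl (Cube.boundary (Fin (k + 1))) γ := by
  have h := cl_homotopy (B := Cube.boundary (Fin (k + 1))) (fun y (s : I) => γ (up β s y))
    (hγ.cont.comp (continuous_up β)) (fun y s => hγ.unit _)
    fun y hy s => hγ.base _ (up_boundary h0 h1 hy s)
  beta_reduce at h
  simp only [up_zero] at h
  exact ⟨⟨hγ.cont.comp ((continuous_up β).comp (continuous_id.prodMk continuous_const)),
    fun y => hγ.unit _, fun y hy => hγ.base _ (up_boundary h0 h1 hy 1)⟩, h.symm⟩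

lemma up_mem {β : ℝ} (y : Fin (k + 1) → I)
    (h : (1 + 1) * (y 0 : ℝ) - β * 1 ≤ 0 ∨ 1 ≤ (1 + 1) * (y 0 : ℝ) - β * 1) :
    up β (1 : I) y ∈ Cube.boundary (Fin (k + 1)) := by
  refine ⟨0, ?_⟩
  simp only [up, Function.update_self, Set.Icc.coe_one]
  exact h.imp (Set.projIcc_of_le_left _) (Set.projIcc_of_right_le _)

lemma Rl.mul {a a' : HomotopyGroup (Fin (k + 1 + 1)) X (p A)} {z z' : SC (k + 1)}
    (h : Rl p A a z) (h' : Rl p A a' z') : Rl p A (a * a') (z + z') := by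
  obtain ⟨F, γ, f, hFc, hF0, hFB, hγ, hγu, hF1, hf, rfl, rfl⟩ := h
  obtain ⟨F', γ', f', hFc', hF0', hFB', hγ', hγu', hF1', hf', rfl, rfl⟩ := h'
  obtain ⟨g1, e1⟩ := cl_up zero_le_one le_rfl hγ
  obtain ⟨g2, e2⟩ := cl_up le_rfl zero_le_one hγ'
  have hB1 : ∀ y : Fin (k + 1) → I, (y 0 : ℝ) ≤ 1 / 2 →
    up 1 (1 : I) y ∈ Cube.boundary (Fin (k + 1)) := fun y h => up_mem y (Or.inl (by linarith))
  have hB2 : ∀ y : Fin (k + 1) → I, 1 / 2 ≤ (y 0 : ℝ) →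
    up 0 (1 : I) y ∈ Cube.boundary (Fin (k + 1)) := fun y h => up_mem y (Or.inr (by linarith))
  obtain ⟨E, hE⟩ : ∃ E : (Fin (k + 1) → I) → I → Pt b n r, ∀ y t, E y t =
    if (y 0 : ℝ) ≤ 1 / 2 then F' (up 0 (1 : I) y) t else F (up 1 (1 : I) y) t :=
      ⟨_, fun _ _ => rfl⟩
  have hup : ∀ β : ℝ, Continuous fun q : (Fin (k + 1) → I) × I => (up β (1 : I) q.1, q.2) :=
    fun β => ((continuous_up β).comp (continuous_fst.prodMk continuous_const)).prodMk continuous_snd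
  refine ⟨E, fun y => γ (up 1 (1 : I) y) * γ' (up 0 (1 : I) y), GenLoop.transAt (Fin.succ 0) f' f,
    ?_, fun y => ?_, fun y hy t => ?_, g1.mul g2, fun y => (hγu _).mul (hγu' _), fun y => ?_,
    fun y t => ?_, ?_, ?_⟩
  · have : uncurry E = _ := funext fun q => hE q.1 q.2
    rw [this]
    refine Continuous.if_le (hFc'.comp (hup 0)) (hFc.comp (hup 1)) (by fun_prop) continuous_const
      fun q hq => ?_
    rw [hFB' _ (hB2 _ hq.ge), hFB _ (hB1 _ hq.le)]
  · rw [hE, hF0, hF0', ite_self]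
  · rw [hE, hFB _ (up_boundary zero_le_one le_rfl hy 1),
      hFB' _ (up_boundary le_rfl zero_le_one hy 1), ite_self]
  · beta_reduce
    rw [hE]
    split_ifs with h
    · rw [hF1', hγ.base _ (hB1 y h), one_mul]
    · rw [hF1, hγ'.base _ (hB2 y (not_le.1 h).le), mul_one]
  · have hu : ∀ v, Function.update (cubeSucc (k + 1) (y, t)) (Fin.succ 0) v =
      cubeSucc (k + 1) (Function.update y 0 v, t) := fun v => (Fin.cons_update _ _ _ _).symm
    have h0 : cubeSucc (k + 1) (y, t) (Fin.succ 0) = y 0 := rfl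
    rw [GenLoop.transAt, GenLoop.coe_copy, hE]
    simp only [h0, hu, hf, hf', up, Set.Icc.coe_one]
    have r1 : (1 + 1) * (y 0 : ℝ) - 0 * 1 = 2 * y 0 := by ring
    have r2 : (1 + 1) * (y 0 : ℝ) - 1 * 1 = 2 * y 0 - 1 := by ring
    rw [r1, r2]
    split_ifs <;> rfl
  · exact HomotopyGroup.mul_spec.symm
  · exact (cl_mul g1 g2).trans (by rw [e1, e2])

/-- In dimension `m + 1`, with `m` odd, the homotopy of the space of conjugacy classes is that of
the unitary group in dimension `m`. -/
theorem pi_iso (hp : IsQuo p) (hk : 1 ≤ k) (hm1 : k + 4 ≤ 2 * n)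
    (hm2 : k + 5 ≤ 2 * (r - 1) * (n - 1)) (hS : ∀ x : SC (k + 3), x = 0) :
    Nonempty (HomotopyGroup (Fin (k + 3)) X (p A) ≃* Multiplicative (SC (k + 2))) := by
  have : NeZero n := ⟨by omega⟩
  exact rel_mulEquiv (fun a z => Rl p A a (Multiplicative.toAdd z))
    (fun a z a' z' h h' => Rl.mul h h') (fun a => Rl.left hp hk a)
    (fun z => Rl.right hp (by omega) (by omega) (Multiplicative.toAdd z))
    (fun z h => Rl.of_one hp h)
    (fun a h => Rl.of_zero hp (by omega) (by omega) hS h)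

end

/-! ### Irreducible loci -/

section
variable {n r : ℕ} {b : Prop}

/-- The computation for a group `G` embedded in the matrices with image `U(n)` or `SU(n)`, whose
elements represent all the unitary matrices up to scalars, and for the subspace `L` of the classes
of irreducible tuples. -/
theorem pi_even {G : Type} [Group G] [TopologicalSpace G] [IsTopologicalGroup G]
    (f : G →* Mat (Fin n)) (hf : Topology.IsInducing f) (hfi : Function.Injective f)
    (hb : ∀ M, IsG b M ↔ ∃ g, f g = M)
    (hc : ∀ u, IsUni u → ∃ g, ∃ c : ℂ, star c * c = 1 ∧ f g = c • u)
    (L : Set (Quotient (MulAction.orbitRel (ConjAct G) (Fin r → G))))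
    (hLi : L = {x | ∃ A : Fin r → G, Irr (fun i => f (A i)) ∧
      Quotient.mk (MulAction.orbitRel (ConjAct G) (Fin r → G)) A = x})
    {j : ℕ} (hj : 1 ≤ j) (h1 : 2 * j + 2 < 2 * n) (h2 : 2 * j + 2 < 2 * (r - 1) * (n - 1) - 1)
    (x : L) : Nonempty (HomotopyGroup (Fin (2 * j + 2)) L x ≃* Multiplicative ℤ) := by
  have : NeZero n := ⟨by omega⟩
  have hu : ∀ g, IsUni (f g) := fun g => ((hb _).2 ⟨g, rfl⟩).1
  have hinv : ∀ g, f g⁻¹ = (f g)ᴴ := fun g => by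
    have h : f g⁻¹ * f g = 1 := by rw [← map_mul, inv_mul_cancel, map_one]
    rw [← mul_one (f g⁻¹), ← (hu g).mul_ct, ← mul_assoc, h, one_mul]
  have hL : ∀ A : Fin r → G, Irr (fun i => f (A i)) ↔
      Quotient.mk (MulAction.orbitRel (ConjAct G) (Fin r → G)) A ∈ L := fun A => by
    rw [hLi]
    refine ⟨fun h => ⟨A, h, rfl⟩, ?_⟩
    rintro ⟨B, hB, h⟩
    obtain ⟨g, rfl⟩ := (MulAction.orbitRel_apply (G := ConjAct G)).1 (Quotient.exact h)
    have h1 := hB.cj (hu (ConjAct.ofConjAct g)).ct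
    convert h1 using 1
    funext i
    beta_reduce
    rw [cj, Pi.smul_apply, ConjAct.smul_def, map_mul, map_mul, hinv, conjTranspose_conjTranspose]
    have := hu (ConjAct.ofConjAct g)
    rw [IsUni] at this
    rw [mul_assoc, mul_assoc, mul_assoc, this, mul_one, ← mul_assoc, this, one_mul]
  choose l hl using fun M : {M // IsG b M} => (hb M.1).1 M.2
  have hlf : ∀ g h, l ⟨f g, h⟩ = g := fun g h => hfi (hl _)
  have hlc : Continuous l := by
    rw [hf.continuous_iff]
    exact continuous_subtype_val.congr fun M => (hl M).symm
  obtain ⟨q, hq⟩ : ∃ q : Pt b n r → Fin r → G, ∀ A i, q A i = l ⟨A.1 i, A.2.1 i⟩ :=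
    ⟨_, fun _ _ => rfl⟩
  have hfq : ∀ A i, f (q A i) = A.1 i := fun A i => by rw [hq, hl]
  have hqc : Continuous q := continuous_pi fun i => by
    simp only [hq]
    exact hlc.comp (((continuous_apply i).comp continuous_subtype_val).subtype_mk _)
  obtain ⟨p, hp⟩ : ∃ p : Pt b n r → L, ∀ A, (p A).1 =
      Quotient.mk (MulAction.orbitRel (ConjAct G) (Fin r → G)) (q A) :=
    ⟨fun A => ⟨_, (hL (q A)).1 (by simp only [hfq]; exact A.2.2)⟩, fun _ => rfl⟩
  have hqs : ∀ A : Fin r → G, Irr (fun i => f (A i)) → ∃ P, q P = A := fun A hA =>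
    ⟨⟨fun i => f (A i), fun i => (hb _).2 ⟨_, rfl⟩, hA⟩, by funext i; rw [hq, hlf]⟩
  have hquo : IsQuo p := by
    refine ⟨?_, ?_, ?_, ?_⟩
    · rw [continuous_induced_rng]
      exact (continuous_quot_mk.comp hqc).congr fun A => (hp A).symm
    · rintro ⟨x, hx⟩
      induction x using Quotient.inductionOn with
      | h A =>
        obtain ⟨P, hP⟩ := hqs A ((hL A).2 hx)
        exact ⟨P, Subtype.ext (by rw [hp, hP])⟩
    · intro U hU
      obtain ⟨V, hV, rfl⟩ := isOpen_induced_iff.1 hU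
      have hF : Continuous fun (A : Fin r → G) i => f (A i) :=
        continuous_pi fun i => hf.continuous.comp (continuous_apply i)
      have ho := isOpenMap_quotient_mk'_mul (Γ := ConjAct G) (T := Fin r → G) _
        ((hV.inter isOpen_irr).preimage hF)
      convert ho.preimage (continuous_subtype_val (p := fun x => x ∈ L)) using 1
      ext y
      constructor
      · rintro ⟨A, hA, rfl⟩
        refine ⟨q A, ⟨?_, ?_⟩, (hp A).symm⟩
        · simp only [hfq]; exact hA
        · show Irr _
          simp only [hfq]; exact A.2.2
      · rintro ⟨A, ⟨hA, hA'⟩, h⟩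
        obtain ⟨P, rfl⟩ := hqs A hA'
        refine ⟨P, ?_, Subtype.ext ((hp P).trans h)⟩
        simp only [hfq] at hA
        exact hA
    · intro A B
      rw [← Subtype.coe_inj, hp, hp, Quotient.eq, MulAction.orbitRel_apply]
      constructor
      · rintro ⟨g, hg⟩
        refine ⟨_, (hu (ConjAct.ofConjAct g)).ct, ?_⟩
        funext i
        have h : f (q A i) = _ := congrArg f (congrFun hg i).symm
        beta_reduce at h
        rw [Pi.smul_apply, ConjAct.smul_def, map_mul, map_mul, hinv, hfq, hfq] at h
        rw [cj, h, conjTranspose_conjTranspose]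
        have := hu (ConjAct.ofConjAct g)
        rw [IsUni] at this
        rw [mul_assoc, mul_assoc, mul_assoc, this, mul_one, ← mul_assoc, this, one_mul]
      · rintro ⟨u, hu', h⟩
        obtain ⟨g, c, hcc, hg⟩ := hc _ hu'.ct
        refine ⟨ConjAct.toConjAct g, ?_⟩
        funext i
        beta_reduce
        refine hfi ?_
        rw [Pi.smul_apply, ConjAct.toConjAct_smul, map_mul, map_mul, hinv, hfq, hfq, hg]
        refine (congrFun (cj_smul hcc uᴴ B.1) i).trans ?_
        rw [h, ← cj_mul, show uᴴ * u = 1 from hu', cj_one]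
  obtain ⟨A, rfl⟩ := hquo.surj x
  obtain ⟨i, rfl⟩ : ∃ i, j = i + 1 := ⟨j - 1, by omega⟩
  obtain ⟨e⟩ := sc_odd (i + 1)
  obtain ⟨E⟩ := pi_iso (A := A) hquo (k := 2 * i + 1) (by omega) (by omega)
    (by generalize 2 * (r - 1) * (n - 1) = N at h2 ⊢; omega) (sc_even (i + 1 + 1))
  exact ⟨E.trans (AddEquiv.toMultiplicative e)⟩

end

end BP

/-- Let `k = 2j + 2` be even with `2 < k < 2n` and `k < 2(r−1)(n−1) − 1`.  Then
`π_k(X_r(U(n))^{irr}) ≅ ℤ`, and the same holds with `SU(n)` in place of `U(n)`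
(every even `k` with `2 < k` is of the form `2j + 2` with `j ≥ 1`; both spaces are path
connected, so this holds at every basepoint). -/
theorem piEven_irrLocus_unitary_and_specialUnitary (n r j : ℕ) (hj : 1 ≤ j)
    (hk2n : 2 * j + 2 < 2 * n) (hkcodim : 2 * j + 2 < 2 * (r - 1) * (n - 1) - 1) :
    (∀ x : ↥(irrLocusU n r),
      Nonempty (HomotopyGroup (Fin (2 * j + 2)) ↥(irrLocusU n r) x ≃* Multiplicative ℤ)) ∧
    (∀ y : ↥(irrLocusSU n r),
      Nonempty (HomotopyGroup (Fin (2 * j + 2)) ↥(irrLocusSU n r) y ≃* Multiplicative ℤ)) := by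
  have hu : ∀ g : Un n, BP.IsUni (g : Matrix (Fin n) (Fin n) ℂ) := fun g =>
    Matrix.mem_unitaryGroup_iff'.1 g.2
  refine ⟨fun x => ?_, fun y => ?_⟩
  · refine BP.pi_even (b := False) (Matrix.unitaryGroup (Fin n) ℂ).subtype
      Topology.IsInducing.subtypeVal Subtype.val_injective (fun M => ⟨fun h =>
        ⟨⟨M, Matrix.mem_unitaryGroup_iff'.2 h.1⟩, rfl⟩, ?_⟩)
      (fun u h => ⟨⟨u, Matrix.mem_unitaryGroup_iff'.2 h⟩, 1, by simp, (one_smul ℂ u).symm⟩)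
      _ (Set.ext fun z => exists_congr fun A => and_congr_left fun _ =>
        (BP.irr_iff fun i => hu (A i)).symm) hj hk2n hkcodim x
    rintro ⟨g, rfl⟩
    exact ⟨hu g, False.elim⟩
  · refine BP.pi_even (b := True) ((Matrix.unitaryGroup (Fin n) ℂ).subtype.comp
      (SUsubgroup n).subtype) (Topology.IsInducing.subtypeVal.comp Topology.IsInducing.subtypeVal)
      (Subtype.val_injective.comp Subtype.val_injective) (fun M => ⟨fun h =>
        ⟨⟨⟨M, Matrix.mem_unitaryGroup_iff'.2 h.1⟩, h.2 trivial⟩, rfl⟩, ?_⟩)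
      (fun u h => ?_)
      _ (Set.ext fun z => exists_congr fun A => and_congr_left fun _ =>
        (BP.irr_iff fun i => hu (A i)).symm) hj hk2n hkcodim y
    · rintro ⟨g, rfl⟩
      exact ⟨hu g, fun _ => g.2⟩
    · -- an `n`-th root of the inverse of the determinant
      obtain ⟨c, hc⟩ := IsAlgClosed.exists_pow_nat_eq (star u.det) (n := n) (by omega)
      have hd : star u.det * u.det = 1 := by
        have := congrArg Matrix.det h
        rwa [Matrix.det_mul, Matrix.det_conjTranspose, Matrix.det_one] at this
      have hn : n ≠ 0 := by omega
      have hcc : star c * c = 1 := by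
        have h1 : ‖c‖ ^ n = 1 := by
          rw [← norm_pow, hc]
          have := congrArg norm hd
          rw [norm_mul, norm_star, norm_one] at this
          rw [norm_star]
          nlinarith [norm_nonneg u.det]
        have h2 : ‖c‖ = 1 := (pow_eq_one_iff_of_nonneg (norm_nonneg c) hn).1 h1
        have := Complex.conj_mul' c
        rw [h2] at this
        simpa using this
      exact ⟨⟨⟨c • u, Matrix.mem_unitaryGroup_iff'.2 (h.smul hcc)⟩, by
        change (c • u).det = 1
        rw [Matrix.det_smul, Fintype.card_fin, hc, hd]⟩, c, hcc, rfl⟩
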